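/- For every n ≥ 2, every m, and every family φ : Fin m → MulAut(B_n), the semidirect product G = B_n ⋊_θ FreeGroup(Fin m), where θ : FreeGroup(Fin m) →* MulAut(B_n) is the lift of φ (so G is the group ⟨B_n, t_1,…,t_m | t_j⁻¹ σ t_j = φ_j(σ) for σ ∈ B_n⟩), has solvable conjugacy problem: there exists a computable function f taking two pairs (u,s), (v,t), where u, v are signed words in the braid generators and s, t are signed words in m letters, and returning a Boolean, such that f((u,s),(v,t)) = true if and only if the element (π(u), FreeGroup.mk s) of G is conjugate in G to (π(v), FreeGroup.mk t). -/

import Mathlib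

/-!
The proof has three parts: automorphisms of braid groups are understood well enough to untwist the
semidirect product, the resulting group carries an integer norm whose balls have the Helly
property, and in such a group conjugators can be found by a bounded search.

*Automorphisms* (`BC.dg_all`, a theorem of Dyer and Grossman). Every automorphism of the braid
group is inner up to the automorphism `ε` inverting the generators. For at least four strands one
shows that an automorphism, after an inner correction, preserves the permutations of braids
(`BC.rho_phi`) and, after composing with `ε` if necessary, exponent sums, hence the linking numbers
of pure braids (`BC.lk_phi`). It then preserves the free group of pure braids in which only strand
`0` moves (`BC.phi_inl`), because a finitely generated subgroup of pure braids with vanishing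
linking numbers that is normalized by all pure braids is trivial. Induction on the number of
strands applies to the quotient of the stabilizer of strand `0` by this free group, and on the free
group itself the automorphism is pinned down by normal forms in free products (`BC.conj_w`,
`BC.alpha_conj`). The base cases are `ℤ` and the braid group on three strands, a central extension
of `ℤ/2 * ℤ/3` (`BC.dg_one`, `BC.dg_two`). Consequently, multiplying each `t_j` by a suitable braid
identifies the group with a semidirect product in which every `t_j` acts as a power of `ε`
(`BC.exists_iso`).

*Norm.* Positive braids define a left-invariant lattice order on the braid group (Garside). With
the central full twist `z`, let `nm g` be the least `r` such that `g` lies between `z⁻ʳ` and `zʳ`.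
A ball for `nm` is an order interval, so pairwise intersecting balls have a common point
(`BC.helly_nm`), and `nm` is invariant under `ε` (`BC.nm_eps`). The free group with its word norm
also has the Helly property, hence so does the semidirect product with the maximum norm
(`BC.sn_helly`).

*Bounded conjugators.* If `x` and `e⁻¹ x e` have norm at most `N` in a group with a Helly norm, a
geodesic in the injective hull gives a path of conjugators from `1` to `e` with steps of norm at
most `3` along which the conjugates of `x` have norm at most `N + 2` (`BC.lang_path`). Cutting out
loops in the finite set of these conjugates yields a conjugator of norm at most three times the
number of elements of the ball of radius `N + 2` (`BC.lang`). Since the faithful Artin action on a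
free group (`BC.art_inj`) makes equality of words primitive recursive, conjugacy is decided by a
primitive recursive search (`BC.conj_prim`, `BC.conj_th`, `BC.conj_all`).
-/


def braidRels (m : ℕ) : Set (FreeGroup (Fin m)) :=
  { r | (∃ i j : Fin m, (i : ℕ) + 1 < (j : ℕ) ∧
          r = FreeGroup.of i * FreeGroup.of j * (FreeGroup.of i)⁻¹ * (FreeGroup.of j)⁻¹) ∨
        (∃ i j : Fin m, (i : ℕ) + 1 = (j : ℕ) ∧
          r = FreeGroup.of i * FreeGroup.of j * FreeGroup.of i *
              (FreeGroup.of j)⁻¹ * (FreeGroup.of i)⁻¹ * (FreeGroup.of j)⁻¹) }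

/-- The braid group on `n` strands. -/
abbrev B (n : ℕ) := PresentedGroup (braidRels (n - 1))

/-- The Artin generators. -/
def σ {n : ℕ} (i : Fin (n - 1)) : B n := PresentedGroup.of i

/-- Evaluation of a signed word in the generators. -/
def π {n : ℕ} (w : List (Fin (n - 1) × Bool)) : B n :=
  (w.map (fun p => if p.2 then σ p.1 else (σ p.1)⁻¹)).prod

/-- The submonoid of positive braids. -/
def P (n : ℕ) : Submonoid (B n) := Submonoid.closure (Set.range (σ (n := n)))

def σ' {n : ℕ} (j : ℕ) : B n := if h : j < n - 1 then σ ⟨j, h⟩ else 1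

/-- The Garside half-twist element Δ. -/
def Δ (n : ℕ) : B n :=
  ((List.range (n - 1)).map
    (fun k => (((List.range (k + 1)).reverse).map (σ' (n := n))).prod)).prod

/-- Simple elements: positive prefixes of Δ. -/
def Simple {n : ℕ} (s : B n) : Prop := s ∈ P n ∧ s⁻¹ * Δ n ∈ P n

/-- Palindromic-free positive braids. -/
def PalFree {n : ℕ} (x : B n) : Prop :=
  ∀ i : Fin (n - 1), (σ i)⁻¹ * x * (σ i)⁻¹ ∉ P n

/-- Canonical length at most `m`. -/
def lenLE {n : ℕ} (x : B n) (m : ℕ) : Prop :=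
  ∃ p : ℤ, (Δ n) ^ (-p) * x ∈ P n ∧ x⁻¹ * (Δ n) ^ (p + (m : ℤ)) ∈ P n

/-- Canonical length exactly `m`. -/
def lenEQ {n : ℕ} (x : B n) (m : ℕ) : Prop :=
  lenLE x m ∧ (1 ≤ m → ¬ lenLE x (m - 1))

/-- Left normal form (as a list of simple factors). -/
def IsLeftNF {n : ℕ} (x : B n) (L : List (B n)) : Prop :=
  (∀ s ∈ L, Simple s ∧ s ≠ 1) ∧ L.prod = x ∧
  ∀ i : ℕ, i + 1 < L.length → ∀ u : B n, Simple u →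
    u⁻¹ * (L.getD i 1 * L.getD (i + 1) 1) ∈ P n → u⁻¹ * L.getD i 1 ∈ P n

/-- Right normal form (as a list of simple factors). -/
def IsRightNF {n : ℕ} (x : B n) (L : List (B n)) : Prop :=
  (∀ s ∈ L, Simple s ∧ s ≠ 1) ∧ L.prod = x ∧
  ∀ i : ℕ, i + 1 < L.length → ∀ u : B n, Simple u →
    (L.getD i 1 * L.getD (i + 1) 1) * u⁻¹ ∈ P n → L.getD (i + 1) 1 * u⁻¹ ∈ P n

namespace BC

/-! ### Artin generators of the braid group -/

/-- The braid group on `m + 1` strands, with `m` Artin generators. -/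
abbrev Br (m : ℕ) := PresentedGroup (braidRels m)

/-- The Artin generators indexed by all naturals; out-of-range indices give `1`. -/
def s {m : ℕ} (i : ℕ) : Br m := if h : i < m then PresentedGroup.of ⟨i, h⟩ else 1

/-- `f` satisfies the relations of the first `m` Artin generators. -/
structure BS {M : Type*} [Monoid M] (m : ℕ) (f : ℕ → M) : Prop where
  comm : ∀ i j, i + 1 < j → j < m → f i * f j = f j * f i
  braid : ∀ i, i + 1 < m → f i * f (i + 1) * f i = f (i + 1) * f i * f (i + 1)

theorem s_of_lt {m i : ℕ} (h : i < m) : (s i : Br m) = PresentedGroup.of ⟨i, h⟩ := dif_pos h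
theorem s_of_ge {m i : ℕ} (h : m ≤ i) : (s i : Br m) = 1 := dif_neg (by omega)

theorem s_comm {m : ℕ} (i j : ℕ) (h : i + 1 < j) : (s i : Br m) * s j = s j * s i := by
  by_cases hj : j < m
  · rw [s_of_lt hj, s_of_lt (by omega : i < m)]
    have : (PresentedGroup.mk (braidRels m)
      (FreeGroup.of ⟨i, by omega⟩ * FreeGroup.of ⟨j, hj⟩ * (FreeGroup.of ⟨i, by omega⟩)⁻¹ *
        (FreeGroup.of ⟨j, hj⟩)⁻¹)) = 1 :=
      PresentedGroup.one_of_mem (Or.inl ⟨_, _, h, rfl⟩)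
    simp only [map_mul, map_inv] at this
    rw [mul_inv_eq_one, mul_inv_eq_iff_eq_mul] at this
    exact this
  · rw [s_of_ge (by omega : m ≤ j)]; simp

theorem s_braid {m : ℕ} (i : ℕ) (h : i + 1 < m) :
    (s i : Br m) * s (i + 1) * s i = s (i + 1) * s i * s (i + 1) := by
  rw [s_of_lt h, s_of_lt (by omega : i < m)]
  have : (PresentedGroup.mk (braidRels m)
      (FreeGroup.of ⟨i, by omega⟩ * FreeGroup.of ⟨i+1, h⟩ * FreeGroup.of ⟨i, by omega⟩ *
        (FreeGroup.of ⟨i+1, h⟩)⁻¹ * (FreeGroup.of ⟨i, by omega⟩)⁻¹ *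
        (FreeGroup.of ⟨i+1, h⟩)⁻¹)) = 1 :=
      PresentedGroup.one_of_mem (Or.inr ⟨_, _, rfl, rfl⟩)
  simp only [map_mul, map_inv] at this
  rw [mul_inv_eq_one, mul_inv_eq_iff_eq_mul, mul_inv_eq_iff_eq_mul] at this
  exact this

theorem s_comm' {m : ℕ} (i j : ℕ) (h : i + 1 < j ∨ j + 1 < i) : (s i : Br m) * s j = s j * s i := by
  rcases h with h | h
  · exact s_comm _ _ h
  · exact (s_comm _ _ h).symm

theorem bs_s (m : ℕ) : BS m (s : ℕ → Br m) := ⟨fun i j h _ => s_comm i j h, s_braid⟩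

/-- The homomorphism out of `Br m` determined by images of generators. -/
def lift {G : Type*} [Group G] {m : ℕ} (f : ℕ → G) (hf : BS m f) : Br m →* G :=
  PresentedGroup.toGroup (f := fun i : Fin m => f i) (by
    rintro r (⟨i, j, h, rfl⟩ | ⟨i, j, h, rfl⟩)
    · simp only [map_mul, map_inv, FreeGroup.lift_apply_of]
      rw [mul_inv_eq_one, mul_inv_eq_iff_eq_mul]
      exact hf.comm _ _ h j.2
    · simp only [map_mul, map_inv, FreeGroup.lift_apply_of]
      rw [mul_inv_eq_one, mul_inv_eq_iff_eq_mul, mul_inv_eq_iff_eq_mul, ← h]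
      exact hf.braid _ (h ▸ j.2))

theorem lift_s {G : Type*} [Group G] {m : ℕ} (f : ℕ → G) (hf : BS m f) {i : ℕ} (h : i < m) :
    lift f hf (s i) = f i := by
  rw [s_of_lt h]; exact PresentedGroup.toGroup.of _

theorem closure_s (m : ℕ) : Subgroup.closure {g : Br m | ∃ i < m, g = s i} = ⊤ := by
  rw [← PresentedGroup.closure_range_of]
  congr 1; ext g; constructor
  · rintro ⟨i, h, rfl⟩; exact ⟨⟨i, h⟩, (s_of_lt h).symm⟩
  · rintro ⟨i, rfl⟩; exact ⟨i, i.2, (s_of_lt i.2).symm⟩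

theorem hom_ext {G : Type*} [Group G] {m : ℕ} {f g : Br m →* G}
    (h : ∀ i < m, f (s i) = g (s i)) : f = g := by
  apply PresentedGroup.ext; intro i
  have := h i i.2; rwa [s_of_lt i.2] at this

theorem br_ind {m : ℕ} {p : Br m → Prop} (one : p 1) (mul : ∀ a b, p a → p b → p (a * b))
    (gen : ∀ i < m, p (s i)) (inv : ∀ a, p a → p a⁻¹) (g : Br m) : p g := by
  have : g ∈ Subgroup.closure {g : Br m | ∃ i < m, g = s i} := by rw [closure_s]; trivial
  induction this using Subgroup.closure_induction with
  | mem x h => obtain ⟨i, h, rfl⟩ := h; exact gen i h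
  | one => exact one
  | mul x y _ _ hx hy => exact mul _ _ hx hy
  | inv x _ hx => exact inv _ hx

/-- A subgroup containing all generators is everything. -/
theorem sub_top {m : ℕ} (H : Subgroup (Br m)) (h : ∀ i < m, s i ∈ H) (g : Br m) : g ∈ H :=
  br_ind (p := (· ∈ H)) H.one_mem (fun _ _ => H.mul_mem) h (fun _ => H.inv_mem) g

/-- Exponent sum. -/
def ex {m : ℕ} : Br m →* Multiplicative ℤ :=
  lift (fun _ => Multiplicative.ofAdd 1) ⟨fun _ _ _ _ => rfl, fun _ _ => rfl⟩

theorem ex_s {m i : ℕ} (h : i < m) : ex (s i : Br m) = Multiplicative.ofAdd 1 := lift_s _ _ h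

/-- The automorphism inverting all generators. -/
def epsHom (m : ℕ) : Br m →* Br m := lift (fun i => (s i)⁻¹) ⟨fun i j h _ => by
    rw [← mul_inv_rev, ← mul_inv_rev, s_comm i j h], fun i h => by
    simp only [← mul_inv_rev]; rw [← mul_assoc, ← mul_assoc, s_braid i h]⟩

theorem epsHom_s {m : ℕ} (i : ℕ) : epsHom m (s i) = (s i)⁻¹ := by
  by_cases h : i < m
  · exact lift_s _ _ h
  · rw [s_of_ge (by omega)]; simp

theorem epsHom_epsHom {m : ℕ} (g : Br m) : epsHom m (epsHom m g) = g := by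
  have : (epsHom m).comp (epsHom m) = MonoidHom.id _ := hom_ext (fun i h => by simp [epsHom_s])
  exact DFunLike.congr_fun this g

/-- The automorphism of the braid group inverting all generators. -/
noncomputable def eps (m : ℕ) : MulAut (Br m) :=
  MulEquiv.ofBijective (epsHom m) ⟨fun a b h => by
    simpa [epsHom_epsHom] using congrArg (epsHom m) h, fun a => ⟨epsHom m a, epsHom_epsHom a⟩⟩

theorem eps_s {m : ℕ} (i : ℕ) : eps m (s i) = (s i)⁻¹ := epsHom_s i
theorem eps_eps {m : ℕ} (g : Br m) : eps m (eps m g) = g := epsHom_epsHom g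

/-! ### The twist δ and the central element -/

section BSlemmas
variable {M : Type*} [Monoid M] {m : ℕ} {f : ℕ → M}

/-- `f 0 * f 1 * ... * f (k-1)`. -/
def dl (f : ℕ → M) : ℕ → M
  | 0 => 1
  | k + 1 => dl f k * f k

theorem BS.dl_comm (hf : BS m f) (k j : ℕ) (h : k < j) (hj : j < m) :
    dl f k * f j = f j * dl f k := by
  induction k with
  | zero => simp [dl]
  | succ k ih =>
    rw [dl, mul_assoc, hf.comm k j h hj, ← mul_assoc, ih (by omega), mul_assoc]

theorem BS.dl_shift (hf : BS m f) (k i : ℕ) (h : i + 1 < k) (hk : k ≤ m) :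
    dl f k * f i = f (i + 1) * dl f k := by
  induction k with
  | zero => omega
  | succ k ih =>
    rcases Nat.lt_or_ge (i + 1) k with h' | h'
    · rw [dl, mul_assoc, ← hf.comm i k h' (by omega), ← mul_assoc, ih h' (by omega), mul_assoc]
    · obtain rfl : k = i + 1 := by omega
      rw [dl, dl]
      calc dl f i * f i * f (i + 1) * f i = dl f i * (f i * f (i + 1) * f i) := by simp [mul_assoc]
        _ = (dl f i * f (i + 1)) * (f i * f (i + 1)) := by
          rw [hf.braid i (by omega)]; simp [mul_assoc]
        _ = _ := by rw [hf.dl_comm i (i + 1) (by omega) (by omega)]; simp [mul_assoc]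

theorem BS.dl_pow_shift (hf : BS m f) (k i j : ℕ) (h : i + j < k) (hk : k ≤ m) :
    dl f k ^ j * f i = f (i + j) * dl f k ^ j := by
  induction j with
  | zero => simp
  | succ j ih =>
    rw [pow_succ', mul_assoc, ih (by omega), ← mul_assoc, hf.dl_shift k (i + j) (by omega) hk,
      mul_assoc]; rfl

/-- `δ² σ_{k-1} = σ_0 δ²`. -/
theorem BS.dl_last (hf : BS m f) (k : ℕ) (hk : k + 1 ≤ m) :
    dl f (k + 1) ^ 2 * f k = f 0 * dl f (k + 1) ^ 2 := by
  induction k with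
  | zero => simp [dl, pow_two, mul_assoc]
  | succ k ih =>
    -- `δ_{k+2} = δ_{k+1} σ_{k+1}`
    have ih := ih (by omega)
    have hb := hf.braid k (by omega)
    have key : dl f (k + 2) ^ 2 = dl f (k + 1) ^ 2 * (f (k + 1) * f k) := by
      have h1 : dl f (k + 1) * f (k + 1) * dl f (k+1) = dl f (k + 1) * dl f k * (f (k+1) * f k) := by
        rw [dl]
        calc _ = dl f k * f k * (f (k + 1) * dl f k) * f k := by simp [mul_assoc]
          _ = _ := by rw [← hf.dl_comm k (k + 1) (by omega) (by omega)]; simp [mul_assoc]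
      calc dl f (k + 2) ^ 2 = dl f (k + 1) * f (k + 1) * dl f (k+1) * f (k + 1) := by
            rw [pow_two]; show dl f (k+1) * f (k+1) * (dl f (k+1) * f (k+1)) = _; simp [mul_assoc]
        _ = dl f (k + 1) * dl f k * (f (k+1) * f k * f (k + 1)) := by rw [h1]; simp [mul_assoc]
        _ = _ := by rw [← hb, pow_two]; simp only [dl, mul_assoc]
    rw [key]
    calc dl f (k + 1) ^ 2 * (f (k + 1) * f k) * f (k + 1)
        = dl f (k + 1) ^ 2 * (f (k + 1) * f k * f (k + 1)) := by simp [mul_assoc]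
      _ = (dl f (k + 1) ^ 2 * f k) * (f (k + 1) * f k) := by rw [← hb]; simp [mul_assoc]
      _ = _ := by rw [ih]; simp [mul_assoc]

/-- The full twist on the first `k + 1` strands. -/
def tw (f : ℕ → M) (k : ℕ) : M := dl f k ^ (k + 1)

theorem BS.tw_comm (hf : BS m f) (k i : ℕ) (h : i < k) (hk : k ≤ m) :
    tw f k * f i = f i * tw f k := by
  obtain ⟨l, rfl⟩ : ∃ l, k = l + 1 := ⟨k - 1, by omega⟩
  have e : l + 1 + 1 = i + 2 + (l - i) := by omega
  rw [tw, e, pow_add, mul_assoc, hf.dl_pow_shift (l+1) i (l - i) (by omega) hk, ← mul_assoc,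
    show i + (l - i) = l by omega, pow_add, mul_assoc (dl f (l+1) ^ i), hf.dl_last l hk,
    ← mul_assoc (dl f (l+1) ^ i), hf.dl_pow_shift (l+1) 0 i (by omega) hk]
  simp [mul_assoc]

/-- Every generator left-divides the full twist. -/
theorem BS.dvd_tw (hf : BS m f) (k i : ℕ) (h : i < k) (hk : k ≤ m) : ∃ c, tw f k = f i * c := by
  obtain ⟨l, rfl⟩ : ∃ l, k = l + 1 := ⟨k - 1, by omega⟩
  have h0 : ∀ l, ∃ c, dl f (l + 1) = f 0 * c := by
    intro l
    induction l with
    | zero => exact ⟨1, by simp [dl]⟩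
    | succ l ih => obtain ⟨c, hc⟩ := ih; exact ⟨c * f (l + 1), by rw [dl, hc, mul_assoc]⟩
  obtain ⟨c, hc⟩ := h0 l
  refine ⟨dl f (l + 1) ^ i * c * dl f (l + 1) ^ (l + 1 - i), ?_⟩
  have e : l + 1 + 1 = i + 1 + (l + 1 - i) := by omega
  rw [tw, e, pow_add, pow_add, pow_one]
  nth_rw 2 [hc]
  rw [← mul_assoc, hf.dl_pow_shift (l+1) 0 i (by omega) hk]
  simp [mul_assoc]

end BSlemmas

end BC

namespace BC

/-! ### The positive braid monoid -/

/-- Distant generators. -/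
def Far {m : ℕ} (i j : Fin m) : Prop := (i : ℕ) + 1 < j ∨ (j : ℕ) + 1 < i
/-- Neighbouring generators. -/
def Near {m : ℕ} (i j : Fin m) : Prop := (i : ℕ) + 1 = j ∨ (j : ℕ) + 1 = i

theorem Far.symm {m : ℕ} {i j : Fin m} (h : Far i j) : Far j i := Or.symm h
theorem Near.symm {m : ℕ} {i j : Fin m} (h : Near i j) : Near j i := Or.symm h

theorem tri {m : ℕ} (i j : Fin m) : i = j ∨ Far i j ∨ Near i j := by
  rw [Fin.ext_iff]; unfold Far Near; omega

/-- The defining relations of the positive braid monoid. -/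
inductive MRel (m : ℕ) : FreeMonoid (Fin m) → FreeMonoid (Fin m) → Prop
  | far (i j : Fin m) : Far i j →
      MRel m (FreeMonoid.of i * FreeMonoid.of j) (FreeMonoid.of j * FreeMonoid.of i)
  | near (i j : Fin m) : Near i j →
      MRel m (FreeMonoid.of i * (FreeMonoid.of j * FreeMonoid.of i))
        (FreeMonoid.of j * (FreeMonoid.of i * FreeMonoid.of j))

/-- The positive braid monoid. -/
abbrev Mo (m : ℕ) := PresentedMonoid (MRel m)

/-- The class of a positive word. -/
def cl {m : ℕ} : FreeMonoid (Fin m) →* Mo m := PresentedMonoid.mk (MRel m)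

/-- Atoms of the positive braid monoid. -/
def at' {m : ℕ} (i : Fin m) : Mo m := cl (FreeMonoid.of i)

theorem cl_surj {m : ℕ} (a : Mo m) : ∃ w, cl w = a := Con.mk'_surjective a

theorem cl_eq {m : ℕ} {u v : FreeMonoid (Fin m)} : cl u = cl v ↔ ConGen.Rel (MRel m) u v :=
  Con.eq _

theorem at_far {m : ℕ} {i j : Fin m} (h : Far i j) (x : Mo m) :
    at' i * (at' j * x) = at' j * (at' i * x) := by
  rw [← mul_assoc, ← mul_assoc]; congr 1
  exact cl_eq.2 (ConGen.Rel.of _ _ (MRel.far i j h))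

theorem at_near {m : ℕ} {i j : Fin m} (h : Near i j) (x : Mo m) :
    at' i * (at' j * (at' i * x)) = at' j * (at' i * (at' j * x)) := by
  have : (at' i * (at' j * at' i) : Mo m) = at' j * (at' i * at' j) :=
    cl_eq.2 (ConGen.Rel.of _ _ (MRel.near i j h))
  simpa [mul_assoc] using congrArg (· * x) this

/-- Word length on the positive monoid. -/
def ln {m : ℕ} : Mo m →* Multiplicative ℕ :=
  PresentedMonoid.lift (fun _ => Multiplicative.ofAdd 1) (by
    rintro a b (⟨i, j, h⟩ | ⟨i, j, h⟩) <;> simp)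

/-- Word length, as a natural number. -/
def len {m : ℕ} (a : Mo m) : ℕ := (ln a).toAdd

theorem len_mul {m : ℕ} (a b : Mo m) : len (a * b) = len a + len b := by simp [len]
theorem len_one {m : ℕ} : len (1 : Mo m) = 0 := by simp [len]
theorem len_at {m : ℕ} (i : Fin m) : len (at' i) = 1 := by
  have : ln (at' i) = Multiplicative.ofAdd 1 := PresentedMonoid.lift_of _ _
  simp [len, this]
theorem len_at_mul {m : ℕ} (i : Fin m) (a : Mo m) : len (at' i * a) = len a + 1 := by
  rw [len_mul, len_at]; omega

theorem mo_cases {m : ℕ} (a : Mo m) : a = 1 ∨ ∃ i b, a = at' i * b := by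
  obtain ⟨w, rfl⟩ := cl_surj a
  induction w using FreeMonoid.casesOn with
  | one => left; simp
  | of_mul i w => right; exact ⟨i, cl w, by simp [at']⟩

theorem len_eq_zero {m : ℕ} {a : Mo m} (h : len a = 0) : a = 1 := by
  rcases mo_cases a with rfl | ⟨i, b, rfl⟩
  · rfl
  · rw [len_at_mul] at h; omega

/-- The expected shape of an equality `σ_i a = σ_j b`. -/
def RR {m : ℕ} (i : Fin m) (a : Mo m) (j : Fin m) (b : Mo m) : Prop :=
  (i = j ∧ a = b) ∨ (Far i j ∧ ∃ c, a = at' j * c ∧ b = at' i * c) ∨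
    (Near i j ∧ ∃ c, a = at' j * (at' i * c) ∧ b = at' i * (at' j * c))

theorem RR.symm {m : ℕ} {i j : Fin m} {a b : Mo m} (h : RR i a j b) : RR j b i a := by
  rcases h with ⟨rfl, rfl⟩ | ⟨h, c, h1, h2⟩ | ⟨h, c, h1, h2⟩
  · exact Or.inl ⟨rfl, rfl⟩
  · exact Or.inr (Or.inl ⟨h.symm, c, h2, h1⟩)
  · exact Or.inr (Or.inr ⟨h.symm, c, h2, h1⟩)

theorem RR.eq {m : ℕ} {i j : Fin m} {a b : Mo m} (h : RR i a j b) : at' i * a = at' j * b := by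
  rcases h with ⟨rfl, rfl⟩ | ⟨h, c, rfl, rfl⟩ | ⟨h, c, rfl, rfl⟩
  · rfl
  · exact at_far h c
  · exact at_near h c

theorem not_far_self {m : ℕ} {i : Fin m} (h : Far i i) : False := by unfold Far at h; omega
theorem not_near_self {m : ℕ} {i : Fin m} (h : Near i i) : False := by unfold Near at h; omega
theorem not_far_near {m : ℕ} {i j : Fin m} (h : Far i j) (h' : Near i j) : False := by
  unfold Far Near at *; omega

theorem RR.of_eq_idx {m : ℕ} {i : Fin m} {a b : Mo m} (h : RR i a i b) : a = b := by
  rcases h with ⟨_, rfl⟩ | ⟨h, _⟩ | ⟨h, _⟩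
  · rfl
  · exact (not_far_self h).elim
  · exact (not_near_self h).elim

theorem RR.of_far {m : ℕ} {i j : Fin m} {a b : Mo m} (h : RR i a j b) (hf : Far i j) :
    ∃ c, a = at' j * c ∧ b = at' i * c := by
  rcases h with ⟨rfl, rfl⟩ | ⟨h, c⟩ | ⟨h, _⟩
  · exact (not_far_self hf).elim
  · exact c
  · exact (not_far_near hf h).elim

theorem RR.of_near {m : ℕ} {i j : Fin m} {a b : Mo m} (h : RR i a j b) (hf : Near i j) :
    ∃ c, a = at' j * (at' i * c) ∧ b = at' i * (at' j * c) := by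
  rcases h with ⟨rfl, rfl⟩ | ⟨h, _⟩ | ⟨h, c⟩
  · exact (not_near_self hf).elim
  · exact (not_far_near h hf).elim
  · exact c

section cube
variable {m L : ℕ} (IH : ∀ (i j : Fin m) (a b : Mo m), len a < L →
  at' i * a = at' j * b → RR i a j b)
include IH

theorem cube_nf {i j k : Fin m} {a b c : Mo m} (ha : len a ≤ L)
    (h1 : RR i a k c) (h2 : RR k c j b) (hik : Far i k) (hkj : Near k j) : RR i a j b := by
  obtain ⟨c1, rfl, rfl⟩ := h1.of_far hik
  obtain ⟨c2, e, rfl⟩ := h2.of_near hkj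
  rw [len_at_mul] at ha
  have hR := IH _ _ _ _ (by omega) e
  have hl : len c1 = len c2 + 1 := by
    have := congrArg len e; simp only [len_at_mul] at this; omega
  rcases tri i j with rfl | hij | hij
  · exact (not_far_near hik hkj.symm).elim
  · obtain ⟨d, rfl, e2⟩ := hR.of_far hij
    have hR2 := IH _ _ _ _ (by omega) e2
    obtain ⟨f, rfl, rfl⟩ := hR2.of_far hik.symm
    refine Or.inr (Or.inl ⟨hij, at' k * (at' j * f), ?_, ?_⟩)
    · rw [at_near hkj]
    · rw [at_far hij.symm, at_far hik.symm]
  · obtain ⟨d, rfl, e2⟩ := hR.of_near hij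
    have hR2 := IH _ _ _ _ (by omega) e2
    obtain ⟨f, rfl, e3⟩ := hR2.of_far hik.symm
    have hl3 : len d = len f := by
      have := congrArg len e3; simp only [len_at_mul] at this; omega
    have hR3 := IH _ _ _ _ (by simp only [len_at_mul] at *; omega) e3
    obtain ⟨g, rfl, rfl⟩ := hR3.of_near hkj.symm
    refine Or.inr (Or.inr ⟨hij, at' k * (at' j * (at' i * g)), ?_, ?_⟩)
    · rw [at_far hik (at' j * g), at_near hkj, at_near hij.symm, at_far hik.symm]
    · rw [at_near hij.symm, at_far hik.symm, at_far hik g, at_near hkj, ]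

/-- The cube condition: under the inductive hypothesis on shorter elements, the relation `RR` of
having equal products for a visible reason is transitive. -/
theorem cube {i j k : Fin m} {a b c : Mo m} (ha : len a ≤ L)
    (h1 : RR i a k c) (h2 : RR k c j b) : RR i a j b := by
  have hab : len a = len b := by
    have := congrArg len (h1.eq.trans h2.eq); simp only [len_at_mul] at this; omega
  have canc : ∀ (i : Fin m) (a b : Mo m), len a < L → at' i * a = at' i * b → a = b :=
    fun i a b h e => (IH i i a b h e).of_eq_idx
  rcases tri i k with rfl | hik | hik
  · rwa [h1.of_eq_idx]
  · rcases tri k j with rfl | hkj | hkj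
    · rwa [← h2.of_eq_idx]
    · obtain ⟨c1, rfl, rfl⟩ := h1.of_far hik
      obtain ⟨c2, e, rfl⟩ := h2.of_far hkj
      rw [len_at_mul] at ha
      have hR := IH _ _ _ _ (by omega) e
      rcases tri i j with rfl | hij | hij
      · rw [hR.of_eq_idx]; exact Or.inl ⟨rfl, rfl⟩
      · obtain ⟨d, rfl, rfl⟩ := hR.of_far hij
        exact Or.inr (Or.inl ⟨hij, at' k * d, at_far hkj _, at_far hik.symm _⟩)
      · obtain ⟨d, rfl, rfl⟩ := hR.of_near hij
        refine Or.inr (Or.inr ⟨hij, at' k * d, ?_, ?_⟩)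
        · rw [at_far hkj, at_far hik.symm]
        · rw [at_far hik.symm, at_far hkj]
    · exact cube_nf IH ha h1 h2 hik hkj
  · rcases tri k j with rfl | hkj | hkj
    · rwa [← h2.of_eq_idx]
    · exact (cube_nf IH (hab ▸ ha) h2.symm h1.symm hkj.symm hik.symm).symm
    · obtain ⟨c1, rfl, rfl⟩ := h1.of_near hik
      obtain ⟨c2, e, rfl⟩ := h2.of_near hkj
      simp only [len_at_mul] at ha hab
      have hR := IH _ _ _ _ (by rw [len_at_mul]; omega) e
      rcases tri i j with rfl | hij | hij
      · have := canc _ _ _ (by omega) hR.of_eq_idx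
        rw [this]; exact Or.inl ⟨rfl, rfl⟩
      · obtain ⟨d, e1, e2⟩ := hR.of_far hij
        obtain ⟨f, rfl, rfl⟩ := (IH _ _ _ _ (by omega) e1).of_near hkj
        obtain ⟨g, rfl, e3⟩ := (IH _ _ _ _ (by omega) e2).of_near hik.symm
        simp only [len_at_mul] at ha hab
        have e4 := canc _ _ _ (by simp only [len_at_mul]; omega) e3
        obtain ⟨q, rfl, rfl⟩ := (IH _ _ _ _ (by omega) e4).of_far hij.symm
        refine Or.inr (Or.inl ⟨hij, at' k * (at' i * (at' j * (at' k * q))), ?_, ?_⟩)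
        · rw [at_far hij, at_near hik, at_near hkj, at_far hij.symm]
        · rw [at_far hij.symm, at_near hkj.symm, at_near hik.symm]
      · exfalso; unfold Near at *; omega

end cube

/-- Given the statement for shorter words, equivalent positive words have first letters and
remainders related by `RR`; this drives the proof of cancellativity. -/
theorem cl_head {m : ℕ} (L : ℕ) (IH : ∀ (i j : Fin m) (a b : Mo m), len a < L →
    at' i * a = at' j * b → RR i a j b) (u v : FreeMonoid (Fin m))
    (h : ConGen.Rel (MRel m) u v) : len (cl u) ≤ L + 1 →
    (u = 1 ∧ v = 1) ∨ ∃ i a j b, u = FreeMonoid.of i * a ∧ v = FreeMonoid.of j * b ∧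
      RR i (cl a) j (cl b) := by
  induction h with
  | of x y h =>
    intro _; right
    rcases h with ⟨i, j, h⟩ | ⟨i, j, h⟩
    · exact ⟨i, _, j, _, rfl, rfl, Or.inr (Or.inl ⟨h, 1, by simp [at'], by simp [at']⟩)⟩
    · exact ⟨i, _, j, _, rfl, rfl, Or.inr (Or.inr ⟨h, 1, by simp [at'], by simp [at']⟩)⟩
  | refl x =>
    intro _
    induction x using FreeMonoid.casesOn with
    | one => left; simp
    | of_mul i w => right; exact ⟨i, w, i, w, rfl, rfl, Or.inl ⟨rfl, rfl⟩⟩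
  | symm h ih =>
    intro hl
    rw [← cl_eq.2 h] at hl
    rcases ih hl with ⟨rfl, rfl⟩ | ⟨i, a, j, b, rfl, rfl, hR⟩
    · left; simp
    · right; exact ⟨j, b, i, a, rfl, rfl, hR.symm⟩
  | trans h1 h2 ih1 ih2 =>
    intro hl
    have h2l := ih2 (by rwa [← cl_eq.2 h1])
    rcases ih1 hl with ⟨rfl, rfl⟩ | ⟨i, a, j, b, rfl, rfl, hR⟩
    · exact h2l
    · rcases h2l with ⟨h, rfl⟩ | ⟨k, c, l, d, e, rfl, hR2⟩
      · exact absurd (congrArg FreeMonoid.length h) (by simp [FreeMonoid.length_mul])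
      · right
        obtain ⟨rfl, rfl⟩ : j = k ∧ b = c := by
          have := congrArg FreeMonoid.toList e
          simpa using this
        refine ⟨i, a, l, d, rfl, rfl, cube IH ?_ hR hR2⟩
        have : cl (FreeMonoid.of i * a) = at' i * cl a := by simp [at']
        rw [this, len_at_mul] at hl; omega
  | @mul w x y z h1 h2 ih1 ih2 =>
    intro hl
    rw [map_mul, len_mul] at hl
    rcases ih1 (by omega) with ⟨rfl, rfl⟩ | ⟨i, a, j, b, rfl, rfl, hR⟩
    · simpa using ih2 (by omega)
    · right
      refine ⟨i, a * y, j, b * z, mul_assoc _ _ _, mul_assoc _ _ _, ?_⟩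
      rw [map_mul, map_mul, ← cl_eq.2 h2]
      rcases hR with ⟨rfl, e⟩ | ⟨h, c, e1, e2⟩ | ⟨h, c, e1, e2⟩
      · exact Or.inl ⟨rfl, by rw [e]⟩
      · exact Or.inr (Or.inl ⟨h, c * cl y, by rw [e1, mul_assoc], by rw [e2, mul_assoc]⟩)
      · exact Or.inr (Or.inr ⟨h, c * cl y, by rw [e1]; simp [mul_assoc], by rw [e2]; simp [mul_assoc]⟩)

/-- Garside's theorem: equalities `σ_i a = σ_j b` are explained by the least common multiple of
the two atoms. -/
theorem garside {m : ℕ} (i j : Fin m) (a b : Mo m) (h : at' i * a = at' j * b) : RR i a j b := by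
  suffices ∀ L (i j : Fin m) (a b : Mo m), len a < L → at' i * a = at' j * b → RR i a j b from
    this _ i j a b (Nat.lt_succ_self _) h
  intro L
  induction L with
  | zero => intro _ _ _ _ h; omega
  | succ L IH =>
    intro i j a b hl h
    obtain ⟨u, rfl⟩ := cl_surj a
    obtain ⟨v, rfl⟩ := cl_surj b
    have h' : cl (FreeMonoid.of i * u) = cl (FreeMonoid.of j * v) := by simpa [at'] using h
    have hlen : len (cl (FreeMonoid.of i * u)) ≤ L + 1 := by
      have : cl (FreeMonoid.of i * u) = at' i * cl u := by simp [at']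
      rw [this, len_at_mul]; omega
    rcases cl_head L IH _ _ (cl_eq.1 h') hlen with ⟨h, _⟩ | ⟨i', a, j', b, e1, e2, hR⟩
    · exact absurd (congrArg FreeMonoid.length h) (by simp [FreeMonoid.length_mul])
    · have e1 := congrArg FreeMonoid.toList e1
      have e2 := congrArg FreeMonoid.toList e2
      simp at e1 e2
      obtain ⟨rfl, rfl⟩ := e1
      obtain ⟨rfl, rfl⟩ := e2
      exact hR

theorem at_cancel {m : ℕ} {i : Fin m} {a b : Mo m} (h : at' i * a = at' i * b) : a = b :=
  (garside _ _ _ _ h).of_eq_idx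

theorem mo_cancel {m : ℕ} {c a b : Mo m} (h : c * a = c * b) : a = b := by
  obtain ⟨w, rfl⟩ := cl_surj c
  induction w using FreeMonoid.inductionOn' with
  | one => simpa using h
  | of_mul i w ih =>
    have : cl (FreeMonoid.of i * w) = at' i * cl w := by simp [at']
    rw [this, mul_assoc, mul_assoc] at h
    exact ih (at_cancel h)

/-- `l` is a least common right multiple of `a` and `b`. -/
def IsL {m : ℕ} (a b l : Mo m) : Prop := a ∣ l ∧ b ∣ l ∧ ∀ w, a ∣ w → b ∣ w → l ∣ w

theorem dvd_of_mul_dvd {m : ℕ} {c a b : Mo m} (h : c * a ∣ c * b) : a ∣ b := by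
  obtain ⟨d, h⟩ := h
  exact ⟨d, mo_cancel (by rw [h, mul_assoc])⟩

theorem mul_dvd' {m : ℕ} {c a b : Mo m} (h : a ∣ b) : c * a ∣ c * b := by
  obtain ⟨d, rfl⟩ := h; exact ⟨d, by rw [mul_assoc]⟩

/-- Two positive braids with a common right multiple have a least one. -/
theorem exists_lcm {m : ℕ} (z a b : Mo m) (ha : a ∣ z) (hb : b ∣ z) : ∃ l, IsL a b l := by
  induction hn : len z using Nat.strong_induction_on generalizing z a b with
  | _ n IH =>
  subst hn
  rcases mo_cases a with rfl | ⟨i, a', rfl⟩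
  · exact ⟨b, one_dvd _, dvd_rfl, fun _ _ h => h⟩
  rcases mo_cases b with rfl | ⟨j, b', rfl⟩
  · exact ⟨_, dvd_rfl, one_dvd _, fun _ h _ => h⟩
  -- `r`, `r'` complete the two atoms to their least common multiple
  obtain ⟨r, r', hr, hu⟩ : ∃ r r' : Mo m, at' i * r = at' j * r' ∧
      ∀ x y, at' i * x = at' j * y → r ∣ x := by
    rcases tri i j with rfl | h | h
    · exact ⟨1, 1, rfl, fun x y h => one_dvd _⟩
    · refine ⟨at' j * 1, at' i * 1, at_far h 1, fun x y e => ?_⟩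
      obtain ⟨c, rfl, _⟩ := (garside _ _ _ _ e).of_far h
      exact ⟨c, by simp⟩
    · refine ⟨at' j * (at' i * 1), at' i * (at' j * 1), at_near h 1, fun x y e => ?_⟩
      obtain ⟨c, rfl, _⟩ := (garside _ _ _ _ e).of_near h
      exact ⟨c, by simp [mul_assoc]⟩
  obtain ⟨za, hza⟩ := ha
  obtain ⟨zb, hzb⟩ := hb
  rw [mul_assoc] at hza hzb
  have hl : len (a' * za) < len z := by rw [hza, len_at_mul]; omega
  have hl' : len (b' * zb) < len z := by rw [hzb, len_at_mul]; omega
  have hrz : r ∣ a' * za := hu _ _ (hza.symm.trans hzb)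
  obtain ⟨u, hu1, ⟨q, rfl⟩, hu3⟩ := IH _ hl (a' * za) a' r ⟨za, rfl⟩ hrz rfl
  have hconv : at' i * (r * q) = at' j * (r' * q) := by rw [← mul_assoc, hr, mul_assoc]
  have h2 : r' * q ∣ b' * zb := by
    apply dvd_of_mul_dvd (c := at' j)
    rw [← hconv, ← hzb, hza]
    exact mul_dvd' (hu3 _ ⟨za, rfl⟩ hrz)
  obtain ⟨v, hv1, hv2, hv3⟩ := IH _ hl' (b' * zb) b' (r' * q) ⟨zb, rfl⟩ h2 rfl
  refine ⟨at' j * v, ?_, mul_dvd' hv1, ?_⟩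
  · exact (mul_dvd' hu1).trans (hconv ▸ mul_dvd' hv2)
  · rintro w ⟨wa, hwa⟩ ⟨wb, hwb⟩
    rw [mul_assoc] at hwa hwb
    rw [hwb]
    refine mul_dvd' (hv3 _ ⟨wb, rfl⟩ ?_)
    apply dvd_of_mul_dvd (c := at' j)
    rw [← hconv, ← hwb, hwa]
    exact mul_dvd' (hu3 _ ⟨wa, rfl⟩ (hu _ _ (hwa.symm.trans hwb)))

end BC

namespace BC

/-! ### The lattice order on the braid group -/

/-- Atoms of the positive monoid indexed by naturals, out-of-range indices give `1`. -/
def as {m : ℕ} (i : ℕ) : Mo m := if h : i < m then at' ⟨i, h⟩ else 1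

theorem as_of_lt {m i : ℕ} (h : i < m) : (as i : Mo m) = at' ⟨i, h⟩ := dif_pos h

theorem bs_as (m : ℕ) : BS m (as : ℕ → Mo m) := by
  constructor
  · intro i j h hj
    rw [as_of_lt hj, as_of_lt (by omega : i < m)]
    simpa using at_far (i := ⟨i, by omega⟩) (j := ⟨j, hj⟩) (Or.inl h) 1
  · intro i h
    rw [as_of_lt h, as_of_lt (by omega : i < m)]
    simpa [mul_assoc] using at_near (i := ⟨i, by omega⟩) (j := ⟨i + 1, h⟩) (Or.inl rfl) 1

/-- The central full twist in the positive monoid. -/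
def zM (m : ℕ) : Mo m := tw as m

theorem mo_ind {m : ℕ} {p : Mo m → Prop} (one : p 1) (mul : ∀ i a, p a → p (at' i * a))
    (a : Mo m) : p a := by
  obtain ⟨w, rfl⟩ := cl_surj a
  induction w using FreeMonoid.inductionOn' with
  | one => simpa using one
  | of_mul i w ih => simpa [at'] using mul i _ ih

theorem zM_comm {m : ℕ} (a : Mo m) : zM m * a = a * zM m := by
  induction a using mo_ind with
  | one => simp
  | mul i a ih =>
    have := (bs_as m).tw_comm m i i.2 le_rfl
    rw [as_of_lt i.2] at this
    change zM m * at' i = at' i * zM m at this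
    rw [← mul_assoc, this, mul_assoc, ih, mul_assoc]

theorem at_dvd_zM {m : ℕ} (i : Fin m) : ∃ c, zM m = at' i * c ∧ zM m = c * at' i := by
  obtain ⟨c, hc⟩ := (bs_as m).dvd_tw m i i.2 le_rfl
  rw [as_of_lt i.2] at hc
  change zM m = at' i * c at hc
  refine ⟨c, hc, ?_⟩
  apply at_cancel (i := i)
  rw [← zM_comm, hc, mul_assoc]

theorem dvd_zM_pow {m : ℕ} (a : Mo m) : ∃ c, zM m ^ len a = a * c := by
  induction a using mo_ind with
  | one => exact ⟨1, by simp [len_one]⟩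
  | mul i a ih =>
    obtain ⟨c, hc⟩ := ih
    obtain ⟨d, hd, -⟩ := at_dvd_zM i
    refine ⟨c * d, ?_⟩
    have h2 : zM m ^ len a * d = d * zM m ^ len a :=
      ((show Commute (zM m) d from zM_comm d).pow_left _).eq
    have h3 : a * (c * d) = d * zM m ^ len a := by rw [← h2, hc, mul_assoc]
    rw [len_at_mul, pow_succ', mul_assoc (at' i), h3, ← mul_assoc, ← hd]

/-- Formal fractions `z⁻ᵏ a`. -/
def frS (m : ℕ) : Setoid (Mo m × ℕ) where
  r p q := zM m ^ q.2 * p.1 = zM m ^ p.2 * q.1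
  iseqv := ⟨fun _ => rfl, fun h => h.symm, fun {p q r} h1 h2 => by
    apply mo_cancel (c := zM m ^ q.2)
    calc zM m ^ q.2 * (zM m ^ r.2 * p.1) = zM m ^ r.2 * (zM m ^ q.2 * p.1) := by
          rw [← mul_assoc, ← mul_assoc, ← pow_add, ← pow_add, add_comm]
      _ = zM m ^ p.2 * (zM m ^ r.2 * q.1) := by
          rw [h1, ← mul_assoc, ← mul_assoc, ← pow_add, ← pow_add, add_comm]
      _ = _ := by rw [h2, ← mul_assoc, ← mul_assoc, ← pow_add, ← pow_add, add_comm]⟩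

theorem zp_comm {m : ℕ} (k : ℕ) (a : Mo m) : zM m ^ k * a = a * zM m ^ k :=
  ((show Commute (zM m) a from zM_comm a).pow_left k).eq

/-- The set of formal fractions. -/
def Fr (m : ℕ) := Quotient (frS m)

/-- Multiplication of fractions by a positive element on the left, with a power of the central
element removed. -/
def frMul {m : ℕ} (c : Mo m) (k : ℕ) : Fr m → Fr m :=
  Quotient.map (fun p => (c * p.1, p.2 + k)) (by
    intro p q h
    change zM m ^ q.2 * p.1 = zM m ^ p.2 * q.1 at h
    change zM m ^ (q.2 + k) * (c * p.1) = zM m ^ (p.2 + k) * (c * q.1)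
    rw [← mul_assoc, ← mul_assoc, zp_comm, zp_comm, mul_assoc, mul_assoc, add_comm q.2, add_comm p.2,
      pow_add, pow_add, mul_assoc, mul_assoc, h])

theorem frMul_frMul {m : ℕ} (c d : Mo m) (k l : ℕ) (x : Fr m) :
    frMul c k (frMul d l x) = frMul (c * d) (l + k) x := by
  induction x using Quotient.inductionOn with
  | _ p => exact congrArg (Quotient.mk _) (by simp [mul_assoc, add_assoc])

theorem frMul_one {m : ℕ} (x : Fr m) : frMul (1 : Mo m) 0 x = x := by
  induction x using Quotient.inductionOn with
  | _ p => exact congrArg (Quotient.mk _) (by simp)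

theorem frMul_z {m : ℕ} (x : Fr m) : frMul (zM m) 1 x = x := by
  induction x using Quotient.inductionOn with
  | _ p => 
    refine Quotient.sound ?_
    change zM m ^ p.2 * (zM m * p.1) = zM m ^ (p.2 + 1) * p.1
    rw [pow_succ, mul_assoc]

/-- The permutation of fractions given by an atom. -/
noncomputable def frPerm {m : ℕ} (i : Fin m) : Equiv.Perm (Fr m) where
  toFun := frMul (at' i) 0
  invFun := frMul (at_dvd_zM i).choose 1
  left_inv x := by rw [frMul_frMul, ← (at_dvd_zM i).choose_spec.2]; exact frMul_z x
  right_inv x := by rw [frMul_frMul, ← (at_dvd_zM i).choose_spec.1]; exact frMul_z x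

/-- Braids act on fractions. -/
noncomputable def frAct (m : ℕ) : Br m →* Equiv.Perm (Fr m) :=
  lift (fun i => if h : i < m then frPerm ⟨i, h⟩ else 1) (by
    have hs : ∀ i (h : i < m) (x : Fr m), frPerm ⟨i, h⟩ x = frMul (as i) 0 x := by
      intro i h x; rw [as_of_lt h]; rfl
    constructor
    · intro i j h hj
      have hi : i < m := by omega
      rw [dif_pos hj, dif_pos hi]
      ext x
      simp only [Equiv.Perm.mul_apply, hs, frMul_frMul, (bs_as m).comm i j h hj]
    · intro i h
      have hi : i < m := by omega
      rw [dif_pos h, dif_pos hi]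
      ext x
      simp only [Equiv.Perm.mul_apply, hs, frMul_frMul]
      rw [← mul_assoc, (bs_as m).braid i h, mul_assoc])

/-- The natural map from the positive monoid to the group. -/
def toBr {m : ℕ} : Mo m →* Br m :=
  PresentedMonoid.lift (fun i => PresentedGroup.of i) (by
    rintro a b (⟨i, j, h⟩ | ⟨i, j, h⟩)
    · have := s_comm' (m := m) i j h
      rw [s_of_lt i.2, s_of_lt j.2] at this
      simpa using this
    · rcases h with h | h
      · have := s_braid (m := m) i (h ▸ j.2)
        rw [s_of_lt i.2, s_of_lt (h ▸ j.2)] at this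
        have e : (⟨i + 1, h ▸ j.2⟩ : Fin m) = j := Fin.ext h
        rw [e] at this
        simpa [mul_assoc] using this
      · have := s_braid (m := m) j (h ▸ i.2)
        rw [s_of_lt j.2, s_of_lt (h ▸ i.2)] at this
        have e : (⟨j + 1, h ▸ i.2⟩ : Fin m) = i := Fin.ext h
        rw [e] at this
        simpa [mul_assoc] using this.symm)

theorem toBr_at {m : ℕ} (i : Fin m) : toBr (at' i) = s i := by
  rw [s_of_lt i.2]; exact PresentedMonoid.lift_of _ _

theorem frAct_toBr {m : ℕ} (a : Mo m) (x : Fr m) : frAct m (toBr a) x = frMul a 0 x := by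
  induction a using mo_ind with
  | one => rw [map_one, map_one, frMul_one]; rfl
  | mul i a ih =>
    rw [map_mul, map_mul, Equiv.Perm.mul_apply, ih, toBr_at, frAct, lift_s _ _ i.2, dif_pos i.2]
    exact frMul_frMul (at' i) a 0 0 x

theorem toBr_inj {m : ℕ} : Function.Injective (toBr : Mo m → Br m) := by
  intro a b h
  let x : Fr m := Quotient.mk (frS m) (1, 0)
  have := frAct_toBr a x
  rw [h, frAct_toBr] at this
  have := Quotient.exact this
  change zM m ^ 0 * (b * 1) = zM m ^ 0 * (a * 1) at this
  simpa using this.symm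

/-- The central full twist. -/
def z (m : ℕ) : Br m := tw s m

theorem toBr_zM (m : ℕ) : toBr (zM m) = z m := by
  have : ∀ k ≤ m, toBr (dl as k : Mo m) = dl s k := by
    intro k hk
    induction k with
    | zero => simp [dl]
    | succ k ih => rw [dl, map_mul, ih (by omega), as_of_lt (by omega), toBr_at]; rfl
  rw [zM, z, tw, tw, map_pow, this m le_rfl]

theorem z_comm {m : ℕ} (g : Br m) : z m * g = g * z m := by
  have : g ∈ Subgroup.centralizer {z m} := by
    apply sub_top
    intro i hi
    rw [Subgroup.mem_centralizer_singleton_iff]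
    exact ((bs_s m).tw_comm m i hi le_rfl).symm
  exact (Subgroup.mem_centralizer_singleton_iff.1 this).symm

theorem zp_comm' {m : ℕ} (k : ℤ) (g : Br m) : z m ^ k * g = g * z m ^ k :=
  ((show Commute (z m) g from z_comm g).zpow_left k).eq

/-- Positive braids. -/
def Pos {m : ℕ} : Submonoid (Br m) := MonoidHom.mrange toBr

theorem s_pos {m : ℕ} (i : ℕ) : (s i : Br m) ∈ Pos := by
  by_cases h : i < m
  · exact ⟨at' ⟨i, h⟩, toBr_at _⟩
  · rw [s_of_ge (by omega)]; exact one_mem _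

theorem z_pos {m : ℕ} : z m ∈ Pos := ⟨zM m, toBr_zM m⟩

/-- The prefix order `a⁻¹ b` positive. -/
def le' {m : ℕ} (a b : Br m) : Prop := a⁻¹ * b ∈ Pos

theorem le'_refl {m : ℕ} (a : Br m) : le' a a := by rw [le', inv_mul_cancel]; exact one_mem _
theorem le'_trans {m : ℕ} {a b c : Br m} (h : le' a b) (h' : le' b c) : le' a c := by
  have := mul_mem h h'; rwa [mul_assoc, mul_inv_cancel_left] at this
theorem le'_mul {m : ℕ} {a b : Br m} (c : Br m) : le' (c * a) (c * b) ↔ le' a b := by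
  unfold le'; rw [show (c * a)⁻¹ * (c * b) = a⁻¹ * b by group]

/-- Exponent sum as an integer. -/
def ei {m : ℕ} (g : Br m) : ℤ := (ex g).toAdd
theorem ei_mul {m : ℕ} (a b : Br m) : ei (a * b) = ei a + ei b := by simp [ei]
theorem ei_inv {m : ℕ} (a : Br m) : ei a⁻¹ = - ei a := by simp [ei]
theorem ei_one {m : ℕ} : ei (1 : Br m) = 0 := by simp [ei]
theorem ei_s {m i : ℕ} (h : i < m) : ei (s i : Br m) = 1 := by simp [ei, ex_s h]
theorem ei_zpow {m : ℕ} (a : Br m) (k : ℤ) : ei (a ^ k) = k * ei a := by simp [ei]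

theorem ei_toBr {m : ℕ} (a : Mo m) : ei (toBr a) = len a := by
  induction a using mo_ind with
  | one => simp [ei_one, len_one]
  | mul i a ih => rw [map_mul, ei_mul, ih, toBr_at, ei_s i.2, len_at_mul]; push_cast; ring

theorem ei_le {m : ℕ} {a b : Br m} (h : le' a b) : ei a ≤ ei b ∧ (ei a = ei b → a = b) := by
  obtain ⟨c, hc⟩ := h
  have h1 : ei (toBr c) = ei b - ei a := by rw [hc, ei_mul, ei_inv]; ring
  rw [ei_toBr] at h1
  refine ⟨by omega, fun h => ?_⟩
  have : c = 1 := len_eq_zero (by omega)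
  subst this
  rw [map_one] at hc
  exact inv_mul_eq_one.1 hc.symm

/-- Multiplying by a high power of the full twist makes any braid positive. -/
theorem exists_pos {m : ℕ} (g : Br m) : ∃ N : ℕ, z m ^ N * g ∈ Pos := by
  induction g using br_ind with
  | one => exact ⟨0, by simp⟩
  | mul a b ha hb =>
    obtain ⟨N, hN⟩ := ha
    obtain ⟨K, hK⟩ := hb
    refine ⟨N + K, ?_⟩
    have := mul_mem hN hK
    have h2 := zp_comm' K a
    rw [zpow_natCast] at h2
    rwa [mul_assoc, ← mul_assoc a, ← h2, mul_assoc, ← mul_assoc, ← pow_add] at this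
  | gen i h => exact ⟨0, by simpa using s_pos i⟩
  | inv a ha =>
    obtain ⟨N, c, hc⟩ := ha
    obtain ⟨d, hd⟩ := dvd_zM_pow c
    refine ⟨len c, ?_⟩
    have : z m ^ len c * (z m ^ N * a)⁻¹ ∈ Pos := by
      rw [← hc, ← toBr_zM, ← map_pow]
      have : zM m ^ len c = d * c := by
        apply mo_cancel (c := c)
        rw [← zp_comm, hd, mul_assoc]
      rw [this, map_mul, mul_inv_cancel_right]
      exact ⟨_, rfl⟩
    have h2 : z m ^ len c * a⁻¹ = (z m ^ len c * (z m ^ N * a)⁻¹) * z m ^ N := by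
      have h2 := zp_comm' N a
      rw [zpow_natCast] at h2
      have h3 : a⁻¹ * z m ^ N = z m ^ N * a⁻¹ := 
        ((show Commute (z m ^ N) a from h2).inv_right).eq.symm
      rw [h2, mul_inv_rev, mul_assoc, mul_assoc, h3]; simp
    rw [h2]
    exact mul_mem this (pow_mem z_pos _)

/-- The prefix order on the braid group has binary joins. -/
theorem exists_join {m : ℕ} (a b : Br m) :
    ∃ l, le' a l ∧ le' b l ∧ ∀ w, le' a w → le' b w → le' l w := by
  obtain ⟨N, hN⟩ := exists_pos a
  obtain ⟨K, hK⟩ := exists_pos b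
  obtain ⟨a', ha⟩ : z m ^ (N + K) * a ∈ Pos := by
    rw [add_comm, pow_add, mul_assoc]; exact mul_mem (pow_mem z_pos _) hN
  obtain ⟨b', hb⟩ : z m ^ (N + K) * b ∈ Pos := by
    rw [pow_add, mul_assoc]; exact mul_mem (pow_mem z_pos _) hK
  obtain ⟨l, ⟨c, hc⟩, ⟨d, hd⟩, hl⟩ := exists_lcm (zM m ^ (len a' + len b')) a' b'
    ((Dvd.intro _ (dvd_zM_pow a').choose_spec.symm).trans ⟨zM m ^ len b', pow_add _ _ _⟩)
    ((Dvd.intro _ (dvd_zM_pow b').choose_spec.symm).trans ⟨zM m ^ len a', by rw [add_comm, pow_add]⟩)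
  refine ⟨(z m ^ (N + K))⁻¹ * toBr l, ?_, ?_, ?_⟩
  · rw [← le'_mul (z m ^ (N + K)), mul_inv_cancel_left, ← ha, hc]
    exact ⟨c, by simp⟩
  · rw [← le'_mul (z m ^ (N + K)), mul_inv_cancel_left, ← hb, hd]
    exact ⟨d, by simp⟩
  · intro w hw hw'
    rw [← le'_mul (z m ^ (N + K)), ← ha] at hw
    rw [← le'_mul (z m ^ (N + K)), ← hb] at hw'
    obtain ⟨p, hp⟩ := hw
    obtain ⟨q, hq⟩ := hw'
    rw [← le'_mul (z m ^ (N + K)), mul_inv_cancel_left]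
    have h1 : toBr (a' * p) = z m ^ (N + K) * w := by rw [map_mul, hp, mul_inv_cancel_left]
    have h2 : toBr (b' * q) = z m ^ (N + K) * w := by rw [map_mul, hq, mul_inv_cancel_left]
    obtain ⟨r, hr⟩ := hl (a' * p) ⟨p, rfl⟩ ⟨q, toBr_inj (h1.trans h2.symm)⟩
    rw [← h1, hr]
    exact ⟨r, by simp⟩

/-- Compatible families of lower and upper bounds can be separated. -/
theorem separate {m : ℕ} {ι : Type*} [Nonempty ι] (lo up : ι → Br m)
    (h : ∀ i j, le' (lo i) (up j)) : ∃ p, ∀ i, le' (lo i) p ∧ le' p (up i) := by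
  -- among the elements below all upper bounds and above some `lo i`, pick one of maximal exponent
  let S : Set (Br m) := {p | (∃ i, le' (lo i) p) ∧ ∀ j, le' p (up j)}
  obtain ⟨i0⟩ := ‹Nonempty ι›
  have hne : lo i0 ∈ S := ⟨⟨i0, le'_refl _⟩, h i0⟩
  obtain ⟨p, hp, hmax⟩ : ∃ p ∈ S, ∀ q ∈ S, ei q ≤ ei p := by
    obtain ⟨ub, ⟨p, hp, rfl⟩, h2⟩ := Int.exists_greatest_of_bdd (P := fun e => ∃ p ∈ S, ei p = e)
      ⟨ei (up i0), by rintro _ ⟨p, hp, rfl⟩; exact (ei_le (hp.2 i0)).1⟩ ⟨_, _, hne, rfl⟩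
    exact ⟨p, hp, fun q hq => h2 _ ⟨q, hq, rfl⟩⟩
  refine ⟨p, fun i => ⟨?_, hp.2 i⟩⟩
  obtain ⟨l, h1, h2, h3⟩ := exists_join p (lo i)
  have hl : l ∈ S := ⟨⟨i, h2⟩, fun j => h3 _ (hp.2 j) (h i j)⟩
  have := ei_le h1
  have e := this.2 (le_antisymm this.1 (hmax l hl))
  rwa [← e] at h2

/-! ### The norm -/

/-- `g` lies between `z⁻ʳ` and `zʳ`. -/
def bd {m : ℕ} (g : Br m) (r : ℕ) : Prop := z m ^ r * g ∈ Pos ∧ g⁻¹ * z m ^ r ∈ Pos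

theorem bd_mono {m : ℕ} {g : Br m} {r t : ℕ} (h : bd g r) (hr : r ≤ t) : bd g t := by
  obtain ⟨k, rfl⟩ := Nat.exists_eq_add_of_le hr
  constructor
  · rw [add_comm, pow_add, mul_assoc]; exact mul_mem (pow_mem z_pos _) h.1
  · rw [pow_add, ← mul_assoc]; exact mul_mem h.2 (pow_mem z_pos _)

theorem zn_comm {m : ℕ} (k : ℕ) (g : Br m) : z m ^ k * g = g * z m ^ k :=
  ((show Commute (z m) g from z_comm g).pow_left k).eq

theorem bd_inv {m : ℕ} {g : Br m} {r : ℕ} (h : bd g r) : bd g⁻¹ r :=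
  ⟨by rw [zn_comm]; exact h.2, by rw [inv_inv, ← zn_comm]; exact h.1⟩

theorem bd_mul {m : ℕ} {g h : Br m} {r t : ℕ} (hg : bd g r) (hh : bd h t) :
    bd (g * h) (r + t) := by
  constructor
  · have := mul_mem hg.1 hh.1
    rwa [mul_assoc, ← mul_assoc g, ← zn_comm, mul_assoc, ← mul_assoc, ← pow_add] at this
  · have := mul_mem hh.2 hg.2
    rw [mul_assoc, ← mul_assoc (z m ^ t), zn_comm t, mul_assoc, ← mul_assoc, ← pow_add,
      add_comm t r] at this
    rwa [mul_inv_rev]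

theorem exists_bd {m : ℕ} (g : Br m) : ∃ r, bd g r := by
  obtain ⟨N, hN⟩ := exists_pos g
  obtain ⟨K, hK⟩ := exists_pos g⁻¹
  refine ⟨N + K, ?_, ?_⟩
  · rw [add_comm, pow_add, mul_assoc]; exact mul_mem (pow_mem z_pos _) hN
  · rw [← zn_comm, pow_add, mul_assoc]; exact mul_mem (pow_mem z_pos _) hK

/-- The norm attached to the full twist. -/
noncomputable def nm {m : ℕ} (g : Br m) : ℕ := sInf {r | bd g r}

theorem nm_le {m : ℕ} {g : Br m} {r : ℕ} : nm g ≤ r ↔ bd g r :=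
  ⟨fun h => bd_mono (Nat.sInf_mem (s := {r | bd g r}) (exists_bd g)) h, fun h => Nat.sInf_le h⟩

theorem nm_one {m : ℕ} : nm (1 : Br m) = 0 := by
  have : nm (1 : Br m) ≤ 0 := nm_le.2 ⟨by simp, by simp⟩
  omega
theorem nm_mul {m : ℕ} (g h : Br m) : nm (g * h) ≤ nm g + nm h :=
  nm_le.2 (bd_mul (nm_le.1 le_rfl) (nm_le.1 le_rfl))
theorem nm_inv {m : ℕ} (g : Br m) : nm g⁻¹ = nm g :=
  le_antisymm (nm_le.2 (bd_inv (nm_le.1 le_rfl)))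
    (nm_le.2 (by simpa using bd_inv (g := g⁻¹) (nm_le.1 le_rfl)))

theorem nm_s {m : ℕ} (i : ℕ) : nm (s i : Br m) ≤ 1 := by
  rw [nm_le]
  by_cases h : i < m
  · refine ⟨mul_mem (by simpa using z_pos) (s_pos i), ?_⟩
    obtain ⟨c, hc, -⟩ := at_dvd_zM (⟨i, h⟩ : Fin m)
    refine ⟨c, ?_⟩
    rw [pow_one, ← toBr_zM, hc, map_mul, toBr_at]; simp
  · rw [s_of_ge (by omega)]; simpa [bd] using z_pos

/-- Helly property for balls. -/
theorem helly_nm {m : ℕ} {ι : Type*} (q : ι → Br m) (r : ι → ℕ)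
    (h : ∀ i j, nm ((q i)⁻¹ * q j) ≤ r i + r j) : ∃ p, ∀ i, nm (p⁻¹ * q i) ≤ r i := by
  cases isEmpty_or_nonempty ι
  · exact ⟨1, fun i => (IsEmpty.false i).elim⟩
  obtain ⟨p, hp⟩ := separate (fun i => (z m ^ r i)⁻¹ * q i) (fun i => z m ^ r i * q i) (by
    intro i j
    have := (nm_le.1 (h i j)).1
    rw [zn_comm, pow_add, ← mul_assoc] at this
    unfold le'
    rw [mul_inv_rev, inv_inv, mul_assoc, zn_comm (r j), ← mul_assoc (z m ^ r i), zn_comm (r i)]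
    simpa [mul_assoc] using this)
  refine ⟨p, fun i => nm_le.2 ⟨?_, ?_⟩⟩
  · have := (hp i).2
    unfold le' at this
    rwa [← mul_assoc, ← zn_comm, mul_assoc] at this
  · have := (hp i).1
    unfold le' at this
    rw [mul_inv_rev, inv_inv, mul_assoc, zn_comm] at this
    rw [mul_inv_rev, inv_inv, mul_assoc]
    exact this

end BC

namespace BC

/-! ### Reversal of the full twist -/

section
variable {M : Type*} [Monoid M] {m : ℕ} {f : ℕ → M}

/-- `f (k-1) * ... * f 0`. -/
def du (f : ℕ → M) : ℕ → M
  | 0 => 1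
  | k + 1 => f k * du f k

/-- `f (k-1) * ... * f (k-j)`. -/
def rd (f : ℕ → M) (k : ℕ) : ℕ → M
  | 0 => 1
  | j + 1 => rd f k j * f (k - 1 - j)

theorem rd_succ (k j : ℕ) (h : j ≤ k) : rd f (k + 1) (j + 1) = f k * rd f k j := by
  induction j with
  | zero => simp [rd]
  | succ j ih =>
    rw [rd, ih (by omega), rd, mul_assoc]
    congr 3; omega

theorem rd_self (k : ℕ) : rd f k k = du f k := by
  induction k with
  | zero => rfl
  | succ k ih => rw [rd_succ k k le_rfl, ih, du]

theorem BS.rd_dl (hf : BS m f) (k j : ℕ) (h : j + 1 ≤ k) (hk : k ≤ m) :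
    rd f k j * dl f k = dl f k * rd f (k - 1) j := by
  induction j with
  | zero => simp [rd]
  | succ j ih =>
    rw [rd, rd, mul_assoc, show k - 1 - j = (k - 1 - 1 - j) + 1 by omega,
      ← hf.dl_shift k (k - 1 - 1 - j) (by omega) hk, ← mul_assoc, ih (by omega), mul_assoc]

theorem BS.dl_pow (hf : BS m f) (k j : ℕ) (h : j ≤ k + 1) (hk : k + 1 ≤ m) :
    dl f (k + 1) ^ j = dl f k ^ j * rd f (k + 1) j := by
  induction j with
  | zero => simp [rd]
  | succ j ih =>
    rw [pow_succ, ih (by omega), mul_assoc, hf.rd_dl (k + 1) j (by omega) hk, dl, pow_succ,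
      rd_succ k j (by omega)]
    simp [mul_assoc]

/-- The full twist on one more strand. -/
theorem BS.tw_succ (hf : BS m f) (k : ℕ) (hk : k + 1 ≤ m) :
    tw f (k + 1) = tw f k * (du f (k + 1) * dl f (k + 1)) := by
  rw [tw, pow_succ, hf.dl_pow k (k + 1) le_rfl hk, rd_self, tw, mul_assoc]

end

/-- Word reversal. -/
noncomputable def rv {m : ℕ} (g : Br m) : Br m := (eps m g)⁻¹

theorem rv_mul {m : ℕ} (a b : Br m) : rv (a * b) = rv b * rv a := by simp [rv]
theorem rv_s {m : ℕ} (i : ℕ) : rv (s i : Br m) = s i := by simp [rv, eps_s]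
theorem rv_rv {m : ℕ} (g : Br m) : rv (rv g) = g := by simp [rv, eps_eps]
theorem rv_one {m : ℕ} : rv (1 : Br m) = 1 := by simp [rv]

theorem rv_dl {m : ℕ} (k : ℕ) : rv (dl s k : Br m) = du s k := by
  induction k with
  | zero => exact rv_one
  | succ k ih => rw [dl, rv_mul, ih, rv_s, du]
theorem rv_du {m : ℕ} (k : ℕ) : rv (du s k : Br m) = dl s k := by
  rw [← rv_dl, rv_rv]

theorem tw_comm_du {m : ℕ} (k l : ℕ) (hl : l ≤ k) (hk : k ≤ m) :
    Commute (tw s k : Br m) (du s l) := by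
  induction l with
  | zero => exact Commute.one_right _
  | succ l ih => exact Commute.mul_right ((bs_s m).tw_comm k l (by omega) hk) (ih (by omega))

theorem tw_comm_dl {m : ℕ} (k l : ℕ) (hl : l ≤ k) (hk : k ≤ m) :
    Commute (tw s k : Br m) (dl s l) := by
  induction l with
  | zero => exact Commute.one_right _
  | succ l ih => exact Commute.mul_right (ih (by omega)) ((bs_s m).tw_comm k l (by omega) hk)

theorem rv_tw {m : ℕ} (k : ℕ) (hk : k ≤ m) : rv (tw s k : Br m) = tw s k := by
  induction k with
  | zero => simp [tw, dl, rv_one]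
  | succ k ih =>
    have h1 := (bs_s m).tw_succ k hk
    have hc : Commute (tw s (k + 1) : Br m) (tw s k) :=
      (tw_comm_dl (k + 1) k (by omega) hk).pow_right _
    have hc2 : Commute (tw s k : Br m) (du s (k + 1) * dl s (k + 1)) := by
      have : (du s (k + 1) * dl s (k + 1) : Br m) = (tw s k)⁻¹ * tw s (k + 1) := by
        rw [h1, inv_mul_cancel_left]
      rw [this]
      exact (Commute.refl _).inv_right.mul_right hc.symm
    rw [h1, rv_mul, rv_mul, rv_du, rv_dl, ih (by omega), hc2.eq]

theorem rv_pos {m : ℕ} {g : Br m} (h : g ∈ Pos) : rv g ∈ Pos := by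
  obtain ⟨a, rfl⟩ := h
  induction a using mo_ind with
  | one => rw [map_one, rv_one]; exact one_mem _
  | mul i a ih => rw [map_mul, rv_mul, toBr_at, rv_s]; exact mul_mem ih (s_pos _)

theorem eps_z {m : ℕ} : eps m (z m) = (z m)⁻¹ := by
  have := rv_tw (m := m) m le_rfl
  rw [z, eq_comm, inv_eq_iff_eq_inv]; exact this.symm

theorem nm_eps {m : ℕ} (g : Br m) : nm (eps m g) = nm g := by
  have key : ∀ g : Br m, nm (eps m g) ≤ nm g := by
    intro g
    obtain ⟨h1, h2⟩ := nm_le.1 (le_refl (nm g))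
    rw [nm_le]
    have h1 := rv_pos h1
    have h2 := rv_pos h2
    rw [rv, map_mul, map_pow, eps_z, mul_inv_rev, inv_pow, inv_inv] at h1 h2
    refine ⟨?_, h1⟩
    simpa using h2
  exact le_antisymm (key g) (by simpa [eps_eps] using key (eps m g))

/-! ### Injective hulls and conjugators of bounded length -/

section Lang

variable {G : Type*} [Group G] (ν : G → ℕ) (h1 : ν 1 = 0) (hi : ∀ g, ν g⁻¹ = ν g)
  (hm : ∀ g h, ν (g * h) ≤ ν g + ν h)

/-- The left-invariant metric of a norm. -/
def ds (a b : G) : ℝ := ν (a⁻¹ * b)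

/-- The functions dominating the metric. -/
def InD (f : G → ℝ) : Prop := ∀ a b, ds ν a b ≤ f a + f b

/-- The conjugate function. -/
noncomputable def st (f : G → ℝ) (a : G) : ℝ := ⨆ b, (ds ν a b - f b)

/-- Averaging with the conjugate function. -/
noncomputable def qq (f : G → ℝ) (a : G) : ℝ := (f a + st ν f a) / 2

variable {ν}

theorem ds_left (x a b : G) : ds ν (x * a) (x * b) = ds ν a b := by simp [ds, mul_assoc]

include hm in
theorem ds_tri (a b c : G) : ds ν a c ≤ ds ν a b + ds ν b c := by
  have := hm (a⁻¹ * b) (b⁻¹ * c)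
  rw [show a⁻¹ * b * (b⁻¹ * c) = a⁻¹ * c by group] at this
  unfold ds; exact_mod_cast this

include hi in
theorem ds_symm (a b : G) : ds ν a b = ds ν b a := by
  unfold ds; rw [← hi, mul_inv_rev, inv_inv]

theorem st_bdd {f : G → ℝ} (hf : InD ν f) (a : G) :
    BddAbove (Set.range fun b => ds ν a b - f b) :=
  ⟨f a, by rintro _ ⟨b, rfl⟩; have := hf a b; simp only; linarith⟩

theorem le_st {f : G → ℝ} (hf : InD ν f) (a b : G) : ds ν a b - f b ≤ st ν f a :=
  le_ciSup (st_bdd hf a) b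

theorem st_le {f : G → ℝ} (hf : InD ν f) (a : G) : st ν f a ≤ f a :=
  ciSup_le fun b => by have := hf a b; linarith

theorem qq_le {f : G → ℝ} (hf : InD ν f) (a : G) : qq ν f a ≤ f a := by
  have := st_le hf a; unfold qq; linarith

include hi in
theorem InD.qq {f : G → ℝ} (hf : InD ν f) : InD ν (qq ν f) := by
  intro a b
  have h1 := le_st hf a b
  have h2 := le_st hf b a
  rw [ds_symm hi b a] at h2
  unfold BC.qq; linarith

theorem st_close {f g : G → ℝ} (hf : InD ν f) {c : ℝ}
    (h : ∀ a, f a ≤ g a + c) (a : G) : st ν g a ≤ st ν f a + c :=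
  ciSup_le fun b => by have := le_st hf a b; have := h b; linarith

theorem st_equiv {f : G → ℝ} (x a : G) : st ν (fun b => f (x * b)) a = st ν f (x * a) := by
  unfold st
  have e := (Equiv.mulLeft x).iSup_comp (g := fun b => ds ν (x * a) b - f b)
  rw [← e]
  simp [ds_left]

/-- The iterates of the averaging operator. -/
noncomputable def qn (ν : G → ℕ) (f : G → ℝ) : ℕ → G → ℝ
  | 0 => f
  | n + 1 => qq ν (qn ν f n)

/-- The extremal function below `f`. -/
noncomputable def pp (ν : G → ℕ) (f : G → ℝ) (a : G) : ℝ := ⨅ n, qn ν f n a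

include hi in
theorem InD.qn {f : G → ℝ} (hf : InD ν f) (n : ℕ) : InD ν (qn ν f n) := by
  induction n with
  | zero => exact hf
  | succ n ih => exact ih.qq hi

theorem InD.nonneg {f : G → ℝ} (hf : InD ν f) (a : G) : 0 ≤ f a := by
  have := hf a a
  have h : 0 ≤ ds ν a a := by unfold ds; positivity
  linarith

include hi in
theorem qn_tendsto {f : G → ℝ} (hf : InD ν f) (a : G) :
    Filter.Tendsto (fun n => qn ν f n a) Filter.atTop (nhds (pp ν f a)) :=
  tendsto_atTop_ciInf (antitone_nat_of_succ_le fun n => qq_le (hf.qn hi n) a)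
    ⟨0, by rintro _ ⟨n, rfl⟩; exact (hf.qn hi n).nonneg a⟩

include hi in
theorem pp_le {f : G → ℝ} (hf : InD ν f) (n : ℕ) (a : G) : pp ν f a ≤ qn ν f n a :=
  ciInf_le ⟨0, by rintro _ ⟨n, rfl⟩; exact (hf.qn hi n).nonneg a⟩ n

include hi in
theorem InD.pp {f : G → ℝ} (hf : InD ν f) : InD ν (pp ν f) := fun a b =>
  ge_of_tendsto' ((qn_tendsto hi hf a).add (qn_tendsto hi hf b)) fun n => hf.qn hi n a b

include hi in
/-- The limit of the averaging process is extremal, i.e. a point of the injective hull. -/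
theorem pp_extremal {f : G → ℝ} (hf : InD ν f) (a : G) : pp ν f a ≤ st ν (pp ν f) a := by
  have ht := qn_tendsto hi hf a
  have ht1 := (Filter.tendsto_add_atTop_iff_nat 1).2 ht
  have h2 := ht.sub ht1
  rw [sub_self] at h2
  have h3 : Filter.Tendsto (fun n => st ν (BC.pp ν f) a + 2 * (qn ν f n a - qn ν f (n + 1) a))
      Filter.atTop (nhds (st ν (BC.pp ν f) a + 2 * 0)) := (h2.const_mul 2).const_add _
  rw [mul_zero, add_zero] at h3
  refine ge_of_tendsto' h3 fun n => ?_
  have e : qn ν f (n + 1) a = (qn ν f n a + st ν (qn ν f n) a) / 2 := rfl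
  have h4 := st_close (hf.pp hi) (g := BC.qn ν f n) (c := 0) (fun b => by simpa using pp_le hi hf n b) a
  have h5 := pp_le hi hf n a
  rw [e]; linarith

include hi in
theorem pp_close {f g : G → ℝ} (hf : InD ν f) (hg : InD ν g) {c : ℝ}
    (h : ∀ a, |f a - g a| ≤ c) (a : G) : |pp ν f a - pp ν g a| ≤ c := by
  have key : ∀ n a, |qn ν f n a - qn ν g n a| ≤ c := by
    intro n
    induction n with
    | zero => exact h
    | succ n ih =>
      intro a
      have hf' := hf.qn hi n
      have hg' := hg.qn hi n
      have h1 := st_close hf' (g := qn ν g n) (fun a => by have := abs_le.1 (ih a); linarith [this.2]) a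
      have h2 := st_close hg' (g := qn ν f n) (fun a => by have := abs_le.1 (ih a); linarith [this.1]) a
      have h3 := abs_le.1 (ih a)
      simp only [qn, qq]
      rw [abs_le]; constructor <;> linarith [h3.1, h3.2]
  exact le_of_tendsto' ((qn_tendsto hi hf a).sub (qn_tendsto hi hg a)).abs fun n => key n a

theorem pp_equiv {f : G → ℝ} (x a : G) : pp ν (fun b => f (x * b)) a = pp ν f (x * a) := by
  have key : ∀ n a, qn ν (fun b => f (x * b)) n a = qn ν f n (x * a) := by
    intro n
    induction n with
    | zero => intro a; rfl
    | succ n ih =>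
      intro a
      have : qn ν (fun b => f (x * b)) n = fun b => qn ν f n (x * b) := funext ih
      simp only [qn, qq, this, st_equiv]
  unfold pp; simp only [key]

/-- `c` represents the extremal function of `f` up to `1`. -/
def Rep (ν : G → ℕ) (f : G → ℝ) (c : G) : Prop := ∀ a, |ds ν c a - pp ν f a| ≤ 1

/-- The metric Helly property for integer balls. -/
def Helly (ν : G → ℕ) : Prop := ∀ r : G → ℕ, (∀ a b, ν (a⁻¹ * b) ≤ r a + r b) →
  ∃ p, ∀ a, ν (p⁻¹ * a) ≤ r a

include hi hm in
/-- By the Helly property every point of the injective hull is within `1` of a group element. -/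
theorem exists_rep (hH : Helly ν) {f : G → ℝ} (hf : InD ν f) : ∃ c, Rep ν f c := by
  obtain ⟨c, hc⟩ := hH (fun a => ⌈pp ν f a⌉₊) (fun a b => by
    have := hf.pp hi a b
    have h1 := Nat.le_ceil (pp ν f a)
    have h2 := Nat.le_ceil (pp ν f b)
    unfold ds at this
    have : (ν (a⁻¹ * b) : ℝ) ≤ ⌈pp ν f a⌉₊ + ⌈pp ν f b⌉₊ := by linarith
    exact_mod_cast this)
  have hup : ∀ a, ds ν c a ≤ pp ν f a + 1 := by
    intro a
    have h1 : (ν (c⁻¹ * a) : ℝ) ≤ ⌈pp ν f a⌉₊ := by exact_mod_cast hc a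
    have h2 := Nat.ceil_lt_add_one ((hf.pp hi).nonneg a)
    unfold ds; linarith
  refine ⟨c, fun a => abs_le.2 ⟨?_, by linarith [hup a]⟩⟩
  have h3 := pp_extremal hi hf a
  have h4 : st ν (pp ν f) a ≤ ds ν c a + 1 := ciSup_le fun b => by
    have := hup b
    have := ds_tri hm a c b
    rw [ds_symm hi a c] at this
    linarith
  linarith

/-- The straight path from `ds 1` to `ds e`. -/
def gt (ν : G → ℕ) (e : G) (t : ℝ) (a : G) : ℝ := (1 - t) * ds ν 1 a + t * ds ν e a

include hi hm in
theorem InD_gt (e : G) {t : ℝ} (h0 : 0 ≤ t) (h1 : t ≤ 1) : InD ν (gt ν e t) := by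
  intro a b
  have ha := ds_tri hm a 1 b
  have hb := ds_tri hm a e b
  rw [ds_symm hi a 1] at ha
  rw [ds_symm hi a e] at hb
  unfold gt
  nlinarith

include hi hm in
/-- A geodesic of the injective hull, from the point of `1` to that of `e`, passes near a path of
conjugators in the group with steps of norm at most `3`, along which the conjugates of `x` stay in
the ball of radius `N + 2`. The Helly property lets group elements approximate hull points. -/
theorem lang_path (hH : Helly ν) (h1 : ν 1 = 0) {N : ℕ} (x e : G) (hx : ν x ≤ N)
    (hy : ν (e⁻¹ * x * e) ≤ N) :
    ∃ (K : ℕ) (c : ℕ → G), c 0 = 1 ∧ c K = e ∧ (∀ k ≤ K, ν ((c k)⁻¹ * x * c k) ≤ N + 2) ∧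
      ∀ k < K, ν ((c k)⁻¹ * c (k + 1)) ≤ 3 := by
  classical
  set K := ν e + 1 with hK
  have hKpos : (0 : ℝ) < K := by positivity
  have hdself : ∀ g : G, pp ν (ds ν g) = ds ν g ∧ InD ν (ds ν g) := by
    intro g
    have hI : InD ν (ds ν g) := fun a b => by
      have := ds_tri hm a g b; rwa [ds_symm hi a g] at this
    have hst : ∀ a, st ν (ds ν g) a = ds ν g a := fun a =>
      le_antisymm (st_le hI a) (by
        have := le_st hI a g
        have h0 : ds ν g g = 0 := by simp [ds, h1]
        rw [h0, ds_symm hi] at this; linarith)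
    have hq : qq ν (ds ν g) = ds ν g := by
      funext a; rw [qq, hst]; ring
    have hn : ∀ n, qn ν (ds ν g) n = ds ν g := by
      intro n
      induction n with
      | zero => rfl
      | succ n ih => rw [qn, ih, hq]
    refine ⟨?_, hI⟩
    funext a; unfold pp; simp [hn]
  have ht : ∀ k ≤ K, (0 : ℝ) ≤ k / K ∧ (k : ℝ) / K ≤ 1 := fun k hk =>
    ⟨by positivity, by rw [div_le_one hKpos]; exact_mod_cast hk⟩
  have hrep : ∀ k, ∃ c, k ≤ K → Rep ν (gt ν e (k / K)) c := by
    intro k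
    by_cases hk : k ≤ K
    · obtain ⟨c, hc⟩ := exists_rep hi hm hH (InD_gt hi hm e (ht k hk).1 (ht k hk).2)
      exact ⟨c, fun _ => hc⟩
    · exact ⟨1, fun h => absurd h hk⟩
  choose c0 hc0 using hrep
  let c : ℕ → G := fun k => if k = 0 then 1 else if k = K then e else c0 k
  have hc : ∀ k ≤ K, Rep ν (gt ν e (k / K)) (c k) := by
    intro k hk
    by_cases hk0 : k = 0
    · subst hk0
      have : gt ν e ((0 : ℕ) / K) = ds ν 1 := by funext a; simp [gt]
      rw [this]; intro a; simp [c, (hdself 1).1]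
    · by_cases hkK : k = K
      · subst hkK
        have : gt ν e ((K : ℝ) / K) = ds ν e := by funext a; rw [div_self hKpos.ne']; simp [gt]
        rw [this]; intro a; simp [c, hk0, (hdself e).1]
      · simpa [c, hk0, hkK] using hc0 k hk
  refine ⟨K, c, by simp [c], by simp [c, hK], ?_, ?_⟩
  · intro k hk
    have hI := InD_gt hi hm e (ht k hk).1 (ht k hk).2
    have hI' : InD ν (fun b => gt ν e (k / K) (x * b)) := fun a b => by
      have := hI (x * a) (x * b); rwa [ds_left] at this
    have hcl : ∀ a, |gt ν e (k / K) (x * a) - gt ν e (k / K) a| ≤ N := by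
      intro a
      have e1 : |ds ν 1 (x * a) - ds ν 1 a| ≤ N := by
        have a1 := ds_tri hm 1 x (x * a)
        have a2 := ds_tri hm x 1 (x * a)
        have a3 : ds ν x (x * a) = ds ν 1 a := by simp [ds]
        have a4 : ds ν 1 x ≤ N := by simpa [ds] using hx
        rw [ds_symm hi x 1] at a2
        rw [abs_le]; constructor <;> linarith
      have e2 : |ds ν e (x * a) - ds ν e a| ≤ N := by
        have a1 := ds_tri hm e (x * e) (x * a)
        have a2 := ds_tri hm (x * e) e (x * a)
        have a3 : ds ν (x * e) (x * a) = ds ν e a := ds_left x e a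
        have a4 : ds ν e (x * e) ≤ N := by
          unfold ds; rw [← mul_assoc]; exact_mod_cast hy
        rw [ds_symm hi (x * e) e] at a2
        rw [abs_le]; constructor <;> linarith
      have b1 := abs_le.1 e1
      have b2 := abs_le.1 e2
      obtain ⟨t0, t1⟩ := ht k hk
      unfold gt
      rw [abs_le]; constructor <;> nlinarith [b1.1, b1.2, b2.1, b2.2]
    have h2 := pp_close hi hI' hI hcl (c k)
    rw [pp_equiv] at h2
    have h3 := abs_le.1 (hc k hk (x * c k))
    have h4 := abs_le.1 (hc k hk (c k))
    have h5 : ds ν (c k) (c k) = 0 := by simp [ds, h1]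
    rw [h5] at h4
    have h6 : ds ν (c k) (x * c k) ≤ N + 2 := by
      have := (abs_le.1 h2).2; linarith [h3.2, h4.1]
    unfold ds at h6
    rw [mul_assoc]; exact_mod_cast h6
  · intro k hk
    have hk' : k ≤ K := by omega
    have hk1 : k + 1 ≤ K := by omega
    have hI := InD_gt hi hm e (ht k hk').1 (ht k hk').2
    have hI' := InD_gt hi hm e (ht (k+1) hk1).1 (ht (k+1) hk1).2
    have hcl : ∀ a, |gt ν e (k / K) a - gt ν e ((k + 1 : ℕ) / K) a| ≤ 1 := by
      intro a
      have e1 : gt ν e (k / K) a - gt ν e ((k + 1 : ℕ) / K) a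
          = (ds ν 1 a - ds ν e a) / K := by
        unfold gt; push_cast; field_simp; ring
      have a1 := ds_tri hm 1 e a
      have a2 := ds_tri hm e 1 a
      rw [ds_symm hi e 1] at a2
      have a3 : ds ν 1 e ≤ K := by
        simp only [ds, inv_one, one_mul, hK]; push_cast; linarith
      rw [e1, abs_le]
      constructor
      · rw [le_div_iff₀ hKpos]; linarith
      · rw [div_le_iff₀ hKpos]; linarith
    have h2 := abs_le.1 (pp_close hi hI hI' hcl (c (k + 1)))
    have h3 := abs_le.1 (hc k hk' (c (k + 1)))
    have h4 := abs_le.1 (hc (k + 1) hk1 (c (k + 1)))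
    have h5 : ds ν (c (k + 1)) (c (k + 1)) = 0 := by simp [ds, h1]
    rw [h5] at h4
    have h6 : ds ν (c k) (c (k + 1)) ≤ 3 := by linarith [h2.2, h3.2, h4.1]
    unfold ds at h6
    exact_mod_cast h6

include h1 hi hm in
/-- In a group with the Helly property, conjugate elements of small norm are conjugate by an
element of controlled norm. -/
theorem lang (hH : Helly ν) {N : ℕ} (x e : G) (hx : ν x ≤ N) (hy : ν (e⁻¹ * x * e) ≤ N)
    (V : Finset G) (hV : ∀ g, ν g ≤ N + 2 → g ∈ V) :
    ∃ e', e'⁻¹ * x * e' = e⁻¹ * x * e ∧ ν e' ≤ 3 * V.card := by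
  classical
  obtain ⟨K, c, hc0, hcK, hcN, hcs⟩ := lang_path hi hm hH h1 x e hx hy
  let Γ : SimpleGraph V :=
    { Adj := fun a b => a ≠ b ∧ ∃ g : G, ν g ≤ 3 ∧ g⁻¹ * a * g = b
      symm := ⟨fun a b h => ⟨h.1.symm, by
        obtain ⟨g, hg, e⟩ := h.2
        exact ⟨g⁻¹, by rwa [hi], by rw [← e]; group⟩⟩⟩
      loopless := ⟨fun a h => h.1 rfl⟩ }
  have hmem : ∀ k ≤ K, (c k)⁻¹ * x * c k ∈ V := fun k hk => hV _ (hcN k hk)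
  have hx0 : x ∈ V := by simpa [hc0] using hmem 0 (Nat.zero_le _)
  have hreach : ∀ k (hk : k ≤ K), Γ.Reachable ⟨x, hx0⟩ ⟨_, hmem k hk⟩ := by
    intro k
    induction k with
    | zero =>
      intro hk
      have : (⟨_, hmem 0 hk⟩ : V) = ⟨x, hx0⟩ := Subtype.ext (by simp [hc0])
      rw [this]
    | succ k ih =>
      intro hk
      refine (ih (by omega)).trans ?_
      by_cases he : (⟨_, hmem k (by omega)⟩ : V) = ⟨_, hmem (k + 1) hk⟩
      · rw [he]
      · exact SimpleGraph.Adj.reachable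
          ⟨he, (c k)⁻¹ * c (k + 1), hcs k (by omega), by simp only; group⟩
  have hwalk : ∀ {a b : V} (w : Γ.Walk a b), ∃ g : G, g⁻¹ * a * g = b ∧ ν g ≤ 3 * w.length := by
    intro a b w
    induction w with
    | nil => exact ⟨1, by simp, by simp [h1]⟩
    | cons h w ih =>
      obtain ⟨g, hg, hn⟩ := ih
      obtain ⟨f, hf, hf2⟩ := h.2
      refine ⟨f * g, by rw [← hg, ← hf2]; group, ?_⟩
      have := hm f g
      rw [SimpleGraph.Walk.length_cons]; omega
  obtain ⟨w⟩ := hreach K le_rfl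
  obtain ⟨g, hg, hn⟩ := hwalk w.toPath.1
  refine ⟨g, by simpa [hcK] using hg, ?_⟩
  have := w.toPath.2.length_lt
  rw [Fintype.card_coe] at this
  omega

end Lang

end BC

namespace BC

/-! ### The Helly property for free groups and for semidirect products -/

theorem common_initial {α : Type*} [DecidableEq α] (u v : List α) :
    ∃ w u' v', u = w ++ u' ∧ v = w ++ v' ∧ ∀ x ∈ u'.head?, x ∉ v'.head? := by
  induction u generalizing v with
  | nil => exact ⟨[], [], v, rfl, rfl, by simp⟩
  | cons a u ih =>
    cases v with
    | nil => exact ⟨[], a :: u, [], rfl, rfl, by simp⟩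
    | cons b v =>
      by_cases h : a = b
      · subst h
        obtain ⟨w, u', v', rfl, rfl, h⟩ := ih v
        exact ⟨a :: w, u', v', rfl, rfl, h⟩
      · exact ⟨[], a :: u, b :: v, rfl, rfl, by simpa using fun h' => h h'.symm⟩

/-- There is no cancellation in `u⁻¹ v` when `u` and `v` start with different letters. -/
theorem norm_diff {α : Type*} [DecidableEq α] {u v : List (α × Bool)}
    (hu : FreeGroup.IsReduced u) (hv : FreeGroup.IsReduced v)
    (h : ∀ x ∈ u.head?, x ∉ v.head?) :
    FreeGroup.norm ((FreeGroup.mk u)⁻¹ * FreeGroup.mk v) = u.length + v.length := by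
  have hr : FreeGroup.IsReduced (FreeGroup.invRev u ++ v) := by
    unfold FreeGroup.IsReduced
    rw [List.isChain_append]
    refine ⟨?_, hv, ?_⟩
    · rw [FreeGroup.invRev, List.isChain_reverse, List.isChain_map]
      exact hu.imp fun a b h e => by simpa using (h e.symm).symm
    rintro x hx y hy hxy
    cases u with
    | nil => simp [FreeGroup.invRev] at hx
    | cons a u =>
      simp only [FreeGroup.invRev, List.map_cons, List.reverse_cons, List.getLast?_concat,
        Option.mem_def, Option.some.injEq] at hx
      subst hx
      have := h a (by simp)
      by_contra hne
      apply this
      have : a = y := Prod.ext hxy (by simp at hne; cases h1 : a.2 <;> cases h2 : y.2 <;> simp_all)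
      rwa [this]
  rw [FreeGroup.inv_mk, FreeGroup.mul_mk, FreeGroup.norm, FreeGroup.toWord_mk, hr.reduce_eq]
  simp

/-- Trees have the Helly property for balls. -/
theorem helly_free {α ι : Type*} [DecidableEq α] (q : ι → FreeGroup α) (r : ι → ℕ)
    (h : ∀ i j, FreeGroup.norm ((q i)⁻¹ * q j) ≤ r i + r j) :
    ∃ p, ∀ i, FreeGroup.norm (p⁻¹ * q i) ≤ r i := by
  by_cases hall : ∀ i, FreeGroup.norm (q i) ≤ r i
  · exact ⟨1, by simpa using hall⟩
  push Not at hall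
  obtain ⟨i0, hi0⟩ := hall
  have hbd : BddAbove {k | ∃ i, FreeGroup.norm (q i) = r i + k} :=
    ⟨FreeGroup.norm (q i0) + r i0, by
      rintro k ⟨i, hi⟩
      have h1 := h i0 i
      have h2 := FreeGroup.norm_mul_le (q i0) ((q i0)⁻¹ * q i)
      rw [mul_inv_cancel_left] at h2
      omega⟩
  obtain ⟨k, ⟨i1, hi1⟩, hmax⟩ : ∃ k, (∃ i, FreeGroup.norm (q i) = r i + k) ∧
      ∀ i k', FreeGroup.norm (q i) = r i + k' → k' ≤ k :=
    ⟨_, Nat.sSup_mem (s := {k | ∃ i, FreeGroup.norm (q i) = r i + k})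
      ⟨FreeGroup.norm (q i0) - r i0, i0, by omega⟩ hbd,
      fun i k' hk => le_csSup hbd ⟨i, hk⟩⟩
  refine ⟨FreeGroup.mk ((q i1).toWord.take k), fun i => ?_⟩
  obtain ⟨w, u', v', hu, hv, hd⟩ := common_initial (q i1).toWord (q i).toWord
  have e1 : q i1 = FreeGroup.mk w * FreeGroup.mk u' := by
    rw [FreeGroup.mul_mk, ← hu, FreeGroup.mk_toWord]
  have e2 : q i = FreeGroup.mk w * FreeGroup.mk v' := by
    rw [FreeGroup.mul_mk, ← hv, FreeGroup.mk_toWord]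
  have l1 : FreeGroup.norm (q i1) = w.length + u'.length := by
    rw [FreeGroup.norm, hu, List.length_append]
  have l2 : FreeGroup.norm (q i) = w.length + v'.length := by
    rw [FreeGroup.norm, hv, List.length_append]
  have ru : FreeGroup.IsReduced u' := by
    have : FreeGroup.IsReduced (w ++ u') := hu ▸ FreeGroup.isReduced_toWord
    exact List.IsChain.right_of_append this
  have rv : FreeGroup.IsReduced v' := by
    have : FreeGroup.IsReduced (w ++ v') := hv ▸ FreeGroup.isReduced_toWord
    exact List.IsChain.right_of_append this
  by_cases hk : k ≤ w.length
  · have : (FreeGroup.mk ((q i1).toWord.take k))⁻¹ * q i = FreeGroup.mk (w.drop k ++ v') := by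
      rw [hu, List.take_append_of_le_length hk, e2, ← FreeGroup.mul_mk, inv_mul_eq_iff_eq_mul,
        ← mul_assoc, FreeGroup.mul_mk (L₁ := w.take k), List.take_append_drop]
    rw [this]
    have h1 := FreeGroup.norm_mk_le (L₁ := w.drop k ++ v')
    simp only [List.length_append, List.length_drop] at h1
    rcases Nat.lt_or_ge (FreeGroup.norm (q i)) (r i) with hlt | hge
    · omega
    · have := hmax i (FreeGroup.norm (q i) - r i) (by omega)
      omega
  · have hnd := h i1 i
    have : (q i1)⁻¹ * q i = (FreeGroup.mk u')⁻¹ * FreeGroup.mk v' := by rw [e1, e2]; group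
    rw [this, norm_diff ru rv hd] at hnd
    have : (FreeGroup.mk ((q i1).toWord.take k))⁻¹ * q i
        = (FreeGroup.mk (u'.take (k - w.length)))⁻¹ * FreeGroup.mk v' := by
      rw [hu, List.take_append, List.take_of_length_le (by omega), e2, ← FreeGroup.mul_mk]; group
    rw [this]
    have h1 := FreeGroup.norm_mul_le (FreeGroup.mk (u'.take (k - w.length)))⁻¹ (FreeGroup.mk v')
    rw [FreeGroup.norm_inv_eq] at h1
    have h2 := FreeGroup.norm_mk_le (L₁ := u'.take (k - w.length))
    have h3 := FreeGroup.norm_mk_le (L₁ := v')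
    rw [List.length_take] at h2
    omega

section semi
variable {m k : ℕ} (θ : FreeGroup (Fin k) →* MulAut (Br m))
  (hθ : ∀ h g, nm (θ h g) = nm g)

/-- The maximum norm on the semidirect product. -/
noncomputable def sn (g : Br m ⋊[θ] FreeGroup (Fin k)) : ℕ := max (nm g.left) (FreeGroup.norm g.right)

theorem sn_one : sn θ 1 = 0 := by simp [sn, nm_one]

include hθ

theorem sn_inv (g) : sn θ g⁻¹ = sn θ g := by
  rw [sn, SemidirectProduct.inv_left, hθ, nm_inv, SemidirectProduct.inv_right,
    FreeGroup.norm_inv_eq, sn]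

theorem sn_mul (g h) : sn θ (g * h) ≤ sn θ g + sn θ h := by
  have h1 := nm_mul g.left (θ g.right h.left)
  rw [hθ] at h1
  have h2 := FreeGroup.norm_mul_le g.right h.right
  simp only [sn, SemidirectProduct.mul_left, SemidirectProduct.mul_right]
  omega

theorem sn_dist (g h : Br m ⋊[θ] FreeGroup (Fin k)) : sn θ (g⁻¹ * h) =
    max (nm (g.left⁻¹ * h.left)) (FreeGroup.norm (g.right⁻¹ * h.right)) := by
  simp only [sn, SemidirectProduct.mul_left, SemidirectProduct.mul_right,
    SemidirectProduct.inv_left, SemidirectProduct.inv_right]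
  rw [← map_mul, hθ]

/-- As the action preserves `nm`, distances are maxima of the distances of the coordinates, and the
Helly property passes to the semidirect product. -/
theorem sn_helly : Helly (sn θ) := by
  intro r hr
  simp only [sn_dist θ hθ] at *
  obtain ⟨p, hp⟩ := helly_nm (fun a : Br m ⋊[θ] FreeGroup (Fin k) => a.left) r
    (fun a b => (le_max_left _ _).trans (hr a b))
  obtain ⟨q, hq⟩ := helly_free (fun a : Br m ⋊[θ] FreeGroup (Fin k) => a.right) r
    (fun a b => (le_max_right _ _).trans (hr a b))
  exact ⟨⟨p, q⟩, fun a => max_le (hp a) (hq a)⟩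

end semi

end BC

namespace BC

/-! ### The Artin action on a free group -/

/-- The free group on the `m + 1` strands of `Br m`. -/
abbrev FF (m : ℕ) := FreeGroup (Fin (m + 1))

/-- The free generators indexed by all naturals; out-of-range indices give `1`. -/
def x {m : ℕ} (j : ℕ) : FF m := if h : j < m + 1 then FreeGroup.of ⟨j, h⟩ else 1

theorem x_of_lt {m j : ℕ} (h : j < m + 1) : (x j : FF m) = FreeGroup.of ⟨j, h⟩ := dif_pos h
theorem x_of_ge {m j : ℕ} (h : m < j) : (x j : FF m) = 1 := dif_neg (by omega)

/-- The homomorphism out of `FF m` determined by images of generators. -/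
def FL {G : Type*} [Group G] {m : ℕ} (y : ℕ → G) : FF m →* G := FreeGroup.lift (fun j => y j)

theorem FL_x {G : Type*} [Group G] {m : ℕ} (y : ℕ → G) {j : ℕ} (h : j ≤ m) :
    FL y (x j : FF m) = y j := by
  rw [x_of_lt (by omega)]; simp [FL]

theorem fr_ext {G : Type*} [Group G] {m : ℕ} {f g : FF m →* G}
    (h : ∀ j ≤ m, f (x j) = g (x j)) : f = g := by
  apply FreeGroup.ext_hom; intro j
  have := h j (by omega); rwa [x_of_lt j.2] at this

theorem fr_closure (m : ℕ) : Subgroup.closure {g : FF m | ∃ i ≤ m, g = x i} = ⊤ := by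
  rw [← FreeGroup.closure_range_of]
  congr 1; ext g; constructor
  · rintro ⟨i, h, rfl⟩; exact ⟨⟨i, by omega⟩, (x_of_lt _).symm⟩
  · rintro ⟨i, rfl⟩; exact ⟨i, by omega, (x_of_lt i.2).symm⟩

theorem fr_sub_top {m : ℕ} (H : Subgroup (FF m)) (h : ∀ i ≤ m, x i ∈ H) (g : FF m) : g ∈ H := by
  have : Subgroup.closure {g : FF m | ∃ i ≤ m, g = x i} ≤ H := by
    rw [Subgroup.closure_le]; rintro _ ⟨i, hi, rfl⟩; exact h i hi
  rw [fr_closure] at this; exact this trivial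

section am
variable {G : Type*} [Group G]

/-- The elementary Artin substitution in positions `i, i + 1`. -/
def am (i : ℕ) (y : ℕ → G) : ℕ → G := fun j =>
  if j = i then y (i + 1) else if j = i + 1 then (y (i + 1))⁻¹ * y i * y (i + 1) else y j

/-- The inverse of the elementary Artin substitution. -/
def am' (i : ℕ) (y : ℕ → G) : ℕ → G := fun j =>
  if j = i then y i * y (i + 1) * (y i)⁻¹ else if j = i + 1 then y i else y j

theorem am_am' (i : ℕ) (y : ℕ → G) : am i (am' i y) = y := by
  funext j; simp only [am, am']; split_ifs <;> first | omega | (subst_vars; simp [mul_assoc])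
theorem am'_am (i : ℕ) (y : ℕ → G) : am' i (am i y) = y := by
  funext j; simp only [am, am']; split_ifs <;> first | omega | (subst_vars; simp [mul_assoc])
theorem am_comm (i k : ℕ) (h : i + 1 < k) (y : ℕ → G) : am i (am k y) = am k (am i y) := by
  funext j; simp only [am]; split_ifs <;> first | omega | rfl
theorem am_braid (i : ℕ) (y : ℕ → G) :
    am i (am (i+1) (am i y)) = am (i+1) (am i (am (i + 1) y)) := by
  funext j; simp only [am]; split_ifs <;> first | omega | rfl | (subst_vars; simp [mul_assoc])
end am

theorem FL_am {G : Type*} [Group G] {m : ℕ} (y : ℕ → G) {i : ℕ} (h : i < m) {j : ℕ} (hj : j ≤ m) :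
    FL y (am i (x : ℕ → FF m) j) = am i y j := by
  unfold am; split_ifs <;> simp [FL_x, hj, show i ≤ m by omega, show i + 1 ≤ m by omega]
theorem FL_am' {G : Type*} [Group G] {m : ℕ} (y : ℕ → G) {i : ℕ} (h : i < m) {j : ℕ} (hj : j ≤ m) :
    FL y (am' i (x : ℕ → FF m) j) = am' i y j := by
  unfold am'; split_ifs <;> simp [FL_x, hj, show i ≤ m by omega, show i + 1 ≤ m by omega]

/-- The automorphism by which the `i`-th Artin generator acts. -/
def artG (m i : ℕ) (h : i < m) : MulAut (FF m) :=
  MonoidHom.toMulEquiv (FL (am i x)) (FL (am' i x))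
    (fr_ext fun j hj => by simp [FL_x, hj, FL_am _ h hj, am_am'])
    (fr_ext fun j hj => by simp [FL_x, hj, FL_am' _ h hj, am'_am])

/-- Total version of `artG`. -/
def artG' (m i : ℕ) : MulAut (FF m) := if h : i < m then artG m i h else 1

theorem artG_x {m i j : ℕ} (h : i < m) (hj : j ≤ m) : artG' m i (x j) = am i x j := by
  rw [artG', dif_pos h]; exact FL_x _ hj

theorem artG_eq {m i : ℕ} (h : i < m) (g : FF m) : artG' m i g = FL (am i x) g := by
  rw [artG', dif_pos h]; rfl

theorem mulAut_ext {m : ℕ} {f g : MulAut (FF m)} (h : ∀ j ≤ m, f (x j) = g (x j)) : f = g := by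
  have : f.toMonoidHom = g.toMonoidHom := fr_ext h
  ext a; exact DFunLike.congr_fun this a

theorem FL_comp {m i : ℕ} (h : i < m) {G : Type*} [Group G] (y : ℕ → G) (g : FF m) :
    FL y (FL (am i (x : ℕ → FF m)) g) = FL (am i y) g := by
  have : (FL y).comp (FL (am i (x : ℕ → FF m))) = FL (m := m) (am i y) :=
    fr_ext fun j hj => by simp [FL_x, hj, FL_am _ h hj]
  exact DFunLike.congr_fun this g

theorem bs_art (m : ℕ) : BS m (artG' m) where
  comm i j h hj := by
    apply mulAut_ext; intro k hk
    simp only [MulAut.mul_apply, artG_eq hj, artG_eq (show i < m by omega)]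
    rw [FL_comp hj, FL_comp (show i < m by omega), am_comm i j h]
  braid i h := by
    apply mulAut_ext; intro k hk
    simp only [MulAut.mul_apply, artG_eq h, artG_eq (show i < m by omega)]
    have hi : i < m := by omega
    rw [FL_comp h (am i x), FL_comp hi (am (i + 1) (am i x)), FL_comp hi (am (i + 1) x),
      FL_comp h (am i (am (i + 1) x)), am_braid]

/-- The Artin action of the braid group on the free group. -/
def art (m : ℕ) : Br m →* MulAut (FF m) := lift (artG' m) (bs_art m)

theorem art_s {m i j : ℕ} (h : i < m) (hj : j ≤ m) : art m (s i) (x j) = am i x j := by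
  rw [art, lift_s _ _ h, artG_x h hj]

theorem art_s_fl {m i : ℕ} (h : i < m) (g : FF m) : art m (s i) g = FL (am i x) g := by
  rw [art, lift_s _ _ h, artG_eq h]

/-- The product `x_o x_{o+1} ⋯ x_{o+k-1}`. -/
def wd (m o k : ℕ) : FF m := dl (fun j => x (o + j)) k

theorem wd_succ (m o k : ℕ) : wd m o (k + 1) = wd m o k * x (o + k) := rfl
theorem wd_succ' (m o k : ℕ) : wd m o (k + 1) = x o * wd m (o + 1) k := by
  induction k with
  | zero => simp [wd, dl]
  | succ k ih => rw [wd_succ, ih, wd_succ, mul_assoc]; congr 3; omega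

theorem art_lt {m o k i : ℕ} (hi : i < m) (h : i + 1 < o ∨ o + k ≤ i) (hk : o + k ≤ m + 1) :
    art m (s i) (wd m o k) = wd m o k := by
  induction k with
  | zero => simp [wd, dl]
  | succ k ih =>
    rw [wd_succ, map_mul, ih (by omega) (by omega), art_s hi (by omega), am, if_neg (by omega),
      if_neg (by omega)]

theorem art_wd {m o k i : ℕ} (hk : o + k ≤ m + 1) (h1 : o ≤ i) (h2 : i + 1 < o + k) :
    art m (s i) (wd m o k) = wd m o k := by
  induction k with
  | zero => omega
  | succ k ih =>
    rcases Nat.lt_or_ge (i + 1) (o + k) with h | h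
    · rw [wd_succ, map_mul, ih (by omega) h, art_s (by omega) (by omega), am, if_neg (by omega),
        if_neg (by omega)]
    · obtain ⟨l, rfl⟩ : ∃ l, k = l + 1 := ⟨k - 1, by omega⟩
      obtain rfl : i = o + l := by omega
      rw [wd_succ, wd_succ, map_mul, map_mul, art_lt (by omega) (by omega) (by omega),
        art_s (by omega) (by omega), art_s (by omega) (by omega)]
      simp [am, mul_assoc, ← add_assoc]

/-- Position-shifted generators. -/
def so (m o : ℕ) : ℕ → Br m := fun j => s (o + j)

theorem bs_so (m o : ℕ) : BS (m - o) (so m o) :=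
  ⟨fun i j h _ => s_comm _ _ (by omega), fun i h => s_braid (o + i) (by omega)⟩

theorem art_dl_fix {m o k j : ℕ} (hk : o + k ≤ m) (hj : j < o ∨ o + k < j) (hjm : j ≤ m) :
    art m (dl (so m o) k) (x j) = x j := by
  induction k with
  | zero => simp [dl]
  | succ k ih =>
    rw [dl, map_mul, MulAut.mul_apply, so, art_s (by omega) hjm, am, if_neg (by omega),
      if_neg (by omega), ih (by omega) (by omega)]

theorem art_dl {m o k : ℕ} (hk : o + k ≤ m) :
    (∀ j < k, art m (dl (so m o) k) (x (o + j)) = x (o + j + 1)) ∧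
    art m (dl (so m o) k) (x (o + k)) = (wd m (o+1) k)⁻¹ * x o * wd m (o+1) k := by
  induction k with
  | zero => simp [dl, wd]
  | succ k ih =>
    obtain ⟨h1, h2⟩ := ih (by omega)
    constructor
    · intro j hj
      rw [dl, map_mul, MulAut.mul_apply, so, art_s (by omega) (by omega), am]
      by_cases e : j = k
      · subst e; simp only [if_true]
        exact art_dl_fix (by omega) (by omega) (by omega)
      · rw [if_neg (by omega), if_neg (by omega), h1 j (by omega)]
    · rw [dl, map_mul, MulAut.mul_apply, so, art_s (by omega) (by omega), am, if_neg (by omega),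
        if_pos (by omega), map_mul, map_mul, map_inv, h2,
        art_dl_fix (by omega) (by omega) (by omega), wd_succ]
      rw [show o + k + 1 = o + 1 + k by omega]; simp [mul_assoc]

/-- `art` of the full twist on strands `o,…,o+k`, as conjugation by their product. -/
theorem art_tw_mem {m o k j : ℕ} (hk : o + k ≤ m) (h1 : o ≤ j) (h2 : j ≤ o + k) :
    art m (tw (so m o) k) (x j) = (wd m o (k+1))⁻¹ * x j * wd m o (k+1) := by
  obtain ⟨i, rfl⟩ : ∃ i, j = o + i := ⟨j - o, by omega⟩
  obtain ⟨hs, hl⟩ := art_dl (m := m) (o := o) (k := k) hk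
  have hw : art m (dl (so m o) k) (wd m o (k + 1)) = wd m o (k + 1) := by
    have : ∀ l ≤ k, art m (dl (so m o) l) (wd m o (k + 1)) = wd m o (k + 1) := by
      intro l hl
      induction l with
      | zero => simp [dl]
      | succ l ih =>
        rw [dl, map_mul, MulAut.mul_apply, so, art_wd (by omega) (by omega) (by omega),
          ih (by omega)]
    exact this k le_rfl
  have hl' : art m (dl (so m o) k) (x (o + k)) = (wd m o (k+1))⁻¹ * x o * wd m o (k+1) := by
    rw [hl, wd_succ']; simp [mul_assoc]
  have hp : ∀ r, i + r ≤ k → art m (dl (so m o) k ^ r) (x (o + i)) = x (o + i + r) := by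
    intro r hr
    induction r with
    | zero => simp
    | succ r ih =>
      rw [pow_succ', map_mul, MulAut.mul_apply, ih (by omega), add_assoc, hs _ (by omega)]; congr 1; omega
  have hw' : ∀ r, art m (dl (so m o) k ^ r) (wd m o (k + 1)) = wd m o (k + 1) := by
    intro r
    induction r with
    | zero => simp
    | succ r ih => rw [pow_succ', map_mul, MulAut.mul_apply, ih, hw]
  have hp0 : ∀ r, r ≤ k → art m (dl (so m o) k ^ r) (x o) = x (o + r) := by
    intro r hr
    induction r with
    | zero => simp
    | succ r ih =>
      rw [pow_succ', map_mul, MulAut.mul_apply, ih (by omega), hs _ (by omega)]; rfl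
  rw [tw, show k + 1 = i + (1 + (k - i)) by omega, pow_add, map_mul, MulAut.mul_apply,
    pow_add, map_mul, MulAut.mul_apply, hp _ (by omega), pow_one,
    show o + i + (k - i) = o + k by omega, hl', map_mul, map_mul, map_inv, hw', hp0 _ (by omega),
    show i + (1 + (k - i)) = k + 1 by omega]

theorem art_tw_fix {m o k j : ℕ} (hk : o + k ≤ m) (hj : j < o ∨ o + k < j) (hjm : j ≤ m) :
    art m (tw (so m o) k) (x j) = x j := by
  have : ∀ r, art m (dl (so m o) k ^ r) (x j) = x j := by
    intro r
    induction r with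
    | zero => simp
    | succ r ih => rw [pow_succ', map_mul, MulAut.mul_apply, ih, art_dl_fix hk hj hjm]
  exact this _

theorem art_tw {m : ℕ} (g : FF m) : art m (z m) g = (wd m 0 (m+1))⁻¹ * g * wd m 0 (m+1) := by
  have : art m (z m) = MulAut.conj (wd m 0 (m+1))⁻¹ := by
    apply mulAut_ext; intro j hj
    have h := art_tw_mem (m := m) (o := 0) (k := m) (by omega) (Nat.zero_le j) (by omega)
    have e : so m 0 = s := by funext i; simp [so]
    rw [e] at h; simpa [z] using h
  rw [this]; simp

theorem art_w {m : ℕ} (b : Br m) : art m b (wd m 0 (m+1)) = wd m 0 (m+1) := by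
  induction b using br_ind with
  | one => simp
  | mul a b ha hb => rw [map_mul, MulAut.mul_apply, hb, ha]
  | gen i h => exact art_wd (by omega) (by omega) (by omega)
  | inv a ha =>
    rw [map_inv]; nth_rw 1 [← ha]; exact MulAut.inv_apply_self _ _ _

end BC

namespace BC

/-! ### Cocycles on the braid group -/

section cocycle
variable {X G : Type*} [Group G]

/-- The permutation of `X × G` given by a permutation of `X` twisted by `c : X → G`. -/
def tp (p : Equiv.Perm X) (c : X → G) : Equiv.Perm (X × G) where
  toFun a := (p a.1, c a.1 * a.2)
  invFun a := (p.symm a.1, (c (p.symm a.1))⁻¹ * a.2)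
  left_inv a := by simp
  right_inv a := by simp

/-- The cocycle identities making the twisted permutations satisfy the braid relations. -/
structure CO (m : ℕ) (p : ℕ → Equiv.Perm X) (c : ℕ → X → G) : Prop where
  bs : BS m p
  comm : ∀ i j, i + 1 < j → j < m → ∀ k, c i (p j k) * c j k = c j (p i k) * c i k
  braid : ∀ i, i + 1 < m → ∀ k, c i (p (i+1) (p i k)) * c (i+1) (p i k) * c i k =
    c (i+1) (p i (p (i+1) k)) * c i (p (i+1) k) * c (i+1) k

variable {m : ℕ} {p : ℕ → Equiv.Perm X} {c : ℕ → X → G}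

theorem CO.bs_tp (h : CO m p c) : BS m (fun i => tp (p i) (c i)) where
  comm i j hij hj := by
    ext1 ⟨k, g⟩
    have h1 := DFunLike.congr_fun (h.bs.comm i j hij hj) k
    simp only [Equiv.Perm.mul_apply, tp, Equiv.coe_fn_mk] at h1 ⊢
    rw [h1, ← mul_assoc, ← mul_assoc, h.comm i j hij hj]
  braid i hi := by
    ext1 ⟨k, g⟩
    have h1 := DFunLike.congr_fun (h.bs.braid i hi) k
    simp only [Equiv.Perm.mul_apply, tp, Equiv.coe_fn_mk] at h1 ⊢
    rw [h1]; simp only [← mul_assoc]; rw [h.braid i hi]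

/-- The cocycle extending the values `c i` on the generators. -/
def CO.co (h : CO m p c) (b : Br m) (k : X) : G := (lift _ h.bs_tp b (k, 1)).2

theorem CO.act (h : CO m p c) (b : Br m) (k : X) (g : G) :
    lift _ h.bs_tp b (k, g) = (lift _ h.bs b k, h.co b k * g) := by
  have key : (lift _ h.bs_tp b (k, 1)).1 = lift _ h.bs b k ∧
      ∀ g a, lift _ h.bs_tp b (k, g * a) =
        ((lift _ h.bs_tp b (k, g)).1, (lift _ h.bs_tp b (k, g)).2 * a) := by
    induction b using br_ind generalizing k with
    | one => simp
    | mul a b ha hb =>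
      constructor
      · rw [map_mul, map_mul, Equiv.Perm.mul_apply, Equiv.Perm.mul_apply, ← (hb k).1,
          ← (ha _).1]
        have := (ha (lift _ h.bs_tp b (k, 1)).1).2 1 (lift _ h.bs_tp b (k, 1)).2
        rw [one_mul] at this
        rw [show lift _ h.bs_tp b (k, 1) = ((lift _ h.bs_tp b (k, 1)).1,
          (lift _ h.bs_tp b (k, 1)).2) from rfl, this]
      · intro g d
        rw [map_mul, Equiv.Perm.mul_apply, (hb k).2, (ha _).2, Equiv.Perm.mul_apply]
    | gen i hi =>
      rw [lift_s _ _ hi, lift_s _ _ hi]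
      simp [tp, mul_assoc]
    | inv b hb =>
      have h1 : ∀ g, lift _ h.bs_tp b ((lift _ h.bs b).symm k, g) =
          (k, h.co b ((lift _ h.bs b).symm k) * g) := by
        intro g
        obtain ⟨e1, e2⟩ := hb ((lift _ h.bs b).symm k)
        have := e2 1 g
        rw [one_mul] at this
        rw [this, e1]; simp [CO.co]
      have h2 : ∀ g, lift _ h.bs_tp b⁻¹ (k, g) =
          ((lift _ h.bs b).symm k, (h.co b ((lift _ h.bs b).symm k))⁻¹ * g) := by
        intro g
        rw [map_inv, Equiv.Perm.inv_eq_iff_eq, h1]; simp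
      refine ⟨by rw [h2]; rw [map_inv]; rfl, fun g a => by rw [h2, h2]; simp [mul_assoc]⟩
  have := key.2 1 g
  rw [one_mul] at this
  rw [this, key.1]; rfl

theorem CO.co_one (h : CO m p c) (k : X) : h.co 1 k = 1 := by simp [CO.co]
theorem CO.co_mul (h : CO m p c) (a b : Br m) (k : X) :
    h.co (a * b) k = h.co a (lift _ h.bs b k) * h.co b k := by
  have h1 := h.act (a * b) k 1
  rw [map_mul, Equiv.Perm.mul_apply, h.act b, h.act a] at h1
  simpa using (congrArg Prod.snd h1).symm
theorem CO.co_inv (h : CO m p c) (b : Br m) (k : X) :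
    h.co b⁻¹ (lift _ h.bs b k) = (h.co b k)⁻¹ := by
  have := h.co_mul b⁻¹ b k
  rw [inv_mul_cancel, h.co_one] at this
  exact (inv_eq_of_mul_eq_one_left this.symm).symm
theorem CO.co_s (h : CO m p c) {i : ℕ} (hi : i < m) (k : X) : h.co (s i) k = c i k := by
  rw [CO.co, lift_s _ _ hi]; simp [tp]

end cocycle

/-! ### The permutation of a braid -/

theorem bs_swap (m : ℕ) : BS m (fun i => Equiv.swap i (i + 1)) where
  comm i j h _ := by
    ext k; simp only [Equiv.Perm.mul_apply, Equiv.swap_apply_def]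
    split_ifs <;> omega
  braid i h := by
    ext k; simp only [Equiv.Perm.mul_apply, Equiv.swap_apply_def]
    split_ifs <;> omega

/-- The permutation of the strands `0,…,m` induced by a braid. -/
def rho (m : ℕ) : Br m →* Equiv.Perm ℕ := lift _ (bs_swap m)

theorem rho_s {m i : ℕ} (h : i < m) : rho m (s i) = Equiv.swap i (i + 1) := lift_s _ _ h

theorem rho_gt {m : ℕ} (b : Br m) (k : ℕ) (hk : m < k) : rho m b k = k := by
  induction b using br_ind with
  | one => simp
  | mul a b ha hb => rw [map_mul, Equiv.Perm.mul_apply, hb, ha]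
  | gen i h => rw [rho_s h]; exact Equiv.swap_apply_of_ne_of_ne (by omega) (by omega)
  | inv a ha => rw [map_inv, Equiv.Perm.inv_eq_iff_eq, ha]

theorem rho_le {m : ℕ} (b : Br m) (k : ℕ) (hk : k ≤ m) : rho m b k ≤ m := by
  by_contra h
  have := rho_gt b⁻¹ (rho m b k) (by omega)
  rw [map_inv, Equiv.Perm.inv_eq_iff_eq] at this
  have := (rho m b).injective this
  omega

/-! ### The point-pushing subgroup -/

/-- `F ⋊ B`, which is the stabilizer of strand `0` in the next braid group. -/
abbrev GG (m : ℕ) := FF m ⋊[art m] Br m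

section yy
variable {m : ℕ}

/-- `y_j = σ_j ⋯ σ_1 σ_0 σ_1⁻¹ ⋯ σ_j⁻¹`. -/
def yy : ℕ → Br (m + 1)
  | 0 => s 0
  | j + 1 => s (j + 1) * yy j * (s (j + 1))⁻¹

theorem yy_comm_gt (j i : ℕ) (h : j + 1 < i) : (yy j : Br (m+1)) * s i = s i * yy j := by
  induction j with
  | zero => exact s_comm _ _ h
  | succ j ih =>
    have h1 : Commute (s (j+1) : Br (m+1)) (s i) := s_comm _ _ h
    exact ((h1.mul_left (ih (by omega))).mul_left h1.inv_left).eq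

theorem yy_braid (j : ℕ) (h : j < m) :
    (yy j : Br (m+1)) * s (j + 1) * yy j = s (j + 1) * yy j * s (j + 1) := by
  induction j with
  | zero => exact s_braid _ (by omega)
  | succ j ih =>
    have ih := ih (by omega)
    have e : (yy (j+1) : Br (m+1)) = (yy j)⁻¹ * s (j+1) * yy j := by
      rw [yy, mul_inv_eq_iff_eq_mul, mul_assoc, mul_assoc, eq_inv_mul_iff_mul_eq, ← mul_assoc, ih,
        mul_assoc]
    have c := yy_comm_gt (m := m) j (j + 2) (by omega)
    have b := s_braid (m := m + 1) (j + 1) (by omega)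
    have c' : (yy j : Br (m+1)) * s (j+1+1) * (yy j)⁻¹ = s (j + 1 + 1) := by
      rw [mul_inv_eq_iff_eq_mul]; exact c
    have c2 : s (j + 1 + 1) = (yy j : Br (m+1))⁻¹ * s (j + 1 + 1) * yy j := by
      rw [mul_assoc, eq_inv_mul_iff_mul_eq]; exact c
    rw [e]
    calc (yy j)⁻¹ * s (j+1) * yy j * s (j + 1 + 1) * ((yy j)⁻¹ * s (j+1) * yy j)
        = (yy j)⁻¹ * s (j+1) * (yy j * s (j + 1 + 1) * (yy j)⁻¹) * s (j+1) * yy j := by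
          simp [mul_assoc]
      _ = (yy j)⁻¹ * (s (j+1) * s (j+1+1) * s (j+1)) * yy j := by rw [c']; simp [mul_assoc]
      _ = (yy j)⁻¹ * s (j+1+1) * yy j * ((yy j)⁻¹ * s (j+1) * yy j) *
            ((yy j)⁻¹ * s (j+1+1) * yy j) := by rw [b]; simp [mul_assoc]
      _ = _ := by rw [← c2]

theorem yy_succ' (j : ℕ) (h : j < m) : (yy (j+1) : Br (m+1)) = (yy j)⁻¹ * s (j+1) * yy j := by
  rw [yy, mul_inv_eq_iff_eq_mul, mul_assoc, mul_assoc, eq_inv_mul_iff_mul_eq, ← mul_assoc,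
    yy_braid j h, mul_assoc]

theorem yy_comm_lt (j i : ℕ) (h0 : 0 < i) (h : i < j) (hj : j ≤ m) :
    (yy j : Br (m+1)) * s i = s i * yy j := by
  induction j with
  | zero => omega
  | succ j ih =>
    rcases Nat.lt_or_ge i j with h' | h'
    · have h1 : Commute (s (j+1) : Br (m+1)) (s i) := (s_comm i (j+1) (by omega)).symm
      exact ((h1.mul_left (ih h' (by omega))).mul_left h1.inv_left).eq
    · obtain rfl : i = j := by omega
      obtain ⟨l, rfl⟩ : ∃ l, i = l + 1 := ⟨i - 1, by omega⟩
      have b := s_braid (m := m + 1) (l + 1) (by omega)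
      have c := yy_comm_gt (m := m) l (l + 1 + 1) (by omega)
      have h1 : (s (l+1+1) : Br (m+1)) * s (l+1) * (s (l+1+1)) * (s (l+1))⁻¹ * (s (l+1+1))⁻¹
         = s (l+1) := by
        rw [mul_inv_eq_iff_eq_mul, mul_inv_eq_iff_eq_mul, b]
      have h2 : (s (l+1))⁻¹ * (s (l+1+1))⁻¹ * s (l + 1) =
          s (l+1+1) * (s (l+1))⁻¹ * (s (l+1+1) : Br (m+1))⁻¹ := by
        rw [eq_mul_inv_iff_mul_eq, eq_mul_inv_iff_mul_eq, mul_assoc, mul_assoc, mul_assoc,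
          inv_mul_eq_iff_eq_mul, inv_mul_eq_iff_eq_mul, ← mul_assoc, ← mul_assoc, b]
      rw [yy, yy]
      calc s (l+1+1) * (s (l+1) * yy l * (s (l+1))⁻¹) * (s (l+1+1))⁻¹ * s (l+1)
          = s (l+1+1) * s (l+1) * yy l * ((s (l+1))⁻¹ * (s (l+1+1))⁻¹ * s (l+1)) := by
            simp only [mul_assoc]
        _ = s (l+1+1) * s (l+1) * (yy l * s (l+1+1)) * (s (l+1))⁻¹ * (s (l+1+1))⁻¹ := by
            rw [h2]; simp only [mul_assoc]
        _ = s (l+1+1) * s (l+1) * s (l+1+1) * yy l * (s (l+1))⁻¹ * (s (l+1+1))⁻¹ := by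
            rw [c]; simp only [mul_assoc]
        _ = _ := by rw [← b]; simp only [mul_assoc]

end yy

theorem sq_braid {G : Type*} [Group G] {a b : G} (h : b * a * b = a * b * a) :
    a * (a * b^2 * a⁻¹) * a⁻¹ = (a * b^2 * a⁻¹)⁻¹ * b^2 * (a * b^2 * a⁻¹) := by
  have key : a * b^2 * a * b^2 = b^2 * a * b^2 * a := by
    calc a * b^2 * a * b^2 = a * b * (b * a * b) * b := by simp [pow_two, mul_assoc]
      _ = (a * b * a) * b * (a * b) := by rw [h]; simp [mul_assoc]
      _ = b * (a * b) * (b * a * b) := by rw [← h]; simp [mul_assoc]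
      _ = b * (a * b * a) * b * a := by rw [h]; simp [mul_assoc]
      _ = _ := by rw [← h]; simp [pow_two, mul_assoc]
  rw [mul_assoc _ (b^2) (a * b^2 * a⁻¹), eq_inv_mul_iff_mul_eq]
  calc a * b^2 * a⁻¹ * (a * (a * b^2 * a⁻¹) * a⁻¹) = (a * b^2 * a * b^2) * a⁻¹ * a⁻¹ := by
        simp [mul_assoc]
    _ = _ := by rw [key]; simp [mul_assoc]

/-- The shift `σ_i ↦ σ_{i+1}`. -/
def shB (m : ℕ) : Br m →* Br (m + 1) := lift (fun i => s (i + 1))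
  ⟨fun i j h _ => s_comm _ _ (by omega), fun i h => s_braid (i + 1) (by omega)⟩

theorem shB_s {m : ℕ} (i : ℕ) : shB m (s i) = s (i + 1) := by
  by_cases h : i < m
  · exact lift_s _ _ h
  · rw [s_of_ge (by omega), s_of_ge (by omega), map_one]

/-- The pure generator linking strand `0` with strand `j + 1`. -/
def YY (m : ℕ) (j : ℕ) : Br (m + 1) := yy j ^ 2

theorem YY_am (m i j : ℕ) (hi : i < m) (hj : j ≤ m) :
    am i (YY m) j = s (i + 1) * YY m j * (s (i + 1))⁻¹ := by
  have e : YY m (i + 1) = s (i + 1) * YY m i * (s (i + 1))⁻¹ := by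
    simp only [YY, yy]; rw [conj_pow]
  unfold am
  split_ifs with h1 h2
  · rw [h1, e]
  · rw [h2, e]; exact (sq_braid (yy_braid i hi)).symm
  · have : Commute (yy j : Br (m+1)) (s (i+1)) := by
      rcases Nat.lt_or_ge j i with h | h
      · exact yy_comm_gt _ _ (by omega)
      · exact yy_comm_lt _ _ (by omega) (by omega) hj
    rw [eq_mul_inv_iff_mul_eq]; exact (this.pow_left 2).eq

/-- The isomorphism of `F ⋊ B` with the stabilizer of strand `0`. -/
def iota (m : ℕ) : GG m →* Br (m + 1) := SemidirectProduct.lift (FL (YY m)) (shB m) (by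
  intro b
  induction b using br_ind with
  | one => simp; rfl
  | mul a b ha hb =>
    apply MonoidHom.ext; intro g
    have ha' := fun g => DFunLike.congr_fun ha g
    have hb' := fun g => DFunLike.congr_fun hb g
    simp only [MonoidHom.comp_apply, MulEquiv.coe_toMonoidHom, MulAut.conj_apply] at ha' hb' ⊢
    rw [map_mul, MulAut.mul_apply, ha', hb']; simp [mul_assoc]
  | gen i h =>
    apply fr_ext; intro j hj
    simp only [MonoidHom.comp_apply, MulEquiv.coe_toMonoidHom, MulAut.conj_apply]
    rw [art_s h hj, FL_am _ h hj, YY_am _ _ _ h hj, FL_x _ hj, shB_s]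
  | inv a ha =>
    apply MonoidHom.ext; intro g
    have ha' := fun g => DFunLike.congr_fun ha g
    simp only [MonoidHom.comp_apply, MulEquiv.coe_toMonoidHom, MulAut.conj_apply] at ha' ⊢
    have := ha' ((art m a)⁻¹ g)
    rw [MulAut.apply_inv_self] at this
    rw [this, map_inv, map_inv]; simp [mul_assoc])

theorem iota_inl {m : ℕ} (f : FF m) : iota m (SemidirectProduct.inl f) = FL (YY m) f := by
  simp [iota]
theorem iota_inr {m : ℕ} (b : Br m) : iota m (SemidirectProduct.inr b) = shB m b := by
  simp [iota]

end BC

namespace BC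
open SemidirectProduct

theorem gg_comm {m : ℕ} (b : Br m) (f : FF m) :
    (inr b * inl f : GG m) = inl (art m b f) * inr b := by
  ext <;> simp

/-- The cocycle of the coset representatives `τ_k` on generators. -/
def cG (m : ℕ) (i k : ℕ) : GG m :=
  if m + 1 < k then 1 else if k < i then inr (s (i - 1)) else if k = i then 1
  else if k = i + 1 then inl (x i) else inr (s i)

theorem gg_fix {m i j : ℕ} (hi : i < m) (hj : j ≤ m) (h : j ≠ i ∧ j ≠ i + 1) :
    (inr (s i) * inl (x j) : GG m) = inl (x j) * inr (s i) := by
  rw [gg_comm, art_s hi hj, am, if_neg h.1, if_neg h.2]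

theorem gg_rel {m i : ℕ} (hi : i < m) :
    (inr (s i) * inl (x i) : GG m) = inl (x (i + 1)) * inr (s i) := by
  rw [gg_comm, art_s hi (by omega), am, if_pos rfl]

theorem gg_rel2 {m i : ℕ} (hi : i < m) :
    (inl (x i) * inl (x (i+1)) * inr (s i) : GG m) = inr (s i) * inl (x i) * inl (x (i+1)) := by
  rw [gg_rel hi, mul_assoc _ (inr (s i)), gg_comm, art_s hi (by omega), am, if_neg (by omega),
    if_pos rfl]
  simp [mul_assoc]

/-- The braid relations for the cocycle that records the position of a braid relative to the
cosets of the stabilizer of strand `0`. -/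
theorem co_cG (m : ℕ) : CO (m + 1) (fun i => Equiv.swap i (i + 1)) (cG m) where
  bs := bs_swap _
  comm i j h hj k := by
    rcases Nat.lt_or_ge (m + 1) k with h0 | h0
    · rw [Equiv.swap_apply_of_ne_of_ne (by omega) (by omega),
        Equiv.swap_apply_of_ne_of_ne (by omega) (by omega)]
      simp [cG, h0]
    have H : k < i ∨ k = i ∨ k = i + 1 ∨ (i + 1 < k ∧ k < j) ∨ k = j ∨ k = j + 1 ∨ j + 1 < k := by
      omega
    rcases H with H | H | H | H | H | H | H
    · rw [Equiv.swap_apply_of_ne_of_ne (by omega) (by omega),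
        Equiv.swap_apply_of_ne_of_ne (by omega) (by omega)]
      simp only [cG, show ¬ m + 1 < k by omega, H, show k < j by omega, if_true, if_false]
      rw [← map_mul, ← map_mul, s_comm _ _ (by omega)]
    · subst H
      rw [Equiv.swap_apply_of_ne_of_ne (by omega) (by omega), Equiv.swap_apply_left]
      simp only [cG, show ¬ m + 1 < k by omega, show ¬ m + 1 < k + 1 by omega, lt_irrefl,
        show k < j by omega, show k + 1 < j by omega, if_true, if_false]
      simp
    · subst H
      rw [Equiv.swap_apply_of_ne_of_ne (by omega) (by omega), Equiv.swap_apply_right]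
      simp only [cG, show ¬ m + 1 < i by omega, show ¬ m + 1 < i + 1 by omega,
        show ¬ i + 1 < i by omega, show ¬ i + 1 = i by omega,
        show i < j by omega, show i + 1 < j by omega, if_true, if_false]
      rw [gg_fix (by omega) (by omega) (by omega)]
    · rw [Equiv.swap_apply_of_ne_of_ne (by omega) (by omega),
        Equiv.swap_apply_of_ne_of_ne (by omega) (by omega)]
      simp only [cG, show ¬ m + 1 < k by omega, show ¬ k < i by omega, show ¬ k = i by omega,
        show ¬ k = i + 1 by omega, show k < j by omega, if_true, if_false]
      rw [← map_mul, ← map_mul, s_comm _ _ (by omega)]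
    · subst H
      rw [Equiv.swap_apply_left, Equiv.swap_apply_of_ne_of_ne (by omega) (by omega)]
      simp only [cG, show ¬ m + 1 < k by omega, show ¬ m + 1 < k + 1 by omega, lt_irrefl,
        show ¬ k < i by omega, show ¬ k = i by omega, show ¬ k = i + 1 by omega,
        show ¬ k + 1 < i by omega, show ¬ k + 1 = i by omega, show ¬ k + 1 = i + 1 by omega,
        if_true, if_false]
      simp
    · subst H
      rw [Equiv.swap_apply_right, Equiv.swap_apply_of_ne_of_ne (by omega) (by omega)]
      simp only [cG, show ¬ m + 1 < j by omega, show ¬ m + 1 < j + 1 by omega,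
        show ¬ j < i by omega, show ¬ j = i by omega, show ¬ j = i + 1 by omega,
        show ¬ j + 1 < i by omega, show ¬ j + 1 = i by omega, show ¬ j + 1 = i + 1 by omega,
        show ¬ j + 1 < j by omega, show ¬ j + 1 = j by omega,
        if_true, if_false]
      rw [gg_fix (by omega) (by omega) (by omega)]
    · rw [Equiv.swap_apply_of_ne_of_ne (by omega) (by omega),
        Equiv.swap_apply_of_ne_of_ne (by omega) (by omega)]
      simp only [cG, show ¬ m + 1 < k by omega, show ¬ k < i by omega, show ¬ k = i by omega,
        show ¬ k = i + 1 by omega, show ¬ k < j by omega, show ¬ k = j by omega,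
        show ¬ k = j + 1 by omega, if_true, if_false]
      rw [← map_mul, ← map_mul, s_comm _ _ (by omega)]
  braid i hi k := by
    rcases Nat.lt_or_ge (m + 1) k with h0 | h0
    · rw [Equiv.swap_apply_of_ne_of_ne (by omega : k ≠ i) (by omega),
        Equiv.swap_apply_of_ne_of_ne (by omega : k ≠ i + 1) (by omega),
        Equiv.swap_apply_of_ne_of_ne (by omega : k ≠ i) (by omega)]
      simp [cG, h0]
    have H : k < i ∨ k = i ∨ k = i + 1 ∨ k = i + 2 ∨ i + 2 < k := by omega
    have e1 : Equiv.swap i (i+1) (i + 2) = i + 2 :=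
      Equiv.swap_apply_of_ne_of_ne (by omega) (by omega)
    have e2 : Equiv.swap (i+1) (i+1+1) i = i :=
      Equiv.swap_apply_of_ne_of_ne (by omega) (by omega)
    rcases H with H | H | H | H | H
    · rw [Equiv.swap_apply_of_ne_of_ne (by omega : k ≠ i) (by omega),
        Equiv.swap_apply_of_ne_of_ne (by omega : k ≠ i + 1) (by omega),
        Equiv.swap_apply_of_ne_of_ne (by omega : k ≠ i) (by omega)]
      obtain ⟨l, rfl⟩ : ∃ l, i = l + 1 := ⟨i - 1, by omega⟩
      simp only [cG, show ¬ m + 1 < k by omega, H, show k < l + 1 + 1 by omega, if_true, if_false,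
        Nat.add_sub_cancel, ← map_mul]
      rw [s_braid _ (by omega)]
    · subst H
      rw [Equiv.swap_apply_left, Equiv.swap_apply_left, e2, Equiv.swap_apply_left]
      simp only [cG, show ¬ m + 1 < k by omega, show ¬ m + 1 < k + 1 by omega, 
        show ¬ m + 1 < k + 1 + 1 by omega, lt_irrefl, show ¬ k + 1 + 1 < k by omega,
        show ¬ k + 1 + 1 = k by omega, show ¬ k + 1 + 1 = k + 1 by omega,
        show k < k + 1 by omega, if_true, if_false]
      simp
    · subst H
      rw [Equiv.swap_apply_right, Equiv.swap_apply_left, e1, e2]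
      simp only [cG, show ¬ m + 1 < i by omega, show ¬ m + 1 < i + 1 by omega, 
        show ¬ m + 1 < i + 2 by omega, lt_irrefl, show ¬ i + 1 < i by omega,
        show ¬ i + 2 < i by omega, show ¬ i + 2 < i + 1 by omega,
        show ¬ i + 2 = i by omega, show ¬ i + 2 = i + 1 by omega, show ¬ i + 1 = i by omega,
        show i < i + 1 by omega, if_true, if_false]
      simpa using gg_rel (m := m) (i := i) (by omega)
    · subst H
      rw [e1, Equiv.swap_apply_right, Equiv.swap_apply_right]
      simp only [cG, show ¬ m + 1 < i by omega, show ¬ m + 1 < i + 1 by omega, 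
        show ¬ m + 1 < i + 2 by omega, lt_irrefl, show ¬ i + 1 < i by omega,
        show ¬ i + 2 < i by omega, show ¬ i + 2 < i + 1 by omega,
        show ¬ i + 2 = i by omega, show ¬ i + 2 = i + 1 by omega, show ¬ i + 1 = i by omega,
        show i < i + 1 by omega, if_true, if_false]
      simpa using gg_rel2 (m := m) (i := i) (by omega)
    · rw [Equiv.swap_apply_of_ne_of_ne (by omega : k ≠ i) (by omega),
        Equiv.swap_apply_of_ne_of_ne (by omega : k ≠ i + 1) (by omega),
        Equiv.swap_apply_of_ne_of_ne (by omega : k ≠ i) (by omega)]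
      simp only [cG, show ¬ m + 1 < k by omega, show ¬ k < i by omega, show ¬ k < i + 1 by omega,
        show ¬ k = i by omega, show ¬ k = i + 1 by omega, show ¬ k = i + 1 + 1 by omega,
        if_true, if_false, ← map_mul]
      rw [s_braid _ (by omega)]

/-- The cocycle `b τ_k = τ_{ρ(b) k} ι(coG b k)`. -/
def coG (m : ℕ) (b : Br (m+1)) (k : ℕ) : GG m := (co_cG m).co b k

theorem coG_mul {m : ℕ} (a b : Br (m+1)) (k : ℕ) :
    coG m (a * b) k = coG m a (rho _ b k) * coG m b k := (co_cG m).co_mul a b k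
theorem coG_inv {m : ℕ} (b : Br (m+1)) (k : ℕ) :
    coG m b⁻¹ (rho _ b k) = (coG m b k)⁻¹ := (co_cG m).co_inv b k
theorem coG_one {m : ℕ} (k : ℕ) : coG m 1 k = 1 := (co_cG m).co_one k
theorem coG_s {m i : ℕ} (h : i < m + 1) (k : ℕ) : coG m (s i) k = cG m i k := (co_cG m).co_s h k

/-- `τ_k = σ_{k-1} ⋯ σ_0`. -/
def tau (m : ℕ) : ℕ → Br (m + 1)
  | 0 => 1
  | k + 1 => s k * tau m k

theorem tau_comm_lt {m : ℕ} (i k : ℕ) (h : k < i) : s i * tau m k = tau m k * s i := by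
  induction k with
  | zero => simp [tau]
  | succ k ih => rw [tau, ← mul_assoc, ← s_comm k i h, mul_assoc, ih (by omega), mul_assoc]

theorem tau_yy {m : ℕ} (i : ℕ) (h : i ≤ m) : s i * tau m i = tau m i * yy i := by
  induction i with
  | zero => simp [tau, yy]
  | succ i ih =>
    have ih := ih (by omega)
    rw [tau, ih, ← mul_assoc, tau_comm_lt _ _ (by omega), yy_succ' i (by omega)]; simp [mul_assoc]

theorem tau_gt {m : ℕ} (i k : ℕ) (h : i + 1 < k) (hk : k ≤ m + 1) :
    s i * tau m k = tau m k * s (i + 1) := by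
  induction k with
  | zero => omega
  | succ k ih =>
    rcases Nat.lt_or_ge (i + 1) k with h' | h'
    · rw [tau, ← mul_assoc, s_comm i k h', mul_assoc, ih h' (by omega), mul_assoc]
    · obtain rfl : k = i + 1 := by omega
      rw [tau, tau, ← mul_assoc, ← mul_assoc, s_braid i (by omega), mul_assoc,
        tau_comm_lt _ _ (by omega)]
      simp [mul_assoc]

theorem tau_s {m i : ℕ} (hi : i < m + 1) (k : ℕ) (hk : k ≤ m + 1) :
    s i * tau m k = tau m (Equiv.swap i (i + 1) k) * iota m (cG m i k) := by
  unfold cG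
  rw [if_neg (by omega)]
  split_ifs with h1 h2 h3
  · rw [Equiv.swap_apply_of_ne_of_ne (by omega) (by omega), iota_inr, shB_s, tau_comm_lt _ _ h1]
    congr 2; omega
  · subst h2; rw [Equiv.swap_apply_left]; simp [tau]
  · subst h3
    rw [Equiv.swap_apply_right, iota_inl, FL_x _ (by omega), YY, tau, tau_yy _ (by omega), pow_two,
      ← mul_assoc, tau_yy _ (by omega), mul_assoc]
  · rw [Equiv.swap_apply_of_ne_of_ne (by omega) (by omega), iota_inr, shB_s,
      tau_gt _ _ (by omega) hk]

/-- The action of a braid on the coset representatives `τ_k` of the stabilizer of strand `0`. -/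
theorem tau_act {m : ℕ} (b : Br (m+1)) (k : ℕ) (hk : k ≤ m + 1) :
    b * tau m k = tau m (rho _ b k) * iota m (coG m b k) := by
  induction b using br_ind generalizing k with
  | one => simp [coG_one]
  | mul a b ha hb =>
    rw [mul_assoc, hb k hk, ← mul_assoc, ha _ (rho_le _ _ hk), coG_mul, map_mul, map_mul,
      mul_assoc]; rfl
  | gen i hi => rw [tau_s hi k hk, coG_s hi, rho_s hi]
  | inv b hb =>
    have hk' := rho_le b⁻¹ k hk
    have e := hb _ hk'
    have e2 : rho (m+1) b (rho (m+1) b⁻¹ k) = k := by rw [map_inv]; simp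
    have e3 := coG_inv b (rho (m+1) b⁻¹ k)
    rw [e2] at e e3
    rw [e3, map_inv (iota m), eq_mul_inv_iff_mul_eq, mul_assoc, ← e]; simp

/-- The cocycle inverts `iota`, which is therefore injective. -/
theorem iota_act {m : ℕ} (g : GG m) : rho _ (iota m g) 0 = 0 ∧ coG m (iota m g) 0 = g := by
  let H : Subgroup (GG m) :=
    { carrier := {g | rho _ (iota m g) 0 = 0 ∧ coG m (iota m g) 0 = g}
      one_mem' := by simp [coG_one]
      mul_mem' := by
        rintro a b ⟨a1, a2⟩ ⟨b1, b2⟩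
        simp only [Set.mem_setOf_eq, map_mul, coG_mul, Equiv.Perm.mul_apply]
        rw [b1, a1, a2, b2]; exact ⟨rfl, rfl⟩
      inv_mem' := by
        rintro a ⟨a1, a2⟩
        have := coG_inv (iota m a) 0
        rw [a1, a2] at this
        refine ⟨?_, by rw [map_inv, this]⟩
        rw [map_inv, map_inv, Equiv.Perm.inv_eq_iff_eq, a1] }
  have h1 : ∀ b : Br m, (inr b : GG m) ∈ H := by
    intro b
    refine sub_top (H.comap inr) (fun i hi => ?_) b
    show rho _ (iota m (inr (s i))) 0 = 0 ∧ _
    rw [iota_inr, shB_s, rho_s (by omega), coG_s (by omega)]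
    refine ⟨Equiv.swap_apply_of_ne_of_ne (by omega) (by omega), ?_⟩
    simp [cG]
  have h2 : ∀ j ≤ m, (inl (x j) : GG m) ∈ H := by
    intro j hj
    induction j with
    | zero =>
      show rho _ (iota m (inl (x 0))) 0 = 0 ∧ _
      rw [iota_inl, FL_x _ (by omega), YY, yy, pow_two, coG_mul, map_mul, rho_s (by omega),
        coG_s (by omega), coG_s (by omega)]
      simp [cG]
    | succ j ih =>
      have := gg_rel (m := m) (i := j) (by omega)
      rw [← mul_inv_eq_iff_eq_mul] at this
      rw [← this]
      exact H.mul_mem (H.mul_mem (h1 _) (ih (by omega))) (H.inv_mem (h1 _))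
  have h3 : ∀ f : FF m, (inl f : GG m) ∈ H := fun f => fr_sub_top (H.comap inl) h2 f
  have : g ∈ H := by
    rw [← inl_left_mul_inr_right g]; exact H.mul_mem (h3 _) (h1 _)
  exact this

theorem iota_inj (m : ℕ) : Function.Injective (iota m) := fun a b h => by
  rw [← (iota_act a).2, h, (iota_act b).2]

theorem iota_of_stab {m : ℕ} (b : Br (m+1)) (h : rho _ b 0 = 0) : b = iota m (coG m b 0) := by
  have := tau_act b 0 (by omega)
  rw [h] at this; simpa [tau] using this

/-- Forgetting strand `0`. -/
theorem rho_iota {m : ℕ} (g : GG m) (k : ℕ) :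
    rho (m+1) (iota m g) (k + 1) = rho m g.right k + 1 := by
  have h1 : ∀ b : Br m, ∀ k, rho (m+1) (shB m b) (k+1) = rho m b k + 1 := by
    intro b
    induction b using br_ind with
    | one => simp
    | mul a b ha hb => intro k; simp only [map_mul, Equiv.Perm.mul_apply]; rw [hb, ha]
    | gen i hi =>
      intro k; rw [shB_s, rho_s (by omega), rho_s hi]
      simp only [Equiv.swap_apply_def]; split_ifs <;> omega
    | inv a ha =>
      intro k
      rw [map_inv, map_inv, map_inv, Equiv.Perm.inv_eq_iff_eq, ha]; simp
  have h2 : ∀ f : FF m, rho (m+1) (iota m (inl f)) = 1 := by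
    intro f
    refine fr_sub_top (((rho (m+1)).comp ((iota m).comp inl)).ker) (fun j hj => ?_) f
    rw [MonoidHom.mem_ker]
    simp only [MonoidHom.comp_apply]
    rw [iota_inl, FL_x _ hj]
    clear hj f
    have : ∀ j, rho (m+1) (yy j) ^ 2 = 1 := by
      intro j
      induction j with
      | zero => rw [yy, rho_s (by omega), pow_two, Equiv.swap_mul_self]
      | succ j ih => rw [yy, map_mul, map_mul, map_inv, conj_pow, ih]; simp
    rw [YY, map_pow, this]
  conv_lhs => rw [← inl_left_mul_inr_right g]
  rw [map_mul, map_mul, h2, one_mul, iota_inr, h1]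

end BC

namespace BC
open SemidirectProduct

/-! ### Centralizers in free groups -/

theorem of_comm_eq {α : Type*} {i j : α}
    (h : FreeGroup.of i * FreeGroup.of j = FreeGroup.of j * FreeGroup.of i) : i = j := by
  classical
  by_contra hne
  let f : FreeGroup α →* Equiv.Perm (Fin 3) :=
    FreeGroup.lift (fun k => if k = i then Equiv.swap 0 1 else Equiv.swap 1 2)
  have := congrArg f h
  simp only [map_mul, f, FreeGroup.lift_apply_of, if_true, if_neg (Ne.symm hne)] at this
  revert this; decide

/-- A pair of commuting elements of a free group lies in a cyclic subgroup. -/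
theorem free_comm {α : Type*} {a c : FreeGroup α} (h : a * c = c * a) :
    ∃ d : FreeGroup α, ∃ i j : ℤ, a = d ^ i ∧ c = d ^ j := by
  let H := Subgroup.closure ({a, c} : Set (FreeGroup α))
  have hc : ∀ u ∈ H, ∀ v ∈ H, u * v = v * u := by
    intro u hu v hv
    have h1 : H ≤ Subgroup.centralizer ({a, c} : Set (FreeGroup α)) := by
      rw [Subgroup.closure_le]
      rintro y (rfl | rfl) w (rfl | rfl) <;> first | rfl | exact h | exact h.symm
    have h2 : H ≤ Subgroup.centralizer (H : Set (FreeGroup α)) := by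
      rw [Subgroup.centralizer_closure]
      exact h1
    exact (h2 hu v hv).symm
  let e := IsFreeGroup.toFreeGroup H
  have hs : Subsingleton (IsFreeGroup.Generators H) := ⟨fun i j => of_comm_eq (by
    apply e.symm.injective
    rw [map_mul, map_mul]; exact Subtype.ext (hc _ (SetLike.coe_mem _) _ (SetLike.coe_mem _)))⟩
  have key : ∃ d : FreeGroup (IsFreeGroup.Generators H), ∀ g, ∃ i : ℤ, g = d ^ i := by
    rcases isEmpty_or_nonempty (IsFreeGroup.Generators H) with he | ⟨⟨i⟩⟩
    · exact ⟨1, fun g => ⟨0, Subsingleton.elim _ _⟩⟩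
    · refine ⟨FreeGroup.of i, fun g => ?_⟩
      have : g ∈ Subgroup.zpowers (FreeGroup.of i) := by
        have h1 : (⊤ : Subgroup _) ≤ Subgroup.zpowers (FreeGroup.of i) := by
          rw [← FreeGroup.closure_range_of, Subgroup.closure_le]
          rintro _ ⟨j, rfl⟩
          rw [Subsingleton.elim j i]; exact Subgroup.mem_zpowers _
        exact h1 trivial
      obtain ⟨k, hk⟩ := this; exact ⟨k, hk.symm⟩
  obtain ⟨d, hd⟩ := key
  have ha : a ∈ H := Subgroup.subset_closure (by simp)
  have hcm : c ∈ H := Subgroup.subset_closure (by simp)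
  obtain ⟨i, hi⟩ := hd (e ⟨a, ha⟩)
  obtain ⟨j, hj⟩ := hd (e ⟨c, hcm⟩)
  refine ⟨(e.symm d : H), i, j, ?_, ?_⟩
  · have := congrArg e.symm hi
    rw [e.symm_apply_apply, map_zpow] at this
    exact congrArg Subtype.val this
  · have := congrArg e.symm hj
    rw [e.symm_apply_apply, map_zpow] at this
    exact congrArg Subtype.val this

theorem cent {α : Type*} {a c : FreeGroup α} (χ : FreeGroup α →* Multiplicative ℤ)
    (hχ : χ c = Multiplicative.ofAdd 1) (h : a * c = c * a) : ∃ k : ℤ, a = c ^ k := by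
  obtain ⟨d, i, j, rfl, rfl⟩ := free_comm h
  rw [map_zpow] at hχ
  have h1 : j * (χ d).toAdd = 1 := by
    have := congrArg Multiplicative.toAdd hχ
    simpa using this
  rcases Int.isUnit_iff.1 (IsUnit.of_mul_eq_one _ h1) with rfl | rfl
  · exact ⟨i, by simp⟩
  · exact ⟨-i, by simp⟩

theorem cent_pow {α : Type*} {a c : FreeGroup α} (χ : FreeGroup α →* Multiplicative ℤ)
    (hχ : χ c = Multiplicative.ofAdd 1) {n : ℕ} (hn : n ≠ 0) (h : a * c ^ n = c ^ n * a) :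
    ∃ k : ℤ, a = c ^ k := by
  refine cent χ hχ ?_
  have : (a * c * a⁻¹) ^ n = c ^ n := by rw [conj_pow, h]; simp
  have := IsMulTorsionFree.pow_left_injective hn this
  rwa [mul_inv_eq_iff_eq_mul] at this

/-- The exponent sum of the letter `j`. -/
def xe (m j : ℕ) : FF m →* Multiplicative ℤ :=
  FL (fun i => if i = j then Multiplicative.ofAdd 1 else 1)

theorem xe_x {m i j : ℕ} (h : i ≤ m) :
    xe m j (x i) = if i = j then Multiplicative.ofAdd 1 else 1 := FL_x _ h

theorem xe_wd {m o k j : ℕ} (h : o + k ≤ m + 1) :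
    xe m j (wd m o k) = if o ≤ j ∧ j < o + k then Multiplicative.ofAdd 1 else 1 := by
  induction k with
  | zero => simp [wd, dl, show ¬ (o ≤ j ∧ j < o) by omega]
  | succ k ih =>
    rw [wd_succ, map_mul, ih (by omega), xe_x (by omega)]
    split_ifs <;> first | omega | simp

/-! ### Faithfulness of the Artin action -/

/-- Killing the letter of strand `0`. -/
def kap (m : ℕ) : FF (m + 1) →* FF m := FL (fun j => if j = 0 then 1 else x (j - 1))

theorem kap_zero {m : ℕ} : kap m (x 0) = 1 := by rw [kap, FL_x _ (by omega)]; simp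
theorem kap_succ {m j : ℕ} (h : j ≤ m) : kap m (x (j + 1)) = x j := by
  rw [kap, FL_x _ (by omega)]; simp

/-- Killing the letter of strand `0` intertwines the Artin action of a shifted braid with that
of the braid itself. -/
theorem kap_sh {m : ℕ} (b : Br m) (g : FF (m+1)) :
    kap m (art (m+1) (shB m b) g) = art m b (kap m g) := by
  have key : ∀ b : Br m, (kap m).comp (art (m+1) (shB m b)).toMonoidHom =
      (art m b).toMonoidHom.comp (kap m) := by
    intro b
    induction b using br_ind with
    | one => ext; simp
    | mul a b ha hb =>
      apply MonoidHom.ext; intro g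
      have ha' := fun g => DFunLike.congr_fun ha g
      have hb' := fun g => DFunLike.congr_fun hb g
      simp only [MonoidHom.comp_apply, MulEquiv.coe_toMonoidHom] at ha' hb' ⊢
      rw [map_mul, map_mul, map_mul, MulAut.mul_apply, MulAut.mul_apply, ha', hb']
    | gen i hi =>
      apply fr_ext; intro j hj
      simp only [MonoidHom.comp_apply, MulEquiv.coe_toMonoidHom]
      rw [shB_s, art_s (by omega) hj]
      rcases j with _ | j
      · rw [am, if_neg (by omega), if_neg (by omega), kap_zero, map_one]
      · rw [kap_succ (by omega), art_s hi (by omega)]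
        unfold am
        split_ifs <;> first | omega | simp [kap_succ, show j ≤ m by omega, show i ≤ m by omega,
          show i + 1 ≤ m by omega]
    | inv a ha =>
      apply MonoidHom.ext; intro g
      have ha' := fun g => DFunLike.congr_fun ha g
      simp only [MonoidHom.comp_apply, MulEquiv.coe_toMonoidHom] at ha' ⊢
      have := ha' ((art (m+1) (shB m a))⁻¹ g)
      rw [MulAut.apply_inv_self] at this
      rw [map_inv, map_inv, map_inv, this, MulAut.inv_apply_self]
  exact DFunLike.congr_fun (key b) g

theorem sh_x0 {m : ℕ} (b : Br m) : art (m+1) (shB m b) (x 0) = x 0 := by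
  induction b using br_ind with
  | one => simp
  | mul a b ha hb => rw [map_mul, map_mul, MulAut.mul_apply, hb, ha]
  | gen i h => rw [shB_s, art_s (by omega) (by omega), am, if_neg (by omega), if_neg (by omega)]
  | inv a ha =>
    rw [map_inv, map_inv]; nth_rw 1 [← ha]; exact MulAut.inv_apply_self _ _ _

theorem art_s_sq {m : ℕ} (j : ℕ) (hj : j ≤ m + 1) : art (m+1) (s 0 ^ 2) (x j) =
    if j ≤ 1 then (x 0 * x 1)⁻¹ * x j * (x 0 * x 1) else x j := by
  rw [pow_two, map_mul, MulAut.mul_apply, art_s (by omega) hj]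
  rcases j with _ | _ | j
  · simp [am, art_s, mul_assoc]
  · simp [am, art_s, mul_assoc]
  · simp [am, art_s, hj]

/-- The data attached to pushing strand `0` along the word `h`. -/
structure Push (m : ℕ) (h : FF m) : Prop where
  kap : ∀ g, kap m (art (m+1) (iota m (inl h)) g) = kap m g
  x0 : ∃ g, art (m+1) (iota m (inl h)) (x 0) = g⁻¹ * x 0 * g ∧ BC.kap m g = h

/-- Pushing strand `0` along `h` acts trivially once that strand is forgotten, and conjugates
`x 0` by an element from which `h` can be read off. -/
theorem push (m : ℕ) (h : FF m) : Push m h := by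
  let H : Subgroup (FF m) :=
    { carrier := {h | Push m h}
      one_mem' := ⟨by simp, 1, by simp⟩
      mul_mem' := by
        rintro a b ⟨a1, g, a2, a3⟩ ⟨b1, g', b2, b3⟩
        refine ⟨fun u => ?_, g * art (m+1) (iota m (inl a)) g', ?_, ?_⟩
        · rw [map_mul, map_mul, map_mul, MulAut.mul_apply, a1, b1]
        · rw [map_mul, map_mul, map_mul, MulAut.mul_apply, b2, map_mul, map_mul, map_inv, a2]
          simp [mul_assoc]
        · rw [map_mul, a1, a3, b3]
      inv_mem' := by
        rintro a ⟨a1, g, a2, a3⟩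
        have h1 : ∀ u, kap m ((art (m+1) (iota m (inl a)))⁻¹ u) = kap m u := by
          intro u; rw [← a1, MulAut.apply_inv_self]
        refine ⟨fun u => ?_, ((art (m+1) (iota m (inl a)))⁻¹ g)⁻¹, ?_, ?_⟩
        · rw [map_inv, map_inv, map_inv, h1]
        · rw [map_inv, map_inv, map_inv]
          have := congrArg (fun t => ((art (m+1) (iota m (inl a)))⁻¹ : MulAut (FF (m+1))) t) a2
          rw [MulAut.inv_apply_self, map_mul, map_mul, map_inv] at this
          rw [inv_inv, eq_mul_inv_iff_mul_eq]
          rw [mul_assoc, eq_inv_mul_iff_mul_eq] at this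
          exact this.symm
        · rw [map_inv, h1, a3] }
  refine fr_sub_top H (fun j hj => ?_) h
  show Push m (x j)
  induction j with
  | zero =>
    have e : iota m (inl (x 0)) = s 0 ^ 2 := by rw [iota_inl, FL_x _ hj]; rfl
    refine ⟨fun g => ?_, x 1, ?_, kap_succ (by omega)⟩
    · have : (kap m).comp (art (m+1) (s 0 ^ 2)).toMonoidHom = kap m := by
        apply fr_ext; intro j hj
        simp only [MonoidHom.comp_apply, MulEquiv.coe_toMonoidHom]
        rw [art_s_sq j hj]
        split_ifs with h
        · have : j = 0 ∨ j = 1 := by omega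
          rcases this with rfl | rfl <;> simp [kap_zero, mul_assoc]
        · rfl
      rw [e]; exact DFunLike.congr_fun this g
    · rw [e, art_s_sq 0 (by omega)]; simp [mul_assoc]
  | succ j ih =>
    obtain ⟨h1, g, h2, h3⟩ := ih (by omega)
    have e : iota m (inl (x (j+1))) = s (j+1) * iota m (inl (x j)) * (s (j+1))⁻¹ := by
      have := gg_rel (m := m) (i := j) (by omega)
      rw [← mul_inv_eq_iff_eq_mul] at this
      rw [← this, map_mul, map_mul, map_inv, iota_inr, shB_s]
    have k1 := fun g => kap_sh (m := m) (s j) g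
    have k2 := fun g => kap_sh (m := m) (s j)⁻¹ g
    have k0 := sh_x0 (m := m) (s j)
    have k00 := sh_x0 (m := m) (s j)⁻¹
    rw [map_inv, map_inv] at k00
    simp only [shB_s, map_inv] at k0 k1 k2 k00
    refine ⟨fun u => ?_, art (m+1) (s (j+1)) g, ?_, ?_⟩
    · rw [e, map_mul, map_mul, map_inv, MulAut.mul_apply, MulAut.mul_apply, k1, h1, k2,
        MulAut.apply_inv_self]
    · rw [e, map_mul, map_mul, map_inv, MulAut.mul_apply, MulAut.mul_apply, k00, h2, map_mul,
        map_mul, map_inv, k0]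
    · rw [k1, h3, art_s (by omega) (by omega), am, if_pos rfl]

/-- On homology a braid acts by its permutation. -/
theorem art_xe {m : ℕ} (b : Br m) (j k : ℕ) (hj : j ≤ m) (hk : k ≤ m) :
    xe m k (art m b (x j)) = if rho m b j = k then Multiplicative.ofAdd 1 else 1 := by
  have key : ∀ j ≤ m, ∃ u, art m b (x j) = u⁻¹ * x (rho m b j) * u := by
    induction b using br_ind with
    | one => exact fun j _ => ⟨1, by simp⟩
    | mul a b ha hb =>
      intro j hj
      obtain ⟨u, hu⟩ := hb j hj
      obtain ⟨v, hv⟩ := ha _ (rho_le b j hj)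
      refine ⟨v * art m a u, ?_⟩
      rw [map_mul, MulAut.mul_apply, hu, map_mul, map_mul, map_inv, hv, map_mul]
      simp [mul_assoc]
    | gen i hi =>
      intro j hj
      rw [art_s hi hj, rho_s hi]; unfold am
      split_ifs with h1 h2
      · exact ⟨1, by rw [h1]; simp⟩
      · exact ⟨x (i+1), by rw [h2]; simp⟩
      · exact ⟨1, by rw [Equiv.swap_apply_of_ne_of_ne h1 h2]; simp⟩
    | inv a ha =>
      intro j hj
      obtain ⟨u, hu⟩ := ha _ (rho_le a⁻¹ j hj)
      refine ⟨((art m a)⁻¹ u)⁻¹, ?_⟩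
      have := congrArg (fun t => ((art m a)⁻¹ : MulAut (FF m)) t) hu
      have hr : rho m a (rho m a⁻¹ j) = j := by rw [map_inv]; simp
      rw [hr] at this
      rw [MulAut.inv_apply_self, map_mul, map_mul, map_inv ((art m a)⁻¹ : MulAut (FF m)) u, mul_assoc,
        eq_inv_mul_iff_mul_eq] at this
      rw [map_inv (art m), inv_inv, this]; group
  obtain ⟨u, hu⟩ := key j hj
  rw [hu, map_mul, map_mul, map_inv, mul_comm, mul_inv_cancel_left, xe_x (rho_le b j hj)]

/-- The Artin action is faithful: by induction, forgetting strand `0` reduces a braid in the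
kernel to a point-pushing braid, and `push` shows that the latter is trivial. -/
theorem art_inj (m : ℕ) (b : Br m) (h : art m b = 1) : b = 1 := by
  induction m with
  | zero =>
    induction b using br_ind with
    | one => rfl
    | mul a b ha hb =>
      have : ∀ g : Br 0, g = 1 := fun g => sub_top ⊥ (fun i hi => by omega) g
      exact this _
    | gen i hi => omega
    | inv a ha =>
      have : ∀ g : Br 0, g = 1 := fun g => sub_top ⊥ (fun i hi => by omega) g
      exact this _
  | succ m ih =>
    have h0 : rho (m+1) b 0 = 0 := by
      have := art_xe b 0 0 (by omega) (by omega)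
      rw [h, MulAut.one_apply, xe_x (by omega), if_pos rfl] at this
      by_contra h'
      rw [if_neg h'] at this
      exact absurd (congrArg Multiplicative.toAdd this) (by simp)
    have e := iota_of_stab b h0
    set g := coG m b 0
    have hg : g = inl g.left * inr g.right := (inl_left_mul_inr_right g).symm
    have hb : g.right = 1 := by
      apply ih
      apply mulAut_ext; intro j hj
      have : kap m (art (m+1) b (x (j+1))) = x j := by rw [h, MulAut.one_apply, kap_succ hj]
      rw [e, hg, map_mul, map_mul, MulAut.mul_apply, (push m g.left).kap, iota_inr, kap_sh,
        kap_succ hj] at this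
      rw [this]; rfl
    obtain ⟨u, h1, h2⟩ := (push m g.left).x0
    have hg' : g = inl g.left := by rw [hg, hb]; simp
    rw [← hg', ← e, h, MulAut.one_apply, mul_assoc, eq_inv_mul_iff_mul_eq] at h1
    obtain ⟨k, hk⟩ := cent (xe (m+1) 0) (by rw [xe_x (by omega), if_pos rfl]) h1
    rw [hk, map_zpow, kap_zero, one_zpow] at h2
    rw [e, hg', ← h2]; simp

theorem br_zero (g : Br 0) : g = 1 := sub_top ⊥ (fun i hi => by omega) g

/-! ### Pure braids -/

theorem s_conj {m : ℕ} (i : ℕ) (h : i < m) : ∃ b : Br m, s i = b * s 0 * b⁻¹ := by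
  induction i with
  | zero => exact ⟨1, by simp⟩
  | succ i ih =>
    obtain ⟨b, hb⟩ := ih (by omega)
    refine ⟨s i * s (i+1) * b, ?_⟩
    have e : s (i+1) = (s i * s (i+1)) * s i * (s i * s (i+1) : Br m)⁻¹ := by
      rw [eq_mul_inv_iff_mul_eq, s_braid i h, mul_assoc]
    calc s (i+1) = (s i * s (i+1)) * s i * (s i * s (i+1) : Br m)⁻¹ := e
      _ = (s i * s (i+1)) * (b * s 0 * b⁻¹) * (s i * s (i+1) : Br m)⁻¹ := by rw [← hb]
      _ = _ := by simp [mul_assoc]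

/-- The pure braid group is normally generated by the square of one generator. -/
theorem pure_gen {m : ℕ} (b : Br m) (h : rho m b = 1) :
    b ∈ Subgroup.normalClosure {(s 0 : Br m) ^ 2} := by
  induction m with
  | zero => rw [br_zero b]; exact one_mem _
  | succ m ih =>
    have e := iota_of_stab b (by rw [h]; rfl)
    set g := coG m b 0
    set N := Subgroup.normalClosure {(s 0 : Br (m+1)) ^ 2}
    have hn : (s 0 : Br (m+1)) ^ 2 ∈ N := Subgroup.subset_normalClosure rfl
    rw [e, ← inl_left_mul_inr_right g, map_mul]
    apply N.mul_mem
    · refine fr_sub_top (N.comap ((iota m).comp inl)) (fun j hj => ?_) _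
      simp only [Subgroup.mem_comap, MonoidHom.comp_apply]
      rw [iota_inl, FL_x _ hj]
      clear hj
      have : ∀ j, (yy j : Br (m+1)) ^ 2 ∈ N := by
        intro j
        induction j with
        | zero => exact hn
        | succ j ih => rw [yy, conj_pow]; exact Subgroup.Normal.conj_mem inferInstance _ ih _
      exact this j
    · rw [iota_inr]
      have hp : rho m g.right = 1 := by
        ext k
        have := rho_iota g k
        rw [← e, h] at this
        simp at this ⊢; omega
      have := ih g.right hp
      have hle : Subgroup.normalClosure {(s 0 : Br m) ^ 2} ≤ N.comap (shB m) := by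
        apply Subgroup.normalClosure_le_normal
        rintro _ rfl
        show shB m (s 0 ^ 2) ∈ N
        rw [map_pow, shB_s]
        by_cases h1 : 1 < m + 1
        · obtain ⟨c, hc⟩ := s_conj 1 h1
          rw [show 0 + 1 = 1 from rfl, hc, conj_pow]
          exact Subgroup.Normal.conj_mem inferInstance _ hn _
        · rw [s_of_ge (by omega)]; simp
      exact hle this

end BC

namespace BC
open SemidirectProduct

/-! ### Linking numbers -/

/-- The contribution of the crossing `σ_i` to the linking number of the strands at `k.1, k.2`. -/
def lc (i : ℕ) (k : ℕ × ℕ) : Multiplicative ℤ :=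
  if (k.1 = i ∧ k.2 = i + 1) ∨ (k.1 = i + 1 ∧ k.2 = i) then Multiplicative.ofAdd 1 else 1

/-- The transposition `(i, i+1)` acting on pairs. -/
def ps (i : ℕ) : Equiv.Perm (ℕ × ℕ) :=
  Equiv.prodCongr (Equiv.swap i (i+1)) (Equiv.swap i (i+1))

theorem ps_apply (i : ℕ) (k : ℕ × ℕ) :
    ps i k = (Equiv.swap i (i+1) k.1, Equiv.swap i (i+1) k.2) := rfl

theorem co_lk (m : ℕ) : CO m ps lc where
  bs :=
    { comm := fun i j h hj => by
        ext1 ⟨k, l⟩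
        have := (bs_swap m).comm i j h hj
        have h1 := DFunLike.congr_fun this k
        have h2 := DFunLike.congr_fun this l
        simp only [Equiv.Perm.mul_apply, ps_apply] at h1 h2 ⊢
        rw [h1, h2]
      braid := fun i h => by
        ext1 ⟨k, l⟩
        have := (bs_swap m).braid i h
        have h1 := DFunLike.congr_fun this k
        have h2 := DFunLike.congr_fun this l
        simp only [Equiv.Perm.mul_apply, ps_apply] at h1 h2 ⊢
        rw [h1, h2] }
  comm i j h hj := by
    rintro ⟨k, l⟩
    have e1 : ∀ i j k l : ℕ, (i + 1 < j ∨ j + 1 < i) → lc i (ps j (k, l)) = lc i (k, l) := by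
      intro i j k l h
      simp only [ps_apply, lc, Equiv.swap_apply_def]
      congr 1
      apply propext
      split_ifs <;> omega
    rw [e1 i j k l (.inl h), e1 j i k l (.inr h), mul_comm]
  braid i h := by
    have key : ∀ i k l : ℕ, lc i (ps (i+1) (ps i (k, l))) = lc (i+1) (k, l) ∧
        lc (i+1) (ps i (k, l)) = lc i (ps (i+1) (k, l)) ∧
        lc (i+1) (ps i (ps (i+1) (k, l))) = lc i (k, l) := by
      intro i k l
      simp only [ps_apply, lc, Equiv.swap_apply_def]
      refine ⟨?_, ?_, ?_⟩ <;> congr 1 <;> apply propext <;> split_ifs <;> omega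
    rintro ⟨k, l⟩
    obtain ⟨a, b, c⟩ := key i k l
    rw [a, b, c, mul_comm, mul_comm (lc (i+1) (k, l)), mul_assoc]

/-- The algebraic crossing number of the strands starting at `p` and `q`. -/
def lk {m : ℕ} (b : Br m) (p q : ℕ) : ℤ := Multiplicative.toAdd ((co_lk m).co b (p, q))

theorem lift_ps {m : ℕ} (b : Br m) (p q : ℕ) :
    lift _ (co_lk m).bs b (p, q) = (rho m b p, rho m b q) := by
  induction b using br_ind generalizing p q with
  | one => simp
  | mul a b ha hb => simp only [map_mul, Equiv.Perm.mul_apply, hb, ha]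
  | gen i hi => rw [lift_s _ _ hi, rho_s hi]; rfl
  | inv a ha =>
    rw [map_inv, map_inv, Equiv.Perm.inv_eq_iff_eq, ha]; simp

theorem lk_mul {m : ℕ} (a b : Br m) (p q : ℕ) :
    lk (a * b) p q = lk a (rho m b p) (rho m b q) + lk b p q := by
  rw [lk, CO.co_mul, lift_ps]; rfl

theorem lk_one {m : ℕ} (p q : ℕ) : lk (1 : Br m) p q = 0 := by
  rw [lk, CO.co_one]; rfl

theorem lk_s {m i : ℕ} (h : i < m) (p q : ℕ) : lk (s i : Br m) p q =
    if (p = i ∧ q = i + 1) ∨ (p = i + 1 ∧ q = i) then 1 else 0 := by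
  rw [lk, CO.co_s _ h, lc]; split_ifs <;> rfl

theorem lk_inv' {m : ℕ} (b : Br m) (p q : ℕ) : lk b⁻¹ (rho m b p) (rho m b q) = - lk b p q := by
  have := lk_mul b⁻¹ b p q
  rw [inv_mul_cancel, lk_one] at this; omega

theorem rho_inv_self {m : ℕ} (b : Br m) (p : ℕ) : rho m b (rho m b⁻¹ p) = p := by
  rw [map_inv]; simp
theorem rho_self_inv {m : ℕ} (b : Br m) (p : ℕ) : rho m b⁻¹ (rho m b p) = p := by
  rw [map_inv]; simp

theorem lk_inv {m : ℕ} (b : Br m) (p q : ℕ) : lk b⁻¹ p q = - lk b (rho m b⁻¹ p) (rho m b⁻¹ q) := by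
  rw [← lk_inv', rho_inv_self, rho_inv_self]

theorem lk_symm {m : ℕ} (b : Br m) (p q : ℕ) : lk b p q = lk b q p := by
  induction b using br_ind generalizing p q with
  | one => simp [lk_one]
  | mul a b ha hb => rw [lk_mul, lk_mul, ha, hb]
  | gen i hi => rw [lk_s hi, lk_s hi]; congr 1; apply propext; omega
  | inv a ha => rw [lk_inv, lk_inv, ha]

theorem lk_self {m : ℕ} (b : Br m) (p : ℕ) : lk b p p = 0 := by
  induction b using br_ind generalizing p with
  | one => simp [lk_one]
  | mul a b ha hb => rw [lk_mul, ha, hb]; rfl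
  | gen i hi => rw [lk_s hi, if_neg]; omega
  | inv a ha => rw [lk_inv, ha]; rfl

theorem rho_sum {m : ℕ} (b : Br m) (f : ℕ → ℤ) :
    ∑ p ∈ Finset.range (m+1), f (rho m b p) = ∑ p ∈ Finset.range (m+1), f p := by
  apply Finset.sum_bij' (fun p _ => rho m b p) (fun p _ => rho m b⁻¹ p)
  · intro p hp; have := rho_le b p (by simp at hp; omega); simp; omega
  · intro p hp; have := rho_le b⁻¹ p (by simp at hp; omega); rw [Finset.mem_range]; omega
  · intro p _; exact rho_self_inv b p
  · intro p _; exact rho_inv_self b p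
  · intro p _; rfl

theorem lk_sum {m : ℕ} (b : Br m) :
    ∑ p ∈ Finset.range (m+1), ∑ q ∈ Finset.range (m+1), lk b p q = 2 * ei b := by
  induction b using br_ind with
  | one => simp [lk_one, ei_one]
  | mul a b ha hb =>
    simp only [lk_mul, Finset.sum_add_distrib, hb, ei_mul]
    have : ∀ p, ∑ q ∈ Finset.range (m+1), lk a (rho m b p) (rho m b q) =
        ∑ q ∈ Finset.range (m+1), lk a (rho m b p) q := fun p => rho_sum b _
    simp only [this]
    rw [rho_sum b (fun p => ∑ q ∈ Finset.range (m+1), lk a p q), ha]; ring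
  | gen i hi =>
    simp only [lk_s hi, ei_s hi]
    have : ∀ p q : ℕ, (if (p = i ∧ q = i + 1) ∨ (p = i + 1 ∧ q = i) then (1:ℤ) else 0) =
      (if q = i+1 then if p = i then 1 else 0 else 0) + (if q = i then if p = i+1 then 1 else 0 else 0) := by
      intro p q; split_ifs <;> omega
    simp only [this, Finset.sum_add_distrib, Finset.sum_ite_eq', Finset.mem_range]
    simp only [show i + 1 < m + 1 by omega, show i < m + 1 by omega, if_true,
      Finset.sum_ite_eq', Finset.mem_range]
    norm_num
  | inv a ha =>
    simp only [lk_inv, Finset.sum_neg_distrib, ei_inv]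
    have : ∀ p, ∑ q ∈ Finset.range (m+1), lk a (rho m a⁻¹ p) (rho m a⁻¹ q) =
        ∑ q ∈ Finset.range (m+1), lk a (rho m a⁻¹ p) q := fun p => rho_sum a⁻¹ _
    simp only [this]
    rw [rho_sum a⁻¹ (fun p => ∑ q ∈ Finset.range (m+1), lk a p q), ha]; ring

/-- Two strands cross an odd number of times exactly if the braid exchanges their order. -/
theorem lk_parity {m : ℕ} (b : Br m) (p q : ℕ) (h : p ≠ q) :
    Even (lk b p q) ↔ (p < q ↔ rho m b p < rho m b q) := by
  induction b using br_ind generalizing p q with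
  | one => simp [lk_one]
  | mul a b ha hb =>
    rw [lk_mul, Int.even_add, hb p q h, ha _ _ (fun e => h ((rho m b).injective e)), map_mul,
      Equiv.Perm.mul_apply, Equiv.Perm.mul_apply]
    tauto
  | gen i hi =>
    rw [lk_s hi, rho_s hi]; simp only [Equiv.swap_apply_def]
    split_ifs <;> simp <;> omega
  | inv a ha =>
    rw [lk_inv, even_neg, ha _ _ (fun e => h ((rho m a⁻¹).injective e)), rho_inv_self, rho_inv_self]
    tauto

theorem lk_eps {m : ℕ} (b : Br m) (p q : ℕ) : rho m (eps m b) = rho m b ∧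
    lk (eps m b) p q = - lk b p q := by
  have h0 : ∀ b : Br m, rho m (eps m b) = rho m b := by
    intro b
    induction b using br_ind with
    | one => simp
    | mul a b ha hb => simp only [map_mul, ha, hb]
    | gen i hi => rw [eps_s, map_inv, rho_s hi, Equiv.swap_inv]
    | inv a ha => simp only [map_inv, ha]
  refine ⟨h0 b, ?_⟩
  induction b using br_ind generalizing p q with
  | one => simp [lk_one]
  | mul a b ha hb => rw [map_mul, lk_mul, lk_mul, h0, ha, hb]; ring
  | gen i hi =>
    rw [eps_s, lk_inv, map_inv, rho_s hi, Equiv.swap_inv, lk_s hi, lk_s hi]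
    congr 1; simp only [Equiv.swap_apply_def]; congr 1; apply propext; split_ifs <;> omega
  | inv a ha => rw [map_inv, lk_inv, lk_inv, ha, ← map_inv, h0]

/-- Conjugation permutes the linking numbers of a pure braid. -/
theorem lk_conj {m : ℕ} (b g : Br m) (hg : rho m g = 1) (p q : ℕ) :
    lk (b * g * b⁻¹) p q = lk g (rho m b⁻¹ p) (rho m b⁻¹ q) := by
  rw [lk_mul, lk_mul, hg, lk_inv]; simp

theorem lk_pmul {m : ℕ} (a b : Br m) (hb : rho m b = 1) (p q : ℕ) :
    lk (a * b) p q = lk a p q + lk b p q := by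
  rw [lk_mul, hb]; rfl
theorem lk_pinv {m : ℕ} (a : Br m) (hb : rho m a = 1) (p q : ℕ) :
    lk a⁻¹ p q = - lk a p q := by
  rw [lk_inv, map_inv, hb]; simp

theorem lk_out {m : ℕ} (b : Br m) (p q : ℕ) (h : m < p) : lk b p q = 0 := by
  induction b using br_ind generalizing q with
  | one => simp [lk_one]
  | mul a b ha hb => rw [lk_mul, hb, rho_gt b p h, ha]; rfl
  | gen i hi => rw [lk_s hi, if_neg]; omega
  | inv a ha => rw [lk_inv, rho_gt _ p h, ha]; rfl

theorem lk_sq {m i : ℕ} (hi : i < m) (p q : ℕ) : lk (s i ^ 2 : Br m) p q =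
    if (p = i ∧ q = i + 1) ∨ (p = i + 1 ∧ q = i) then 2 else 0 := by
  rw [pow_two, lk_mul, lk_s hi, lk_s hi, rho_s hi]; simp only [Equiv.swap_apply_def]
  split_ifs <;> omega

theorem rho_sq {m i : ℕ} (hi : i < m) : rho m (s i ^ 2 : Br m) = 1 := by
  rw [map_pow, rho_s hi]; ext; simp [pow_two]

theorem rho_conj {m : ℕ} (b g : Br m) (hg : rho m g = 1) : rho m (b * g * b⁻¹) = 1 := by
  rw [map_mul, map_mul, hg, map_inv]; simp

theorem lk_YY {m j : ℕ} (hj : j ≤ m) : rho _ (YY m j) = 1 ∧ ∀ p q, lk (YY m j) p q =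
    if (p = 0 ∧ q = j + 1) ∨ (p = j + 1 ∧ q = 0) then 2 else 0 := by
  induction j with
  | zero => exact ⟨rho_sq (by omega), fun p q => lk_sq (by omega) p q⟩
  | succ j ih =>
    obtain ⟨h1, h2⟩ := ih (by omega)
    have e : YY m (j + 1) = s (j + 1) * YY m j * (s (j + 1))⁻¹ := by
      simp only [YY, yy]; rw [conj_pow]
    refine ⟨by rw [e, rho_conj _ _ h1], fun p q => ?_⟩
    rw [e, lk_conj _ _ h1, h2, map_inv, rho_s (by omega), Equiv.swap_inv]
    simp only [Equiv.swap_apply_def]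
    congr 1; apply propext; split_ifs <;> first | omega | (simp; try omega)

theorem rho_inl {m : ℕ} (f : FF m) : rho _ (iota m (inl f)) = 1 := by
  ext k
  cases k with
  | zero => rw [(iota_act _).1]; rfl
  | succ k => rw [rho_iota]; simp

/-- The exponent sum of `x_j`, as an integer. -/
def xi {m : ℕ} (j : ℕ) (f : FF m) : ℤ := Multiplicative.toAdd (xe m j f)

theorem xi_mul {m : ℕ} (j : ℕ) (f g : FF m) : xi j (f * g) = xi j f + xi j g := by
  rw [xi, map_mul]; rfl
theorem xi_inv {m : ℕ} (j : ℕ) (f : FF m) : xi j f⁻¹ = - xi j f := by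
  rw [xi, map_inv]; rfl
theorem xi_one {m : ℕ} (j : ℕ) : xi j (1 : FF m) = 0 := by
  rw [xi, map_one]; rfl
theorem xi_x {m i j : ℕ} (h : i ≤ m) : xi j (x i : FF m) = if i = j then 1 else 0 := by
  rw [xi, xe_x h]; split_ifs <;> rfl

/-- The linking numbers of strand `0` of a point-pushing braid are given by exponent sums. -/
theorem lk_inl {m : ℕ} (f : FF m) (j : ℕ) (hj : j ≤ m) :
    lk (iota m (inl f)) 0 (j+1) = 2 * xi j f := by
  let H : FF m →* Multiplicative ℤ :=
    { toFun := fun f => Multiplicative.ofAdd (lk (iota m (inl f)) 0 (j+1))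
      map_one' := by simp [lk_one]
      map_mul' := fun a b => by
        rw [map_mul, map_mul, lk_pmul _ _ (rho_inl b)]; rfl }
  have : H = (xe m j) ^ 2 := by
    apply fr_ext; intro i hi
    show Multiplicative.ofAdd (lk (iota m (inl (x i))) 0 (j+1)) = (xe m j (x i)) ^ 2
    rw [iota_inl, FL_x _ hi, (lk_YY hi).2, xe_x hi]
    by_cases h : i = j
    · rw [if_pos (by omega), if_pos h]; rfl
    · rw [if_neg (by omega), if_neg h]; rfl
  have := congrArg Multiplicative.toAdd (DFunLike.congr_fun this f)
  change lk (iota m (inl f)) 0 (j+1) = Multiplicative.toAdd ((xe m j f) ^ 2) at this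
  rw [this, toAdd_pow]; simp [xi]

theorem lk_inl' {m : ℕ} (f : FF m) (p q : ℕ) :
    lk (iota m (inl f)) (p+1) (q+1) = 0 := by
  let H : FF m →* Multiplicative ℤ :=
    { toFun := fun f => Multiplicative.ofAdd (lk (iota m (inl f)) (p+1) (q+1))
      map_one' := by simp [lk_one]
      map_mul' := fun a b => by
        rw [map_mul, map_mul, lk_pmul _ _ (rho_inl b)]; rfl }
  have : H = 1 := by
    apply fr_ext; intro i hi
    show Multiplicative.ofAdd (lk (iota m (inl (x i))) (p+1) (q+1)) = 1
    rw [iota_inl, FL_x _ hi, (lk_YY hi).2, if_neg (by omega)]; rfl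
  exact congrArg Multiplicative.toAdd (DFunLike.congr_fun this f)

theorem rho_sh {m : ℕ} (b : Br m) (k : ℕ) : rho _ (shB m b) (k+1) = rho m b k + 1 := by
  rw [← iota_inr, rho_iota]; rfl
theorem rho_sh0 {m : ℕ} (b : Br m) : rho _ (shB m b) 0 = 0 := by
  rw [← iota_inr]; exact (iota_act _).1

theorem lk_sh {m : ℕ} (b : Br m) (p q : ℕ) : lk (shB m b) (p+1) (q+1) = lk b p q := by
  induction b using br_ind generalizing p q with
  | one => simp [lk_one]
  | mul a b ha hb => rw [map_mul, lk_mul, rho_sh, rho_sh, ha, hb, lk_mul]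
  | gen i hi =>
    rw [shB_s, lk_s (by omega), lk_s hi]; congr 1; apply propext; omega
  | inv a ha => rw [map_inv, lk_inv, lk_inv, ← map_inv, rho_sh, rho_sh, ha]

theorem lk_sh0 {m : ℕ} (b : Br m) (q : ℕ) : lk (shB m b) 0 q = 0 := by
  induction b using br_ind generalizing q with
  | one => simp [lk_one]
  | mul a b ha hb => rw [map_mul, lk_mul, rho_sh0, ha, hb]; rfl
  | gen i hi => rw [shB_s, lk_s (by omega), if_neg (by omega)]
  | inv a ha => rw [map_inv, lk_inv, ← map_inv, rho_sh0, ha]; rfl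

end BC

namespace BC
open Equiv

/-! ### Commuting permutations of small sets -/

section perm
variable {X : Type*} [Fintype X] [DecidableEq X]

theorem nodup_le {l : List X} (h : l.Nodup) : l.length ≤ Fintype.card X :=
  h.length_le_card

theorem nodup_mem {l : List X} (h : l.Nodup) (hl : Fintype.card X ≤ l.length) (q : X) : q ∈ l := by
  by_contra hq
  have := nodup_le (l := q :: l) (List.nodup_cons.2 ⟨hq, h⟩)
  simp at this; omega

/-- Two permutations commuting with a permutation `g`, not an involution, of at most five points
commute; for six points the same holds if moreover `g ^ 3 ≠ 1`. -/
theorem perm_V (g c d : Perm X) (hc : ∀ y, c (g y) = g (c y)) (hd : ∀ y, d (g y) = g (d y))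
    (p : X) (hp : g (g p) ≠ p)
    (h : Fintype.card X ≤ 5 ∨ (Fintype.card X ≤ 6 ∧ ∃ q, g (g (g q)) ≠ q)) (y : X) :
    c (d y) = d (c y) := by
  have inj : ∀ {a b}, g a = g b → a = b := fun h => g.injective h
  have hz : ∀ c : Perm X, (∀ y, c (g y) = g (c y)) → ∀ (i : ℤ) y, c ((g ^ i) y) = (g ^ i) (c y) := by
    intro c hc i y
    have e : Commute c g := by ext y; exact hc y
    exact DFunLike.congr_fun (e.zpow_right i).eq y
  have claim1 : ∀ c : Perm X, (∀ y, c (g y) = g (c y)) → ∀ y, g (g y) ≠ y →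
      g.SameCycle y (c y) := by
    intro c hc y hy
    by_contra hs
    have e1 : g y ≠ y := fun e => hy (by rw [e, e])
    have hcy : g (g (c y)) ≠ c y := by rw [← hc, ← hc]; exact fun e => hy (c.injective e)
    have e2 : g (c y) ≠ c y := fun e => hcy (by rw [e, e])
    have sep : ∀ a b, g.SameCycle y a → g.SameCycle (c y) b → a ≠ b := by
      rintro a b ha hb rfl; exact hs (ha.trans hb.symm)
    have hn : [y, g y, g (g y), c y, g (c y), g (g (c y))].Nodup := by
      have s1 : g.SameCycle y y := .refl _ _
      have s2 : g.SameCycle y (g y) := by simp [Perm.SameCycle.refl]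
      have s3 : g.SameCycle y (g (g y)) := by simp [Perm.SameCycle.refl]
      have s4 : g.SameCycle (c y) (c y) := .refl _ _
      have s5 : g.SameCycle (c y) (g (c y)) := by simp [Perm.SameCycle.refl]
      have s6 : g.SameCycle (c y) (g (g (c y))) := by simp [Perm.SameCycle.refl]
      simp only [List.nodup_cons, List.mem_cons, not_or, List.not_mem_nil, not_false_eq_true,
        List.nodup_nil, and_true]
      exact ⟨⟨e1.symm, hy.symm, sep _ _ s1 s4, sep _ _ s1 s5, sep _ _ s1 s6⟩,
        ⟨fun e => e1 (inj e).symm, sep _ _ s2 s4, sep _ _ s2 s5, sep _ _ s2 s6⟩,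
        ⟨sep _ _ s3 s4, sep _ _ s3 s5, sep _ _ s3 s6⟩, ⟨e2.symm, hcy.symm⟩,
        fun e => e2 (inj e).symm⟩
    have := nodup_le hn
    simp only [List.length_cons, List.length_nil] at this
    rcases h with h | ⟨h, q, hq⟩
    · omega
    · have cov := nodup_mem hn (by simpa using h)
      have h3 : ∀ u v, g.SameCycle y u → g.SameCycle (c y) v → u ≠ v := sep
      have y3 : g (g (g y)) = y := by
        have := cov (g (g (g y)))
        have s3 : g.SameCycle y (g (g (g y))) := by simp [Perm.SameCycle.refl]
        simp only [List.mem_cons, List.not_mem_nil, or_false] at this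
        rcases this with e | e | e | e | e | e
        · exact e
        · exact absurd (inj e) hy
        · exact absurd (inj (inj e)) e1
        · exact absurd e (sep _ _ s3 (by simp [Perm.SameCycle.refl]))
        · exact absurd e (sep _ _ s3 (by simp [Perm.SameCycle.refl]))
        · exact absurd e (sep _ _ s3 (by simp [Perm.SameCycle.refl]))
      have z3 : g (g (g (c y))) = c y := by rw [← hc, ← hc, ← hc, y3]
      apply hq
      have := cov q
      simp only [List.mem_cons, List.not_mem_nil, or_false] at this
      rcases this with e | e | e | e | e | e <;> rw [e] <;> simp only [y3, z3]
  by_cases hy : g (g y) = y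
  swap
  · obtain ⟨i, hi⟩ := claim1 c hc y hy
    obtain ⟨j, hj⟩ := claim1 d hd y hy
    rw [← hj, ← hi, hz c hc, hz d hd, ← hi, ← hj, ← Perm.mul_apply, ← Perm.mul_apply,
      ← zpow_add, ← zpow_add, add_comm]
  have p1 : g p ≠ p := fun e => hp (by rw [e, e])
  have hT : ∀ l : List X, l.Nodup → (∀ u ∈ l, g (g u) = u) → (p :: g p :: g (g p) :: l).Nodup := by
    intro l hl hu
    simp only [List.nodup_cons, List.mem_cons, not_or]
    exact ⟨⟨p1.symm, hp.symm, fun e => hp (hu _ e)⟩, ⟨fun e => p1 (inj e).symm,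
      fun e => hp (inj (hu _ e))⟩, fun e => hp (inj (inj (hu _ e))), hl⟩
  have cT : ∀ c : Perm X, (∀ y, c (g y) = g (c y)) → ∀ y, g (g y) = y → g (g (c y)) = c y := by
    intro c hc y hy; rw [← hc, ← hc, hy]
  have four : ∀ a b c d, g (g a) = a → g (g b) = b → g (g c) = c → g (g d) = d →
      [a, b, c, d].Nodup → False := by
    intro a b c d h1 h2 h3 h4 hn
    have := nodup_le (hT _ hn (by simp [h1, h2, h3, h4]))
    simp only [List.length_cons, List.length_nil] at this
    omega
  by_cases hq : ∃ q, g (g q) = q ∧ g q ≠ q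
  · obtain ⟨q, hq1, hq2⟩ := hq
    have claim2 : ∀ c : Perm X, (∀ y, c (g y) = g (c y)) → c y = y ∨ c y = g y := by
      intro c hc
      by_contra hcy; push Not at hcy
      have := cT c hc y hy
      by_cases e : g y = y
      · have e2 : g (c y) = c y := by rw [← hc, e]
        refine four y (c y) q (g q) hy this hq1 (by rw [hq1]) ?_
        simp only [List.nodup_cons, List.mem_cons, not_or, List.not_mem_nil, not_false_eq_true,
          List.nodup_nil, and_true]
        refine ⟨⟨hcy.1.symm, ?_, ?_⟩, ⟨?_, ?_⟩, hq2.symm⟩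
        · rintro rfl; exact hq2 e
        · intro e'; apply hq2; rw [e', hq1] at e; exact e.symm
        · intro e'; rw [e'] at e2; exact hq2 e2
        · intro e'; rw [e', hq1] at e2; exact hq2 e2.symm
      · have e2 : g (c y) ≠ c y := by rw [← hc]; exact fun e' => e (c.injective e')
        refine four y (g y) (c y) (g (c y)) hy (by rw [hy]) this (by rw [this]) ?_
        simp only [List.nodup_cons, List.mem_cons, not_or, List.not_mem_nil, not_false_eq_true,
          List.nodup_nil, and_true]
        refine ⟨⟨Ne.symm e, hcy.1.symm, ?_⟩, ⟨hcy.2.symm, ?_⟩, e2.symm⟩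
        · intro e'; exact hcy.2 (this.symm.trans (congrArg g e'.symm))
        · intro e'; exact hcy.1 (inj e').symm
    rcases claim2 c hc with e1 | e1 <;> rcases claim2 d hd with e2 | e2 <;>
      simp [e1, e2, hc, hd]
  · push Not at hq
    have three : ∀ a b c, g (g a) = a → g (g b) = b → g (g c) = c → [a, b, c].Nodup → False := by
      intro a b c h1 h2 h3 hn
      have hn' := hT _ hn (by simp [h1, h2, h3])
      have := nodup_le hn'
      simp only [List.length_cons, List.length_nil] at this
      rcases h with h | ⟨h, q, hqq⟩
      · omega
      have cov := nodup_mem hn' (by simpa using h)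
      have f1 := hq _ h1
      have f2 := hq _ h2
      have f3 := hq _ h3
      have hp3 : g (g (g p)) = p := by
        have := cov (g (g (g p)))
        simp only [List.mem_cons, List.not_mem_nil, or_false] at this
        have no : ∀ u, g u = u → g (g (g p)) ≠ u := by
          intro u hu e
          rw [← hu] at e; have e := inj e
          rw [← hu] at e; have e := inj e
          rw [← hu] at e; have e := inj e
          apply p1; rw [e, hu]
        rcases this with e | e | e | e | e | e
        · exact e
        · exact absurd (inj e) hp
        · exact absurd (inj (inj e)) p1
        · exact absurd e (no _ f1)
        · exact absurd e (no _ f2)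
        · exact absurd e (no _ f3)
      apply hqq
      have := cov q
      simp only [List.mem_cons, List.not_mem_nil, or_false] at this
      rcases this with e | e | e | e | e | e <;> rw [e] <;> simp only [hp3, f1, f2, f3]
    have ty := cT c hc y hy
    have ty' := cT d hd y hy
    have t1 := cT c hc _ ty'
    have t2 := cT d hd _ ty
    have ci : ∀ {a b}, c a = c b → a = b := fun h => c.injective h
    have di : ∀ {a b}, d a = d b → a = b := fun h => d.injective h
    by_contra hne
    have three' : ∀ a b c, g (g a) = a → g (g b) = b → g (g c) = c → a ≠ b → a ≠ c → b ≠ c → False := by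
      intro a b c h1 h2 h3 h4 h5 h6
      exact three a b c h1 h2 h3 (by simp [h4, h5, h6])
    by_cases e1 : c y = y
    · have : d y ≠ y := fun e => hne (by rw [e1, e, e1])
      refine three' y (d y) (c (d y)) hy ty' t1 this.symm ?_ ?_
      · intro e; exact this (ci (e1.trans e)).symm
      · intro e; exact hne (by rw [e1, ← e])
    · by_cases e2 : d y = y
      · refine three' y (c y) (d (c y)) hy ty t2 (Ne.symm e1) ?_ ?_
        · intro e; exact e1 (di (e2.trans e)).symm
        · intro e; exact hne (by rw [e2, ← e])
      · have e3 : c y = d y := by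
          by_contra e3; exact three' y (c y) (d y) hy ty ty' (Ne.symm e1) (Ne.symm e2) e3
        have e4 : c (d y) = y := by
          by_contra e4
          exact three' y (c y) (c (d y)) hy ty t1 (Ne.symm e1) (Ne.symm e4) (fun e => e2 (ci e).symm)
        have e5 : d (c y) = y := by
          by_contra e5
          exact three' y (d y) (d (c y)) hy ty' t2 (Ne.symm e2) (Ne.symm e5) (fun e => e1 (di e).symm)
        exact hne (e4.trans e5.symm)

end perm
end BC

namespace BC
open Equiv

/-! ### Braid group actions on few points -/

theorem BS.map {m : ℕ} {G H : Type*} [Group G] [Group H] {f : ℕ → G} (h : BS m f) (F : G →* H) :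
    BS m (fun i => F (f i)) where
  comm i j hij hj := by simp only [← map_mul, h.comm i j hij hj]
  braid i hi := by simp only [← map_mul, h.braid i hi]

theorem BS.shift {m : ℕ} {G : Type*} [Group G] {f : ℕ → G} (h : BS m f) (o k : ℕ) (hk : k + o ≤ m) :
    BS k (fun i => f (i + o)) where
  comm i j hij hj := h.comm _ _ (by omega) (by omega)
  braid i hi := by
    have := h.braid (i + o) (by omega)
    simpa only [show i + 1 + o = i + o + 1 by omega] using this

theorem BS.eq_of_comm {m : ℕ} {G : Type*} [Group G] {f : ℕ → G} (h : BS m f) {i : ℕ}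
    (hi : i + 1 < m) (hc : f i * f (i+1) = f (i+1) * f i) : f i = f (i+1) := by
  have := h.braid i hi
  rw [hc] at this
  rw [mul_assoc, mul_assoc] at this
  have := mul_left_cancel this
  exact mul_left_cancel this

/-- If two neighbouring generators have commuting images, the representation is cyclic. -/
theorem BS.cyclic {m : ℕ} {G : Type*} [Group G] {f : ℕ → G} (h : BS m f) {i : ℕ}
    (hi : i + 1 < m) (hc : f i * f (i+1) = f (i+1) * f i) : ∀ j < m, f j = f 0 := by
  have up : ∀ k, i + k + 1 < m → f (i+k) = f (i+k+1) := by
    intro k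
    induction k with
    | zero => intro _; exact h.eq_of_comm hi hc
    | succ k ih =>
      intro hk
      apply h.eq_of_comm hk
      have := h.comm (i+k) (i+k+2) (by omega) (by omega)
      rw [ih (by omega)] at this; exact this
  have dn : ∀ k, k ≤ i → f (i-k) = f (i-k+1) := by
    intro k
    induction k with
    | zero => intro _; exact h.eq_of_comm hi hc
    | succ k ih =>
      intro hk
      have e := ih (by omega)
      have e1 : i - (k+1) + 1 = i - k := by omega
      apply h.eq_of_comm (by omega)
      have := h.comm (i-(k+1)) (i-k+1) (by omega) (by omega)
      rw [← e] at this; rw [e1]; exact this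
  have all : ∀ j, j + 1 < m → f j = f (j+1) := by
    intro j hj
    rcases le_total i j with h1 | h1
    · have := up (j - i) (by omega)
      rwa [show i + (j - i) = j by omega] at this
    · have := dn (i - j) (by omega)
      rwa [show i - (i - j) = j by omega] at this
  intro j
  induction j with
  | zero => intro _; rfl
  | succ j ih => intro hj; rw [← all j hj, ih (by omega)]

/-- Every action of the braid group with `m` generators on at most `m` points is cyclic. -/
def Yp (m : ℕ) : Prop := ∀ (X : Type) [Fintype X] (a : ℕ → Perm X), Fintype.card X ≤ m → BS m a →
  ∀ i < m, a i = a 0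

theorem Yp5 : Yp 5 := by
  intro X _ a hX h
  classical
  by_cases hg : ∃ p, (a 0 * a 1) ((a 0 * a 1) p) ≠ p
  · obtain ⟨p, hp⟩ := hg
    have hc : ∀ c : Perm X, c * a 0 = a 0 * c → c * a 1 = a 1 * c →
        ∀ y, c ((a 0 * a 1) y) = (a 0 * a 1) (c y) := by
      intro c h0 h1 y
      rw [← Perm.mul_apply, ← mul_assoc, h0, mul_assoc, h1]; rfl
    have := perm_V (a 0 * a 1) (a 3) (a 4)
      (hc _ (h.comm 0 3 (by omega) (by omega)).symm (h.comm 1 3 (by omega) (by omega)).symm)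
      (hc _ (h.comm 0 4 (by omega) (by omega)).symm (h.comm 1 4 (by omega) (by omega)).symm)
      p hp (.inl hX)
    exact h.cyclic (i := 3) (by omega) (Equiv.ext this)
  · push Not at hg
    have e : a 0 * a 1 * (a 0 * a 1) = 1 := Equiv.ext hg
    have b := h.braid 0 (by omega)
    rw [zero_add] at b
    refine h.cyclic (i := 0) (by omega) ?_
    rw [zero_add]
    rw [← mul_assoc, b] at e
    have e2 : a 0 = (a 1)⁻¹ * (a 1)⁻¹ * (a 1)⁻¹ := by
      calc a 0 = (a 1)⁻¹ * (a 1 * a 0 * a 1 * a 1) * (a 1)⁻¹ * (a 1)⁻¹ := by group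
        _ = _ := by rw [e, mul_one]
    rw [e2]; group

theorem Yp4 : Yp 4 := by
  intro X _ a hX h
  classical
  have cyc : ∀ i < 3, a i * a (i+1) = a (i+1) * a i → ∀ i < 4, a i = a 0 :=
    fun i hi e => h.cyclic (by omega) e
  by_contra hn
  have h0 : ∀ p, a 0 (a 0 p) = p := by
    by_contra h0; push Not at h0
    obtain ⟨p, hp⟩ := h0
    apply hn
    apply cyc 2 (by omega)
    apply Equiv.ext
    exact perm_V (a 0) (a 2) (a 3)
      (fun y => DFunLike.congr_fun (h.comm 0 2 (by omega) (by omega)).symm y)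
      (fun y => DFunLike.congr_fun (h.comm 0 3 (by omega) (by omega)).symm y) p hp (.inl (by omega))
  have q0 : a 0 * a 0 = 1 := Equiv.ext h0
  have next : ∀ i, i + 1 < 4 → a i * a i = 1 → a (i+1) * a (i+1) = 1 := by
    intro i hi e
    have b := h.braid i hi
    have e1 : a (i+1) = (a i * a (i+1)) * a i * (a i * a (i+1))⁻¹ := by
      rw [eq_mul_inv_iff_mul_eq, b, mul_assoc]
    calc a (i+1) * a (i+1) = (a i * a (i+1)) * a i * (a i * a (i+1))⁻¹ *
          ((a i * a (i+1)) * a i * (a i * a (i+1))⁻¹) := by rw [← e1]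
      _ = (a i * a (i+1)) * (a i * a i) * (a i * a (i+1))⁻¹ := by group
      _ = 1 := by rw [e]; simp
  have q1 := next 0 (by omega) q0
  have q2 := next 1 (by omega) q1
  have q3 := next 2 (by omega) q2
  simp only [zero_add, Nat.reduceAdd] at q1 q2 q3
  set t := a 0 * a 1 with ht
  have b := h.braid 0 (by omega)
  rw [zero_add] at b
  have t3 : t * t * t = 1 := by
    calc t * t * t = (a 0 * a 1 * a 0) * (a 1 * a 0 * a 1) := by simp only [ht, mul_assoc]
      _ = a 0 * a 1 * (a 0 * a 0) * a 1 * a 0 := by rw [← b]; simp only [mul_assoc]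
      _ = a 0 * (a 1 * a 1) * a 0 := by rw [q0]; simp only [mul_assoc, one_mul, mul_one]
      _ = 1 := by rw [q1, mul_one, q0]
  have t3' : ∀ p, t (t (t p)) = p := fun p => DFunLike.congr_fun t3 p
  have tc : ∀ p, a 3 (t p) = t (a 3 p) := by
    intro p
    have : a 3 * t = t * a 3 := by
      rw [ht, ← mul_assoc, (h.comm 0 3 (by omega) (by omega)).symm, mul_assoc,
        (h.comm 1 3 (by omega) (by omega)).symm, mul_assoc]
    exact DFunLike.congr_fun this p
  have q3' : ∀ p, a 3 (a 3 p) = p := fun p => DFunLike.congr_fun q3 p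
  have ht1 : ∃ p, t p ≠ p := by
    by_contra hh; push Not at hh
    have : t = 1 := Equiv.ext hh
    apply hn
    apply cyc 0 (by omega)
    rw [zero_add]
    rw [ht, mul_eq_one_iff_eq_inv] at this
    rw [this]; simp
  obtain ⟨p, hp⟩ := ht1
  have ti : ∀ {a b}, t a = t b → a = b := fun h => t.injective h
  have key : ∀ p, t p ≠ p → t (t p) ≠ p := by
    intro p hp e; apply hp
    have := t3' p
    rw [e] at this; exact this
  have f1 : ∀ p, t p ≠ p → a 3 p = p := by
    intro p hp
    have k := key p hp
    have hs : a 3 p = p ∨ a 3 p = t p ∨ a 3 p = t (t p) := by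
      by_contra hs; push Not at hs
      obtain ⟨h1, h2, h3⟩ := hs
      have e1 : t (a 3 p) ≠ a 3 p := by rw [← tc]; exact fun e => hp ((a 3).injective e)
      have hn : [p, t p, t (t p), a 3 p, t (a 3 p)].Nodup := by
        simp only [List.nodup_cons, List.mem_cons, not_or, List.not_mem_nil, not_false_eq_true,
          List.nodup_nil, and_true]
        refine ⟨⟨hp.symm, k.symm, h1.symm, ?_⟩, ⟨fun e => hp (ti e).symm, h2.symm,
          fun e => h1 (ti e).symm⟩, ⟨h3.symm, fun e => h2 (ti e).symm⟩, e1.symm⟩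
        intro e
        apply h3; apply ti; rw [← e, t3']
      have := nodup_le hn
      simp only [List.length_cons, List.length_nil] at this
      omega
    rcases hs with e | e | e
    · exact e
    · exfalso
      have := q3' p
      rw [e, tc, e] at this; exact k this
    · exfalso
      have := q3' p
      rw [e, tc, tc, e, t3'] at this; exact hp this
  have f2 : ∀ q, t q = q → a 3 q = q := by
    intro q hq
    by_contra h1
    have e1 : t (a 3 q) = a 3 q := by rw [← tc, hq]
    have k := key p hp
    have no : ∀ u, t u = u → p ≠ u ∧ t p ≠ u ∧ t (t p) ≠ u := by
      intro u hu
      refine ⟨?_, ?_, ?_⟩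
      · rintro rfl; exact hp hu
      · intro e; rw [← hu] at e; have e := ti e; rw [e] at hp; exact hp hu
      · intro e; rw [← hu] at e; have e := ti e; rw [← hu] at e; have e := ti e
        rw [e] at hp; exact hp hu
    have hn : [p, t p, t (t p), q, a 3 q].Nodup := by
      obtain ⟨x1, x2, x3⟩ := no q hq
      obtain ⟨y1, y2, y3⟩ := no _ e1
      simp only [List.nodup_cons, List.mem_cons, not_or, List.not_mem_nil, not_false_eq_true,
        List.nodup_nil, and_true]
      exact ⟨⟨hp.symm, k.symm, x1, y1⟩, ⟨fun e => hp (ti e).symm, x2, y2⟩, ⟨x3, y3⟩, Ne.symm h1⟩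
    have := nodup_le hn
    simp only [List.length_cons, List.length_nil] at this
    omega
  have : a 3 = 1 := by
    apply Equiv.ext; intro q
    by_cases hq : t q = q
    · exact f2 q hq
    · exact f1 q hq
  exact hn (cyc 2 (by omega) (by simp [this]))


section orbits
variable {X : Type} [Fintype X] (a : Perm X)

/-- Nontrivial cycles of `a`. -/
def orbS : Setoid {x : X // a x ≠ x} where
  r x y := a.SameCycle x y
  iseqv := ⟨fun _ => .refl _ _, fun h => h.symm, fun h k => h.trans k⟩

/-- The set of nontrivial cycles of `a`. -/
abbrev Orb := Quotient (orbS a)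

/-- Nontrivial cycles have at least two points each. -/
theorem orb_card [DecidableEq X] [Fintype (Orb a)] :
    2 * Fintype.card (Orb a) ≤ Fintype.card X := by
  have hs : ∀ q : Orb a, (⟦q.out⟧ : Orb a) = q := fun q => Quotient.out_eq q
  let F : Orb a × Bool → X := fun q => if q.2 then a q.1.out.1 else q.1.out.1
  have hF : Function.Injective F := by
    rintro ⟨q, b⟩ ⟨r, c⟩ h
    have h1 : ∀ q b, a.SameCycle q.out.1 (F (q, b)) := by
      intro q b; cases b <;> simp [F, Perm.SameCycle.refl]
    have h2 : q = r := by
      rw [← hs q, ← hs r]; apply Quotient.sound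
      exact (h1 q b).trans ((h ▸ (h1 r c).symm))
    subst h2
    have := q.out.2
    cases b <;> cases c <;> simp [F] at h ⊢
    · exact this h.symm
    · exact this h
  have := Fintype.card_le_of_injective F hF
  simp at this; omega

/-- The action of the centralizer of `a` on the fixed points of `a`. -/
def fixH : Subgroup.centralizer {a} →* Perm {x : X // a x = x} :=
  MonoidHom.toHomPerm
    { toFun := fun g (x : {x : X // a x = x}) => (⟨g.1 x.1, by
        have := DFunLike.congr_fun (Subgroup.mem_centralizer_iff.1 g.2 a rfl) x.1
        simp only [Perm.mul_apply] at this
        rw [this, x.2]⟩ : {x : X // a x = x})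
      map_one' := rfl
      map_mul' := fun _ _ => rfl }

/-- The action of the centralizer of `a` on the cycles of `a`. -/
def orbH : Subgroup.centralizer {a} →* Perm (Orb a) :=
  MonoidHom.toHomPerm
    { toFun := fun g => Quotient.map (fun x => (⟨g.1 x.1, by
        have := DFunLike.congr_fun (Subgroup.mem_centralizer_iff.1 g.2 a rfl) x.1
        simp only [Perm.mul_apply] at this
        rw [this]; exact fun e => x.2 (g.1.injective e)⟩ : {x : X // a x ≠ x})) (by
          rintro x y ⟨i, hi⟩
          refine ⟨i, ?_⟩
          have e : Commute (a ^ i) g.1 := Commute.zpow_left (Subgroup.mem_centralizer_iff.1 g.2 a rfl) i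
          have := DFunLike.congr_fun e.eq x.1
          simp only [Perm.mul_apply] at this
          simp only [this, hi])
      map_one' := by funext q; induction q using Quotient.ind; rfl
      map_mul' := fun _ _ => by funext q; induction q using Quotient.ind; rfl }

end orbits

theorem comm_of_cycle {X : Type} (a t u : Perm X) (ht : t * a = a * t) (hu : u * a = a * u)
    (h1 : ∀ y, a.SameCycle y (t y)) (h2 : ∀ y, a.SameCycle y (u y)) : t * u = u * t := by
  ext1 y
  obtain ⟨i, hi⟩ := h1 y
  obtain ⟨j, hj⟩ := h2 y
  have e1 := DFunLike.congr_fun (Commute.zpow_right (show Commute t a from ht) j).eq y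
  have e2 := DFunLike.congr_fun (Commute.zpow_right (show Commute u a from hu) i).eq y
  simp only [Perm.mul_apply] at e1 e2 ⊢
  rw [← hj, ← hi, e1, e2, ← hi, ← hj, ← Perm.mul_apply, ← Perm.mul_apply, ← zpow_add, ← zpow_add,
    add_comm]

/-- A noncyclic action of the braid group on `m + 1 ≥ 7` strands on at most `m + 1` points: each
generator moves at most two points. -/
theorem act_W {m : ℕ} (hm : 6 ≤ m) (hY : Yp (m-2)) {X : Type} [Fintype X] [DecidableEq X]
    (a : ℕ → Perm X) (hX : Fintype.card X ≤ m + 1) (h : BS m a) (hn : a 2 * a 3 ≠ a 3 * a 2) :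
    m - 1 ≤ Fintype.card {x // a 0 x = x} := by
  classical
  by_contra hf
  have hc : ∀ i, 2 ≤ i → i < m → a i ∈ Subgroup.centralizer {a 0} := by
    intro i hi him
    rw [Subgroup.mem_centralizer_iff]; rintro _ rfl
    exact h.comm 0 i (by omega) him
  let c : ℕ → Subgroup.centralizer {a 0} := fun i =>
    if hi : 2 ≤ i ∧ i < m then ⟨a i, hc i hi.1 hi.2⟩ else 1
  have c1 : ∀ i, 2 ≤ i → i < m → (c i).1 = a i := by
    intro i h1 h2; simp only [c, dif_pos (And.intro h1 h2)]
  have hcs : BS (m-2) (fun i => c (i+2)) :=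
    { comm := fun i j hij hj => by
        apply Subtype.ext
        simp only [Subgroup.coe_mul]
        rw [c1 _ (by omega) (by omega), c1 _ (by omega) (by omega)]
        exact h.comm _ _ (by omega) (by omega)
      braid := fun i hi => by
        apply Subtype.ext
        simp only [Subgroup.coe_mul]
        rw [c1 _ (by omega) (by omega), c1 _ (by omega) (by omega)]
        exact h.braid (i+2) (by omega) }
  have h1 := hY _ _ (by omega) (hcs.map (fixH (a 0)))
  have h2 := hY _ _ (by have := orb_card (a 0); omega) (hcs.map (orbH (a 0)))
  have sc : ∀ i, i < m - 2 → ∀ y, (a 0).SameCycle y ((a 2 * (a (i+2))⁻¹) y) := by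
    intro i hi y
    obtain ⟨x, rfl⟩ := (a (i+2)).surjective y
    have e0 : (a (i+2))⁻¹ (a (i+2) x) = x := (a (i+2)).symm_apply_apply x
    rw [Perm.mul_apply, e0]
    by_cases hx : a 0 x = x
    · have := congrArg Subtype.val (DFunLike.congr_fun (h1 i hi) ⟨x, hx⟩)
      change (c (i+2)).1 x = (c (0+2)).1 x at this
      rw [c1 _ (by omega) (by omega), c1 _ (by omega) (by omega)] at this
      rw [this]
    · have := Quotient.exact (DFunLike.congr_fun (h2 i hi) ⟦⟨x, hx⟩⟧)
      change (a 0).SameCycle ((c (i+2)).1 x) ((c (0+2)).1 x) at this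
      rw [c1 _ (by omega) (by omega), c1 _ (by omega) (by omega)] at this
      exact this
  have cm : ∀ i, i < m - 2 → (a 2 * (a (i+2))⁻¹) * a 0 = a 0 * (a 2 * (a (i+2))⁻¹) := by
    intro i hi
    have e1 : Commute (a 2) (a 0) := (h.comm 0 2 (by omega) (by omega)).symm
    have e2 : Commute (a (i+2)) (a 0) := (h.comm 0 (i+2) (by omega) (by omega)).symm
    exact (e1.mul_left e2.inv_left).eq
  have := comm_of_cycle (a 0) _ _ (cm 1 (by omega)) (cm 3 (by omega)) (sc 1 (by omega)) (sc 3 (by omega))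
  simp only [Nat.reduceAdd] at this
  have e2 : (a 5)⁻¹ * a 2 = a 2 * (a 5)⁻¹ := 
    (show Commute (a 2) (a 5) from h.comm 2 5 (by omega) (by omega)).inv_right.eq.symm
  have e3 : (a 5)⁻¹ * (a 3)⁻¹ = (a 3)⁻¹ * (a 5)⁻¹ := 
    (show Commute (a 3) (a 5) from h.comm 3 5 (by omega) (by omega)).inv_inv.eq.symm
  have e4 : a 2 * (a 5)⁻¹ * (a 2 * (a 3)⁻¹) = a 2 * a 2 * (a 3)⁻¹ * (a 5)⁻¹ := by
    rw [mul_assoc, ← mul_assoc (a 5)⁻¹, e2, mul_assoc (a 2) (a 5)⁻¹, e3]; simp only [mul_assoc]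
  rw [e4, ← mul_assoc] at this
  have := mul_right_cancel this
  rw [mul_assoc, mul_assoc] at this
  have := mul_left_cancel this
  apply hn
  rw [inv_mul_eq_iff_eq_mul, ← mul_assoc, eq_mul_inv_iff_mul_eq] at this
  exact this

/-- Actions of the braid group with `m ≥ 4` generators on at most `m` points are cyclic. -/
theorem Yp_all (m : ℕ) (hm : 4 ≤ m) : Yp m := by
  induction m using Nat.strong_induction_on with
  | _ m ih =>
    rcases (by omega : m = 4 ∨ m = 5 ∨ 6 ≤ m) with rfl | rfl | h6
    · exact Yp4
    · exact Yp5
    intro X _ a hX h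
    classical
    by_cases hc : a 2 * a 3 = a 3 * a 2
    · exact h.cyclic (i := 2) (by omega) hc
    have := act_W h6 (ih _ (by omega) (by omega)) a (by omega) h hc
    have h1 : a 0 = 1 := by
      ext1 x
      by_contra hx
      have hx : a 0 x ≠ x := hx
      have : Fintype.card {x // a 0 x = x} + Fintype.card {x // ¬ a 0 x = x} = Fintype.card X :=
        by rw [Fintype.card_subtype_compl]; have := Fintype.card_subtype_le (fun x => a 0 x = x); omega
      have h2 : [(⟨x, hx⟩ : {x // ¬ a 0 x = x}), ⟨a 0 x, fun e => hx ((a 0).injective e)⟩].Nodup := by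
        simp [Subtype.ext_iff, Ne.symm hx]
      have := nodup_le h2
      simp only [List.length_cons, List.length_nil] at this
      omega
    exact h.cyclic (i := 0) (by omega) (by simp [h1])

end BC

namespace BC
open Equiv

/-! ### The permutation of the image of a generator under an automorphism -/

/-- The permutation of the strands, on `Fin (m+1)`. -/
def rhoF (m : ℕ) : Br m →* Perm (Fin (m+1)) :=
  MonoidHom.toHomPerm
    { toFun := fun b (k : Fin (m+1)) =>
        (⟨rho m b k, Nat.lt_succ_of_le (rho_le b k (by omega))⟩ : Fin (m+1))
      map_one' := rfl
      map_mul' := fun a b => by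
        funext k; apply Fin.ext
        show rho m (a * b) k = rho m a (rho m b k)
        rw [map_mul]; rfl }

theorem rhoF_val {m : ℕ} (b : Br m) (k : Fin (m+1)) : (rhoF m b k : ℕ) = rho m b k := rfl

theorem rho_ext {m : ℕ} {b c : Br m} (h : rhoF m b = rhoF m c) : rho m b = rho m c := by
  ext k
  by_cases hk : k ≤ m
  · exact congrArg Fin.val (DFunLike.congr_fun h ⟨k, by omega⟩)
  · rw [rho_gt _ _ (by omega), rho_gt _ _ (by omega)]

theorem rhoF_s {m : ℕ} (i : Fin m) : rhoF m (s i) = swap i.castSucc i.succ := by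
  ext k
  rw [rhoF_val, rho_s i.2, swap_apply_def, swap_apply_def]
  simp only [Fin.ext_iff, Fin.val_castSucc, Fin.val_succ]
  split_ifs <;> simp

theorem rhoF_surj (m : ℕ) : Function.Surjective (rhoF m) := by
  intro p
  have hp : p ∈ Submonoid.closure (Set.range fun i : Fin m ↦ swap i.castSucc i.succ) := by
    rw [Perm.mclosure_swap_castSucc_succ]; trivial
  have : Submonoid.closure (Set.range fun i : Fin m ↦ swap i.castSucc i.succ) ≤
      MonoidHom.mrange (rhoF m) := by
    rw [Submonoid.closure_le]
    rintro _ ⟨i, rfl⟩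
    exact ⟨s i, rhoF_s i⟩
  exact this hp

theorem ei_conj {m : ℕ} (b g : Br m) : ei (b * g * b⁻¹) = ei g := by
  rw [ei_mul, ei_mul, ei_inv]; ring

theorem ei_phi {m : ℕ} (hm : 0 < m) (φ : MulAut (Br m)) :
    (ei (φ (s 0)) = 1 ∨ ei (φ (s 0)) = -1) ∧ ∀ g, ei (φ g) = ei (φ (s 0)) * ei g := by
  have key : ∀ φ : MulAut (Br m), ∀ g, ei (φ g) = ei (φ (s 0)) * ei g := by
    intro φ g
    induction g using br_ind with
    | one => rw [map_one, ei_one]; ring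
    | mul a b ha hb => rw [map_mul, ei_mul, ei_mul, ha, hb]; ring
    | gen i hi =>
      obtain ⟨b, hb⟩ := s_conj i hi
      rw [ei_s hi, hb, map_mul, map_mul, map_inv, ei_conj]; ring
    | inv a ha => rw [map_inv, ei_inv, ei_inv, ha]; ring
  refine ⟨?_, key φ⟩
  have := key φ (φ⁻¹ (s 0))
  rw [MulAut.apply_inv_self, ei_s hm] at this
  exact Int.isUnit_iff.1 (IsUnit.of_mul_eq_one _ this.symm)

theorem lk_comm {m : ℕ} (b g : Br m) (hg : rho m g = 1) (h : b * g = g * b) (p q : ℕ) :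
    lk g (rho m b p) (rho m b q) = lk g p q := by
  have := lk_conj b g hg (rho m b p) (rho m b q)
  rw [h, mul_inv_cancel_right, rho_self_inv, rho_self_inv] at this
  exact this

theorem lk_sumF {m : ℕ} (b : Br m) :
    ∑ p : Fin (m+1), ∑ q : Fin (m+1), lk b p q = 2 * ei b := by
  rw [← lk_sum, Finset.sum_range]
  apply Finset.sum_congr rfl
  intro p _
  rw [Finset.sum_range]

set_option maxRecDepth 100000 in
theorem perm4 : ∀ a : Perm (Fin 4), Perm.sign a = -1 →
    (∃ u v, u ≠ v ∧ a = swap u v) ∨ ∀ p, a (a p) ≠ p := by decide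

set_option maxRecDepth 100000 in
theorem perm4' : ∀ a b : Perm (Fin 4), (∀ p, a (a p) ≠ p) → a * b * a = b * a * b → a ≠ b →
    a * b * (a * b) * (a * b) = 1 ∧ ∃ p, b (a p) = a (a (b p)) := by decide

theorem sum_list {X : Type*} [Fintype X] [DecidableEq X] {l : List X} (h : l.Nodup)
    (hl : Fintype.card X ≤ l.length) (f : X → ℤ) : ∑ p, f p = (l.map f).sum := by
  have : (Finset.univ : Finset X) = l.toFinset := by
    ext q; simp [nodup_mem h hl q]
  rw [this, List.sum_toFinset f h]

/-- An odd involution of at most six points is a transposition or, on exactly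
six points, has no fixed point. -/
theorem invol_swap {X : Type*} [Fintype X] [DecidableEq X] (a : Perm X) (h2 : a * a = 1)
    (hs : Perm.sign a = -1) (hX : Fintype.card X ≤ 6) : (∃ u v, u ≠ v ∧ a = swap u v) ∨
    (Fintype.card X = 6 ∧ ∀ p, a p ≠ p) := by
  have h1 : a ≠ 1 := by rintro rfl; simp at hs
  have ho : orderOf a = 2 := orderOf_eq_prime (by rw [pow_two, h2]) h1
  obtain ⟨n, hn⟩ := Perm.cycleType_prime_order (σ := a) (by rw [ho]; exact Nat.prime_two)
  rw [ho] at hn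
  have hsum := Perm.sum_cycleType a
  rw [hn, Multiset.sum_replicate, smul_eq_mul] at hsum
  have hle := Finset.card_le_univ a.support
  have hsg := Perm.sign_of_cycleType a
  rw [hs, hn, Multiset.sum_replicate, Multiset.card_replicate, smul_eq_mul] at hsg
  have : n = 0 ∨ n = 2 := by
    have : n ≤ 2 := by omega
    interval_cases n
    · left; rfl
    · exfalso; revert hsg; decide
    · right; rfl
  rcases this with rfl | rfl
  · left
    exact Perm.card_support_eq_two.1 (by omega)
  · right
    refine ⟨by omega, fun p => ?_⟩
    have : a.support = Finset.univ := by
      apply Finset.eq_univ_of_card; omega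
    have hp : p ∈ a.support := by rw [this]; simp
    exact Perm.mem_support.1 hp

end BC

namespace BC
open Equiv

/-- The permutation induced by the image of the `i`-th generator. -/
def aa {m : ℕ} (φ : MulAut (Br m)) (i : ℕ) : Perm (Fin (m+1)) := rhoF m (φ (s i))

theorem aa_bs {m : ℕ} (φ : MulAut (Br m)) : BS m (aa φ) :=
  (bs_s m).map ((rhoF m).comp φ.toMonoidHom)

/-- The permutations of the images of neighbouring generators do not commute, since otherwise the
action would be cyclic, contradicting surjectivity. -/
theorem aa_nc {m : ℕ} (φ : MulAut (Br m)) {i : ℕ} (hi : i + 1 < m) :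
    aa φ i * aa φ (i+1) ≠ aa φ (i+1) * aa φ i := by
  intro hc
  have h0 := (aa_bs φ).cyclic hi hc
  have hz : ∀ g, rhoF m (φ g) ∈ Subgroup.zpowers (aa φ 0) := by
    intro g
    induction g using br_ind with
    | one => simp
    | mul a b ha hb => rw [map_mul, map_mul]; exact mul_mem ha hb
    | gen i hi => exact (h0 i hi).symm ▸ Subgroup.mem_zpowers _
    | inv a ha => rw [map_inv, map_inv]; exact inv_mem ha
  have hall : ∀ p q : Perm (Fin (m+1)), p * q = q * p := by
    intro p q
    obtain ⟨g, rfl⟩ := rhoF_surj m p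
    obtain ⟨k, rfl⟩ := rhoF_surj m q
    have h1 := hz (φ⁻¹ g)
    have h2 := hz (φ⁻¹ k)
    rw [MulAut.apply_inv_self] at h1 h2
    obtain ⟨x, hx⟩ := h1
    obtain ⟨y, hy⟩ := h2
    simp only at hx hy
    rw [← hx, ← hy, ← zpow_add, ← zpow_add, add_comm x]
  have := DFunLike.congr_fun (hall (swap ⟨0, by omega⟩ ⟨1, by omega⟩)
    (swap ⟨1, by omega⟩ ⟨2, by omega⟩)) ⟨0, by omega⟩
  simp [swap_apply_def] at this

theorem aa_conj {m : ℕ} (φ : MulAut (Br m)) {i : ℕ} (hi : i < m) :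
    ∃ c, aa φ i = c * aa φ 0 * c⁻¹ := by
  obtain ⟨b, hb⟩ := s_conj (m := m) i hi
  exact ⟨rhoF m (φ b), by rw [aa, hb]; simp [aa]⟩

theorem aa_sign {m : ℕ} (hm : 0 < m) (φ : MulAut (Br m)) : Perm.sign (aa φ 0) = -1 := by
  rcases Int.units_eq_one_or (Perm.sign (aa φ 0)) with h | h
  · exfalso
    have : ∀ g, Perm.sign (rhoF m (φ g)) = 1 := by
      intro g
      induction g using br_ind with
      | one => simp
      | mul a b ha hb => rw [map_mul, map_mul, map_mul, ha, hb]; rfl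
      | gen i hi =>
        obtain ⟨c, hc⟩ := aa_conj φ hi
        show Perm.sign (aa φ i) = 1
        rw [hc]; simp [h]
      | inv a ha => simp [ha]
    obtain ⟨g, hg⟩ := rhoF_surj m (swap ⟨0, by omega⟩ ⟨1, by omega⟩)
    have h2 := this (φ⁻¹ g)
    rw [MulAut.apply_inv_self, hg, Perm.sign_swap (by simp)] at h2
    exact absurd h2 (by decide)
  · exact h

set_option maxRecDepth 100000 in
theorem perm4c : ∀ a : Perm (Fin 4), (∀ p, a (a p) ≠ p) → ∀ p,
    [p, a p, a (a p), a (a (a p))].Nodup ∧ a (a (a (a p))) = p := by decide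

/-- The case of four strands, where the images could a priori be `4`-cycles. -/
theorem aa_swap3 (φ : MulAut (Br 3)) : ∃ u v, u ≠ v ∧ aa φ 0 = swap u v := by
  rcases perm4 _ (aa_sign (by omega) φ) with h | h
  · exact h
  exfalso
  have hne : aa φ 0 ≠ aa φ 1 := fun e => aa_nc φ (i := 0) (by omega) (by rw [zero_add, e])
  obtain ⟨hD, p, hp⟩ := perm4' _ _ h ((aa_bs φ).braid 0 (by omega)) hne
  set D : Br 3 := s 0 * s 1 * (s 0 * s 1) * (s 0 * s 1) with hDd
  have hb := s_braid (m := 3) 0 (by omega)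
  rw [zero_add] at hb
  have hr : rho 3 (φ D) = 1 := by
    have : rhoF 3 (φ D) = rhoF 3 1 := by
      simp only [hDd, map_mul, map_one]; exact hD
    rw [rho_ext this, map_one]
  have c0 : s 0 * D = D * s 0 := by
    rw [hDd]
    calc s 0 * (s 0 * s 1 * (s 0 * s 1) * (s 0 * s 1))
        = s 0 * (s 0 * s 1 * s 0) * (s 1 * s 0 * s 1) := by group
      _ = s 0 * (s 1 * s 0 * s 1) * (s 0 * s 1 * s 0) := by rw [hb]
      _ = _ := by group
  have c1 : s 1 * D = D * s 1 := by
    rw [hDd]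
    calc s 1 * (s 0 * s 1 * (s 0 * s 1) * (s 0 * s 1))
        = (s 1 * s 0 * s 1) * (s 0 * s 1 * s 0) * s 1 := by group
      _ = (s 0 * s 1 * s 0) * (s 1 * s 0 * s 1) * s 1 := by rw [hb]
      _ = _ := by group
  set H : Fin 4 → Fin 4 → ℤ := fun p q => lk (φ D) p q with hH
  have hA : ∀ p q, H (aa φ 0 p) (aa φ 0 q) = H p q := fun p q =>
    lk_comm (φ (s 0)) (φ D) hr (by rw [← map_mul, c0, map_mul]) p q
  have hB : ∀ p q, H (aa φ 1 p) (aa φ 1 q) = H p q := fun p q =>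
    lk_comm (φ (s 1)) (φ D) hr (by rw [← map_mul, c1, map_mul]) p q
  have hs : ∀ p q, H p q = H q p := fun p q => lk_symm _ _ _
  have h0 : ∀ p, H p p = 0 := fun p => lk_self _ _
  obtain ⟨hn, h4⟩ := perm4c _ h p
  set a := aa φ 0
  have hX : Even (H p (a p)) := by
    rw [hH]
    simp only
    rw [lk_parity _ _ _ (by intro e; apply h p; rw [← Fin.ext e, ← Fin.ext e]), hr]; rfl
  have hXY : H p (a (a p)) = H p (a p) := by
    have e1 := hB p (a p)
    rw [hp] at e1
    rw [← e1]
    have hd := hA p (a (a p))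
    have hd' := hA (a p) (a (a (a p)))
    rw [h4] at hd'
    have := nodup_mem hn (by simp) (aa φ 1 p)
    simp only [List.mem_cons, List.not_mem_nil, or_false] at this
    rcases this with e | e | e | e <;> rw [e] <;> try simp only [h4]
    · exact hd.symm
    · rw [hs]
    · rw [← hd, hs]
  have hsum := lk_sumF (φ D)
  have : ∑ p : Fin 4, ∑ q : Fin 4, H p q = 2 * ei (φ D) := hsum
  rw [sum_list hn (by simp)] at this
  simp only [List.map_cons, List.map_nil, List.sum_cons, List.sum_nil, sum_list hn (by simp)] at this
  have e1 := hA p (a p)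
  have e2 := hA (a p) (a (a p))
  have e3 := hA (a (a p)) (a (a (a p)))
  rw [h4] at e3
  have e4 := hA p (a (a p))
  rw [h0, h0, h0, h0, hs (a p) p, hs (a (a p)) p, hs (a (a p)) (a p), hs (a (a (a p))) (a p),
    hs (a (a (a p))) (a (a p)), e4, e2, e1, hXY, e3, e2, e1, hs p (a (a (a p))), e3, e2, e1] at this
  have h6 := (ei_phi (by omega) φ)
  rw [h6.2 D] at this
  have hD6 : ei D = 6 := by
    rw [hDd]; simp only [ei_mul, ei_s (m := 3) (i := 0) (by omega), ei_s (m := 3) (i := 1) (by omega)]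
    rfl
  rw [hD6] at this
  obtain ⟨r, hr⟩ := hX
  rcases h6.1 with h | h <;> rw [h] at this <;> omega

/-- An automorphism sends a generator to a braid whose permutation is a transposition. -/
theorem aa_swap {m : ℕ} (hm : 3 ≤ m) (φ : MulAut (Br m)) : ∃ u v, u ≠ v ∧ aa φ 0 = swap u v := by
  have hsg := aa_sign (by omega) φ
  have hbs := aa_bs φ
  rcases (by omega : m = 3 ∨ m = 4 ∨ m = 5 ∨ 6 ≤ m) with rfl | rfl | rfl | h6
  · exact aa_swap3 φ
  · have h2 : aa φ 0 * aa φ 0 = 1 := by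
      by_contra hne
      have : ∃ p, aa φ 0 (aa φ 0 p) ≠ p := by
        by_contra! h; exact hne (Equiv.ext h)
      obtain ⟨p, hp⟩ := this
      apply aa_nc φ (i := 2) (by omega)
      exact Equiv.ext (perm_V (aa φ 0) (aa φ 2) (aa φ 3)
        (fun y => DFunLike.congr_fun (hbs.comm 0 2 (by omega) (by omega)).symm y)
        (fun y => DFunLike.congr_fun (hbs.comm 0 3 (by omega) (by omega)).symm y) p hp
        (Or.inl (by simp)))
    rcases invol_swap _ h2 hsg (by simp) with h | h
    · exact h
    · simp at h
  · have h2 : aa φ 0 * aa φ 0 = 1 := by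
      by_contra hne
      have : ∃ p, aa φ 0 (aa φ 0 p) ≠ p := by
        by_contra! h; exact hne (Equiv.ext h)
      obtain ⟨p, hp⟩ := this
      apply aa_nc φ (i := 2) (by omega)
      refine Equiv.ext (perm_V (aa φ 0) (aa φ 2) (aa φ 3)
        (fun y => DFunLike.congr_fun (hbs.comm 0 2 (by omega) (by omega)).symm y)
        (fun y => DFunLike.congr_fun (hbs.comm 0 3 (by omega) (by omega)).symm y) p hp
        (Or.inr ⟨by simp, ?_⟩))
      by_contra! h
      have h3 : aa φ 0 * aa φ 0 * aa φ 0 = 1 := Equiv.ext h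
      have := congrArg Perm.sign h3
      rw [map_mul, map_mul, hsg] at this
      exact absurd this (by simp)
    rcases invol_swap _ h2 hsg (by simp) with h | ⟨-, h⟩
    · exact h
    exfalso
    have hsq : ∀ i < 5, aa φ i * aa φ i = 1 := by
      intro i hi
      obtain ⟨c, hc⟩ := aa_conj φ hi
      rw [hc]
      calc c * aa φ 0 * c⁻¹ * (c * aa φ 0 * c⁻¹) = c * (aa φ 0 * aa φ 0) * c⁻¹ := by group
        _ = 1 := by rw [h2]; group
    set t := aa φ 2 * aa φ 3 with ht
    set a := aa φ 0 with ha
    have ht3 : t * t * t = 1 := by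
      have hb := hbs.braid 2 (by omega)
      calc t * t * t = (aa φ 2 * aa φ 3 * aa φ 2) * (aa φ 3 * aa φ 2 * aa φ 3) := by rw [ht]; group
        _ = (aa φ 2 * aa φ 3 * aa φ 2) * (aa φ 2 * aa φ 3 * aa φ 2) := by rw [← hb]
        _ = aa φ 2 * aa φ 3 * (aa φ 2 * aa φ 2) * aa φ 3 * aa φ 2 := by group
        _ = aa φ 2 * (aa φ 3 * aa φ 3) * aa φ 2 := by rw [hsq 2 (by omega)]; group
        _ = 1 := by rw [hsq 3 (by omega), mul_one, hsq 2 (by omega)]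
    have hta : ∀ p, t (a p) = a (t p) := by
      have h02 := hbs.comm 0 2 (by omega) (by omega)
      have h03 := hbs.comm 0 3 (by omega) (by omega)
      have : t * a = a * t := by
        rw [ht, mul_assoc, ← h03, ← mul_assoc, ← h02, mul_assoc]
      exact fun p => DFunLike.congr_fun this p
    have ht3' : ∀ p, t (t (t p)) = p := fun p => DFunLike.congr_fun ht3 p
    have ha2 : ∀ p, a (a p) = p := fun p => DFunLike.congr_fun h2 p
    have hex : ∃ p, t p ≠ p ∧ t p ≠ a p := by
      by_contra! hall
      have : ∀ p, t p = p := by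
        intro p
        by_contra hp
        have h1 := hall p hp
        have h3 := ht3' p
        rw [h1, hta, h1, ha2] at h3
        exact hp h3
      have h1 : t = 1 := Equiv.ext this
      apply aa_nc φ (i := 2) (by omega)
      have h23 : aa φ 2 = aa φ 3 := by
        have := congrArg (· * aa φ 3) h1
        simp only [ht, one_mul, mul_assoc] at this
        rwa [hsq 3 (by omega), mul_one] at this
      rw [h23]
    obtain ⟨p, hp1, hp2⟩ := hex
    have it : ∀ {x y}, t x = t y → x = y := fun h => t.injective h
    have ia : ∀ {x y}, a x = a y → x = y := fun h => a.injective h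
    have hn : [p, a p, t p, t (a p), t (t p), t (t (a p))].Nodup := by
      have q1 := h p
      have q2 : t (t p) ≠ p := fun e => hp1 (by have := ht3' p; rw [e] at this; exact this)
      have q3 : t (t p) ≠ a p := fun e => hp2 (by
        have := congrArg t e; rw [ht3', hta] at this
        have := congrArg a this; rw [ha2] at this; exact this.symm)
      have q4 : t (a p) ≠ a p := by rw [hta]; exact fun e => hp1 (ia e)
      have q5 : t (a p) ≠ p := by
        rw [hta]; exact fun e => hp2 (by have := congrArg a e; rwa [ha2] at this)
      have q6 : t (t (a p)) ≠ p := by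
        rw [hta, hta]; exact fun e => q3 (by have := congrArg a e; rwa [ha2] at this)
      have q7 : t (t (a p)) ≠ a p := by rw [hta, hta]; exact fun e => q2 (ia e)
      have q8 : t (a p) ≠ t p := fun e => q1 (it e)
      have q9 : t (t (a p)) ≠ t p := fun e => q5 (it e)
      have q10 : t (t (a p)) ≠ t (a p) := fun e => q4 (it e)
      have q11 : t (t (a p)) ≠ t (t p) := fun e => q8 (it e)
      have q12 : t (t p) ≠ t p := fun e => hp1 (it e)
      have q13 : t (t p) ≠ t (a p) := fun e => hp2 (it e)
      simp only [List.nodup_cons, List.mem_cons, List.not_mem_nil, or_false, not_or]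
      refine ⟨⟨q1.symm, hp1.symm, q5.symm, q2.symm, q6.symm⟩,
        ⟨hp2.symm, q4.symm, q3.symm, q7.symm⟩, ⟨q8.symm, q12.symm, q9.symm⟩,
        ⟨q13.symm, q10.symm⟩, q11.symm, by simp, by simp⟩
    have hr : rho 5 (φ (s 0 ^ 2)) = 1 := by
      have : rhoF 5 (φ (s 0 ^ 2)) = rhoF 5 1 := by
        rw [pow_two, map_mul, map_mul, map_one]; exact h2
      rw [rho_ext this, map_one]
    set H : Fin 6 → Fin 6 → ℤ := fun p q => lk (φ (s 0 ^ 2)) p q with hH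
    have hT : ∀ p q, H (t p) (t q) = H p q := by
      intro p q
      have := lk_comm (φ (s 2 * s 3)) (φ (s 0 ^ 2)) hr (by
        rw [← map_mul, ← map_mul]
        congr 1
        have h02 : Commute (s 0 : Br 5) (s 2) := s_comm 0 2 (by omega)
        have h03 : Commute (s 0 : Br 5) (s 3) := s_comm 0 3 (by omega)
        exact ((h02.pow_left 2).mul_right (h03.pow_left 2)).symm.eq) p q
      simp only [hH]
      rw [← this, ht]
      simp only [map_mul]
      rfl
    have hG : ∀ p, ∑ q, H (t p) q = ∑ q, H p q := by
      intro p
      rw [← Equiv.sum_comp t]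
      exact Finset.sum_congr rfl fun q _ => hT p q
    have hsum : ∑ p, ∑ q, H p q = 2 * ei (φ (s 0 ^ 2)) := lk_sumF _
    rw [sum_list hn (by simp)] at hsum
    simp only [List.map_cons, List.map_nil, List.sum_cons, List.sum_nil, hG] at hsum
    have h6 := (ei_phi (by omega) φ)
    rw [h6.2 (s 0 ^ 2), pow_two, ei_mul, ei_s (by omega)] at hsum
    rcases h6.1 with h | h <;> rw [h] at hsum <;> omega
  · have := act_W h6 (Yp_all (m-2) (by omega)) (aa φ) (by simp) hbs (aa_nc φ (i := 2) (by omega))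
    have hc : (aa φ 0).support.card ≤ 2 := by
      have e : Fintype.card {x // aa φ 0 x = x} + (aa φ 0).support.card = m + 1 := by
        rw [Fintype.card_subtype, Perm.support]
        have := Finset.card_filter_add_card_filter_not (s := (Finset.univ : Finset (Fin (m+1))))
          (fun x => aa φ 0 x = x)
        simpa using this
      omega
    have h1 : aa φ 0 ≠ 1 := by intro e; rw [e] at hsg; exact absurd hsg (by simp)
    have := Perm.two_le_card_support_of_ne_one h1
    exact Perm.card_support_eq_two.1 (by omega)

end BC

namespace BC
open Equiv

section
variable {X : Type*} [DecidableEq X]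

theorem swap_eq_of_comm {u v y : X} (h : swap u v * swap u y = swap u y * swap u v)
    (hv : u ≠ v) (hy : u ≠ y) : v = y := by
  by_contra hne
  have := DFunLike.congr_fun h u
  simp only [Perm.mul_apply, swap_apply_left] at this
  rw [swap_apply_of_ne_of_ne hy.symm (Ne.symm hne), swap_apply_of_ne_of_ne hv.symm hne] at this
  exact hne this.symm

theorem swap_meet {u v x y : X} (h : swap u v * swap x y ≠ swap x y * swap u v) :
    x = u ∨ x = v ∨ y = u ∨ y = v := by
  by_contra! hn
  obtain ⟨h1, h2, h3, h4⟩ := hn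
  apply h
  ext z
  simp only [Perm.mul_apply, swap_apply_def]
  grind
end

theorem aa_swap_all {m : ℕ} (hm : 3 ≤ m) (φ : MulAut (Br m)) {i : ℕ} (hi : i < m) :
    ∃ u v, u ≠ v ∧ aa φ i = swap u v := by
  obtain ⟨u, v, hne, h⟩ := aa_swap hm φ
  obtain ⟨c, hc⟩ := aa_conj φ hi
  exact ⟨c u, c v, c.injective.ne hne, by rw [hc, h, swap_apply_apply]⟩

theorem aa_ne2 {m : ℕ} (hm : 3 ≤ m) (φ : MulAut (Br m)) {k : ℕ} (hk : k + 2 < m) :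
    aa φ k ≠ aa φ (k+2) := by
  intro e
  have hbs := aa_bs φ
  by_cases h1 : k + 3 < m
  · apply aa_nc φ (i := k+2) (by omega)
    rw [← e]
    exact hbs.comm k (k+3) (by omega) (by omega)
  by_cases h2 : 1 ≤ k
  · apply aa_nc φ (i := k-1) (by omega)
    rw [show k - 1 + 1 = k by omega, e]
    exact hbs.comm (k-1) (k+2) (by omega) (by omega)
  obtain rfl : k = 0 := by omega
  obtain rfl : m = 3 := by omega
  obtain ⟨u, v, huv, h0⟩ := aa_swap_all hm φ (i := 0) (by omega)
  obtain ⟨x, y, hxy, h3⟩ := aa_swap_all hm φ (i := 1) (by omega)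
  have hmeet := swap_meet (u := u) (v := v) (x := x) (y := y)
    (by rw [← h0, ← h3]; exact aa_nc φ (by omega))
  have : ∃ q : Fin 4, q ≠ u ∧ q ≠ v ∧ q ≠ x ∧ q ≠ y := by
    have hc : ({u, v, x, y} : Finset (Fin 4)).card < 4 := by
      have h33 : ∀ a b c : Fin 4, ({a, b, c} : Finset (Fin 4)).card ≤ 3 := fun a b c =>
        Finset.card_le_three
      rcases hmeet with rfl | rfl | rfl | rfl
      · have := h33 x v y
        have e : ({x, v, x, y} : Finset (Fin 4)) = {x, v, y} := by ext z; simp; tauto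
        rw [e]; omega
      · have := h33 u x y
        have e : ({u, x, x, y} : Finset (Fin 4)) = {u, x, y} := by ext z; simp
        rw [e]; omega
      · have := h33 y v x
        have e : ({y, v, x, y} : Finset (Fin 4)) = {y, v, x} := by ext z; simp; tauto
        rw [e]; omega
      · have := h33 u y x
        have e : ({u, y, x, y} : Finset (Fin 4)) = {u, y, x} := by ext z; simp; tauto
        rw [e]; omega
    by_contra! hall
    have : ({u, v, x, y} : Finset (Fin 4)) = Finset.univ := by
      ext q; simp only [Finset.mem_insert, Finset.mem_singleton, Finset.mem_univ, iff_true]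
      by_contra! hq
      exact hq.2.2.2 (hall q hq.1 hq.2.1 hq.2.2.1)
    rw [this] at hc
    simp at hc
  obtain ⟨q, hu, hv, hx, hy⟩ := this
  have fixq : ∀ g, rhoF 3 (φ g) q = q := by
    intro g
    induction g using br_ind with
    | one => simp
    | mul a b ha hb => rw [map_mul, map_mul, Perm.mul_apply, hb, ha]
    | gen i hi =>
      show aa φ i q = q
      have : i = 0 ∨ i = 1 ∨ i = 0 + 2 := by omega
      rcases this with rfl | rfl | rfl
      · rw [h0, swap_apply_of_ne_of_ne hu hv]
      · rw [h3, swap_apply_of_ne_of_ne hx hy]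
      · rw [← e, h0, swap_apply_of_ne_of_ne hu hv]
    | inv a ha => rw [map_inv, map_inv]; nth_rw 1 [← ha]; simp
  obtain ⟨g, hg⟩ := rhoF_surj 3 (swap q u)
  have := fixq (φ⁻¹ g)
  rw [MulAut.apply_inv_self, hg, swap_apply_left] at this
  exact hu this.symm

/-- The transpositions of the images of the generators form a chain, as those of the generators
themselves do. -/
theorem aa_chain {m : ℕ} (hm : 3 ≤ m) (φ : MulAut (Br m)) (k : ℕ) (hk : k + 2 ≤ m) :
    ∃ c : ℕ → Fin (m+1), (∀ i j, i ≤ k+2 → j ≤ k+2 → c i = c j → i = j) ∧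
      ∀ i < k+2, aa φ i = swap (c i) (c (i+1)) := by
  have hbs := aa_bs φ
  induction k with
  | zero =>
    obtain ⟨u, v, huv, h0⟩ := aa_swap_all hm φ (i := 0) (by omega)
    obtain ⟨x, y, hxy, h1⟩ := aa_swap_all hm φ (i := 1) (by omega)
    have hnc := aa_nc φ (i := 0) (by omega)
    rw [zero_add, h0, h1] at hnc
    have key : ∀ p q r : Fin (m+1), p ≠ q → q ≠ r → p ≠ r → aa φ 0 = swap p q → aa φ 1 = swap q r →
        ∃ c : ℕ → Fin (m+1), (∀ i j, i ≤ 0+2 → j ≤ 0+2 → c i = c j → i = j) ∧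
          ∀ i < 0+2, aa φ i = swap (c i) (c (i+1)) := by
      intro p q r h1 h2 h3 e0 e1
      refine ⟨fun i => if i = 0 then p else if i = 1 then q else r, ?_, ?_⟩
      · intro i j hi hj
        have hi' : i = 0 ∨ i = 1 ∨ i = 2 := by omega
        have hj' : j = 0 ∨ j = 1 ∨ j = 2 := by omega
        rcases hi' with rfl | rfl | rfl <;> rcases hj' with rfl | rfl | rfl <;>
          simp [h1, h2, h3, h1.symm, h2.symm, h3.symm]
      · intro i hi
        have hi' : i = 0 ∨ i = 1 := by omega
        rcases hi' with rfl | rfl <;> simp [e0, e1]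
    rcases swap_meet hnc with rfl | rfl | rfl | rfl
    · exact key v x y huv.symm hxy (by rintro rfl; exact hnc rfl) (by rw [h0, swap_comm]) h1
    · exact key u x y huv hxy (by rintro rfl; exact hnc (by rw [swap_comm])) h0 h1
    · exact key v y x huv.symm hxy.symm (by rintro rfl; exact hnc (by rw [swap_comm]))
        (by rw [h0, swap_comm]) (by rw [h1, swap_comm])
    · exact key u y x huv hxy.symm (by rintro rfl; exact hnc rfl) h0 (by rw [h1, swap_comm])
  | succ k ih =>
    obtain ⟨c, hc, ha⟩ := ih (by omega)
    obtain ⟨x, y, hxy, hx⟩ := aa_swap_all hm φ (i := k+2) (by omega)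
    have hnc := aa_nc φ (i := k+1) (by omega)
    rw [ha (k+1) (by omega), show k+1+1 = k+2 by omega, hx] at hnc
    have h12 : c (k+1) ≠ c (k+2) := fun e => by have := hc _ _ (by omega) (by omega) e; omega
    have h01 : c k ≠ c (k+1) := fun e => by have := hc _ _ (by omega) (by omega) e; omega
    -- the new transposition cannot meet the end of the chain in its last but one point
    have bad : ∀ d, c (k+1) ≠ d → aa φ (k+2) = swap (c (k+1)) d → False := by
      intro d hd e
      have hcm := hbs.comm k (k+2) (by omega) (by omega)
      rw [ha k (by omega), e, swap_comm (c k)] at hcm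
      have := swap_eq_of_comm hcm h01.symm hd
      apply aa_ne2 hm φ (k := k) (by omega)
      rw [e, ha k (by omega), this, swap_comm]
    have good : ∀ d, c (k+2) ≠ d → c (k+1) ≠ d → aa φ (k+2) = swap (c (k+2)) d →
        ∃ c : ℕ → Fin (m+1), (∀ i j, i ≤ k+1+2 → j ≤ k+1+2 → c i = c j → i = j) ∧
          ∀ i < k+1+2, aa φ i = swap (c i) (c (i+1)) := by
      intro d h1 h2 e
      have hd : ∀ i ≤ k+2, c i ≠ d := by
        intro i hi
        rcases (by omega : i = k+2 ∨ i = k+1 ∨ i < k+1) with rfl | rfl | hi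
        · exact h1
        · exact h2
        rintro rfl
        have hcm := hbs.comm i (k+2) (by omega) (by omega)
        rw [ha i (by omega), e, swap_comm (c (k+2))] at hcm
        have := swap_eq_of_comm hcm (fun e => by have := hc _ _ (by omega) (by omega) e; omega)
          h1.symm
        have := hc _ _ (by omega) (by omega) this
        omega
      refine ⟨fun i => if i ≤ k+2 then c i else d, ?_, ?_⟩
      · intro i j hi hj
        by_cases hi' : i ≤ k+2 <;> by_cases hj' : j ≤ k+2 <;> simp only [hi', hj', if_true, if_false]
        · exact hc i j hi' hj'
        · exact fun e => absurd e (hd i hi')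
        · exact fun e => absurd e.symm (hd j hj')
        · intro _; omega
      · intro i hi
        rcases (by omega : i < k+2 ∨ i = k+2) with h | rfl
        · simp only [show i ≤ k+2 by omega, show i+1 ≤ k+2 by omega, if_true]
          exact ha i h
        · simp [e]
    rcases swap_meet hnc with rfl | rfl | rfl | rfl
    · exact (bad y hxy hx).elim
    · refine good y hxy ?_ hx
      rintro rfl
      exact hnc (by rw [swap_comm])
    · exact (bad x hxy.symm (by rw [hx, swap_comm])).elim
    · refine good x hxy.symm ?_ (by rw [hx, swap_comm])
      rintro rfl
      exact hnc rfl

/-- Up to an inner automorphism, an automorphism of the braid group preserves the permutation of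
the strands. -/
theorem rho_phi {m : ℕ} (hm : 3 ≤ m) (φ : MulAut (Br m)) :
    ∃ b, ∀ g, rho m (φ g) = rho m (b * g * b⁻¹) := by
  obtain ⟨c, hc, ha⟩ := aa_chain hm φ (m-2) (by omega)
  rw [show m - 2 + 2 = m by omega] at hc ha
  have hinj : Function.Injective (fun i : Fin (m+1) => c i) := fun i j e =>
    Fin.ext (hc i j (by omega) (by omega) e)
  set p : Perm (Fin (m+1)) := Equiv.ofBijective _ (Finite.injective_iff_bijective.1 hinj)
  obtain ⟨b, hb⟩ := rhoF_surj m p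
  refine ⟨b, fun g => rho_ext ?_⟩
  induction g using br_ind with
  | one => simp
  | mul x y hx hy => rw [map_mul, map_mul, hx, hy, ← map_mul]; congr 1; group
  | gen i hi =>
    show aa φ i = _
    rw [ha i hi, map_mul, map_mul, map_inv, hb]
    have := rhoF_s (m := m) ⟨i, hi⟩
    simp only at this
    rw [this, ← swap_apply_apply]
    rfl
  | inv x hx => rw [map_inv, map_inv, hx, ← map_inv]; congr 1; group

end BC

namespace BC
open Equiv Finset

/-! ### Linking numbers are preserved by automorphisms -/

/-- The total linking of the strand `p` with the others. -/
def dg {m : ℕ} (g : Br m) (p : ℕ) : ℤ := ∑ q ∈ range (m+1), lk g p q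

theorem dg_conj {m : ℕ} (b g : Br m) (hg : rho m g = 1) (p : ℕ) :
    dg (b * g * b⁻¹) p = dg g (rho m b⁻¹ p) := by
  simp only [dg, lk_conj b g hg]
  exact rho_sum b⁻¹ (fun q => lk g (rho m b⁻¹ p) q)

theorem dg_mul {m : ℕ} (a b : Br m) (hb : rho m b = 1) (p : ℕ) : dg (a * b) p = dg a p + dg b p := by
  simp only [dg, lk_pmul a b hb, sum_add_distrib]

theorem dg_inv {m : ℕ} (a : Br m) (ha : rho m a = 1) (p : ℕ) : dg a⁻¹ p = - dg a p := by
  simp only [dg, lk_pinv a ha, sum_neg_distrib]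

theorem dg_sum {m : ℕ} (a : Br m) : ∑ p ∈ range (m+1), dg a p = 2 * ei a := lk_sum a

theorem dg_sq {m i : ℕ} (hi : i < m) (p : ℕ) :
    dg (s i ^ 2 : Br m) p = if p = i ∨ p = i + 1 then 2 else 0 := by
  simp only [dg, lk_sq hi]
  by_cases h1 : p = i
  · subst h1
    rw [sum_eq_single (p+1)]
    · simp
    · intro b _ hb; rw [if_neg (by omega)]
    · intro h; simp at h; omega
  by_cases h2 : p = i + 1
  · subst h2
    rw [sum_eq_single i]
    · simp
    · intro b _ hb; rw [if_neg (by omega)]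
    · intro h; simp at h; omega
  · rw [if_neg (by omega)]
    exact sum_eq_zero fun q _ => by rw [if_neg (by omega)]

theorem ei_sq {m i : ℕ} (hi : i < m) : ei (s i ^ 2 : Br m) = 2 := by
  rw [pow_two, ei_mul, ei_s hi]; rfl

/-- The linear map on linking matrices induced by an automorphism compatible with the
permutations of the strands, with coefficients `e`, `d`, `c`. -/
def TL {m : ℕ} (ψ : MulAut (Br m)) (e d c : ℤ) : Prop :=
  ∀ g, rho m g = 1 → ∀ p ≤ m, ∀ q ≤ m, p ≠ q →
    lk (ψ g) p q = e * lk g p q + d * (dg g p + dg g q) + c * ei g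

theorem exists_TL {m : ℕ} (hm : 3 ≤ m) (ψ : MulAut (Br m)) (hψ : ∀ g, rho m (ψ g) = rho m g) :
    ∃ e d c : ℤ, TL ψ e d c ∧ Odd (e + 2 * d + c) := by
  set v : ℕ → ℕ → ℤ := fun p q => lk (ψ (s 0 ^ 2)) p q with hv
  have hr : rho m (ψ (s 0 ^ 2)) = 1 := by rw [hψ]; exact rho_sq (by omega)
  have inv : ∀ b : Br m, b * s 0 ^ 2 = s 0 ^ 2 * b → ∀ p q, v (rho m b p) (rho m b q) = v p q := by
    intro b hb p q
    have := lk_comm (ψ b) (ψ (s 0 ^ 2)) hr (by rw [← map_mul, hb, map_mul]) p q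
    rwa [hψ] at this
  have inv0 : ∀ p q, v (swap 0 1 p) (swap 0 1 q) = v p q := by
    have := inv (s 0) (by group)
    rwa [rho_s (by omega)] at this
  have invj : ∀ j, 2 ≤ j → j < m → ∀ p q, v (swap j (j+1) p) (swap j (j+1) q) = v p q := by
    intro j hj hjm
    have := inv (s j) (Commute.pow_left (show Commute (s 0 : Br m) (s j) from s_comm 0 j (by omega)) 2).symm.eq
    rwa [rho_s (by omega)] at this
  have vs : ∀ p q, v p q = v q p := fun p q => lk_symm _ _ _
  have v0 : ∀ j, 2 ≤ j → j ≤ m → v 0 j = v 0 2 := by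
    intro j hj
    induction j, hj using Nat.le_induction with
    | base => intro _; rfl
    | succ j hj ih =>
      intro hjm
      rw [← ih (by omega), ← invj j hj (by omega) 0 j, swap_apply_left,
        swap_apply_of_ne_of_ne (by omega) (by omega)]
  have v1 : ∀ j, 2 ≤ j → j ≤ m → v 1 j = v 0 2 := by
    intro j hj hjm
    rw [← v0 j hj hjm, ← inv0 0 j, swap_apply_left, swap_apply_of_ne_of_ne (by omega) (by omega)]
  have v2 : ∀ j, 3 ≤ j → j ≤ m → v 2 j = v 2 3 := by
    intro j hj
    induction j, hj using Nat.le_induction with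
    | base => intro _; rfl
    | succ j hj ih =>
      intro hjm
      rw [← ih (by omega), ← invj j (by omega) (by omega) 2 j, swap_apply_left,
        swap_apply_of_ne_of_ne (by omega) (by omega)]
  have v3 : ∀ i, 2 ≤ i → ∀ j, i < j → j ≤ m → v i j = v 2 3 := by
    intro i hi
    induction i, hi using Nat.le_induction with
    | base => exact fun j h1 h2 => v2 j h1 h2
    | succ i hi ih =>
      intro j hj hjm
      rw [← ih j (by omega) hjm, ← invj i (by omega) (by omega) i j, swap_apply_left,
        swap_apply_of_ne_of_ne (by omega) (by omega)]
  have ev : ∀ p q, p ≠ q → Even (v p q) := by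
    intro p q h
    simp only [hv]
    rw [lk_parity _ _ _ h, hr]; rfl
  obtain ⟨b, hb⟩ := ev 0 2 (by omega)
  obtain ⟨c, hc⟩ := ev 2 3 (by omega)
  have ha : v 0 1 = 2 * lk (ψ (s 0)) 0 1 := by
    simp only [hv]
    rw [pow_two, map_mul, lk_mul, hψ, rho_s (by omega)]
    simp only [swap_apply_left, swap_apply_right]
    rw [lk_symm]; ring
  set a := lk (ψ (s 0)) 0 1 with had
  have hodd : Odd a := by
    rw [← Int.not_even_iff_odd, had, lk_parity _ _ _ (by omega), hψ, rho_s (by omega)]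
    simp
  refine ⟨a - 2 * b + c, b - c, c, ?_, by ring_nf; exact hodd⟩
  intro g hg
  let K : Subgroup (Br m) :=
    { carrier := {g | rho m g = 1 ∧ ∀ p ≤ m, ∀ q ≤ m, p ≠ q → lk (ψ g) p q =
        (a - 2 * b + c) * lk g p q + (b - c) * (dg g p + dg g q) + c * ei g}
      one_mem' := ⟨map_one _, fun p _ q _ _ => by simp [lk_one, dg, ei_one]⟩
      mul_mem' := by
        rintro x y ⟨hx, hx'⟩ ⟨hy, hy'⟩
        refine ⟨by rw [map_mul, hx, hy, mul_one], fun p hp q hq hpq => ?_⟩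
        rw [map_mul, lk_pmul _ _ (by rw [hψ, hy]), lk_pmul _ _ hy, dg_mul _ _ hy, dg_mul _ _ hy,
          ei_mul, hx' p hp q hq hpq, hy' p hp q hq hpq]
        ring
      inv_mem' := by
        rintro x ⟨hx, hx'⟩
        refine ⟨by rw [map_inv, hx, inv_one], fun p hp q hq hpq => ?_⟩
        rw [map_inv, lk_pinv _ (by rw [hψ, hx]), lk_pinv _ hx, dg_inv _ hx, dg_inv _ hx,
          ei_inv, hx' p hp q hq hpq]
        ring }
  have hK : K.Normal := ⟨by
    rintro x ⟨hx, hx'⟩ y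
    refine ⟨rho_conj y x hx, fun p hp q hq hpq => ?_⟩
    rw [map_mul, map_mul, map_inv, lk_conj _ _ (by rw [hψ, hx]), lk_conj _ _ hx, dg_conj _ _ hx,
      dg_conj _ _ hx, ei_conj, ← map_inv, hψ]
    exact hx' _ (rho_le _ _ hp) _ (rho_le _ _ hq) ((rho m y⁻¹).injective.ne hpq)⟩
  have hs : (s 0 : Br m) ^ 2 ∈ K := by
    refine ⟨rho_sq (by omega), ?_⟩
    have main : ∀ p q, p ≤ m → q ≤ m → p < q → v p q = (a - 2 * b + c) * lk (s 0 ^ 2 : Br m) p q +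
        (b - c) * (dg (s 0 ^ 2 : Br m) p + dg (s 0 ^ 2 : Br m) q) + c * ei (s 0 ^ 2 : Br m) := by
      intro p q hp hq hpq
      rw [lk_sq (by omega), dg_sq (by omega), dg_sq (by omega), ei_sq (by omega)]
      by_cases p0 : p = 0
      · subst p0
        by_cases q1 : q = 1
        · subst q1; rw [ha]; simp; ring
        · rw [v0 q (by omega) hq, hb, if_neg (by omega), if_pos (by omega), if_neg (by omega)]; ring
      by_cases p1 : p = 1
      · subst p1
        rw [v1 q (by omega) hq, hb, if_neg (by omega), if_pos (by omega), if_neg (by omega)]; ring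
      · rw [v3 p (by omega) q hpq hq, hc, if_neg (by omega), if_neg (by omega), if_neg (by omega)]
        ring
    intro p hp q hq hpq
    rcases lt_or_gt_of_ne hpq with h | h
    · exact main p q hp hq h
    · have := main q p hq hp h
      show v p q = _
      rw [vs, this, lk_symm]; ring
  have : Subgroup.normalClosure {(s 0 : Br m) ^ 2} ≤ K :=
    Subgroup.normalClosure_le_normal (by rintro _ rfl; exact hs)
  exact (this (pure_gen g hg)).2

theorem TL_dg {m : ℕ} {ψ : MulAut (Br m)} {e d c : ℤ} (h : TL ψ e d c) (g : Br m)
    (hg : rho m g = 1) (p : ℕ) (hp : p ≤ m) :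
    dg (ψ g) p = (e + (m - 1) * d) * dg g p + (2 * d + m * c) * ei g := by
  have h1 : ∀ q ∈ range (m+1), lk (ψ g) p q = (e * lk g p q + d * (dg g p + dg g q) + c * ei g) -
      if q = p then 2 * d * dg g p + c * ei g else 0 := by
    intro q hq
    split_ifs with hqp
    · subst hqp; rw [lk_self, lk_self]; ring
    · rw [h g hg p hp q (by simp at hq; omega) (Ne.symm hqp)]; ring
  rw [dg, sum_congr rfl h1, sum_sub_distrib, sum_add_distrib, sum_add_distrib, ← mul_sum, ← mul_sum,
    sum_add_distrib, dg_sum, sum_ite_eq']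
  simp only [sum_const, card_range, nsmul_eq_mul, mem_range]
  rw [if_pos (by omega), ← dg]
  push_cast
  ring

theorem TL_e {m : ℕ} (hm : 3 ≤ m) {ψ : MulAut (Br m)} (hψ : ∀ g, rho m (ψ g) = rho m g)
    (he : ∀ g, ei (ψ g) = ei g) {e d c e' d' c' : ℤ} (h : TL ψ e d c) (h' : TL ψ⁻¹ e' d' c') :
    e * e' = 1 ∧ (e + (m - 1) * d) * (e' + (m - 1) * d') = 1 := by
  have r0 : rho m (s 0 ^ 2 : Br m) = 1 := rho_sq (by omega)
  have r1 : rho m (s 1 ^ 2 : Br m) = 1 := rho_sq (by omega)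
  have r2 : rho m (s 2 ^ 2 : Br m) = 1 := rho_sq (by omega)
  have rinv : ∀ g : Br m, rho m g = 1 → rho m g⁻¹ = 1 := fun g h => by rw [map_inv, h, inv_one]
  have rmul : ∀ g k : Br m, rho m g = 1 → rho m k = 1 → rho m (g * k) = 1 := fun g k h h' => by
    rw [map_mul, h, h', mul_one]
  constructor
  · set b : Br m := s 2 * s 1 with hb
    set g : Br m := s 0 ^ 2 * (s 1 ^ 2)⁻¹ * (s 2 ^ 2 * (b * s 0 ^ 2 * b⁻¹)⁻¹) with hgd
    have rb := rho_conj b _ r0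
    have rg : rho m g = 1 := rmul _ _ (rmul _ _ r0 (rinv _ r1)) (rmul _ _ r2 (rinv _ rb))
    have hbi : ∀ p, rho m b⁻¹ p = swap 1 2 (swap 2 3 p) := by
      intro p
      rw [hb, mul_inv_rev, map_mul, map_inv, map_inv, rho_s (by omega), rho_s (by omega)]
      simp
    have hei : ei g = 0 := by
      rw [hgd]; simp only [ei_mul, ei_inv, ei_conj, ei_sq (show 0 < m by omega),
        ei_sq (show 1 < m by omega), ei_sq (show 2 < m by omega)]
      ring
    have hdg : ∀ p, dg g p = 0 := by
      intro p
      rw [hgd, dg_mul _ _ (rmul _ _ r2 (rinv _ rb)), dg_mul _ _ (rinv _ r1), dg_mul _ _ (rinv _ rb),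
        dg_inv _ r1, dg_inv _ rb, dg_conj _ _ r0, dg_sq (by omega), dg_sq (by omega), dg_sq (by omega),
        dg_sq (by omega), hbi]
      rcases (by omega : p = 0 ∨ p = 1 ∨ p = 2 ∨ p = 3 ∨ 4 ≤ p) with rfl | rfl | rfl | rfl | h4
      · simp [swap_apply_def]
      · simp [swap_apply_def]
      · simp [swap_apply_def]
      · simp [swap_apply_def]
      · rw [swap_apply_of_ne_of_ne (a := 2) (b := 3) (by omega) (by omega),
          swap_apply_of_ne_of_ne (by omega) (by omega), if_neg (by omega), if_neg (by omega),
          if_neg (by omega)]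
        rfl
    have hlk : lk g 0 1 = 2 := by
      rw [hgd, lk_pmul _ _ (rmul _ _ r2 (rinv _ rb)), lk_pmul _ _ (rinv _ r1), lk_pmul _ _ (rinv _ rb),
        lk_pinv _ r1, lk_pinv _ rb, lk_conj _ _ r0, lk_sq (by omega), lk_sq (by omega),
        lk_sq (by omega), lk_sq (by omega), hbi, hbi]
      simp [swap_apply_def]
    have rg' : rho m (ψ g) = 1 := by rw [hψ, rg]
    have h1 := h g rg 0 (by omega) 1 (by omega) (by omega)
    have h2 := h' (ψ g) rg' 0 (by omega) 1 (by omega) (by omega)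
    rw [MulAut.inv_apply_self, h1, TL_dg h g rg 0 (by omega), TL_dg h g rg 1 (by omega), he, hei, hdg, hdg,
      hlk] at h2
    linarith
  · set g : Br m := s 0 ^ 2 * (s 1 ^ 2)⁻¹ with hgd
    have rg : rho m g = 1 := rmul _ _ r0 (rinv _ r1)
    have hei : ei g = 0 := by
      rw [hgd]; simp only [ei_mul, ei_inv, ei_sq (show 0 < m by omega), ei_sq (show 1 < m by omega)]
      ring
    have hdg : dg g 0 = 2 := by
      rw [hgd, dg_mul _ _ (rinv _ r1), dg_inv _ r1, dg_sq (by omega), dg_sq (by omega)]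
      simp
    have h2 := TL_dg h' (ψ g) (by rw [hψ, rg]) 0 (by omega)
    rw [MulAut.inv_apply_self, TL_dg h g rg 0 (by omega), he, hei, hdg] at h2
    linarith

/-- An automorphism compatible with permutations and exponents preserves the linking numbers of
pure braids. -/
theorem lk_phi {m : ℕ} (hm : 3 ≤ m) (ψ : MulAut (Br m)) (hψ : ∀ g, rho m (ψ g) = rho m g)
    (he : ∀ g, ei (ψ g) = ei g) (g : Br m) (hg : rho m g = 1) (p q : ℕ) :
    lk (ψ g) p q = lk g p q := by
  obtain ⟨e, d, c, h, hodd⟩ := exists_TL hm ψ hψ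
  obtain ⟨e', d', c', h', -⟩ := exists_TL hm ψ⁻¹ (fun g => by
    rw [← hψ, MulAut.apply_inv_self])
  obtain ⟨h1, h2⟩ := TL_e hm hψ he h h'
  have h1 := Int.isUnit_iff.1 (IsUnit.of_mul_eq_one _ h1)
  have h2 := Int.isUnit_iff.1 (IsUnit.of_mul_eq_one _ h2)
  have h3 : (2 : ℤ) = 2 * (e + (m - 1) * d) + (m + 1) * (2 * d + m * c) := by
    have r0 : rho m (s 0 ^ 2 : Br m) = 1 := rho_sq (by omega)
    have := dg_sum (ψ (s 0 ^ 2))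
    rw [sum_congr rfl (fun p hp => TL_dg h _ r0 p (by simp at hp; omega)), sum_add_distrib, ← mul_sum,
      dg_sum, sum_const, card_range, he, ei_sq (by omega)] at this
    simp only [nsmul_eq_mul] at this
    push_cast at this
    linarith
  have hm' : (3 : ℤ) ≤ m := by exact_mod_cast hm
  have hd1 : d < 2 := by by_contra hh; push Not at hh; rcases h1 with h1 | h1 <;> rcases h2 with h2 | h2 <;> nlinarith
  have hd2 : -2 < d := by by_contra hh; push Not at hh; rcases h1 with h1 | h1 <;> rcases h2 with h2 | h2 <;> nlinarith
  obtain ⟨rfl, rfl, rfl⟩ : e = 1 ∧ d = 0 ∧ c = 0 := by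
    rcases (by omega : d = 0 ∨ d = 1 ∨ d = -1) with rfl | rfl | rfl
    · have hM : (12 : ℤ) ≤ m * (m + 1) := by nlinarith
      have h3' : 2 = 2 * e + (m * (m + 1) : ℤ) * c := by linarith
      generalize (m * (m + 1) : ℤ) = M at hM h3'
      have hc1 : c < 1 := by by_contra hh; push Not at hh; rcases h1 with h1 | h1 <;> nlinarith
      have hc2 : -1 < c := by by_contra hh; push Not at hh; rcases h1 with h1 | h1 <;> nlinarith
      obtain rfl : c = 0 := by omega
      simp at h3; omega
    · have : (m : ℤ) = 3 := by omega
      rw [this] at h2 h3; omega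
    · have : (m : ℤ) = 3 := by omega
      rw [this] at h2 h3
      rw [Int.odd_iff] at hodd
      omega
  by_cases hp : m < p
  · rw [lk_out _ _ _ hp, lk_out _ _ _ hp]
  by_cases hq : m < q
  · rw [lk_symm, lk_out _ _ _ hq, lk_symm, lk_out _ _ _ hq]
  by_cases hpq : p = q
  · rw [hpq, lk_self, lk_self]
  rw [h g hg p (by omega) q (by omega) hpq]; ring

end BC

namespace BC
open SemidirectProduct

/-! ### Finitely generated normal subgroups with vanishing linking numbers -/

/-- Finite generation, spelled out. -/
def Fg {G : Type*} [Group G] (N : Subgroup G) : Prop :=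
  ∃ S : Set G, S.Finite ∧ Subgroup.closure S = N

theorem Fg.map {G H : Type*} [Group G] [Group H] {N : Subgroup G} (h : Fg N) (f : G →* H) :
    Fg (N.map f) := by
  obtain ⟨S, hS, rfl⟩ := h
  exact ⟨f '' S, hS.image f, (MonoidHom.map_closure f S).symm⟩

theorem Fg.comap {G H : Type*} [Group G] [Group H] {N : Subgroup H} (h : Fg N) (f : G →* H)
    (hf : Function.Injective f) (hN : ∀ n ∈ N, ∃ g, f g = n) : Fg (N.comap f) := by
  obtain ⟨S, hS, rfl⟩ := h
  refine ⟨f ⁻¹' S, hS.preimage hf.injOn, ?_⟩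
  have : (Subgroup.closure (f ⁻¹' S)).map f = Subgroup.closure S := by
    rw [MonoidHom.map_closure, Set.image_preimage_eq_of_subset]
    intro n hn
    obtain ⟨g, hg⟩ := hN n (Subgroup.subset_closure hn)
    exact ⟨g, hg⟩
  rw [← this, Subgroup.comap_map_eq_self_of_injective hf]

section window
variable (m : ℕ)

/-- The free group on the conjugates `x_0^k x_j x_0^{-k}`. -/
abbrev KK (m : ℕ) := FreeGroup (Fin (m+1) × ℤ)

/-- The index shift by `r`. -/
def shE (m : ℕ) (r : ℤ) : Fin (m+1) × ℤ ≃ Fin (m+1) × ℤ :=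
  (Equiv.refl _).prodCongr (Equiv.addLeft r)

/-- The shift action of `ℤ` on `KK m`. -/
def shA (m : ℕ) : Multiplicative ℤ →* MulAut (KK m) where
  toFun r := FreeGroup.freeGroupCongr (shE m r.toAdd)
  map_one' := by
    ext g; simp [shE]
  map_mul' a b := by
    apply MulEquiv.toMonoidHom_injective
    apply FreeGroup.ext_hom
    rintro ⟨i, k⟩
    simp [shE, add_assoc]

theorem shA_of (r : Multiplicative ℤ) (i : Fin (m+1)) (k : ℤ) :
    shA m r (FreeGroup.of (i, k)) = FreeGroup.of (i, r.toAdd + k) := by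
  simp [shA, shE]

/-- The rewriting of words with `x_0` acting as the shift. -/
def wF : FF m →* KK m ⋊[shA m] Multiplicative ℤ :=
  FreeGroup.lift (fun i => if i = 0 then inr (Multiplicative.ofAdd 1) else inl (FreeGroup.of (i, 0)))

/-- The inverse rewriting. -/
def wB : KK m ⋊[shA m] Multiplicative ℤ →* FF m :=
  SemidirectProduct.lift
    (FreeGroup.lift fun p => FreeGroup.of 0 ^ p.2 * FreeGroup.of p.1 * (FreeGroup.of 0 ^ p.2)⁻¹)
    (zpowersHom _ (FreeGroup.of 0)) (by
      intro r
      apply FreeGroup.ext_hom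
      rintro ⟨i, k⟩
      simp only [MonoidHom.comp_apply, MulEquiv.coe_toMonoidHom, shA_of, FreeGroup.lift_apply_of,
        MulAut.conj_apply, zpowersHom_apply, toAdd_ofAdd, zpow_add]
      group)

theorem wB_wF (f : FF m) : wB m (wF m f) = f := by
  have : (wB m).comp (wF m) = MonoidHom.id _ := by
    apply FreeGroup.ext_hom
    intro i
    simp only [MonoidHom.comp_apply, wF, FreeGroup.lift_apply_of, MonoidHom.id_apply]
    split_ifs with h
    · subst h; simp [wB]
    · simp [wB]
  exact DFunLike.congr_fun this f

theorem wF_right (f : FF m) : (wF m f).right = xe m 0 f := by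
  have : (rightHom).comp (wF m) = xe m 0 := by
    apply fr_ext
    intro j hj
    rw [xe_x hj, x_of_lt (by omega)]
    simp only [MonoidHom.comp_apply, wF, FreeGroup.lift_apply_of]
    by_cases h : j = 0
    · subst h; simp
    · rw [if_neg (by intro e; exact h (congrArg Fin.val e)), if_neg h]; simp
  exact DFunLike.congr_fun this f

/-- Killing the letters whose index is larger than `R` in absolute value. -/
def wK (R : ℕ) : KK m →* KK m :=
  FreeGroup.lift (fun p => if p.2.natAbs ≤ R then FreeGroup.of p else 1)

theorem wK_le {R S : ℕ} (h : R ≤ S) {f : KK m} (hf : wK m R f = f) : wK m S f = f := by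
  have : (wK m S).comp (wK m R) = wK m R := by
    apply FreeGroup.ext_hom
    rintro ⟨i, k⟩
    simp only [MonoidHom.comp_apply, wK, FreeGroup.lift_apply_of]
    split_ifs with h1
    · simp only [FreeGroup.lift_apply_of]; rw [if_pos (by omega)]
    · simp
  have := DFunLike.congr_fun this f
  simp only [MonoidHom.comp_apply] at this
  rwa [hf] at this

theorem wK_ex (f : KK m) : ∃ R, wK m R f = f := by
  induction f using FreeGroup.induction_on with
  | C1 => exact ⟨0, by simp⟩
  | of p => exact ⟨p.2.natAbs, by simp [wK]⟩
  | inv_of p _ => exact ⟨p.2.natAbs, by simp [wK]⟩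
  | mul a b ha hb =>
    obtain ⟨R, hR⟩ := ha
    obtain ⟨S, hS⟩ := hb
    exact ⟨max R S, by rw [map_mul, wK_le m (le_max_left _ _) hR, wK_le m (le_max_right _ _) hS]⟩

theorem wK_sh (R : ℕ) (f : KK m) :
    wK m R (shA m (Multiplicative.ofAdd (2 * R + 1 : ℤ)) (wK m R f)) = 1 := by
  have : ((wK m R).comp ((shA m (Multiplicative.ofAdd (2 * R + 1 : ℤ))).toMonoidHom)).comp (wK m R) = 1 := by
    apply FreeGroup.ext_hom
    rintro ⟨i, k⟩
    simp only [MonoidHom.comp_apply, wK, FreeGroup.lift_apply_of]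
    split_ifs with h1
    · simp only [MulEquiv.coe_toMonoidHom, shA_of, FreeGroup.lift_apply_of]
      rw [if_neg (by rw [toAdd_ofAdd]; omega)]; rfl
    · simp
  exact DFunLike.congr_fun this f

/-- A finitely generated subgroup normalized by `x_0` with trivial exponent of `x_0` is trivial:
its elements involve only finitely many of the conjugates by `x_0`, but shifting leaves this
window. -/
theorem window {N : Subgroup (FF m)} (hN : Fg N) (hc : ∀ n ∈ N, x 0 * n * (x 0)⁻¹ ∈ N)
    (he : ∀ n ∈ N, xi 0 n = 0) (n : FF m) (hn : n ∈ N) : n = 1 := by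
  obtain ⟨S, hS, rfl⟩ := hN
  have hR : ∃ R, ∀ f ∈ S, wK m R (wF m f).left = (wF m f).left := by
    clear hc he hn
    induction S, hS using Set.Finite.induction_on with
    | empty => exact ⟨0, by simp⟩
    | insert _ _ ih =>
      rename_i a S _ _
      obtain ⟨R, hR⟩ := ih
      obtain ⟨R', hR'⟩ := wK_ex m (wF m a).left
      refine ⟨max R R', ?_⟩
      rintro f (rfl | hf)
      · exact wK_le m (le_max_right _ _) hR'
      · exact wK_le m (le_max_left _ _) (hR f hf)
  obtain ⟨R, hR⟩ := hR
  have hri : ∀ f ∈ Subgroup.closure S, (wF m f).right = 1 := by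
    intro f hf
    rw [wF_right]
    have := he f hf
    rw [xi] at this
    exact Multiplicative.toAdd.injective this
  have hall : ∀ f ∈ Subgroup.closure S, wK m R (wF m f).left = (wF m f).left := by
    intro f hf
    induction hf using Subgroup.closure_induction with
    | mem f h => exact hR f h
    | one => simp
    | mul a b ha hb iha ihb => rw [map_mul, mul_left, hri a ha]; simp [iha, ihb]
    | inv a ha iha => rw [map_inv, inv_left, hri a ha]; simp [iha]
  have hconj : ∀ k : ℕ, ∀ f ∈ Subgroup.closure S, x 0 ^ k * f * (x 0 ^ k)⁻¹ ∈ Subgroup.closure S := by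
    intro k f hf
    induction k with
    | zero => simpa using hf
    | succ k ih =>
      have := hc _ ih
      rw [pow_succ']
      convert this using 1
      group
  have h1 := hall _ (hconj (2 * R + 1) n hn)
  have hx : wF m (x 0) = inr (Multiplicative.ofAdd 1) := by
    rw [x_of_lt (by omega)]; simp [wF]
  have h2 : (wF m (x 0 ^ (2 * R + 1) * n * (x 0 ^ (2 * R + 1))⁻¹)).left =
      shA m (Multiplicative.ofAdd (2 * R + 1 : ℤ)) (wF m n).left := by
    have hp : (inr (Multiplicative.ofAdd 1) : KK m ⋊[shA m] Multiplicative ℤ) ^ (2 * R + 1) =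
        inr (Multiplicative.ofAdd (2 * R + 1 : ℤ)) := by
      rw [← map_pow, ← ofAdd_nsmul]
      congr 2
      simp
    rw [map_mul, map_mul, map_inv, map_pow, hx, hp]
    generalize (Multiplicative.ofAdd (2 * R + 1 : ℤ)) = r
    simp
  rw [h2, ← hall n hn, wK_sh] at h1
  have h3 : wK m R (wF m n).left = 1 := by
    apply (shA m (Multiplicative.ofAdd (2 * R + 1 : ℤ))).injective
    rw [← h1, map_one]
  rw [hall n hn] at h3
  have : wF m n = 1 := SemidirectProduct.ext h3 (hri n hn)
  rw [← wB_wF m n, this, map_one]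

end window

theorem lk_iota {m : ℕ} (g : GG m) (p q : ℕ) :
    lk (iota m g) (p+1) (q+1) = lk g.right p q := by
  conv_lhs => rw [← inl_left_mul_inr_right g, map_mul, lk_mul, iota_inr, rho_sh, rho_sh, lk_inl', lk_sh]
  ring

theorem rho_iota_eq {m : ℕ} {g : GG m} (h : rho _ (iota m g) = 1) : rho m g.right = 1 := by
  ext k
  have := rho_iota g k
  rw [h] at this
  simpa using this.symm

theorem rho_sh_one {m : ℕ} {b : Br m} (h : rho m b = 1) : rho _ (shB m b) = 1 := by
  ext k
  cases k with
  | zero => rw [rho_sh0]; rfl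
  | succ k => rw [rho_sh, h]; rfl

/-- A finitely generated subgroup of pure braids with vanishing linking numbers that is normalized
by all pure braids is trivial. -/
theorem pure_window (m : ℕ) (N : Subgroup (Br m)) (hN : Fg N)
    (hl : ∀ n ∈ N, rho m n = 1 ∧ ∀ p q, lk n p q = 0)
    (hc : ∀ b, rho m b = 1 → ∀ n ∈ N, b * n * b⁻¹ ∈ N) (n : Br m) (hn : n ∈ N) : n = 1 := by
  induction m with
  | zero => exact br_zero n
  | succ m ih =>
    have hst : ∀ n ∈ N, ∃ g, iota m g = n := fun n hn =>
      ⟨_, (iota_of_stab n (by rw [(hl n hn).1]; rfl)).symm⟩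
    have hM := hN.comap (iota m) (iota_inj m) hst
    have hr : ∀ g : GG m, iota m g ∈ N → g.right = 1 := by
      intro g hg
      apply ih ((N.comap (iota m)).map rightHom) (hM.map _) _ _ _ ⟨g, hg, rfl⟩
      · rintro _ ⟨g, hg, rfl⟩
        refine ⟨rho_iota_eq (hl _ hg).1, fun p q => ?_⟩
        rw [← (hl _ hg).2 (p+1) (q+1), lk_iota]; rfl
      · rintro b hb _ ⟨g, hg, rfl⟩
        refine ⟨inr b * g * (inr b)⁻¹, ?_, by simp⟩
        have := hc _ (rho_sh_one hb) _ hg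
        simpa [iota_inr] using this
    have hst' : ∀ n ∈ N, ∃ f, ((iota m).comp inl) f = n := by
      intro n hn
      obtain ⟨g, rfl⟩ := hst n hn
      refine ⟨g.left, ?_⟩
      have := hr g hn
      conv_rhs => rw [← inl_left_mul_inr_right g, this]
      simp
    have hinj : Function.Injective ((iota m).comp inl) := (iota_inj m).comp inl_injective
    obtain ⟨f, rfl⟩ := hst' n hn
    have hF := hN.comap _ hinj hst'
    have := window m hF (fun n hn => by
        have := hc (iota m (inl (x 0))) (rho_inl _) _ hn
        simpa using this)
      (fun n hn => by
        have := (hl _ hn).2 0 1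
        rw [MonoidHom.comp_apply, lk_inl n 0 (by omega)] at this
        omega) f hn
    rw [this, map_one]

/-- An automorphism preserving permutations and linking numbers maps the free group of pure
braids in which only strand `0` moves into itself. -/
theorem phi_inl {m : ℕ} (ψ : MulAut (Br (m+1))) (hψ : ∀ g, rho _ (ψ g) = rho _ g)
    (hl : ∀ g, rho _ g = 1 → ∀ p q, lk (ψ g) p q = lk g p q) (f : FF m) :
    ∃ f', ψ (iota m (inl f)) = iota m (inl f') := by
  let U : Subgroup (Br (m+1)) := (((iota m).comp inl).range).map ψ.toMonoidHom
  have hU : Fg U := by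
    refine Fg.map ⟨(iota m).comp inl '' {g : FF m | ∃ i ≤ m, g = x i}, ?_, ?_⟩ _
    · apply Set.Finite.image
      have : {g : FF m | ∃ i ≤ m, g = x i} = (fun i => x i) '' {i : ℕ | i ≤ m} := by
        ext g; simp [eq_comm]
      rw [this]
      exact (Set.finite_le_nat m).image _
    · rw [← MonoidHom.map_closure, fr_closure, MonoidHom.range_eq_map]
  have hst : ∀ n ∈ U, ∃ g, iota m g = n := by
    rintro _ ⟨_, ⟨f, rfl⟩, rfl⟩
    exact ⟨_, (iota_of_stab _ (by
      simp only [MonoidHom.comp_apply, MulEquiv.coe_toMonoidHom]; rw [hψ, rho_inl]; rfl)).symm⟩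
  have key : ∀ g : GG m, iota m g ∈ U → g.right = 1 := by
    intro g hg
    apply pure_window m ((U.comap (iota m)).map rightHom)
      ((hU.comap _ (iota_inj m) hst).map _) _ _ _ ⟨g, hg, rfl⟩
    · rintro _ ⟨g, ⟨_, ⟨f, rfl⟩, e⟩, rfl⟩
      simp only [MonoidHom.comp_apply, MulEquiv.coe_toMonoidHom] at e
      refine ⟨rho_iota_eq (by rw [← e, hψ, rho_inl]), fun p q => ?_⟩
      rw [rightHom_eq_right, ← lk_iota, ← e, hl _ (rho_inl _), lk_inl']
    · rintro b hb _ ⟨g, ⟨_, ⟨f, rfl⟩, e⟩, rfl⟩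
      simp only [MonoidHom.comp_apply, MulEquiv.coe_toMonoidHom] at e
      refine ⟨inr b * g * (inr b)⁻¹, ?_, by simp⟩
      -- the conjugating pure braid is the image of a pure braid, which normalizes the free group
      set c := ψ⁻¹ (iota m (inr b)) with hcd
      have hc : ψ c = iota m (inr b) := MulAut.apply_inv_self _ _ _
      have hcr : rho _ c 0 = 0 := by rw [← hψ, hc]; exact (iota_act _).1
      have hci := iota_of_stab c hcr
      refine ⟨iota m (coG m c 0 * inl f * (coG m c 0)⁻¹), ⟨((coG m c 0 * inl f * (coG m c 0)⁻¹)).left, ?_⟩, ?_⟩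
      · simp only [MonoidHom.comp_apply]
        congr 1
        apply SemidirectProduct.ext
        · simp
        · simp
      · simp only [MulEquiv.coe_toMonoidHom]
        rw [map_mul, map_mul, map_inv, ← hci, map_mul, map_mul, map_inv, hc, e]
        simp
        rw [← hci, hc]
  obtain ⟨g, hg⟩ := hst (ψ (iota m (inl f))) ⟨_, ⟨f, rfl⟩, rfl⟩
  refine ⟨g.left, ?_⟩
  have := key g (hg ▸ ⟨_, ⟨f, rfl⟩, rfl⟩)
  rw [← hg]
  conv_lhs => rw [← inl_left_mul_inr_right g, this]
  simp

end BC

namespace BC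

/-! ### Alternating products over two subgroups -/

section alt
variable {G : Type*} [Group G]

/-- `Alt K l`: the list `l` of indexed nontrivial elements of the two subgroups alternates. -/
def Alt (K : Bool → Subgroup G) (l : List (Bool × G)) : Prop :=
  (∀ p ∈ l, p.2 ∈ K p.1 ∧ p.2 ≠ 1) ∧ l.IsChain (fun a b => a.1 ≠ b.1)

/-- The product of the letters of an indexed list. -/
def pr (l : List (Bool × G)) : G := (l.map Prod.snd).prod

/-- The two subgroups generate their free product. -/
def FP (K : Bool → Subgroup G) : Prop := ∀ l, Alt K l → l ≠ [] → pr l ≠ 1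

/-- The formal inverse of an indexed list. -/
def iv (l : List (Bool × G)) : List (Bool × G) := (l.map (fun p => (p.1, p.2⁻¹))).reverse

variable {K : Bool → Subgroup G}

@[simp] theorem pr_nil : pr ([] : List (Bool × G)) = 1 := rfl
@[simp] theorem pr_cons (a : Bool × G) (l) : pr (a :: l) = a.2 * pr l := by simp [pr]
@[simp] theorem pr_append (l l' : List (Bool × G)) : pr (l ++ l') = pr l * pr l' := by simp [pr]
@[simp] theorem iv_length (l : List (Bool × G)) : (iv l).length = l.length := by simp [iv]
@[simp] theorem iv_iv (l : List (Bool × G)) : iv (iv l) = l := by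
  simp [iv, Function.comp_def]
@[simp] theorem iv_cons (a : Bool × G) (l) : iv (a :: l) = iv l ++ [(a.1, a.2⁻¹)] := by simp [iv]
@[simp] theorem iv_append (l l' : List (Bool × G)) : iv (l ++ l') = iv l' ++ iv l := by simp [iv]
@[simp] theorem iv_nil : iv ([] : List (Bool × G)) = [] := rfl

@[simp] theorem pr_iv (l : List (Bool × G)) : pr (iv l) = (pr l)⁻¹ := by
  induction l with
  | nil => simp
  | cons a l ih => simp [ih]

theorem Alt.nil : Alt K [] := ⟨by simp, by simp⟩

theorem alt_single {a : Bool × G} : Alt K [a] ↔ a.2 ∈ K a.1 ∧ a.2 ≠ 1 := by simp [Alt]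

theorem alt_append {l l' : List (Bool × G)} : Alt K (l ++ l') ↔ Alt K l ∧ Alt K l' ∧
    ∀ a ∈ l.getLast?, ∀ b ∈ l'.head?, a.1 ≠ b.1 := by
  simp only [Alt, List.isChain_append, List.mem_append]
  constructor
  · rintro ⟨h, h1, h2, h3⟩
    exact ⟨⟨fun p hp => h p (.inl hp), h1⟩, ⟨fun p hp => h p (.inr hp), h2⟩, h3⟩
  · rintro ⟨⟨h, h1⟩, ⟨h', h2⟩, h3⟩
    exact ⟨fun p hp => hp.elim (h p) (h' p), h1, h2, h3⟩

theorem alt_cons {a : Bool × G} {l : List (Bool × G)} : Alt K (a :: l) ↔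
    (a.2 ∈ K a.1 ∧ a.2 ≠ 1) ∧ Alt K l ∧ ∀ b ∈ l.head?, a.1 ≠ b.1 := by
  rw [← List.singleton_append, alt_append, alt_single]; simp

theorem alt_map {l : List (Bool × G)} (h : Alt K l) (T : Bool × G → Bool × G)
    (h1 : ∀ p, (T p).1 = p.1)
    (h2 : ∀ p ∈ l, p.2 ∈ K p.1 → p.2 ≠ 1 → (T p).2 ∈ K p.1 ∧ (T p).2 ≠ 1) : Alt K (l.map T) := by
  refine ⟨?_, ?_⟩
  · intro p hp
    obtain ⟨q, hq, rfl⟩ := List.mem_map.1 hp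
    rw [h1]; exact h2 q hq (h.1 q hq).1 (h.1 q hq).2
  · rw [List.isChain_map]; simpa only [h1] using h.2

theorem Alt.iv {l : List (Bool × G)} (h : Alt K l) : Alt K (iv l) := by
  have h1 := alt_map h (fun p => (p.1, p.2⁻¹)) (fun _ => rfl)
    (fun p _ h1 h2 => ⟨inv_mem h1, by simpa using h2⟩)
  refine ⟨fun p hp => h1.1 p (by simpa [BC.iv] using hp), ?_⟩
  rw [BC.iv, List.isChain_reverse]
  exact h1.2.imp (fun a b h => h.symm)

theorem iv_head (l : List (Bool × G)) : (iv l).head?.map Prod.fst = l.getLast?.map Prod.fst := by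
  simp [iv, List.head?_reverse, List.getLast?_map, Function.comp_def]

theorem iv_last (l : List (Bool × G)) : (iv l).getLast?.map Prod.fst = l.head?.map Prod.fst := by
  simp [iv, List.getLast?_reverse, Function.comp_def]

/-- Index of the first letter. -/
def hd (l : List (Bool × G)) : Option Bool := l.head?.map Prod.fst
/-- Index of the last letter. -/
def la (l : List (Bool × G)) : Option Bool := l.getLast?.map Prod.fst

@[simp] theorem hd_iv (l : List (Bool × G)) : hd (iv l) = la l := iv_head l
@[simp] theorem la_iv (l : List (Bool × G)) : la (iv l) = hd l := iv_last l
@[simp] theorem hd_cons (a : Bool × G) (l) : hd (a :: l) = some a.1 := rfl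
@[simp] theorem hd_nil : hd ([] : List (Bool × G)) = none := rfl
@[simp] theorem la_nil : la ([] : List (Bool × G)) = none := rfl
@[simp] theorem la_concat (a : Bool × G) (l) : la (l ++ [a]) = some a.1 := by simp [la]
@[simp] theorem la_single (a : Bool × G) : la [a] = some a.1 := by simp [la]
theorem hd_append {l l' : List (Bool × G)} (h : l ≠ []) : hd (l ++ l') = hd l := by
  cases l with
  | nil => exact absurd rfl h
  | cons a l => rfl
theorem la_append {l l' : List (Bool × G)} (h : l' ≠ []) : la (l ++ l') = la l' := by
  rcases List.eq_nil_or_concat l' with rfl | ⟨t, a, rfl⟩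
  · exact absurd rfl h
  · rw [List.concat_eq_append, ← List.append_assoc, la_concat, la_concat]
theorem hd_none {l : List (Bool × G)} : hd l = none ↔ l = [] := by cases l <;> simp
theorem la_none {l : List (Bool × G)} : la l = none ↔ l = [] := by
  rcases List.eq_nil_or_concat l with rfl | ⟨t, a, rfl⟩ <;> simp

theorem alt_append' {l l' : List (Bool × G)} : Alt K (l ++ l') ↔ Alt K l ∧ Alt K l' ∧
    (l ≠ [] → l' ≠ [] → la l ≠ hd l') := by
  rw [alt_append]
  refine and_congr_right fun _ => and_congr_right fun _ => ?_
  cases l' with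
  | nil => simp
  | cons b l' =>
    rcases List.eq_nil_or_concat l with rfl | ⟨t, a, rfl⟩
    · simp
    · simp

/-- Uniqueness of normal forms in a free product. -/
theorem FP.unique (hF : FP K) {l l' : List (Bool × G)} (h : Alt K l) (h' : Alt K l')
    (he : pr l = pr l') : l = l' := by
  induction l generalizing l' with
  | nil =>
    by_contra hn
    exact hF l' h' (fun e => hn e.symm) (by simpa using he.symm)
  | cons a t ih =>
    cases l' with
    | nil => exact absurd he (hF _ h (by simp))
    | cons b t' =>
      by_cases hab : a.1 = b.1
      · by_cases hab2 : a.2 = b.2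
        · obtain rfl : a = b := Prod.ext hab hab2
          rw [ih (alt_cons.1 h).2.1 (alt_cons.1 h').2.1 (by simpa using he)]
        · exfalso
          refine hF (iv t ++ (a.1, a.2⁻¹ * b.2) :: t') ?_ (by simp) ?_
          · have h2 := alt_cons.1 h
            have h3 := alt_cons.1 h'
            rw [alt_append']
            refine ⟨h2.2.1.iv, ?_, ?_⟩
            · rw [alt_cons]
              refine ⟨⟨mul_mem (inv_mem h2.1.1) (by simpa [hab] using h3.1.1), ?_⟩, h3.2.1, ?_⟩
              · intro e; exact hab2 (inv_mul_eq_one.1 e)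
              · simpa [hab] using h3.2.2
            · intro _ _
              have := h2.2.2
              cases t with
              | nil => simp
              | cons c t => simp at this ⊢; simpa using fun e => this e.symm
          · simp at he ⊢
            rw [inv_mul_eq_one, ← mul_right_inj a.2, he]; group
      · exfalso
        refine hF (iv (a :: t) ++ (b :: t')) ?_ (by simp) ?_
        · rw [alt_append']
          exact ⟨h.iv, h', fun _ _ => by simpa using hab⟩
        · rw [pr_append, pr_iv, he, inv_mul_cancel]

/-- An element of a factor times an alternating product is an alternating product. -/
theorem mulL {l : List (Bool × G)} (h : Alt K l) {i : Bool} {a : G} (ha : a ∈ K i) :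
    ∃ l', Alt K l' ∧ pr l' = a * pr l := by
  by_cases h1 : a = 1
  · exact ⟨l, h, by simp [h1]⟩
  cases l with
  | nil => exact ⟨[(i, a)], alt_single.2 ⟨ha, h1⟩, by simp⟩
  | cons b t =>
    by_cases hb : i = b.1
    · have h2 := alt_cons.1 h
      by_cases h3 : a * b.2 = 1
      · exact ⟨t, h2.2.1, by rw [pr_cons, ← mul_assoc, h3, one_mul]⟩
      · refine ⟨(i, a * b.2) :: t, alt_cons.2 ⟨⟨mul_mem ha (hb ▸ h2.1.1), h3⟩, h2.2.1, ?_⟩, ?_⟩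
        · subst hb; exact h2.2.2
        · simp [mul_assoc]
    · refine ⟨(i, a) :: b :: t, alt_cons.2 ⟨⟨ha, h1⟩, h, by simpa using hb⟩, by simp⟩

theorem exists_alt {g : G} (hg : g ∈ K false ⊔ K true) : ∃ l, Alt K l ∧ pr l = g := by
  have key : ∀ l : List (Bool × G), (∀ p ∈ l, p.2 ∈ K p.1) → ∃ l', Alt K l' ∧ pr l' = pr l := by
    intro l
    induction l with
    | nil => exact fun _ => ⟨[], Alt.nil, rfl⟩
    | cons a l ih =>
      intro h
      obtain ⟨l1, h1, h2⟩ := ih (fun p hp => h p (List.mem_cons_of_mem _ hp))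
      obtain ⟨l2, h3, h4⟩ := mulL h1 (h a List.mem_cons_self)
      exact ⟨l2, h3, by rw [h4, h2, pr_cons]⟩
  have h2 : ∃ l : List (Bool × G), (∀ p ∈ l, p.2 ∈ K p.1) ∧ pr l = g := by
    rw [← SetLike.mem_coe, Subgroup.sup_eq_closure] at hg
    induction hg using Subgroup.closure_induction with
    | mem a ha =>
      rcases ha with ha | ha
      · exact ⟨[(false, a)], by simpa using ha, by simp⟩
      · exact ⟨[(true, a)], by simpa using ha, by simp⟩
    | one => exact ⟨[], by simp, rfl⟩
    | mul a b _ _ iha ihb =>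
      obtain ⟨l1, h1, rfl⟩ := iha
      obtain ⟨l2, h2, rfl⟩ := ihb
      refine ⟨l1 ++ l2, ?_, by simp⟩
      intro p hp
      rcases List.mem_append.1 hp with hp | hp
      exacts [h1 p hp, h2 p hp]
    | inv a _ iha =>
      obtain ⟨l1, h1, rfl⟩ := iha
      refine ⟨iv l1, ?_, by simp⟩
      intro p hp
      simp only [iv, List.mem_reverse, List.mem_map] at hp
      obtain ⟨q, hq, rfl⟩ := hp
      exact inv_mem (h1 q hq)
  obtain ⟨l, h1, rfl⟩ := h2
  exact key l h1

/-- Words `u` and `v` with `u g = g v` are rotations of each other. -/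
theorem comm_rot {α : Type*} : ∀ (n : ℕ) (u g v : List α), g.length = n → u ++ g = g ++ v → u ~r v := by
  intro n
  induction n using Nat.strong_induction_on with
  | _ n ih =>
    intro u g v hn h
    by_cases hu : u = []
    · subst hu
      have : v = [] := by
        have := congrArg List.length h
        simp at this; exact List.length_eq_zero_iff.1 (by simpa using this)
      subst this; exact List.IsRotated.refl _
    by_cases hlt : g.length < u.length
    · obtain ⟨r, hr⟩ : g <+: u := by
        have h1 : g <+: u ++ g := h ▸ List.prefix_append _ _
        exact List.prefix_of_prefix_length_le h1 (List.prefix_append _ _) hlt.le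
      subst hr
      rw [List.append_assoc, List.append_cancel_left_eq] at h
      rw [← h]
      exact List.isRotated_append
    · obtain ⟨r, hr⟩ : u <+: g := by
        have h1 : u <+: g ++ v := h ▸ List.prefix_append _ _
        exact List.prefix_of_prefix_length_le h1 (List.prefix_append _ _) (by omega)
      subst hr
      rw [List.append_assoc, List.append_cancel_left_eq] at h
      refine ih r.length ?_ u r v rfl h
      have : 0 < u.length := List.length_pos_iff.2 hu
      simp at hn; omega

theorem opt_bool {i j k : Option Bool} (hi : i ≠ none) (hj : j ≠ none) (hk : k ≠ none)
    (h : i ≠ j) (h' : k ≠ i) : k = j := by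
  rcases i with _ | _ | _ <;> rcases j with _ | _ | _ <;> rcases k with _ | _ | _ <;> simp_all

theorem isRot_iv {u v : List (Bool × G)} (h : iv u ~r iv v) : u ~r v := by
  simpa [iv, Function.comp_def] using (h.reverse.map (fun p : Bool × G => (p.1, p.2⁻¹)))

/-- Conjugate cyclically reduced elements of a free product are rotations of each other. -/
theorem FP.rot (hF : FP K) (htop : K false ⊔ K true = ⊤) {u v : List (Bool × G)}
    (hu : Alt K (u ++ u)) (hv : Alt K (v ++ v)) (hu0 : u ≠ []) (hc : IsConj (pr u) (pr v)) :
    u ~r v := by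
  obtain ⟨c, hc⟩ := isConj_iff.1 hc
  obtain ⟨l, hl, hlc⟩ := exists_alt (K := K) (g := c⁻¹) (by rw [htop]; trivial)
  have e : pr u * pr l = pr l * pr v := by rw [hlc, ← hc]; group
  obtain ⟨au, -, hu1⟩ := alt_append'.1 hu
  obtain ⟨av, -, hv1⟩ := alt_append'.1 hv
  specialize hu1 hu0 hu0
  have hv0 : v ≠ [] := by
    rintro rfl
    exact hF u au hu0 (by simpa using e)
  specialize hv1 hv0 hv0
  by_cases hl0 : l = []
  · subst hl0
    rw [hF.unique au av (by simpa using e)]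
  have iu0 : iv u ≠ [] := fun e => hu0 (by simpa using congrArg iv e)
  have iv0 : iv v ≠ [] := fun e => hv0 (by simpa using congrArg iv e)
  have n1 := mt hd_none.1 hu0
  have n2 := mt la_none.1 hu0
  have n3 := mt hd_none.1 hv0
  have n4 := mt la_none.1 hv0
  have n5 := mt hd_none.1 hl0
  have n6 := mt la_none.1 hl0
  have ul : ∀ (x y : List (Bool × G)), Alt K x → Alt K y → (la x ≠ hd y) → Alt K (x ++ y) :=
    fun x y a b c => alt_append'.2 ⟨a, b, fun _ _ => c⟩
  by_cases c1 : la u = hd l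
  · -- `u⁻¹` does not cancel against `l`
    have c1' : hd u ≠ hd l := fun e => hu1 (c1.trans e.symm)
    have a1 := ul _ _ au.iv hl (by simpa using c1')
    by_cases c2 : la l = la v
    · exfalso
      have a2 := ul _ _ a1 av (by rw [la_append hl0, c2]; exact hv1)
      have := hF.unique a2 hl (by
        simp only [pr_append, pr_iv]; rw [mul_assoc, ← e]; group)
      have := congrArg List.length this
      have := List.length_pos_iff.2 hu0
      simp at *; omega
    · have a2 := ul _ _ hl av.iv (by simpa using c2)
      have := hF.unique a1 a2 (by
        simp only [pr_append, pr_iv]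
        rw [inv_mul_eq_iff_eq_mul, ← mul_assoc, e]; group)
      exact isRot_iv (comm_rot _ _ _ _ rfl this)
  · have a1 := ul _ _ au hl c1
    by_cases c2 : la l = hd v
    · exfalso
      have a2 := ul _ _ a1 av.iv (by rw [la_append hl0, hd_iv, c2]; exact hv1.symm)
      have := hF.unique a2 hl (by
        simp only [pr_append, pr_iv]; rw [e]; group)
      have := congrArg List.length this
      have := List.length_pos_iff.2 hu0
      simp at *; omega
    · have a2 := ul _ _ hl av c2
      exact comm_rot _ _ _ _ rfl (hF.unique a1 a2 (by simpa using e))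

/-- Every element is conjugate to one in a single factor or to a cyclically reduced one. -/
theorem exists_cr {g : G} (htop : K false ⊔ K true = ⊤) : ∃ l, Alt K l ∧ IsConj g (pr l) ∧
    (l.length ≤ 1 ∨ Alt K (l ++ l)) := by
  classical
  have hex : ∃ n, ∃ l : List (Bool × G), l.length = n ∧ Alt K l ∧ IsConj g (pr l) := by
    obtain ⟨l, hl, rfl⟩ := exists_alt (K := K) (g := g) (by rw [htop]; trivial)
    exact ⟨_, l, rfl, hl, IsConj.refl _⟩
  obtain ⟨l, hn, hl, hc⟩ := Nat.find_spec hex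
  have hmin : ∀ l' : List (Bool × G), Alt K l' → IsConj g (pr l') → l.length ≤ l'.length := by
    intro l' h1 h2
    rw [hn]; exact Nat.find_min' hex ⟨l', rfl, h1, h2⟩
  refine ⟨l, hl, hc, ?_⟩
  by_contra! hcon
  obtain ⟨h1, h2⟩ := hcon
  rw [alt_append'] at h2
  have h3 : l ≠ [] ∧ la l = hd l := by
    by_contra h; exact h2 ⟨hl, hl, fun a _ c => h ⟨a, c⟩⟩
  obtain ⟨h3, h4⟩ := h3
  cases l with
  | nil => exact h3 rfl
  | cons a t =>
    rcases List.eq_nil_or_concat t with rfl | ⟨t, b, rfl⟩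
    · simp at h1
    rw [List.concat_eq_append] at *
    obtain ⟨ha, ht, ha2⟩ := alt_cons.1 hl
    obtain ⟨ht1, hb, hb1⟩ := alt_append'.1 ht
    have hba : b.1 = a.1 := by
      rw [← List.cons_append, la_concat] at h4; simpa using h4
    have hcj : IsConj g (pr t * (b.2 * a.2)) := by
      refine hc.trans (isConj_iff.2 ⟨a.2⁻¹, ?_⟩)
      simp [mul_assoc]
    by_cases h5 : b.2 * a.2 = 1
    · have := hmin t ht1 (by simpa [h5] using hcj)
      simp at this
    · have := hmin (t ++ [(b.1, b.2 * a.2)]) (alt_append'.2 ⟨ht1, alt_single.2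
        ⟨mul_mem (alt_single.1 hb).1 (by rw [hba]; exact ha.1), h5⟩, by
          simpa using hb1⟩) (by simpa using hcj)
      simp at this

theorem pr_map (T : G →* G) (l : List (Bool × G)) : pr (l.map (fun p => (p.1, T p.2))) = T (pr l) := by
  induction l with
  | nil => simp
  | cons a l ih => simp [ih]

/-- If all powers of the partial conjugation `T` (by `c` on the factor `K false`, trivial on
`K true`) preserve the conjugacy class of `v`, then up to conjugacy the `K false`-letters of `v`
commute with a power of `c`. -/
theorem FP.twist (hF : FP K) (htop : K false ⊔ K true = ⊤) (c v : G) (hcK : c ∈ K false)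
    (T : ℕ → G →* G)
    (h1 : ∀ k, ∀ a ∈ K false, T k a = (c ^ k)⁻¹ * a * c ^ k) (h2 : ∀ k, ∀ a ∈ K true, T k a = a)
    (hv : ∀ k, IsConj v (T k v)) :
    (∃ a ∈ K false, IsConj v a) ∨ ∃ l, Alt K l ∧ IsConj v (pr l) ∧ ∃ d : ℕ, 0 < d ∧
      ∀ p ∈ l, p.1 = false → Commute p.2 (c ^ d) := by
  obtain ⟨l, hl, hc, h3⟩ := exists_cr (g := v) htop
  rcases h3 with h3 | h3
  · match l, h3 with
    | [], _ => exact .inr ⟨[], hl, hc, 1, one_pos, by simp⟩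
    | [(false, a)], _ => exact .inl ⟨a, (alt_single.1 hl).1, by simpa using hc⟩
    | [(true, a)], _ => exact .inr ⟨_, hl, hc, 1, one_pos, by simp⟩
  · by_cases h0 : l = []
    · subst h0; exact .inr ⟨[], hl, hc, 1, one_pos, by simp⟩
    refine .inr ⟨l, hl, hc, ?_⟩
    let L : ℕ → List (Bool × G) := fun k => l.map (fun p => (p.1, T k p.2))
    have hL : ∀ k, Alt K (L k ++ L k) := by
      intro k
      have := alt_map h3 (fun p => (p.1, T k p.2)) (fun _ => rfl) (by
        rintro ⟨i, a⟩ _ ha ha1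
        simp only at ha ha1
        cases i
        · simp only [h1 k a ha]
          refine ⟨mul_mem (mul_mem (inv_mem (pow_mem hcK _)) ha) (pow_mem hcK _), ?_⟩
          intro e; apply ha1
          have : a = c ^ k * ((c ^ k)⁻¹ * a * c ^ k) * (c ^ k)⁻¹ := by group
          rw [this, e]; group
        · simp only [h2 k a ha]; exact ⟨ha, ha1⟩)
      simpa [L] using this
    have hr : ∀ k, l ~r L k := by
      intro k
      refine hF.rot htop h3 (hL k) h0 ?_
      rw [pr_map]
      refine hc.symm.trans ((hv k).trans ?_)
      exact (T k).map_isConj hc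
    have hr2 : ∀ k, ∃ r : Fin (l.length + 1), l.rotate r = L k := by
      intro k
      obtain ⟨r, hr, e⟩ := List.isRotated_iff_mod.1 (hr k)
      exact ⟨⟨r, by omega⟩, e⟩
    choose r hr3 using hr2
    obtain ⟨j, k, hjk, he⟩ : ∃ j k : ℕ, j < k ∧ r j = r k := by
      obtain ⟨j, k, h1, h2⟩ := Finite.exists_ne_map_eq_of_infinite r
      rcases lt_or_gt_of_ne h1 with h | h
      exacts [⟨j, k, h, h2⟩, ⟨k, j, h, h2.symm⟩]
    have heq : L j = L k := by rw [← hr3, ← hr3, he]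
    refine ⟨k - j, by omega, ?_⟩
    rintro ⟨i, a⟩ hp hi
    simp only at hi
    subst hi
    have := List.map_inj_left.1 heq (false, a) hp
    simp only [Prod.mk.injEq, true_and] at this
    have ha := (hl.1 _ hp).1
    simp only at ha
    rw [h1 j a ha, h1 k a ha] at this
    obtain ⟨d, rfl⟩ := Nat.exists_eq_add_of_lt hjk
    have e : j + d + 1 - j = d + 1 := by omega
    rw [e]
    rw [show j + d + 1 = (d + 1) + j by ring, pow_add c (d + 1) j] at this
    change a * c ^ (d + 1) = c ^ (d + 1) * a
    have h5 : a = (c ^ (d + 1))⁻¹ * a * c ^ (d + 1) := by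
      have := congrArg (fun t => c ^ j * t * (c ^ j)⁻¹) this
      calc a = c ^ j * ((c ^ j)⁻¹ * a * c ^ j) * (c ^ j)⁻¹ := by group
        _ = _ := this
        _ = _ := by rw [mul_inv_rev]; group
    calc a * c ^ (d + 1) = c ^ (d + 1) * ((c ^ (d + 1))⁻¹ * a * c ^ (d + 1)) := by group
      _ = _ := by rw [← h5]

/-- An element fixed by the partial conjugation by `c` of one factor has all its syllables in that
factor commuting with `c`. -/
theorem FP.fixed (hF : FP K) (c v : G) (hcK : c ∈ K false) (hv : v ∈ K false ⊔ K true) (T : G →* G)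
    (h1 : ∀ a ∈ K false, T a = c⁻¹ * a * c) (h2 : ∀ a ∈ K true, T a = a) (hT : T v = v) :
    ∃ l, Alt K l ∧ pr l = v ∧ ∀ p ∈ l, p.1 = false → Commute p.2 c := by
  obtain ⟨l, hl, rfl⟩ := exists_alt hv
  refine ⟨l, hl, rfl, ?_⟩
  have hL := alt_map hl (fun p => (p.1, T p.2)) (fun _ => rfl) (by
    rintro ⟨i, a⟩ _ ha ha1
    simp only at ha ha1
    cases i
    · simp only [h1 a ha]
      refine ⟨mul_mem (mul_mem (inv_mem hcK) ha) hcK, ?_⟩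
      intro e; apply ha1
      have : a = c * (c⁻¹ * a * c) * c⁻¹ := by group
      rw [this, e]; group
    · simp only [h2 a ha]; exact ⟨ha, ha1⟩)
  have heq := hF.unique hL hl (by rw [pr_map, hT])
  rintro ⟨i, a⟩ hp hi
  simp only at hi
  subst hi
  have := List.map_inj_left.1 (heq.trans (List.map_id l).symm) (false, a) hp
  simp only [Prod.mk.injEq, true_and, id] at this
  rw [h1 a (hl.1 _ hp).1] at this
  change a * c = c * a
  nth_rewrite 2 [← this]; group

end alt
end BC

namespace BC

/-! ### Normal forms in free products -/

section nf
variable {G : Type*} [Group G] {K : Bool → Subgroup G}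

/-- `g` is the product of an alternating list of length `n` with first index `i` and
last index `j`. -/
def NF (K : Bool → Subgroup G) (i j : Bool) (n : ℕ) (g : G) : Prop :=
  ∃ l, Alt K l ∧ pr l = g ∧ hd l = some i ∧ la l = some j ∧ l.length = n

theorem NF.single {i : Bool} {a : G} (h : a ∈ K i) (h1 : a ≠ 1) : NF K i i 1 a :=
  ⟨[(i, a)], alt_single.2 ⟨h, h1⟩, by simp, rfl, by simp, rfl⟩

theorem NF.cat {i j k l : Bool} {n n' : ℕ} {g g' : G} (h : NF K i j n g) (h' : NF K k l n' g')
    (hjk : j ≠ k) : NF K i l (n + n') (g * g') := by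
  obtain ⟨u, h1, h2, h3, h4, h5⟩ := h
  obtain ⟨v, h1', h2', h3', h4', h5'⟩ := h'
  have hu : u ≠ [] := by rintro rfl; simp at h3
  have hv : v ≠ [] := by rintro rfl; simp at h3'
  exact ⟨u ++ v, alt_append'.2 ⟨h1, h1', fun _ _ => by rw [h4, h3']; simpa using hjk⟩,
    by rw [pr_append, h2, h2'], by rw [hd_append hu, h3], by rw [la_append hv, h4'], by simp [h5, h5']⟩

theorem NF.inv {i j : Bool} {n : ℕ} {g : G} (h : NF K i j n g) : NF K j i n g⁻¹ := by
  obtain ⟨u, h1, h2, h3, h4, h5⟩ := h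
  exact ⟨iv u, h1.iv, by rw [pr_iv, h2], by rw [hd_iv, h4], by rw [la_iv, h3], by simp [h5]⟩

theorem NF.unique (hF : FP K) {i j i' j' : Bool} {n n' : ℕ} {g : G} (h : NF K i j n g)
    (h' : NF K i' j' n' g) : i = i' ∧ j = j' ∧ n = n' := by
  obtain ⟨u, h1, h2, h3, h4, h5⟩ := h
  obtain ⟨v, h1', h2', h3', h4', h5'⟩ := h'
  obtain rfl := hF.unique h1 h1' (h2.trans h2'.symm)
  rw [h3] at h3'; rw [h4] at h4'
  exact ⟨by simpa using h3', by simpa using h4', by omega⟩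

theorem NF.ne_one (hF : FP K) {i j : Bool} {n : ℕ} {g : G} (h : NF K i j n g) : g ≠ 1 := by
  obtain ⟨u, h1, rfl, h3, h4, h5⟩ := h
  exact hF u h1 (by rintro rfl; simp at h3)

theorem exists_NF {g : G} (hg : g ∈ K false ⊔ K true) (h1 : g ≠ 1) : ∃ i j n, NF K i j n g := by
  obtain ⟨l, hl, rfl⟩ := exists_alt hg
  cases l with
  | nil => exact absurd rfl h1
  | cons a t =>
    rcases List.eq_nil_or_concat (a :: t) with h | ⟨t', b, h⟩
    · simp at h
    · exact ⟨a.1, b.1, _, a :: t, hl, rfl, rfl, by rw [h, List.concat_eq_append, la_concat], rfl⟩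

/-- Splitting off the first letter. -/
theorem NF.head {i j : Bool} {n : ℕ} {g : G} (h : NF K i j n g) : ∃ a ∈ K i, a ≠ 1 ∧
    ((n = 1 ∧ i = j ∧ g = a) ∨ ∃ g' n', g = a * g' ∧ n = n' + 1 ∧ NF K (!i) j n' g') := by
  obtain ⟨l, h1, rfl, h3, h4, rfl⟩ := h
  cases l with
  | nil => simp at h3
  | cons a t =>
    obtain ⟨ha, ht, hat⟩ := alt_cons.1 h1
    obtain rfl : a.1 = i := by simpa using h3
    refine ⟨a.2, ha.1, ha.2, ?_⟩
    cases t with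
    | nil => left; exact ⟨rfl, by simpa using h4, by simp⟩
    | cons b t =>
      right
      refine ⟨pr (b :: t), _, pr_cons _ _, rfl, _, ht, rfl, ?_, ?_, rfl⟩
      · have : a.1 ≠ b.1 := by simpa using hat
        simp only [hd_cons, Option.some.injEq]
        revert this; generalize a.1 = x; generalize b.1 = y
        cases x <;> cases y <;> simp
      · rw [← h4, ← List.singleton_append (x := a), la_append (by simp)]

/-- Splitting off the last letter. -/
theorem NF.last {i j : Bool} {n : ℕ} {g : G} (h : NF K i j n g) : ∃ a ∈ K j, a ≠ 1 ∧
    ((n = 1 ∧ i = j ∧ g = a) ∨ ∃ g' n', g = g' * a ∧ n = n' + 1 ∧ NF K i (!j) n' g') := by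
  obtain ⟨a, ha, h1, h2⟩ := h.inv.head
  refine ⟨a⁻¹, inv_mem ha, by simpa using h1, ?_⟩
  rcases h2 with ⟨h2, h3, h4⟩ | ⟨g', n', h2, h3, h4⟩
  · exact .inl ⟨h2, h3.symm, by rw [← h4, inv_inv]⟩
  · refine .inr ⟨g'⁻¹, n', ?_, h3, h4.inv⟩
    rw [← mul_inv_rev, ← h2, inv_inv]

theorem ne_not (i : Bool) : i ≠ !i := by cases i <;> simp
theorem not_ne (i : Bool) : (!i) ≠ i := by cases i <;> simp

/-- Positive powers of an alternating product beginning and ending in the same factor do so too,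
without getting shorter, when the factors are torsion-free. -/
theorem NF.pow (htf : ∀ i, ∀ a ∈ K i, ∀ k : ℕ, 0 < k → a ^ k = 1 → a = 1) :
    ∀ (n : ℕ) {i : Bool} {g : G}, NF K i i n g → ∀ k : ℕ, 0 < k → ∃ n', n ≤ n' ∧ NF K i i n' (g ^ k) := by
  intro n
  induction n using Nat.strong_induction_on with
  | _ n ih =>
    intro i g h k hk
    obtain ⟨a, ha, ha1, h1⟩ := h.head
    rcases h1 with ⟨rfl, -, rfl⟩ | ⟨g', n', rfl, rfl, h2⟩
    · exact ⟨1, le_rfl, .single (pow_mem ha k) (fun e => ha1 (htf i _ ha k hk e))⟩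
    obtain ⟨b, hb, hb1, h3⟩ := h2.last
    rcases h3 with ⟨-, h3, -⟩ | ⟨t, n'', rfl, rfl, h3⟩
    · exact absurd h3 (not_ne i)
    by_cases hab : b * a = 1
    · obtain ⟨n3, h4, h5⟩ := ih n'' (by omega) h3 k hk
      refine ⟨1 + n3 + 1, by omega, ?_⟩
      have e : (a * (t * b)) ^ k = a * t ^ k * b := by
        obtain rfl : b = a⁻¹ := eq_inv_of_mul_eq_one_left hab
        rw [← mul_assoc, conj_pow]
      rw [e]
      exact ((NF.single ha ha1).cat h5 (ne_not i)).cat (.single hb hb1) (not_ne i)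
    · have key : ∀ q : ℕ, ∃ n3, n'' + 1 ≤ n3 ∧ NF K (!i) i n3 ((t * (b * a)) ^ q * (t * b)) := by
        intro q
        induction q with
        | zero => exact ⟨_, le_rfl, by simpa using h3.cat (.single hb hb1) (not_ne i)⟩
        | succ q ihq =>
          obtain ⟨n3, h5, h6⟩ := ihq
          refine ⟨n'' + 1 + n3, by omega, ?_⟩
          rw [pow_succ', mul_assoc]
          exact (h3.cat (.single (mul_mem hb ha) hab) (not_ne i)).cat h6 (ne_not i)
      obtain ⟨q, rfl⟩ : ∃ q, k = q + 1 := ⟨k - 1, by omega⟩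
      obtain ⟨n3, h5, h6⟩ := key q
      refine ⟨1 + n3, by omega, ?_⟩
      have e : (a * (t * b)) ^ (q + 1) = a * ((t * (b * a)) ^ q * (t * b)) := by
        clear h6 h5
        induction q with
        | zero => simp
        | succ q ihq => rw [pow_succ, ihq (by omega), pow_succ]; simp only [mul_assoc]
      rw [e]
      exact (NF.single ha ha1).cat h6 (ne_not i)

theorem NF.zpow (htf : ∀ i, ∀ a ∈ K i, ∀ k : ℕ, 0 < k → a ^ k = 1 → a = 1)
    {n : ℕ} {i : Bool} {g : G} (h : NF K i i n g) (k : ℤ) (hk : k ≠ 0) :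
    ∃ n', n ≤ n' ∧ NF K i i n' (g ^ k) := by
  obtain ⟨q, rfl | rfl⟩ := k.eq_nat_or_neg
  · simpa using h.pow htf n q (by omega)
  · obtain ⟨n', h1, h2⟩ := h.pow htf n q (by omega)
    exact ⟨n', h1, by simpa using h2.inv⟩

/-- If all nontrivial elements of `J` are alternating products of length at least `3` beginning and
ending in `K true`, then `K false` and `J` generate a subgroup meeting `K true` trivially. -/
theorem FP.meet (hF : FP K) (J : Subgroup G) (hJ : ∀ y ∈ J, y ≠ 1 → ∃ n, 3 ≤ n ∧ NF K true true n y)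
    {g : G} (hg : g ∈ K false ⊔ J) (hgt : g ∈ K true) : g = 1 := by
  by_contra hne
  let K' : Bool → Subgroup G := fun i => cond i J (K false)
  have key : ∀ l : List (Bool × G), Alt K' l → ∀ i, hd l = some i →
      ∃ j n, NF K i j n (pr l) ∧ (la l = some j) ∧ (3 ≤ n ∨ (i = false ∧ n = 1)) := by
    intro l
    induction l with
    | nil => intro _ i h; simp at h
    | cons a t ih =>
      intro hl i hi
      obtain rfl : a.1 = i := by simpa using hi
      obtain ⟨⟨ha, ha1⟩, ht, hat⟩ := alt_cons.1 hl
      have hs : ∃ n, NF K a.1 a.1 n a.2 ∧ (3 ≤ n ∨ (a.1 = false ∧ n = 1)) := by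
        obtain ⟨i, a⟩ := a
        cases i
        · exact ⟨1, .single ha ha1, .inr ⟨rfl, rfl⟩⟩
        · obtain ⟨n, h1, h2⟩ := hJ a ha ha1
          exact ⟨n, h2, .inl h1⟩
      obtain ⟨n, h1, h2⟩ := hs
      cases t with
      | nil => exact ⟨a.1, n, by simpa using h1, by simp, h2⟩
      | cons b t =>
        have hab : a.1 ≠ b.1 := by simpa using hat
        obtain ⟨j, n', h3, h4, h5⟩ := ih ht b.1 rfl
        refine ⟨j, n + n', by rw [pr_cons]; exact h1.cat h3 hab, ?_, ?_⟩
        · rw [← h4, ← List.singleton_append (x := a), la_append (by simp)]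
        · left
          rcases h2 with h2 | h2
          · omega
          rcases h5 with h5 | h5
          · omega
          exact absurd (h2.1.trans h5.1.symm) hab
  obtain ⟨l, hl, rfl⟩ := exists_alt (K := K') (g := g) hg
  cases l with
  | nil => exact hne rfl
  | cons a t =>
    obtain ⟨j, n, h1, h2, h3⟩ := key _ hl a.1 rfl
    obtain ⟨h4, -, h5⟩ := h1.unique hF (.single hgt hne)
    rcases h3 with h3 | h3
    · omega
    · rw [h3.1] at h4; cases h4

open Monoid in
/-- A criterion for subgroups to generate their free product by mapping to one. -/
theorem fp_of_hom {H : Bool → Type*} [∀ i, Group (H i)] (f : G →* CoprodI H)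
    (hf : ∀ i, ∀ a ∈ K i, ∃ h : H i, f a = CoprodI.of h ∧ (h = 1 → a = 1)) : FP K := by
  classical
  intro l hl hl0 h1
  choose! h hh using hf
  let W : CoprodI.Word H :=
    { toList := l.map (fun p => ⟨p.1, h p.1 p.2⟩)
      ne_one := by
        intro q hq
        obtain ⟨p, hp, rfl⟩ := List.mem_map.1 hq
        intro e
        exact (hl.1 p hp).2 ((hh p.1 p.2 (hl.1 p hp).1).2 e)
      chain_ne := by
        rw [List.isChain_map]; exact hl.2 }
  have h2 : W.prod = f (pr l) := by
    rw [CoprodI.Word.prod, pr, map_list_prod, List.map_map, List.map_map]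
    congr 1
    apply List.map_congr_left
    intro p hp
    exact (hh p.1 p.2 (hl.1 p hp).1).1.symm
  rw [h1, map_one, ← CoprodI.Word.prod_empty] at h2
  have h3 : W = CoprodI.Word.empty := CoprodI.Word.equiv.symm.injective h2
  have h4 := congrArg CoprodI.Word.toList h3
  simp [W, CoprodI.Word.empty] at h4
  exact hl0 h4

open Monoid in
/-- Criterion for subgroups given by generators. -/
theorem fp_of_gen {S : Bool → Set G} (f : G →* CoprodI (fun i => Subgroup.closure (S i)))
    (hf : ∀ i, ∀ a, ∀ ha : a ∈ S i, f a = CoprodI.of (i := i) ⟨a, Subgroup.subset_closure ha⟩) :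
    FP (fun i => Subgroup.closure (S i)) := by
  refine fp_of_hom f ?_
  intro i a ha
  refine ⟨⟨a, ha⟩, ?_, fun e => congrArg Subtype.val e⟩
  induction ha using Subgroup.closure_induction with
  | mem a ha => exact hf i a ha
  | one => rw [map_one]; exact (map_one CoprodI.of).symm
  | mul a b ha hb iha ihb => rw [map_mul, iha, ihb, ← map_mul]; rfl
  | inv a ha iha => rw [map_inv, iha, ← map_inv]; rfl

end nf
end BC

namespace BC
open Monoid

/-! ### Free factors and partial conjugations of the free group -/

section free
variable {m : ℕ}

/-- The two complementary free factors of the free group determined by a colouring of the letters. -/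
def KS (m : ℕ) (S : ℕ → Bool) (i : Bool) : Subgroup (FF m) :=
  Subgroup.closure {g | ∃ j ≤ m, S j = i ∧ g = x j}

theorem x_mem_KS (S : ℕ → Bool) {j : ℕ} (h : j ≤ m) : (x j : FF m) ∈ KS m S (S j) :=
  Subgroup.subset_closure ⟨j, h, rfl, rfl⟩

theorem fp_KS (S : ℕ → Bool) : FP (KS m S) := by
  refine fp_of_gen (FL (fun j => if h : j ≤ m then
    CoprodI.of (i := S j) ⟨x j, x_mem_KS S h⟩ else 1)) ?_
  rintro i a ⟨j, hj, rfl, rfl⟩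
  rw [FL_x _ hj, dif_pos hj]

theorem KS_top (S : ℕ → Bool) : KS m S false ⊔ KS m S true = ⊤ := by
  rw [eq_top_iff]
  intro g _
  refine fr_sub_top _ (fun j hj => ?_) g
  have := x_mem_KS S hj
  cases h : S j <;> rw [h] at this
  · exact Subgroup.mem_sup_left this
  · exact Subgroup.mem_sup_right this

theorem xi_KS (S : ℕ → Bool) {i : Bool} {a : FF m} (ha : a ∈ KS m S i) {j : ℕ} (hj : S j ≠ i) :
    xi j a = 0 := by
  induction ha using Subgroup.closure_induction with
  | mem a ha =>
    obtain ⟨k, hk, hS, rfl⟩ := ha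
    rw [xi_x hk, if_neg (by rintro rfl; exact hj hS)]
  | one => exact xi_one j
  | mul a b _ _ ha hb => rw [xi_mul, ha, hb]; rfl
  | inv a _ ha => rw [xi_inv, ha]; rfl

theorem wd_mem (H : Subgroup (FF m)) (o k : ℕ) (h : ∀ j, o ≤ j → j < o + k → x j ∈ H) : wd m o k ∈ H := by
  induction k with
  | zero => exact one_mem H
  | succ k ih =>
    rw [wd_succ]
    exact mul_mem (ih fun j h1 h2 => h j h1 (by omega)) (h _ (by omega) (by omega))

theorem twist_pow {G : Type*} [Group G] (A : Subgroup G) (c : G) (hc : c ∈ A) (t : MulAut G)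
    (h : ∀ a ∈ A, t a = c⁻¹ * a * c) (k : ℕ) : ∀ a ∈ A, (t ^ k) a = (c ^ k)⁻¹ * a * c ^ k := by
  induction k with
  | zero => intro a _; simp
  | succ k ih =>
    intro a ha
    rw [pow_succ, MulAut.mul_apply, h a ha, ih _ (mul_mem (mul_mem (inv_mem hc) ha) hc), pow_succ' c]
    group

/-- The colouring singling out the window of letters `o, …, o + k`. -/
def SW (o k : ℕ) (j : ℕ) : Bool := !decide (o ≤ j ∧ j ≤ o + k)

/-- The subgroup generated by the product of the window and the letters outside it. -/
def QW (m o k : ℕ) : Subgroup (FF m) :=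
  Subgroup.closure ({wd m o (k+1)} ∪ {g | ∃ j ≤ m, (j < o ∨ o + k < j) ∧ g = x j})

theorem wd_mem_KS {o k : ℕ} (hk : o + k ≤ m) : wd m o (k+1) ∈ KS m (SW o k) false := by
  refine wd_mem _ _ _ fun j h1 h2 => ?_
  have := x_mem_KS (m := m) (SW o k) (j := j) (by omega)
  rwa [show SW o k j = false by simp [SW]; omega] at this

theorem tw_false {o k : ℕ} (hk : o + k ≤ m) : ∀ a ∈ KS m (SW o k) false,
    art m (tw (so m o) k) a = (wd m o (k+1))⁻¹ * a * wd m o (k+1) := by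
  intro a ha
  induction ha using Subgroup.closure_induction with
  | mem a ha =>
    obtain ⟨j, hj, hS, rfl⟩ := ha
    have : o ≤ j ∧ j ≤ o + k := by simpa [SW] using hS
    exact art_tw_mem hk this.1 this.2
  | one => simp
  | mul a b _ _ ha hb => rw [map_mul, ha, hb]; group
  | inv a _ ha => rw [map_inv, ha]; group

theorem tw_true {o k : ℕ} (hk : o + k ≤ m) : ∀ a ∈ KS m (SW o k) true,
    art m (tw (so m o) k) a = a := by
  intro a ha
  induction ha using Subgroup.closure_induction with
  | mem a ha =>
    obtain ⟨j, hj, hS, rfl⟩ := ha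
    have : j < o ∨ o + k < j := by simpa [SW] using hS
    exact art_tw_fix hk (by omega) hj
  | one => simp
  | mul a b _ _ ha hb => rw [map_mul, ha, hb]
  | inv a _ ha => rw [map_inv, ha]

/-- A syllable in the window commuting with a power of the window product is a power of that
product, as centralizers in free groups are cyclic. -/
theorem pr_mem_QW {o k d : ℕ} (hk : o + k ≤ m) (hd : 0 < d) {l : List (Bool × FF m)}
    (hl : Alt (KS m (SW o k)) l) (h : ∀ p ∈ l, p.1 = false → Commute p.2 (wd m o (k+1) ^ d)) :
    pr l ∈ QW m o k := by
  refine Subgroup.list_prod_mem _ ?_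
  intro a ha
  obtain ⟨⟨i, a⟩, hp, rfl⟩ := List.mem_map.1 ha
  have h1 := (hl.1 _ hp).1
  cases i
  · obtain ⟨q, hq⟩ := cent_pow (xe m o) (by rw [xe_wd (by omega)]; simp) (by omega) (h _ hp rfl)
    simp only at hq ⊢
    rw [hq]
    exact zpow_mem (Subgroup.subset_closure (.inl rfl)) q
  · have : KS m (SW o k) true ≤ QW m o k := by
      refine (Subgroup.closure_le _).2 ?_
      rintro _ ⟨j, hj, hS, rfl⟩
      have : j < o ∨ o + k < j := by simpa [SW] using hS
      exact Subgroup.subset_closure (.inr ⟨j, hj, by omega, rfl⟩)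
    exact this h1

/-- A conjugacy class invariant under braids meets the window factor or the subgroup `QW`: it is
invariant under all powers of the full twist of the window, which is a partial conjugation. -/
theorem conj_QW {o k : ℕ} (hk : o + k ≤ m) (v : FF m) (hv : ∀ b, IsConj v (art m b v)) :
    (∃ a ∈ KS m (SW o k) false, IsConj v a) ∨ ∃ V ∈ QW m o k, IsConj v V := by
  rcases (fp_KS (m := m) (SW o k)).twist (KS_top _) (wd m o (k+1)) v (wd_mem_KS hk)
    (fun q => (art m (tw (so m o) k ^ q)).toMonoidHom)
    (fun q a ha => by
      have := twist_pow _ _ (wd_mem_KS hk) _ (tw_false hk) q a ha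
      rw [← map_pow] at this; exact this)
    (fun q a ha => by
      change art m (tw (so m o) k ^ q) a = a
      rw [map_pow]
      induction q with
      | zero => rfl
      | succ q ih => rw [pow_succ, MulAut.mul_apply, tw_true hk a ha, ih])
    (fun q => hv _) with h | ⟨l, h1, h2, d, h3, h4⟩
  · exact .inl h
  · exact .inr ⟨_, pr_mem_QW hk h3 h1 h4, h2⟩

/-- The fixed subgroup of the full twist of a window. -/
theorem fixed_QW {o k : ℕ} (hk : o + k ≤ m) (v : FF m) (hv : art m (tw (so m o) k) v = v) :
    v ∈ QW m o k := by
  obtain ⟨l, h1, rfl, h2⟩ := (fp_KS (m := m) (SW o k)).fixed (wd m o (k+1)) v (wd_mem_KS hk)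
    (by rw [KS_top]; trivial) (art m (tw (so m o) k)).toMonoidHom (tw_false hk) (tw_true hk) hv
  exact pr_mem_QW hk one_pos h1 (by simpa using h2)

theorem xi_conj {v u : FF m} (h : IsConj v u) (j : ℕ) : xi j u = xi j v := by
  obtain ⟨c, rfl⟩ := isConj_iff.1 h
  rw [xi_mul, xi_mul, xi_inv]; ring

theorem xi_zpow (j : ℕ) (f : FF m) (k : ℤ) : xi j (f ^ k) = k * xi j f := by
  simp [xi]

theorem xi_w {j : ℕ} (h : j ≤ m) : xi j (wd m 0 (m+1)) = 1 := by
  rw [xi, xe_wd (by omega), if_pos (by omega)]; rfl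

/-- An element whose conjugacy class is preserved by all braids and which has exponent one in every
letter is conjugate to the product of the letters. -/
theorem conj_w (hm : 2 ≤ m) (v : FF m) (hv : ∀ b, IsConj v (art m b v)) (hx : ∀ j ≤ m, xi j v = 1) :
    IsConj v (wd m 0 (m+1)) := by
  have h1 : ∃ V ∈ QW m 0 (m-1), IsConj v V := by
    rcases conj_QW (o := 0) (k := m - 1) (by omega) v hv with ⟨a, ha, hc⟩ | h
    · have h2 := xi_KS _ ha (j := m) (by simp [SW]; omega)
      rw [xi_conj hc, hx m le_rfl] at h2
      omega
    · exact h
  have h2 : ∃ V ∈ QW m 1 (m-1), IsConj v V := by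
    rcases conj_QW (o := 1) (k := m - 1) (by omega) v hv with ⟨a, ha, hc⟩ | h
    · have h2 := xi_KS _ ha (j := 0) (by simp [SW])
      rw [xi_conj hc, hx 0 (by omega)] at h2
      omega
    · exact h
  obtain ⟨V, hV, c1⟩ := h1
  obtain ⟨V', hV', c2⟩ := h2
  have hm1 : m - 1 + 1 = m := by omega
  let c : FF m := wd m 0 m
  let E : FF m →* FF m := FL (fun j => if j = 1 then c else if j = m then x m else 1)
  have e1 : ∀ k, k + 2 ≤ m → E (wd m 0 (k+2)) = c := by
    intro k
    induction k with
    | zero =>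
      intro _
      rw [wd_succ, wd_succ]
      simp only [E, map_mul, wd, dl, map_one]
      rw [FL_x _ (by omega), FL_x _ (by omega)]
      simp; omega
    | succ k ih =>
      intro hk
      rw [wd_succ, map_mul, ih (by omega)]
      simp only [E]
      rw [FL_x _ (by omega), if_neg (by omega), if_neg (by omega), mul_one]
  have e2 : ∀ k, k + 2 ≤ m → E (wd m 1 (k+1)) = c := by
    intro k hk
    have := e1 k hk
    rw [wd_succ', map_mul] at this
    rw [← this]
    simp only [E]
    rw [FL_x _ (by omega)]; simp; omega
  have e3 : E (x m) = x m := by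
    simp only [E]; rw [FL_x _ le_rfl, if_neg (by omega), if_pos rfl]
  have e0 : E (x 0) = 1 := by
    simp only [E]; rw [FL_x _ (by omega)]; simp; omega
  have hE : E V = V := by
    clear c1
    induction hV using Subgroup.closure_induction with
    | mem a ha =>
      rcases ha with rfl | ⟨j, hj, hj2, rfl⟩
      · rw [hm1]
        obtain ⟨k, rfl⟩ : ∃ k, m = k + 2 := ⟨m - 2, by omega⟩
        exact e1 k (by omega)
      · obtain rfl : j = m := by omega
        exact e3
    | one => simp
    | mul a b _ _ ha hb => rw [map_mul, ha, hb]
    | inv a _ ha => rw [map_inv, ha]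
  have hE' : E V' ∈ Subgroup.zpowers (wd m 0 (m+1)) := by
    clear c2
    induction hV' using Subgroup.closure_induction with
    | mem a ha =>
      rcases ha with rfl | ⟨j, hj, hj2, rfl⟩
      · rw [wd_succ m 1, map_mul]
        obtain ⟨k, rfl⟩ : ∃ k, m = k + 2 := ⟨m - 2, by omega⟩
        rw [show k + 2 - 1 = k + 1 by omega, e2 k (by omega), show 1 + (k + 1) = k + 2 by ring, e3]
        exact Subgroup.mem_zpowers_iff.2 ⟨1, by rw [zpow_one, wd_succ]; simp [c]⟩
      · obtain rfl : j = 0 := by omega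
        rw [e0]; exact one_mem _
    | one => simp
    | mul a b _ _ ha hb => rw [map_mul]; exact mul_mem ha hb
    | inv a _ ha => rw [map_inv]; exact inv_mem ha
  obtain ⟨k, hk⟩ := Subgroup.mem_zpowers_iff.1 hE'
  have c3 : IsConj v (wd m 0 (m+1) ^ k) := by
    rw [hk]
    refine c1.trans ?_
    nth_rewrite 1 [← hE]
    exact E.map_isConj (c1.symm.trans c2)
  have := xi_conj c3 m
  rw [xi_zpow, xi_w le_rfl, hx m le_rfl, mul_one] at this
  rw [this, zpow_one] at c3
  exact c3

end free
end BC

namespace BC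
open Monoid

/-! ### Free group automorphisms commuting with braids -/

section free
variable {m : ℕ}

/-- Generators of the two cyclic subgroups spanned by the product of all letters and by the
first letter. -/
def SX (m : ℕ) (i : Bool) : Set (FF m) := cond i {x 0} {wd m 0 (m+1)}

theorem fp_SX (hm : 1 ≤ m) : FP (fun i => Subgroup.closure (SX m i)) := by
  let a : CoprodI (fun i => Subgroup.closure (SX m i)) :=
    CoprodI.of (i := false) ⟨wd m 0 (m+1), Subgroup.subset_closure rfl⟩
  let b : CoprodI (fun i => Subgroup.closure (SX m i)) :=
    CoprodI.of (i := true) ⟨x 0, Subgroup.subset_closure rfl⟩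
  let f : FF m →* CoprodI (fun i => Subgroup.closure (SX m i)) :=
    FL (fun j => if j = 0 then b else if j = 1 then b⁻¹ * a else 1)
  have e0 : f (x 0) = b := by simp only [f]; rw [FL_x _ (by omega)]; simp
  have e1 : ∀ k, k + 2 ≤ m + 1 → f (wd m 0 (k+2)) = a := by
    intro k
    induction k with
    | zero =>
      intro _
      rw [wd_succ, wd_succ, map_mul, map_mul]
      simp only [wd, dl, map_one, Nat.zero_add, Nat.add_zero]
      rw [e0]
      simp only [f]
      rw [FL_x _ (by omega)]; simp
    | succ k ih =>
      intro hk
      rw [wd_succ, map_mul, ih (by omega)]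
      simp only [f]
      rw [FL_x _ (by omega), if_neg (by omega), if_neg (by omega), mul_one]
  refine fp_of_gen f ?_
  rintro i g hg
  cases i
  · obtain rfl : g = wd m 0 (m+1) := hg
    obtain ⟨k, rfl⟩ : ∃ k, m = k + 1 := ⟨m - 1, by omega⟩
    exact e1 k (by omega)
  · obtain rfl : g = x 0 := hg
    exact e0

theorem mem_SX_false {g : FF m} : g ∈ Subgroup.closure (SX m false) ↔ ∃ k : ℤ, wd m 0 (m+1) ^ k = g :=
  Subgroup.mem_closure_singleton
theorem mem_SX_true {g : FF m} : g ∈ Subgroup.closure (SX m true) ↔ ∃ k : ℤ, x 0 ^ k = g :=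
  Subgroup.mem_closure_singleton

theorem x_ne_one : (x 0 : FF m) ≠ 1 := by
  intro h
  have := xi_x (m := m) (i := 0) (j := 0) (by omega)
  rw [h, xi_one] at this; simp at this

theorem NF.len {G : Type*} [Group G] {K : Bool → Subgroup G} {i j : Bool} {n : ℕ} {g : G}
    (h : NF K i j n g) : 0 < n := by
  obtain ⟨a, _, _, ⟨h, _⟩ | ⟨_, _, _, h, _⟩⟩ := h.head <;> omega

theorem NF.len3 {G : Type*} [Group G] {K : Bool → Subgroup G} {i : Bool} {n : ℕ} {g : G}
    (h : NF K i i n g) : g ∈ K i ∨ 3 ≤ n := by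
  obtain ⟨a, ha, _, ⟨h, _, rfl⟩ | ⟨g', n', _, rfl, h1⟩⟩ := h.head
  · exact .inl ha
  · obtain ⟨a, ha, _, ⟨_, h2, _⟩ | ⟨g', n2, _, hn, h3⟩⟩ := h1.head
    · exact absurd h2 (not_ne i)
    · have h4 := h3.len
      exact .inr (by omega)

/-- An automorphism of the free group commuting with the Artin action, fixing the product of the
letters and acting trivially on homology is conjugation by a power of that product. -/
theorem alpha_conj (hm : 2 ≤ m) (α : MulAut (FF m)) (hw : α (wd m 0 (m+1)) = wd m 0 (m+1))
    (hart : ∀ b f, α (art m b f) = art m b (α f)) (hxi : ∀ j ≤ m, ∀ f, xi j (α f) = xi j f) :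
    ∃ p : ℤ, ∀ f, α f = wd m 0 (m+1) ^ p * f * (wd m 0 (m+1) ^ p)⁻¹ := by
  let w := wd m 0 (m+1)
  let K : Bool → Subgroup (FF m) := fun i => Subgroup.closure (SX m i)
  have hF : FP K := fp_SX (by omega)
  have hw0 : w ∈ K false := Subgroup.subset_closure rfl
  have hx0 : x 0 ∈ K true := Subgroup.subset_closure rfl
  have key : ∀ β : MulAut (FF m), (∀ b f, β (art m b f) = art m b (β f)) → β (x 0) ∈ K false ⊔ K true := by
    intro β hβ
    have h1 : β (x 0) ∈ QW m 1 (m-1) := by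
      refine fixed_QW (by omega) _ ?_
      rw [← hβ, art_tw_fix (by omega) (by omega) (by omega)]
    refine ((Subgroup.closure_le _).2 ?_ : QW m 1 (m-1) ≤ _) h1
    rintro g (rfl | ⟨j, hj, hj2, rfl⟩)
    · have : wd m 1 (m - 1 + 1) = (x 0)⁻¹ * w := by
        simp only [w]; rw [wd_succ' m 0 m, show m - 1 + 1 = m by omega]; simp
      rw [this]
      exact mul_mem (inv_mem (Subgroup.mem_sup_right hx0)) (Subgroup.mem_sup_left hw0)
    · obtain rfl : j = 0 := by omega
      exact Subgroup.mem_sup_right hx0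
  have h1 := key α hart
  have h2 := key α⁻¹ (fun b f => by
    apply α.injective
    rw [hart]; simp)
  have hne : α (x 0) ≠ 1 := fun e => x_ne_one (m := m) (by simpa using e)
  obtain ⟨i, j, n, hn⟩ := exists_NF h1 hne
  have s1 : ∃ (p : ℤ) (Y : FF m) (n : ℕ), α (x 0) = w ^ p * Y ∧ NF K true j n Y := by
    cases i
    · obtain ⟨a, ha, _, h3⟩ := hn.head
      obtain ⟨p, rfl⟩ := mem_SX_false.1 ha
      rcases h3 with ⟨_, _, h3⟩ | ⟨g', n', h3, _, h4⟩
      · exfalso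
        have q0 := hxi 0 (by omega) (x 0)
        have q1 := hxi 1 (by omega) (x 0)
        rw [h3, xi_zpow, xi_w (by omega), xi_x (by omega)] at q0 q1
        simp at q0 q1; omega
      · exact ⟨p, g', n', h3, h4⟩
    · exact ⟨0, _, n, by simp, hn⟩
  obtain ⟨p, Y, n, e1, hY⟩ := s1
  have s2 : ∃ (q : ℤ) (Z : FF m) (n : ℕ), Y = Z * w ^ q ∧ NF K true true n Z := by
    cases j
    · obtain ⟨a, ha, _, h3⟩ := hY.last
      obtain ⟨p, rfl⟩ := mem_SX_false.1 ha
      rcases h3 with ⟨_, h3, _⟩ | ⟨g', n', h3, _, h4⟩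
      · cases h3
      · exact ⟨p, g', n', h3, h4⟩
    · exact ⟨0, _, n, by simp, hY⟩
  obtain ⟨q, Z, n, rfl, hZ⟩ := s2
  rcases hZ.len3 with h3 | h3
  · obtain ⟨k, rfl⟩ := mem_SX_true.1 h3
    have q0 := hxi 0 (by omega) (x 0)
    have q1 := hxi 1 (by omega) (x 0)
    rw [e1, xi_mul, xi_mul, xi_zpow, xi_zpow, xi_zpow, xi_w (by omega), xi_x (by omega)] at q0 q1
    simp at q0 q1
    obtain rfl : k = 1 := by omega
    obtain rfl : q = -p := by omega
    refine ⟨p, ?_⟩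
    have hw' : ∀ b, art m b (w ^ p) = w ^ p := fun b => by rw [map_zpow, art_w]
    have : α = MulAut.conj (w ^ p) := by
      refine mulAut_ext fun j => ?_
      induction j with
      | zero => intro _; rw [e1, MulAut.conj_apply]; simp [mul_assoc]
      | succ j ih =>
        intro hj
        have : art m (s j) (x j) = x (j+1) := by rw [art_s (by omega) (by omega)]; simp [am]
        rw [← this, hart, ih (by omega), MulAut.conj_apply, MulAut.conj_apply, map_mul, map_mul,
          map_inv, hw']
    intro f
    rw [this, MulAut.conj_apply]
  · exfalso
    apply x_ne_one (m := m)
    refine hF.meet (Subgroup.zpowers Z) ?_ ?_ hx0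
    · intro y hy hy1
      obtain ⟨k, rfl⟩ := Subgroup.mem_zpowers_iff.1 hy
      obtain ⟨n', h4, h5⟩ := hZ.zpow (fun i a _ k hk e =>
        IsMulTorsionFree.pow_left_injective hk.ne' (by simpa using e)) k (by rintro rfl; simp at hy1)
      exact ⟨n', by omega, h5⟩
    · have h4 : α (α⁻¹ (x 0)) = x 0 := by simp
      rw [← h4]
      have h5 : K false ⊔ K true ≤ (K false ⊔ Subgroup.zpowers Z).comap α.toMonoidHom := by
        refine sup_le ?_ ?_
        · refine (Subgroup.closure_le _).2 ?_
          rintro g (rfl : g = w)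
          change α w ∈ K false ⊔ Subgroup.zpowers Z
          rw [hw]
          exact Subgroup.mem_sup_left hw0
        · refine (Subgroup.closure_le _).2 ?_
          rintro g (rfl : g = x 0)
          change α (x 0) ∈ K false ⊔ Subgroup.zpowers Z
          rw [e1]
          exact mul_mem (Subgroup.mem_sup_left (zpow_mem hw0 _))
            (mul_mem (Subgroup.mem_sup_right (Subgroup.mem_zpowers Z))
              (Subgroup.mem_sup_left (zpow_mem hw0 _)))
      exact h5 h2

end free
end BC

namespace BC
open SemidirectProduct

/-! ### Automorphisms of braid groups: the induction step -/

/-- Inner automorphisms. -/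
def Inn {m : ℕ} (φ : MulAut (Br m)) : Prop := ∃ b, ∀ g, φ g = b * g * b⁻¹

/-- Every automorphism is inner up to the inversion of the generators. -/
def DG (m : ℕ) : Prop := ∀ φ : MulAut (Br m), Inn φ ∨ Inn (φ * eps m)

theorem Inn.of_conj {m : ℕ} {φ : MulAut (Br m)} (c : Br m) (h : Inn (MulAut.conj c * φ)) :
    Inn φ := by
  obtain ⟨b, hb⟩ := h
  refine ⟨c⁻¹ * b, fun g => ?_⟩
  have := hb g
  rw [MulAut.mul_apply, MulAut.conj_apply, mul_inv_eq_iff_eq_mul, ← eq_inv_mul_iff_mul_eq] at this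
  rw [this]; group

/-- Restricting an automorphism to the range of an injective homomorphism. -/
theorem restr {G H : Type*} [Group G] [Group H] (j : G →* H) (hj : Function.Injective j)
    (ψ : MulAut H) (h : ∀ g, ∃ g', ψ (j g) = j g') (h' : ∀ g, ∃ g', ψ⁻¹ (j g) = j g') :
    ∃ α : MulAut G, ∀ g, ψ (j g) = j (α g) := by
  choose f hf using h
  choose f' hf' using h'
  refine ⟨⟨⟨f, f', fun g => hj ?_, fun g => hj ?_⟩, fun a b => hj ?_⟩, hf⟩
  · rw [← hf', ← hf, MulAut.inv_apply_self]
  · rw [← hf, ← hf', MulAut.apply_inv_self]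
  · show j (f (a * b)) = j (f a * f b)
    rw [map_mul, ← hf, ← hf, ← hf, map_mul, map_mul]

/-- Symmetric groups on at least three points have trivial centre. -/
theorem rho_center {m : ℕ} (hm : 2 ≤ m) (b : Br m)
    (h : ∀ g, rho m (b * g) = rho m (g * b)) : rho m b = 1 := by
  ext k
  by_cases hk : m < k
  · rw [rho_gt b k hk]; rfl
  by_contra hne
  have hbk := rho_le b k (by omega)
  replace hne : rho m b k ≠ k := hne
  obtain ⟨j, hj, h1, h2⟩ : ∃ j ≤ m, j ≠ k ∧ j ≠ rho m b k := by
    by_cases h0 : 0 ≠ k ∧ 0 ≠ rho m b k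
    · exact ⟨0, by omega, h0⟩
    by_cases h1 : 1 ≠ k ∧ 1 ≠ rho m b k
    · exact ⟨1, by omega, h1⟩
    exact ⟨2, by omega, by omega, by omega⟩
  obtain ⟨g, hg⟩ := rhoF_surj m (Equiv.swap ⟨rho m b k, by omega⟩ ⟨j, by omega⟩)
  have e1 : rho m g k = k := by
    have := rhoF_val g ⟨k, by omega⟩
    rw [hg, Equiv.swap_apply_of_ne_of_ne (by simp; omega) (by simp; omega)] at this
    exact this.symm
  have e2 : rho m g (rho m b k) = j := by
    have := rhoF_val g ⟨rho m b k, by omega⟩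
    rw [hg, Equiv.swap_apply_left] at this
    exact this.symm
  have := DFunLike.congr_fun (h g) k
  rw [map_mul, map_mul, Equiv.Perm.mul_apply, Equiv.Perm.mul_apply, e1, e2] at this
  omega

/-- The centralizer of the free group of strand `0`. -/
theorem comm_pure {m : ℕ} (u : Br (m+1)) (hu : rho _ u 0 = 0)
    (hc : ∀ h : FF m, u * iota m (inl h) = iota m (inl h) * u) :
    ∃ k : ℤ, u = iota m (inl (wd m 0 (m+1) ^ k) * inr (z m ^ k)) := by
  have e := iota_of_stab u hu
  set g := coG m u 0
  have hg : g = inl g.left * inr g.right := (inl_left_mul_inr_right g).symm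
  have key : ∀ h, g.left * art m g.right h = h * g.left := by
    intro h
    have := hc h
    rw [e, ← map_mul, ← map_mul] at this
    have := congrArg SemidirectProduct.left (iota_inj m this)
    simpa using this
  have hw := key (wd m 0 (m+1))
  rw [art_w] at hw
  obtain ⟨k, hk⟩ := cent (xe m 0) (by rw [xe_wd (by omega), if_pos (by omega)]) hw
  refine ⟨k, ?_⟩
  have hz : ∀ k : ℤ, art m (z m ^ k) = MulAut.conj ((wd m 0 (m+1)) ^ k)⁻¹ := by
    intro k
    have : art m (z m) = MulAut.conj (wd m 0 (m+1))⁻¹ := by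
      ext f; rw [art_tw]; simp
    rw [map_zpow, this, ← map_zpow, inv_zpow]
  have hr : g.right = z m ^ k := by
    rw [← mul_inv_eq_one]
    apply art_inj
    rw [map_mul, map_inv, mul_inv_eq_one, hz]
    ext h
    have := key h
    rw [hk, ← eq_inv_mul_iff_mul_eq] at this
    rw [this, MulAut.conj_apply]; simp [mul_assoc]
  rw [e, hg, hk, hr]

theorem ei_tw {m : ℕ} : ei (z m) = m * (m + 1) := by
  have h1 : ∀ k ≤ m, ei (dl (s : ℕ → Br m) k) = k := by
    intro k hk
    induction k with
    | zero => simp [dl, ei_one]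
    | succ k ih => rw [dl, ei_mul, ih (by omega), ei_s (by omega)]; push_cast; rfl
  have h2 : z m = dl (s : ℕ → Br m) m ^ (m + 1) := rfl
  rw [h2, ← zpow_natCast, ei_zpow, h1 m le_rfl]; push_cast; ring

theorem ei_sh {m : ℕ} (b : Br m) : ei (shB m b) = ei b := by
  induction b using br_ind with
  | one => simp [ei_one]
  | mul a b ha hb => rw [map_mul, ei_mul, ei_mul, ha, hb]
  | gen i h => rw [shB_s, ei_s h, ei_s (by omega)]
  | inv a ha => rw [map_inv, ei_inv, ei_inv, ha]

theorem ei_yy {m j : ℕ} (h : j ≤ m) : ei (yy j : Br (m+1)) = 1 := by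
  induction j with
  | zero => exact ei_s (by omega)
  | succ j ih => rw [yy, ei_conj, ih (by omega)]

theorem ei_wd {m k : ℕ} (hk : k ≤ m + 1) : ei (iota m (inl (wd m 0 k))) = 2 * k := by
  induction k with
  | zero => simp [wd, dl, ei_one]
  | succ k ih =>
    rw [wd_succ, map_mul, map_mul, ei_mul, ih (by omega), iota_inl, FL_x _ (by omega), YY, pow_two,
      ei_mul, ei_yy (by omega)]
    push_cast; ring

theorem ei_comm_pure {m : ℕ} (k : ℤ) :
    ei (iota m (inl (wd m 0 (m+1) ^ k) * inr (z m ^ k))) = k * ((m + 1) * (m + 2)) := by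
  rw [map_mul, ei_mul, map_zpow, map_zpow, ei_zpow, ei_wd le_rfl, iota_inr, ei_sh, ei_zpow, ei_tw]
  push_cast; ring

/-- Automorphisms compatible with the permutation and with the exponent sum. -/
structure Gd {m : ℕ} (ψ : MulAut (Br m)) : Prop where
  rho : ∀ g, rho m (ψ g) = rho m g
  ei : ∀ g, ei (ψ g) = ei g

theorem Gd.inv {m : ℕ} {ψ : MulAut (Br m)} (h : Gd ψ) : Gd ψ⁻¹ where
  rho g := by rw [← h.rho, MulAut.apply_inv_self]
  ei g := by rw [← h.ei, MulAut.apply_inv_self]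

theorem Gd.conj {m : ℕ} {ψ : MulAut (Br m)} (h : Gd ψ) {c : Br m} (hc : BC.rho m c = 1) :
    Gd (MulAut.conj c * ψ) where
  rho g := by rw [MulAut.mul_apply, MulAut.conj_apply, map_mul, map_mul, map_inv, hc, h.rho]; simp
  ei g := by rw [MulAut.mul_apply, MulAut.conj_apply, ei_conj, h.ei]

section step
variable {m : ℕ} {ψ : MulAut (Br (m+1))}

/-- Under `Gd`, an automorphism that is the identity on the stabilizer of strand `0` is inner. -/
theorem Gd.stepF (h : Gd ψ) (hi : ∀ g : GG m, ψ (iota m g) = iota m g) : Inn ψ := by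
  have hp : ∀ g, BC.rho _ g = 1 → ψ g = g := by
    intro g hg
    rw [iota_of_stab g (by rw [hg]; rfl), hi]
  refine ⟨1, fun b => ?_⟩
  obtain ⟨k, hk⟩ := comm_pure (b⁻¹ * ψ b) (by rw [map_mul, h.rho, map_inv]; simp) (by
    intro f
    have h1 := hp (b * iota m (inl f) * b⁻¹) (rho_conj _ _ (rho_inl f))
    rw [map_mul, map_mul, map_inv, hi, mul_inv_eq_iff_eq_mul] at h1
    rw [mul_assoc, h1]; group)
  have h2 := ei_comm_pure (m := m) k
  rw [← hk, ei_mul, h.ei, ei_inv] at h2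
  have : k = 0 := by
    rcases mul_eq_zero.1 (show k * (((m:ℤ) + 1) * (m + 2)) = 0 by rw [← h2]; ring) with h | h
    · exact h
    · exfalso; nlinarith [Int.natCast_nonneg m]
  rw [this] at hk
  simp only [zpow_zero, map_one, mul_one, inv_mul_eq_one] at hk
  rw [← hk]; simp

theorem Gd.lk (h : Gd ψ) (hm : 2 ≤ m) (g : Br (m+1)) (hg : BC.rho _ g = 1) (p q : ℕ) :
    lk (ψ g) p q = lk g p q := lk_phi (by omega) ψ h.rho h.ei g hg p q

theorem Gd.alpha (h : Gd ψ) (hm : 2 ≤ m) : ∃ α : MulAut (FF m),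
    (∀ f, ψ (iota m (inl f)) = iota m (inl (α f))) ∧ ∀ j ≤ m, ∀ f, xi j (α f) = xi j f := by
  obtain ⟨α, hα⟩ := restr ((iota m).comp inl) ((iota_inj m).comp inl_injective) ψ
    (phi_inl ψ h.rho (h.lk hm)) (phi_inl ψ⁻¹ h.inv.rho (h.inv.lk hm))
  refine ⟨α, hα, fun j hj f => ?_⟩
  have := hα f
  simp only [MonoidHom.comp_apply] at this
  have h2 := lk_inl (α f) j hj
  rw [← this, h.lk hm _ (rho_inl f), lk_inl f j hj] at h2
  omega

theorem conj_art (b : Br m) (f : FF m) :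
    shB m b * iota m (inl f) * (shB m b)⁻¹ = iota m (inl (art m b f)) := by
  rw [mul_inv_eq_iff_eq_mul, ← iota_inr, ← map_mul, gg_comm, map_mul]

/-- Under `Gd`, an automorphism that fixes the shifted braids and the push of strand `0` around all other
strands is inner: by `alpha_conj` it is, on the point-pushing subgroup, conjugation by a power of
that push. -/
theorem Gd.stepE (h : Gd ψ) (hm : 2 ≤ m) (hs : ∀ b, ψ (shB m b) = shB m b)
    (hw : ψ (iota m (inl (wd m 0 (m+1)))) = iota m (inl (wd m 0 (m+1)))) : Inn ψ := by
  obtain ⟨α, hα, hx⟩ := h.alpha hm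
  have hin : Function.Injective fun f => iota m (inl f) := (iota_inj m).comp inl_injective
  obtain ⟨p, hp⟩ := alpha_conj hm α (hin (by simp only; rw [← hα, hw])) (by
    intro b f
    apply hin
    simp only
    rw [← hα, ← conj_art, ← conj_art, map_mul, map_mul, map_inv, hs, hα]) hx
  apply Inn.of_conj (iota m (inl (wd m 0 (m+1) ^ p)))⁻¹
  refine (h.conj (by rw [map_inv, rho_inl, inv_one])).stepF fun g => ?_
  rw [MulAut.mul_apply, MulAut.conj_apply, ← inl_left_mul_inr_right g, map_mul, map_mul, hα, hp,
    iota_inr, hs, ← iota_inr, ← map_inv, ← map_inv, ← map_inv, ← map_mul, ← map_mul, ← map_mul,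
    ← map_mul]
  congr 1
  have e : (inr g.right * inl (wd m 0 (m+1) ^ p) : GG m) = inl (wd m 0 (m+1) ^ p) * inr g.right := by
    rw [gg_comm, map_zpow, art_w]
  calc _ = (inl g.left * (inl (wd m 0 (m+1) ^ p))⁻¹ * (inr g.right * inl (wd m 0 (m+1) ^ p)) : GG m) := by
        simp only [map_mul, map_inv]; group
    _ = _ := by rw [e]; group

/-- Under `Gd`, an automorphism that fixes the shifted braids up to point-pushing braids is inner:
by `conj_w` it fixes, up to conjugation, the push of strand `0` around all others. -/
theorem Gd.stepD (h : Gd ψ) (hm : 2 ≤ m)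
    (hs : ∀ b, ∃ f, ψ (shB m b) = iota m (inl f) * shB m b) : Inn ψ := by
  obtain ⟨α, hα, hx⟩ := h.alpha hm
  have hin : Function.Injective fun f => iota m (inl f) := (iota_inj m).comp inl_injective
  set w := wd m 0 (m+1) with hwd
  choose F hF using hs
  have hc : ∀ b, α w = F b * art m b (α w) * (F b)⁻¹ := by
    intro b
    apply hin
    simp only
    rw [map_mul, map_mul, map_mul, map_mul, ← conj_art, ← hα, map_inv, map_inv]
    have : shB m b * iota m (inl w) * (shB m b)⁻¹ = iota m (inl w) := by rw [conj_art, art_w]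
    conv_lhs => rw [← this, map_mul, map_mul, map_inv, hF]
    group
  obtain ⟨c, hcw⟩ := isConj_iff.1 (conj_w hm (α w) (fun b => isConj_iff.2 ⟨(F b)⁻¹, by
      conv_lhs => rw [hc b]
      group⟩) (fun j hj => by rw [hx j hj, xi_w hj]))
  apply Inn.of_conj (iota m (inl c))
  have h' := h.conj (c := iota m (inl c)) (rho_inl c)
  have hs' : ∀ b, (MulAut.conj (iota m (inl c)) * ψ) (shB m b) =
      iota m (inl (c * F b * art m b c⁻¹)) * shB m b := by
    intro b
    rw [MulAut.mul_apply, MulAut.conj_apply, hF, map_mul, map_mul, map_mul, map_mul, ← conj_art]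
    simp only [map_inv]; group
  have hw' : (MulAut.conj (iota m (inl c)) * ψ) (iota m (inl w)) = iota m (inl w) := by
    rw [MulAut.mul_apply, MulAut.conj_apply, hα, ← map_inv, ← map_inv, ← map_mul, ← map_mul,
      ← map_mul, ← map_mul, hcw]
  refine h'.stepE hm (fun b => ?_) hw'
  replace hs' := hs' b
  rw [hs']
  generalize c * F b * art m b c⁻¹ = d at hs' ⊢
  have hd : d * w = w * d := by
    have h1 : (MulAut.conj (iota m (inl c)) * ψ) (shB m b * iota m (inl w) * (shB m b)⁻¹) =
      iota m (inl w) := by rw [conj_art, art_w, hw']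
    rw [map_mul, map_mul, map_inv, hw', hs'] at h1
    have h2 : shB m b * iota m (inl w) * (shB m b)⁻¹ = iota m (inl w) := by rw [conj_art, art_w]
    apply hin
    simp only
    rw [map_mul, map_mul, map_mul, map_mul, ← mul_inv_eq_iff_eq_mul]
    conv_rhs => rw [← h1]
    conv_lhs => rw [← h2]
    simp only [mul_assoc, mul_inv_rev]
  obtain ⟨k, hk⟩ := cent (xe m 0) (by rw [xe_wd (by omega), if_pos (by omega)]) hd
  have h3 := h'.ei (shB m b)
  rw [hs', ei_mul, hk, map_zpow, map_zpow, ei_zpow, ei_wd le_rfl] at h3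
  have : k = 0 := by
    rcases mul_eq_zero.1 (show k * (2 * ((m + 1 : ℕ) : ℤ)) = 0 by linarith) with h | h
    · exact h
    · exfalso; omega
  rw [hk, this]; simp

/-- By induction the automorphism induced after forgetting strand `0` is inner; linking numbers
exclude the inversion of the generators. -/
theorem Gd.stepC (h : Gd ψ) (hm : 2 ≤ m) (IH : DG m) : Inn ψ := by
  have hst : ∀ ψ : MulAut (Br (m+1)), Gd ψ → ∀ g : GG m, ∃ g', ψ (iota m g) = iota m g' := fun ψ h g =>
    ⟨_, iota_of_stab _ (by rw [h.rho]; exact (iota_act g).1)⟩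
  obtain ⟨N, hN⟩ := restr (iota m) (iota_inj m) ψ (hst ψ h) (hst ψ⁻¹ h.inv)
  have hN' : ∀ g, ψ⁻¹ (iota m g) = iota m (N⁻¹ g) := by
    intro g
    apply ψ.injective
    rw [MulAut.apply_inv_self, hN, MulAut.apply_inv_self]
  have hl : ∀ f, (N (inl f)).right = 1 := by
    intro f
    obtain ⟨f', hf⟩ := phi_inl ψ h.rho (h.lk hm) f
    rw [hN] at hf
    rw [iota_inj m hf, right_inl]
  have hl' : ∀ f, (N⁻¹ (inl f)).right = 1 := by
    intro f
    obtain ⟨f', hf⟩ := phi_inl ψ⁻¹ h.inv.rho (h.inv.lk hm) f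
    rw [hN'] at hf
    rw [iota_inj m hf, right_inl]
  have hr : ∀ g, (N (inr g.right)).right = (N g).right := by
    intro g
    conv_rhs => rw [← inl_left_mul_inr_right g, map_mul, mul_right, hl, one_mul]
  have hr' : ∀ g, (N⁻¹ (inr g.right)).right = (N⁻¹ g).right := by
    intro g
    conv_rhs => rw [← inl_left_mul_inr_right g, map_mul, mul_right, hl', one_mul]
  let φ : MulAut (Br m) := ⟨⟨fun b => (N (inr b)).right, fun b => (N⁻¹ (inr b)).right,
    fun b => by simp only; rw [hr', MulAut.inv_apply_self, right_inr],
    fun b => by simp only; rw [hr, MulAut.apply_inv_self, right_inr]⟩,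
    fun a b => by
      show (N (inr (a * b))).right = (N (inr a)).right * (N (inr b)).right
      rw [map_mul, map_mul, mul_right]⟩
  have hφ : ∀ b, φ b = (N (inr b)).right := fun b => rfl
  have hφs : ∀ b, ψ (shB m b) = iota m (N (inr b)) := fun b => by rw [← iota_inr, hN]
  have hrho : ∀ b, BC.rho m (φ b) = BC.rho m b := by
    intro b
    ext k
    have := rho_iota (N (inr b)) k
    rw [← hφs, h.rho, rho_sh] at this
    rw [hφ]; omega
  have hlk : ∀ b, BC.rho m b = 1 → ∀ p q, BC.lk (φ b) p q = BC.lk b p q := by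
    intro b hb p q
    rw [hφ, ← lk_iota, ← hφs, h.lk hm _ (rho_sh_one hb), lk_sh]
  have hInn : Inn φ := by
    rcases IH φ with hI | ⟨b, hb⟩
    · exact hI
    exfalso
    have h1 := lk_sum (φ (s 0 ^ 2))
    simp only [hlk _ (rho_sq (show 0 < m by omega))] at h1
    rw [lk_sum, ei_sq (by omega)] at h1
    have h2 := hb (s 0 ^ 2)
    rw [MulAut.mul_apply, map_pow (eps m), eps_s, inv_pow, map_inv] at h2
    have h3 := congrArg BC.ei h2
    rw [ei_conj, ei_inv, ei_sq (by omega)] at h3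
    omega
  obtain ⟨b, hb⟩ := hInn
  have hb1 : BC.rho m b = 1 := by
    refine rho_center hm b fun g => ?_
    have := hrho g
    rw [hb, map_mul, map_inv, mul_inv_eq_iff_eq_mul] at this
    rw [this, map_mul]
  apply Inn.of_conj (shB m b)⁻¹
  refine (h.conj (c := (shB m b)⁻¹) (by rw [map_inv, rho_sh_one hb1, inv_one])).stepD hm fun a => ?_
  have e : N (inr a) = inl (N (inr a)).left * inr (b * a * b⁻¹) := by
    rw [← hb, hφ, inl_left_mul_inr_right]
  refine ⟨art m b⁻¹ (N (inr a)).left, ?_⟩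
  rw [MulAut.mul_apply, MulAut.conj_apply, hφs, e, map_mul (iota m), iota_inr, ← conj_art]
  simp only [map_mul, map_inv]; simp [mul_assoc]

end step

theorem dg_step {m : ℕ} (hm : 2 ≤ m) (IH : DG m) : DG (m+1) := by
  have key : ∀ φ : MulAut (Br (m+1)), ei (φ (s 0)) = 1 → Inn φ := by
    intro φ h1
    obtain ⟨b, hb⟩ := rho_phi (by omega) φ
    apply Inn.of_conj b⁻¹
    refine Gd.stepC ⟨fun g => ?_, fun g => ?_⟩ hm IH
    · rw [MulAut.mul_apply, MulAut.conj_apply, map_mul, map_mul, hb, ← map_mul, ← map_mul]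
      congr 1; group
    · rw [MulAut.mul_apply, MulAut.conj_apply, ei_conj, (ei_phi (by omega) φ).2 g, h1, one_mul]
  intro φ
  rcases (ei_phi (by omega) φ).1 with h | h
  · exact Or.inl (key φ h)
  · refine Or.inr (key _ ?_)
    rw [MulAut.mul_apply, eps_s, map_inv, ei_inv, h]; rfl

end BC

namespace BC
open SemidirectProduct Monoid

/-! ### Automorphisms of the modular group -/

section modular
variable {G : Type*} [Group G] {K : Bool → Subgroup G}

/-- An element of a free product splits off syllables at both ends. -/
theorem strip (htop : K false ⊔ K true = ⊤) (g : G) : ∃ a ∈ K false, ∃ c ∈ K true, ∃ g',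
    g = a * g' * c ∧ (g' = 1 ∨ ∃ n, NF K true false n g') := by
  have h2 : ∀ j n g, NF K true j n g → ∃ c ∈ K true, ∃ g',
    g = g' * c ∧ (g' = 1 ∨ ∃ n, NF K true false n g') := by
    intro j n g h
    cases j with
    | false => exact ⟨1, one_mem _, g, by simp, .inr ⟨n, h⟩⟩
    | true =>
      obtain ⟨a, ha, -, ⟨-, -, rfl⟩ | ⟨g', n', rfl, -, h'⟩⟩ := h.last
      · exact ⟨_, ha, 1, by simp, .inl rfl⟩
      · exact ⟨a, ha, g', rfl, .inr ⟨n', h'⟩⟩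
  by_cases h1 : g = 1
  · exact ⟨1, one_mem _, 1, one_mem _, 1, by simp [h1], .inl rfl⟩
  obtain ⟨i, j, n, h⟩ := exists_NF (K := K) (g := g) (by rw [htop]; trivial) h1
  cases i with
  | true =>
    obtain ⟨c, hc, g', rfl, h'⟩ := h2 j n g h
    exact ⟨1, one_mem _, c, hc, g', by simp, h'⟩
  | false =>
    obtain ⟨a, ha, -, ⟨-, -, rfl⟩ | ⟨g1, n', rfl, -, h'⟩⟩ := h.head
    · exact ⟨_, ha, 1, one_mem _, 1, by simp, .inl rfl⟩
    · obtain ⟨c, hc, g', rfl, h''⟩ := h2 j n' g1 h'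
      exact ⟨a, ha, c, hc, g', by simp [mul_assoc], h''⟩

/-- Elements of finite order of a free product are conjugate into a factor. -/
theorem FP.torsion (hF : FP K) (htop : K false ⊔ K true = ⊤) {g : G} {n : ℕ} (hn : 0 < n)
    (hg : g ^ n = 1) (h1 : g ≠ 1) : ∃ i, ∃ a ∈ K i, IsConj g a := by
  obtain ⟨l, hl, hc, h⟩ := exists_cr (K := K) (g := g) htop
  have hl0 : l ≠ [] := by
    rintro rfl
    exact h1 (isConj_one_left.1 (by rwa [pr_nil] at hc))
  rcases h with h | h
  · match l, hl, hl0, h with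
    | [a], hl, _, _ => exact ⟨a.1, a.2, (alt_single.1 hl).1, by simpa using hc⟩
  · exfalso
    have key : ∀ k : ℕ, 0 < k → ∃ L, Alt K L ∧ pr L = pr l ^ k ∧ L ≠ [] ∧ hd L = hd l := by
      intro k hk
      induction k with
      | zero => omega
      | succ k ih =>
        rcases Nat.eq_zero_or_pos k with rfl | hk
        · exact ⟨l, hl, by simp, hl0, rfl⟩
        · obtain ⟨L, h1, h2, h3, h4⟩ := ih hk
          refine ⟨l ++ L, alt_append'.2 ⟨hl, h1, fun _ _ => ?_⟩, by rw [pr_append, h2, pow_succ'],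
            by simp [hl0], hd_append hl0⟩
          rw [h4]
          exact (alt_append'.1 h).2.2 hl0 hl0
    obtain ⟨L, h1', h2, h3, -⟩ := key n hn
    apply hF L h1' h3
    rw [h2]
    obtain ⟨c, hc⟩ := isConj_iff.1 hc
    rw [← hc, conj_pow, hg]; simp

/-- Automorphisms of the free product of a group of order two and one of order three. -/
theorem modular_aut (hF : FP K) (htop : K false ⊔ K true = ⊤) {S R : G}
    (hS : ∀ a ∈ K false, a = 1 ∨ a = S) (hSm : S ∈ K false) (hR : ∀ a ∈ K true, a = 1 ∨ a = R ∨ a = R⁻¹)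
    (hRm : R ∈ K true) (hS2 : S ^ 2 = 1) (hR3 : R ^ 3 = 1) (hS1 : S ≠ 1) (hR1 : R ≠ 1)
    (φ : MulAut G) : ∃ g, φ S = g * S * g⁻¹ ∧ (φ R = g * R * g⁻¹ ∨ φ R = g * R⁻¹ * g⁻¹) := by
  have hSR : ∀ a : G, a ^ 2 = 1 → a ^ 3 = 1 → a = 1 := by
    intro a h2 h3
    rwa [pow_succ, h2, one_mul] at h3
  have h1 : IsConj (φ S) S := by
    obtain ⟨i, a, ha, hc⟩ := hF.torsion htop (g := φ S) (n := 2) (by omega)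
      (by rw [← map_pow, hS2, map_one]) (by simpa using hS1)
    have hne : a ≠ 1 := by
      rintro rfl
      rw [isConj_one_left] at hc
      exact hS1 (by simpa using hc)
    have ha2 : a ^ 2 = 1 := by
      obtain ⟨c, rfl⟩ := isConj_iff.1 hc
      rw [conj_pow, ← map_pow, hS2]; simp
    cases i with
    | false => rcases hS a ha with rfl | rfl
               · exact absurd rfl hne
               · exact hc
    | true =>
      exfalso
      refine hne (hSR a ha2 ?_)
      rcases hR a ha with rfl | rfl | rfl
      · simp
      · exact hR3
      · rw [inv_pow, hR3, inv_one]
  have h2 : ∃ Q, (Q = R ∨ Q = R⁻¹) ∧ IsConj (φ R) Q := by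
    obtain ⟨i, a, ha, hc⟩ := hF.torsion htop (g := φ R) (n := 3) (by omega)
      (by rw [← map_pow, hR3, map_one]) (by simpa using hR1)
    have hne : a ≠ 1 := by
      rintro rfl
      rw [isConj_one_left] at hc
      exact hR1 (by simpa using hc)
    have ha3 : a ^ 3 = 1 := by
      obtain ⟨c, rfl⟩ := isConj_iff.1 hc
      rw [conj_pow, ← map_pow, hR3]; simp
    cases i with
    | true => exact ⟨a, (hR a ha).resolve_left hne, hc⟩
    | false =>
      exfalso
      refine hne (hSR a ?_ ha3)
      rcases hS a ha with rfl | rfl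
      · simp
      · exact hS2
  obtain ⟨Q, hQ, h2⟩ := h2
  obtain ⟨c, hc⟩ := isConj_iff.1 h1.symm
  obtain ⟨d, hd⟩ := isConj_iff.1 h2.symm
  obtain ⟨a, ha, b, hb, g, hg, hgn⟩ := strip htop (c⁻¹ * d)
  have hda : d = c * a * g * b := by rw [mul_assoc, mul_assoc, ← mul_assoc a, ← hg]; group
  have hbQ : b * Q * b⁻¹ = Q := by
    rcases hQ with rfl | rfl <;> rcases hR b hb with rfl | rfl | rfl <;> group
  have haS : a * S * a⁻¹ = S := by
    rcases hS a ha with rfl | rfl <;> group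
  have e1 : φ S = (c * a) * S * (c * a)⁻¹ := by
    rw [← hc]
    conv_lhs => rw [← haS]
    group
  have e2 : φ R = (c * a) * (g * Q * g⁻¹) * (c * a)⁻¹ := by
    rw [← hd, hda]
    conv_rhs => rw [← hbQ]
    group
  refine ⟨c * a, e1, ?_⟩
  rcases hgn with rfl | ⟨n, hn⟩
  · rcases hQ with rfl | rfl
    · left; rw [e2]; group
    · right; rw [e2]; group
  · exfalso
    let J : Subgroup G := (K true).map (MulAut.conj g).toMonoidHom
    have hJ : ∀ y ∈ J, y ≠ 1 → ∃ n, 3 ≤ n ∧ NF K true true n y := by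
      rintro _ ⟨r, hr, rfl⟩ hne
      refine ⟨n + 1 + n, by have := hn.len; omega, ?_⟩
      simp only [MulEquiv.coe_toMonoidHom, MulAut.conj_apply]
      refine (hn.cat (NF.single hr ?_) (by simp)).cat hn.inv (by simp)
      rintro rfl
      simp at hne
    refine hR1 (hF.meet J hJ (g := R) ?_ hRm)
    -- the automorphism has its image in the conjugate of `⟨S⟩ ⊔ J`
    have hle : (⊤ : Subgroup G) ≤ (K false ⊔ J).comap ((MulAut.conj (c * a)⁻¹).toMonoidHom.comp φ.toMonoidHom) := by
      rw [← htop, sup_le_iff]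
      have hSJ : S ∈ (K false ⊔ J).comap ((MulAut.conj (c * a)⁻¹).toMonoidHom.comp φ.toMonoidHom) := by
        simp only [Subgroup.mem_comap, MonoidHom.comp_apply, MulEquiv.coe_toMonoidHom, MulAut.conj_apply]
        rw [e1]
        convert (le_sup_left : K false ≤ K false ⊔ J) hSm using 1
        group
      have hRJ : R ∈ (K false ⊔ J).comap ((MulAut.conj (c * a)⁻¹).toMonoidHom.comp φ.toMonoidHom) := by
        simp only [Subgroup.mem_comap, MonoidHom.comp_apply, MulEquiv.coe_toMonoidHom, MulAut.conj_apply]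
        rw [e2]
        have hQm : Q ∈ K true := by
          rcases hQ with rfl | rfl
          · exact hRm
          · exact inv_mem hRm
        convert (le_sup_right : J ≤ K false ⊔ J) ⟨Q, hQm, rfl⟩ using 1
        simp only [MulEquiv.coe_toMonoidHom, MulAut.conj_apply]
        group
      constructor
      · intro y hy
        rcases hS y hy with rfl | rfl
        · exact one_mem _
        · exact hSJ
      · intro y hy
        rcases hR y hy with rfl | rfl | rfl
        · exact one_mem _
        · exact hRJ
        · exact inv_mem hRJ
    have := hle (show φ.symm (c * a * R * (c * a)⁻¹) ∈ ⊤ from trivial)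
    simp only [Subgroup.mem_comap, MonoidHom.comp_apply, MulEquiv.coe_toMonoidHom, MulAut.conj_apply,
      MulEquiv.apply_symm_apply] at this
    convert this using 1
    group

end modular

/-! ### Automorphisms of the braid groups on two and three strands -/

theorem dg_one : DG 1 := by
  have hg : ∀ g : Br 1, g = s 0 ^ ei g := by
    intro g
    induction g using br_ind with
    | one => simp [ei_one]
    | mul a b ha hb => rw [ei_mul, zpow_add, ← ha, ← hb]
    | gen i h => obtain rfl : i = 0 := by omega
                 rw [ei_s (by omega), zpow_one]
    | inv a ha => rw [ei_inv, zpow_neg, ← ha]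
  have key : ∀ φ : MulAut (Br 1), ei (φ (s 0)) = 1 → Inn φ := by
    intro φ h
    refine ⟨1, fun g => ?_⟩
    rw [hg (φ g), (ei_phi (by omega) φ).2 g, h, one_mul, ← hg]; simp
  intro φ
  rcases (ei_phi (by omega) φ).1 with h | h
  · exact Or.inl (key φ h)
  · refine Or.inr (key _ ?_)
    rw [MulAut.mul_apply, eps_s, map_inv, ei_inv, h]; rfl

/-- The centre of the braid group on at least three strands is generated by the full twist. -/
theorem center_z {m : ℕ} (hm : 1 ≤ m) (c : Br (m+1)) (hc : ∀ g, c * g = g * c) :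
    ∃ k : ℤ, c = z (m+1) ^ k := by
  have hp : ∀ c : Br (m+1), (∀ g, c * g = g * c) →
      ∃ k : ℤ, c = iota m (inl (wd m 0 (m+1)) * inr (z m)) ^ k := by
    intro c hc
    have h1 := rho_center (by omega) c (fun g => by rw [hc])
    obtain ⟨k, hk⟩ := comm_pure c (by rw [h1]; rfl) (fun h => hc _)
    refine ⟨k, ?_⟩
    have : Commute (inl (wd m 0 (m+1)) : GG m) (inr (z m)) := by
      show _ = _
      rw [gg_comm, art_w]
    rw [hk, ← map_zpow, this.mul_zpow, map_zpow, map_zpow]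
  obtain ⟨k, hk⟩ := hp c hc
  obtain ⟨l, hl⟩ := hp (z (m+1)) z_comm
  have h1 := ei_comm_pure (m := m) 1
  rw [zpow_one, zpow_one] at h1
  have h2 := ei_tw (m := m+1)
  rw [hl, ei_zpow, h1] at h2
  push_cast at h2
  have : l = 1 := by
    have h3 : (l - 1) * (((m:ℤ) + 1) * (m + 2)) = 0 := by linear_combination h2
    rcases mul_eq_zero.1 h3 with h | h
    · omega
    · nlinarith [Int.natCast_nonneg m]
  rw [this, zpow_one] at hl
  exact ⟨k, by rw [hk, hl]⟩

/-- The factors `ℤ/2` and `ℤ/3`. -/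
abbrev MH (i : Bool) : Type := Multiplicative (ZMod (cond i 3 2))

/-- The generator of a factor. -/
def mg (i : Bool) : CoprodI MH := CoprodI.of (Multiplicative.ofAdd (1 : ZMod (cond i 3 2)))

theorem mg_pow (i : Bool) : mg i ^ (cond i 3 2) = 1 := by
  rw [mg, ← map_pow, ← ofAdd_nsmul]
  have : (cond i 3 2) • (1 : ZMod (cond i 3 2)) = 0 := by cases i <;> rfl
  rw [this]; simp

/-- The images of the Artin generators of the braid group on three strands in `ℤ/2 * ℤ/3`. -/
theorem bs_mod : BS 2 (fun i => if i = 0 then (mg true)⁻¹ * mg false else mg false * (mg true)⁻¹) where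
  comm i j h hj := by omega
  braid i h := by
    obtain rfl : i = 0 := by omega
    have h2 : mg false * mg false = 1 := by simpa [pow_two] using mg_pow false
    have h3 : (mg true)⁻¹ * ((mg true)⁻¹ * (mg true)⁻¹) = 1 := by
      have := congrArg (·⁻¹) (mg_pow true)
      simpa [pow_succ, mul_assoc] using this
    simp only [if_true, zero_add, one_ne_zero, if_false]
    have a : (mg true)⁻¹ * mg false * (mg false * (mg true)⁻¹) * ((mg true)⁻¹ * mg false) =
      (mg true)⁻¹ * (mg false * mg false) * (mg true)⁻¹ * (mg true)⁻¹ * mg false := by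
        simp only [mul_assoc]
    have b : mg false * (mg true)⁻¹ * ((mg true)⁻¹ * mg false) * (mg false * (mg true)⁻¹) =
      mg false * ((mg true)⁻¹ * ((mg true)⁻¹ * (mg false * mg false * (mg true)⁻¹))) := by
        simp only [mul_assoc]
    rw [a, b, h2, one_mul, mul_one, h3, mul_one, mul_assoc (mg true)⁻¹ (mg true)⁻¹, h3, one_mul]

/-- Three strands: an automorphism induces one of the modular group, which is conjugate to a
standard one. -/
theorem dg_two : DG 2 := by
  let S : Br 2 := s 0 * s 1 * s 0
  let R : Br 2 := s 0 * s 1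
  have hbr : (s 0 * s 1 * s 0 : Br 2) = s 1 * s 0 * s 1 := s_braid 0 (by omega)
  have hz : z 2 = R ^ 3 := by
    show dl (s : ℕ → Br 2) 2 ^ 3 = _
    simp [dl, R]
  have hSz : S ^ 2 = z 2 := by
    rw [hz, pow_two]
    show s 0 * s 1 * s 0 * (s 0 * s 1 * s 0) = (s 0 * s 1) ^ 3
    conv_lhs => rw [mul_assoc (s 0 * s 1), hbr]
    simp only [pow_succ, pow_zero, one_mul, mul_assoc]
  have hs0 : s 0 = R⁻¹ * S := by simp [S, R, mul_assoc]
  have hs1 : s 1 = S * R⁻¹ := by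
    simp only [S, R]; rw [hbr]; group
  have eS : ei S = 3 := by simp only [S, ei_mul]; rw [ei_s (by omega), ei_s (by omega)]; rfl
  have eR : ei R = 2 := by simp only [R, ei_mul]; rw [ei_s (by omega), ei_s (by omega)]; rfl
  let Z : Subgroup (Br 2) := Subgroup.zpowers (z 2)
  haveI hZ : Z.Normal := ⟨by
    rintro _ ⟨k, rfl⟩ g
    refine ⟨k, ?_⟩
    simp only
    rw [← zp_comm']; group⟩
  let Q := Br 2 ⧸ Z
  let q : Br 2 →* Q := QuotientGroup.mk' Z
  have hq : ∀ g, q g = 1 ↔ ∃ k : ℤ, z 2 ^ k = g := fun g => QuotientGroup.eq_one_iff g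
  let f0 : Br 2 →* CoprodI MH := lift _ bs_mod
  have f00 : f0 (s 0) = (mg true)⁻¹ * mg false := by rw [lift_s _ _ (by omega), if_pos rfl]
  have f01 : f0 (s 1) = mg false * (mg true)⁻¹ := by rw [lift_s _ _ (by omega), if_neg (by omega)]
  have m2 : mg false * mg false = 1 := by simpa [pow_two] using mg_pow false
  have m3 : (mg true)⁻¹ * (mg true)⁻¹ = mg true := by
    have : mg true * mg true * mg true = 1 := by simpa [pow_succ] using mg_pow true
    rw [← mul_inv_rev, inv_eq_iff_mul_eq_one, this]
  have f0R : f0 R = mg true := by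
    simp only [R]
    rw [map_mul, f00, f01, mul_assoc, ← mul_assoc (mg false), m2, one_mul, m3]
  have f0S : f0 S = mg false := by
    simp only [S]
    rw [map_mul, f00]
    change f0 R * _ = _
    rw [f0R, mul_inv_cancel_left]
  let f : Q →* CoprodI MH := QuotientGroup.lift Z f0 (by
    rintro _ ⟨k, rfl⟩
    rw [MonoidHom.mem_ker, map_zpow, hz, map_pow, f0R, show mg true ^ 3 = 1 from mg_pow true, one_zpow])
  have hfq : ∀ g, f (q g) = f0 g := fun g => rfl
  let K : Bool → Subgroup Q := fun i => Subgroup.zpowers (cond i (q R) (q S))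
  have hR3 : q R ^ 3 = 1 := by rw [← map_pow, hq]; exact ⟨1, by rw [← hz, zpow_one]⟩
  have hS2 : q S ^ 2 = 1 := by rw [← map_pow, hq]; exact ⟨1, by rw [hSz, zpow_one]⟩
  have hF : FP K := by
    refine fp_of_hom f ?_
    rintro i _ ⟨k, rfl⟩
    refine ⟨Multiplicative.ofAdd (1 : ZMod (cond i 3 2)) ^ k, ?_, ?_⟩
    · rw [map_zpow, map_zpow]
      cases i
      · simp only [cond_false, hfq, f0S]; rfl
      · simp only [cond_true, hfq, f0R]; rfl
    · intro h
      rw [← ofAdd_zsmul, ofAdd_eq_one, zsmul_one] at h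
      have hd : ((cond i 3 2 : ℕ) : ℤ) ∣ k := (ZMod.intCast_zmod_eq_zero_iff_dvd k (cond i 3 2)).1 h
      obtain ⟨r, rfl⟩ := hd
      simp only
      rw [zpow_mul, zpow_natCast]
      cases i
      · simp only [cond_false]; rw [hS2, one_zpow]
      · simp only [cond_true]; rw [hR3, one_zpow]
  have htop : K false ⊔ K true = ⊤ := by
    rw [eq_top_iff]
    rintro g -
    obtain ⟨b, rfl⟩ := QuotientGroup.mk'_surjective Z g
    have hSm : q S ∈ K false ⊔ K true := le_sup_left (a := K false) (Subgroup.mem_zpowers _)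
    have hRm : q R ∈ K false ⊔ K true := le_sup_right (a := K false) (Subgroup.mem_zpowers _)
    refine sub_top ((K false ⊔ K true).comap q) (fun i hi => ?_) b
    rw [Subgroup.mem_comap]
    obtain rfl | rfl : i = 0 ∨ i = 1 := by omega
    · rw [hs0, map_mul, map_inv]; exact mul_mem (inv_mem hRm) hSm
    · rw [hs1]; simp only [map_mul, map_inv]
      exact mul_mem hSm (inv_mem hRm)
  have key : ∀ φ : MulAut (Br 2), ei (φ (s 0)) = 1 → Inn φ := by
    intro φ h
    have he : ∀ g, ei (φ g) = ei g := fun g => by rw [(ei_phi (by omega) φ).2 g, h, one_mul]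
    have hφz : φ (z 2) = z 2 := by
      obtain ⟨k, hk⟩ := center_z (m := 1) (by omega) (φ (z 2)) (fun g => by
        rw [← MulAut.apply_inv_self _ φ g, ← map_mul, z_comm, map_mul])
      have h1 := he (z 2)
      rw [hk, ei_zpow, ei_tw] at h1
      have : k = 1 := by push_cast at h1; omega
      rw [hk, this, zpow_one]
    let φ' : MulAut Q := QuotientGroup.congr Z Z φ (by
      simp only [Z]
      rw [MonoidHom.map_zpowers]
      congr 1)
    have hφq : ∀ g, φ' (q g) = q (φ g) := fun g => rfl
    obtain ⟨g, h1, h2⟩ := modular_aut hF htop (S := q S) (R := q R) (by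
        rintro _ ⟨k, rfl⟩
        simp only [cond_false]
        rcases Int.even_or_odd' k with ⟨r, rfl | rfl⟩
        · left; rw [zpow_mul, zpow_ofNat, hS2, one_zpow]
        · right; rw [zpow_add, zpow_mul, zpow_ofNat, hS2, one_zpow, one_mul, zpow_one])
      (Subgroup.mem_zpowers _) (by
        rintro _ ⟨k, rfl⟩
        simp only [cond_true]
        obtain ⟨r, rfl | rfl | rfl⟩ : ∃ r, k = 3 * r ∨ k = 3 * r + 1 ∨ k = 3 * r + (-1) :=
          ⟨(k + 1) / 3, by omega⟩
        · left; rw [zpow_mul, zpow_ofNat, hR3, one_zpow]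
        · right; left; rw [zpow_add, zpow_mul, zpow_ofNat, hR3, one_zpow, one_mul, zpow_one]
        · right; right; rw [zpow_add, zpow_mul, zpow_ofNat, hR3, one_zpow, one_mul, zpow_neg_one])
      (Subgroup.mem_zpowers _) hS2 hR3 (by
        intro e
        obtain ⟨k, hk⟩ := (hq S).1 e
        have := congrArg ei hk
        rw [ei_zpow, ei_tw, eS] at this
        push_cast at this; omega) (by
        intro e
        obtain ⟨k, hk⟩ := (hq R).1 e
        have := congrArg ei hk
        rw [ei_zpow, ei_tw, eR] at this
        push_cast at this; omega) φ'
    obtain ⟨b, rfl⟩ := QuotientGroup.mk'_surjective Z g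
    change φ' (q S) = q b * q S * (q b)⁻¹ at h1
    change φ' (q R) = q b * q R * (q b)⁻¹ ∨ φ' (q R) = q b * (q R)⁻¹ * (q b)⁻¹ at h2
    have lem : ∀ x y, q x = q y → ei x = ei y → x = y := by
      intro x y hxy hei
      rw [← inv_mul_eq_one, ← map_inv, ← map_mul, hq] at hxy
      obtain ⟨k, hk⟩ := hxy
      have := congrArg ei hk
      rw [ei_zpow, ei_tw, ei_mul, ei_inv, hei] at this
      have : k = 0 := by push_cast at this; omega
      rw [this, zpow_zero, eq_comm, inv_mul_eq_one] at hk
      exact hk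
    have eS' : φ S = b * S * b⁻¹ := lem _ _ (by rw [← hφq, h1]; simp) (by rw [he, ei_conj])
    have eR' : φ R = b * R * b⁻¹ := by
      rcases h2 with h2 | h2
      · exact lem _ _ (by rw [← hφq, h2]; simp) (by rw [he, ei_conj])
      · exfalso
        have : q (φ R) = q (b * R⁻¹ * b⁻¹) := by rw [← hφq, h2]; simp
        rw [← inv_mul_eq_one, ← map_inv, ← map_mul, hq] at this
        obtain ⟨k, hk⟩ := this
        have := congrArg ei hk
        rw [ei_zpow, ei_tw, ei_mul, ei_inv, he, ei_conj, ei_inv, eR] at this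
        push_cast at this; omega
    refine ⟨b, fun g => ?_⟩
    have : φ.toMonoidHom = (MulAut.conj b).toMonoidHom := by
      apply hom_ext
      intro i hi
      simp only [MulEquiv.coe_toMonoidHom, MulAut.conj_apply]
      obtain rfl | rfl : i = 0 ∨ i = 1 := by omega
      · rw [hs0, map_mul, map_inv, eS', eR']; group
      · rw [hs1]; simp only [map_mul, map_inv]; rw [eS', eR']; group
    exact DFunLike.congr_fun this g
  intro φ
  rcases (ei_phi (by omega) φ).1 with h | h
  · exact Or.inl (key φ h)
  · refine Or.inr (key _ ?_)
    rw [MulAut.mul_apply, eps_s, map_inv, ei_inv, h]; rfl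

/-- Automorphisms of braid groups are inner up to inverting the generators. -/
theorem dg_all (m : ℕ) (hm : 1 ≤ m) : DG m := by
  induction m, hm using Nat.le_induction with
  | base => exact dg_one
  | succ m hm ih =>
    obtain rfl | h : m = 1 ∨ 2 ≤ m := by omega
    · exact dg_two
    · exact dg_step h ih

end BC

namespace BC

/-! ### Deciding conjugacy by bounded search -/

/-- All words of length at most `L`. -/
noncomputable def words (α : Type) [Fintype α] : ℕ → List (List α)
  | 0 => [[]]
  | L + 1 => [] :: (words α L).flatMap
      (fun w => (Finset.univ : Finset α).toList.map (fun a => a :: w))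

theorem mem_words {α : Type} [Fintype α] (w : List α) (L : ℕ) (h : w.length ≤ L) :
    w ∈ words α L := by
  induction L generalizing w with
  | zero => simpa [words] using h
  | succ L ih =>
    cases w with
    | nil => simp [words]
    | cons a w =>
      simp only [words, List.mem_cons, List.mem_flatMap, List.mem_map]
      exact .inr ⟨w, ih w (by simpa using h), a, by simp, rfl⟩

theorem words_prim {α : Type} [Fintype α] [Primcodable α] : Primrec (words α) := by
  have h : Primrec₂ fun (_ : ℕ) (q : ℕ × List (List α)) => ([] : List α) :: q.2.flatMap
      (fun w => (Finset.univ : Finset α).toList.map (fun a => a :: w)) := by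
    refine Primrec.list_cons.comp (Primrec.const _) ?_
    refine Primrec.list_flatMap (Primrec.snd.comp Primrec.snd) ?_
    refine Primrec.list_map (Primrec.const _) ?_
    exact Primrec.list_cons.comp Primrec.snd (Primrec.snd.comp Primrec.fst)
  refine (Primrec.nat_rec' Primrec.id (Primrec.const [[]]) h).of_eq ?_
  intro n
  induction n with
  | zero => rfl
  | succ n ih => simp only [id] at ih ⊢; rw [words, ← ih]

theorem reduce_prim {α : Type} [DecidableEq α] [Primcodable α] :
    Primrec (FreeGroup.reduce : List (α × Bool) → List (α × Bool)) := by
  have hs : Primrec₂ fun (_ : List (α × Bool)) (q : (α × Bool) × List (α × Bool)) =>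
      (List.casesOn q.2 [q.1] fun b l => if q.1.1 = b.1 ∧ q.1.2 = !b.2 then l
        else q.1 :: b :: l : List (α × Bool)) := by
    refine Primrec.list_casesOn (f := fun r : List (α × Bool) × (α × Bool) × List (α × Bool) => r.2.2)
      (g := fun r => [r.2.1])
      (h := fun r c => if r.2.1.1 = c.1.1 ∧ r.2.1.2 = !c.1.2 then c.2 else r.2.1 :: c.1 :: c.2)
      (Primrec.snd.comp Primrec.snd)
      (Primrec.list_cons.comp (Primrec.fst.comp Primrec.snd) (Primrec.const [])) ?_
    have h1 : Primrec fun r : (List (α × Bool) × (α × Bool) × List (α × Bool)) ×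
        ((α × Bool) × List (α × Bool)) => r.1.2.1 :=
      Primrec.fst.comp (Primrec.snd.comp Primrec.fst)
    have h2 : Primrec fun r : (List (α × Bool) × (α × Bool) × List (α × Bool)) ×
        ((α × Bool) × List (α × Bool)) => r.2.1 := Primrec.fst.comp Primrec.snd
    have h3 : Primrec fun r : (List (α × Bool) × (α × Bool) × List (α × Bool)) ×
        ((α × Bool) × List (α × Bool)) => r.2.2 := Primrec.snd.comp Primrec.snd
    refine Primrec.ite (PrimrecPred.and ?_ ?_) h3
      (Primrec.list_cons.comp h1 (Primrec.list_cons.comp h2 h3))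
    · exact Primrec.eq.comp (Primrec.fst.comp h1) (Primrec.fst.comp h2)
    · exact Primrec.eq.comp (Primrec.snd.comp h1) (Primrec.not.comp (Primrec.snd.comp h2))
  refine (Primrec.list_foldr Primrec.id (Primrec.const []) hs).of_eq ?_
  intro l
  induction l with
  | nil => rfl
  | cons a l ih =>
    simp only [id, List.foldr_cons] at ih ⊢
    rw [ih, FreeGroup.reduce.cons]

theorem invRev_prim {α : Type} [Primcodable α] :
    Primrec (FreeGroup.invRev : List (α × Bool) → List (α × Bool)) := by
  unfold FreeGroup.invRev
  refine Primrec.list_reverse.comp (Primrec.list_map Primrec.id ?_)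
  exact Primrec.pair (Primrec.fst.comp Primrec.snd) (Primrec.not.comp (Primrec.snd.comp Primrec.snd))

/-- A group with a Helly norm, whose elements are named by codes in `W` such that the group
operations and equality are primitive recursive on codes and norm balls are covered by primitive
recursive finite lists of codes, has a primitive recursive conjugacy relation: by `lang`, a
conjugator, if there is one, can be found in a ball of computable radius. -/
theorem conj_prim {G W : Type} [Group G] [Primcodable W] (ev : W → G) (ν : G → ℕ)
    (h1 : ν 1 = 0) (hi : ∀ g, ν g⁻¹ = ν g) (hm : ∀ g h, ν (g * h) ≤ ν g + ν h) (hH : Helly ν)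
    (mul : W → W → W) (inv : W → W) (cand : ℕ → List W) (lw : W → ℕ)
    (pm : Primrec₂ mul) (pi : Primrec inv) (pc : Primrec cand) (pl : Primrec lw)
    (pe : PrimrecRel fun a b => ev a = ev b)
    (em : ∀ a b, ev (mul a b) = ev a * ev b) (ei : ∀ a, ev (inv a) = (ev a)⁻¹)
    (ec : ∀ g r, ν g ≤ r → ∃ w ∈ cand r, ev w = g) (el : ∀ w, ν (ev w) ≤ lw w) :
    PrimrecRel fun a b => IsConj (ev a) (ev b) := by
  classical
  -- a radius that suffices for the conjugators of `a` to `b`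
  let R : W × W → ℕ := fun q => 3 * (cand (lw q.1 + lw q.2 + 2)).length
  have pR : Primrec R := Primrec.nat_mul.comp (Primrec.const 3)
    (Primrec.list_length.comp (pc.comp (Primrec.nat_add.comp (Primrec.nat_add.comp
      (pl.comp Primrec.fst) (pl.comp Primrec.snd)) (Primrec.const 2))))
  have pQ : PrimrecRel fun (e : W) (q : W × W) => ev (mul (mul (inv e) q.1) e) = ev q.2 := by
    refine PrimrecRel.comp (R := fun a b => ev a = ev b) pe
      (f := fun q : W × W × W => mul (mul (inv q.1) q.2.1) q.1)
      (g := fun q : W × W × W => q.2.2) ?_ ?_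
    · exact pm.comp (pm.comp (pi.comp Primrec.fst) (Primrec.fst.comp Primrec.snd)) Primrec.fst
    · exact Primrec.snd.comp Primrec.snd
  have key : PrimrecPred fun q : W × W =>
      ∃ e ∈ cand (R q), ev (mul (mul (inv e) q.1) e) = ev q.2 :=
    PrimrecRel.comp pQ.exists_mem_list (pc.comp pR) Primrec.id
  refine PrimrecPred.of_eq key ?_
  rintro ⟨a, b⟩
  simp only [em, ei]
  constructor
  · rintro ⟨e, -, he⟩
    rw [isConj_iff]
    exact ⟨(ev e)⁻¹, by simpa using he⟩
  · intro h
    obtain ⟨c, hc⟩ := isConj_iff.1 h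
    have hb : (c⁻¹)⁻¹ * ev a * c⁻¹ = ev b := by simpa using hc
    obtain ⟨e', he', hn⟩ := lang h1 hi hm hH (N := lw a + lw b) (ev a) c⁻¹
      ((el a).trans (by omega)) (by rw [hb]; exact (el b).trans (by omega))
      ((cand (lw a + lw b + 2)).map ev).toFinset (by
        intro g hg
        obtain ⟨w, hw, rfl⟩ := ec g _ hg
        simp only [List.mem_toFinset, List.mem_map]
        exact ⟨w, hw, rfl⟩)
    have hcard : ((cand (lw a + lw b + 2)).map ev).toFinset.card ≤
        (cand (lw a + lw b + 2)).length := by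
      simpa using ((cand (lw a + lw b + 2)).map ev).toFinset_card_le
    obtain ⟨w, hw, rfl⟩ := ec e' (R (a, b)) (hn.trans (by simp only [R]; omega))
    exact ⟨w, hw, he'.trans hb⟩

end BC

namespace BC

/-! ### Words in the braid group and its word problem -/

variable {m : ℕ}

/-- The braid represented by a signed word in the Artin generators. -/
def pw (w : List (Fin m × Bool)) : Br m := PresentedGroup.mk (braidRels m) (FreeGroup.mk w)

theorem pw_nil : pw ([] : List (Fin m × Bool)) = 1 := map_one _

theorem pw_append (u v : List (Fin m × Bool)) : pw (u ++ v) = pw u * pw v := by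
  rw [pw, ← FreeGroup.mul_mk, map_mul]; rfl

theorem pw_cons (a : Fin m × Bool) (v : List (Fin m × Bool)) : pw (a :: v) = pw [a] * pw v :=
  pw_append [a] v

theorem pw_invRev (u : List (Fin m × Bool)) : pw (FreeGroup.invRev u) = (pw u)⁻¹ := by
  rw [pw, ← FreeGroup.inv_mk, map_inv]; rfl

theorem pw_pos (i : Fin m) : pw [(i, true)] = s i := by rw [s_of_lt i.2]; rfl

theorem pw_neg (i : Fin m) : pw [(i, false)] = (s i)⁻¹ := by
  rw [← pw_pos, ← pw_invRev]; rfl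

theorem pw_eq_prod (w : List (Fin m × Bool)) :
    pw w = (w.map (fun p => if p.2 then (PresentedGroup.of p.1 : Br m)
      else (PresentedGroup.of p.1)⁻¹)).prod := by
  induction w with
  | nil => exact pw_nil
  | cons a w ih =>
    rw [pw_cons, ih, List.map_cons, List.prod_cons]
    congr 1
    obtain ⟨i, b⟩ := a
    cases b
    · rw [pw_neg, s_of_lt i.2]; rfl
    · rw [pw_pos, s_of_lt i.2]; rfl

theorem nm_pw (w : List (Fin m × Bool)) : nm (pw w) ≤ w.length := by
  induction w with
  | nil => rw [pw_nil, nm_one]; exact le_rfl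
  | cons a w ih =>
    rw [pw_cons]
    refine (nm_mul _ _).trans ?_
    have : nm (pw [a]) ≤ 1 := by
      obtain ⟨i, b⟩ := a
      cases b
      · rw [pw_neg, nm_inv]; exact nm_s _
      · rw [pw_pos]; exact nm_s _
    simp only [List.length_cons]; omega

theorem pw_of_pos (a : Mo m) : ∃ w : List (Fin m × Bool), w.length = len a ∧ pw w = toBr a := by
  induction a using mo_ind with
  | one => exact ⟨[], by simp [len_one], by rw [pw_nil, map_one]⟩
  | mul i a ih =>
    obtain ⟨w, h1, h2⟩ := ih
    exact ⟨(i, true) :: w, by simp [h1, len_at_mul], by rw [pw_cons, pw_pos, h2, map_mul, toBr_at]⟩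

theorem pw_pow (w : List (Fin m × Bool)) (r : ℕ) :
    ∃ v : List (Fin m × Bool), v.length = r * w.length ∧ pw v = pw w ^ r := by
  induction r with
  | zero => exact ⟨[], by simp, by rw [pw_nil, pow_zero]⟩
  | succ r ih =>
    obtain ⟨v, h1, h2⟩ := ih
    exact ⟨v ++ w, by simp [h1]; ring, by rw [pw_append, h2, pow_succ]⟩

/-- Elements of a norm ball are represented by words of linearly bounded length. -/
theorem pw_of_nm (m : ℕ) : ∃ K : ℕ, ∀ (g : Br m) (r : ℕ), nm g ≤ r →
    ∃ w : List (Fin m × Bool), w.length ≤ K * r ∧ pw w = g := by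
  obtain ⟨zz, hz⟩ := (z_pos : z m ∈ Pos)
  obtain ⟨wz, lz, ez⟩ := pw_of_pos zz
  refine ⟨3 * len zz, fun g r h => ?_⟩
  obtain ⟨⟨p, hp⟩, ⟨q, hq⟩⟩ := nm_le.1 h
  obtain ⟨wp, lp, ep⟩ := pw_of_pos p
  obtain ⟨v, lv, ev⟩ := pw_pow (FreeGroup.invRev wz) r
  refine ⟨v ++ wp, ?_, ?_⟩
  · have e1 := congrArg ei hp
    have e2 := congrArg ei hq
    have hzr : ei ((z m) ^ r) = r * len zz := by
      rw [← zpow_natCast, ei_zpow, ← hz, ei_toBr]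
    rw [ei_mul, ei_toBr, hzr] at e1 e2
    rw [ei_inv] at e2
    have : len p ≤ 2 * (r * len zz) := by
      have : (len p : ℤ) ≤ 2 * (r * len zz) := by linarith [Int.natCast_nonneg (len q)]
      exact_mod_cast this
    rw [List.length_append, lv, lp, FreeGroup.invRev_length, lz]
    nlinarith
  · rw [pw_append, ev, pw_invRev, ez, ep, hz, hp, inv_pow, inv_mul_cancel_left]

/-- A word for the image of a free generator or its inverse under the Artin action of a letter. -/
noncomputable def subst (a : Fin m × Bool) (c : Fin (m + 1) × Bool) : List (Fin (m + 1) × Bool) :=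
  (art m (pw [a]) (FreeGroup.mk [c])).toWord

/-- The Artin action of a braid word on words in the free group. -/
noncomputable def actW (u : List (Fin m × Bool)) (w : List (Fin (m + 1) × Bool)) :
    List (Fin (m + 1) × Bool) :=
  u.foldr (fun a w => w.flatMap (subst a)) w

theorem mk_subst (a : Fin m × Bool) (w : List (Fin (m + 1) × Bool)) :
    (FreeGroup.mk (w.flatMap (subst a)) : FF m) = art m (pw [a]) (FreeGroup.mk w) := by
  induction w with
  | nil => exact (map_one (art m (pw [a]))).symm
  | cons c w ih =>
    rw [List.flatMap_cons, ← FreeGroup.mul_mk, ih, subst, FreeGroup.mk_toWord, ← map_mul,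
      FreeGroup.mul_mk]
    rfl

theorem mk_actW (u : List (Fin m × Bool)) (w : List (Fin (m + 1) × Bool)) :
    (FreeGroup.mk (actW u w) : FF m) = art m (pw u) (FreeGroup.mk w) := by
  induction u with
  | nil => rw [pw_nil, map_one]; rfl
  | cons a u ih =>
    rw [pw_cons, map_mul, MulAut.mul_apply, ← ih, ← mk_subst]; rfl

/-- The normal form of a braid word: the reduced words for the images of the free generators under
the Artin action. -/
noncomputable def nf (u : List (Fin m × Bool)) : List (List (Fin (m + 1) × Bool)) :=
  (List.finRange (m + 1)).map (fun j => FreeGroup.reduce (actW u [(j, true)]))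

/-- Faithfulness of the Artin action solves the word problem. -/
theorem nf_iff (u v : List (Fin m × Bool)) : nf u = nf v ↔ pw u = pw v := by
  have h : nf u = nf v ↔ ∀ j : Fin (m + 1),
      (FreeGroup.mk (actW u [(j, true)]) : FF m) = FreeGroup.mk (actW v [(j, true)]) := by
    simp only [nf, List.map_inj_left, List.mem_finRange, true_imp_iff]
    refine forall_congr' fun j => ⟨fun h => FreeGroup.reduce.exact h, fun h => ?_⟩
    have := congrArg FreeGroup.toWord h
    simpa using this
  rw [h]
  constructor
  · intro h
    have : art m ((pw u)⁻¹ * pw v) = 1 := by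
      rw [map_mul, map_inv, inv_mul_eq_one]
      refine mulAut_ext fun j hj => ?_
      have := h ⟨j, by omega⟩
      rw [mk_actW, mk_actW] at this
      rw [x_of_lt (by omega)]; exact this
    exact inv_mul_eq_one.1 (art_inj m _ this)
  · intro h j
    rw [mk_actW, mk_actW, h]

theorem actW_prim : Primrec₂ (actW : List (Fin m × Bool) → _ → _) := by
  refine Primrec.list_foldr (f := fun q : List (Fin m × Bool) × List (Fin (m + 1) × Bool) => q.1)
    (g := fun q => q.2) (h := fun _ c => c.2.flatMap (subst c.1))
    Primrec.fst Primrec.snd ?_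
  refine Primrec.list_flatMap (Primrec.snd.comp Primrec.snd) ?_
  exact (Primrec.dom_finite (fun c : (Fin m × Bool) × (Fin (m + 1) × Bool) => subst c.1 c.2)).comp
    (Primrec.pair (Primrec.fst.comp (Primrec.snd.comp Primrec.fst)) Primrec.snd)

theorem nf_prim : Primrec (nf : List (Fin m × Bool) → _) := by
  refine Primrec.list_map (Primrec.const _) ?_
  refine reduce_prim.comp (actW_prim.comp Primrec.fst ?_)
  exact Primrec.list_cons.comp (Primrec.pair Primrec.snd (Primrec.const true)) (Primrec.const [])

/-- The sign change `ε` on words, applied or not according to a Boolean. -/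
def fl (b : Bool) (u : List (Fin m × Bool)) : List (Fin m × Bool) :=
  u.map (fun p => (p.1, xor b p.2))

theorem pw_fl (b : Bool) (u : List (Fin m × Bool)) :
    pw (fl b u) = (if b then eps m else 1) (pw u) := by
  cases b with
  | false => simp [fl]
  | true =>
    induction u with
    | nil => simp [fl, pw_nil]
    | cons a u ih =>
      have : fl true (a :: u) = (a.1, !a.2) :: fl true u := by simp [fl]
      rw [this, pw_cons, ih, pw_cons a, map_mul]
      congr 1
      obtain ⟨i, b⟩ := a
      cases b
      · simp [pw_pos, pw_neg, eps_s]
      · simp [pw_pos, pw_neg, eps_s]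

theorem xor_prim : Primrec₂ xor :=
  (Primrec.dom_finite fun c : Bool × Bool => xor c.1 c.2).to₂

theorem fl_prim : Primrec₂ (fl : Bool → List (Fin m × Bool) → _) := by
  refine Primrec.list_map Primrec.snd ?_
  exact Primrec.pair (Primrec.fst.comp Primrec.snd)
    (xor_prim.comp (Primrec.fst.comp Primrec.fst) (Primrec.snd.comp Primrec.snd))

/-! ### The semidirect product with an action through `ε` -/

variable {k : ℕ}

/-- Codes for elements of the semidirect product: a braid word and a word in the free group. -/
abbrev Wd (m k : ℕ) := List (Fin m × Bool) × List (Fin k × Bool)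

/-- The action of the free group in which the `j`-th generator acts as `ε` if `e j` and trivially
otherwise. -/
noncomputable def th (m : ℕ) (e : Fin k → Bool) : FreeGroup (Fin k) →* MulAut (Br m) :=
  FreeGroup.lift (fun j => if e j then eps m else 1)

/-- The parity of the number of letters acting as `ε`. -/
def par (e : Fin k → Bool) (w : List (Fin k × Bool)) : Bool :=
  w.foldr (fun a b => xor (e a.1) b) false

theorem eps_sq : eps m * eps m = 1 := by ext g; simp [eps_eps]

theorem eps_inv : (eps m)⁻¹ = eps m := inv_eq_of_mul_eq_one_left eps_sq

theorem th_mk (e : Fin k → Bool) (w : List (Fin k × Bool)) :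
    th m e (FreeGroup.mk w) = if par e w then eps m else 1 := by
  induction w with
  | nil => simp [par]; exact map_one _
  | cons a w ih =>
    have h1 : (FreeGroup.mk (a :: w) : FreeGroup (Fin k)) = FreeGroup.mk [a] * FreeGroup.mk w := by
      rw [FreeGroup.mul_mk]; rfl
    have h2 : th m e (FreeGroup.mk [a]) = if e a.1 then eps m else 1 := by
      obtain ⟨j, b⟩ := a
      cases b
      · have : (FreeGroup.mk [(j, false)] : FreeGroup (Fin k)) = (FreeGroup.of j)⁻¹ := rfl
        rw [this, map_inv, th, FreeGroup.lift_apply_of]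
        split_ifs <;> simp [eps_inv]
      · have : (FreeGroup.mk [(j, true)] : FreeGroup (Fin k)) = FreeGroup.of j := rfl
        rw [this, th, FreeGroup.lift_apply_of]
    have h3 : par e (a :: w) = xor (e a.1) (par e w) := rfl
    rw [h1, map_mul, h2, ih, h3]
    cases e a.1 <;> cases par e w <;> simp [eps_sq]

theorem th_nm (e : Fin k → Bool) (h : FreeGroup (Fin k)) (g : Br m) : nm (th m e h g) = nm g := by
  rw [← FreeGroup.mk_toWord (x := h), th_mk]
  split_ifs
  · exact nm_eps g
  · rfl

/-- The element with a given code. -/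
def evw (e : Fin k → Bool) (w : Wd m k) : Br m ⋊[th m e] FreeGroup (Fin k) :=
  ⟨pw w.1, FreeGroup.mk w.2⟩

/-- Multiplication of codes. -/
def mulw (e : Fin k → Bool) (a b : Wd m k) : Wd m k := (a.1 ++ fl (par e a.2) b.1, a.2 ++ b.2)

/-- Inversion of codes. -/
def invw (e : Fin k → Bool) (a : Wd m k) : Wd m k :=
  (fl (par e a.2) (FreeGroup.invRev a.1), FreeGroup.invRev a.2)

theorem evw_mul (e : Fin k → Bool) (a b : Wd m k) : evw e (mulw e a b) = evw e a * evw e b := by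
  ext
  · simp [evw, mulw, pw_append, pw_fl, th_mk]
  · simp [evw, mulw]

theorem evw_inv (e : Fin k → Bool) (a : Wd m k) : evw e (invw e a) = (evw e a)⁻¹ := by
  ext
  · simp only [evw, invw, pw_fl, pw_invRev, SemidirectProduct.inv_left, map_inv, th_mk]
    congr 1
    split_ifs <;> simp [eps_inv]
  · simp [evw, invw]

theorem par_prim (e : Fin k → Bool) : Primrec (par e) := by
  refine Primrec.list_foldr (f := fun w : List (Fin k × Bool) => w)
    (h := fun _ c => xor (e c.1.1) c.2) Primrec.id (Primrec.const false) ?_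
  exact xor_prim.comp ((Primrec.dom_finite e).comp
    (Primrec.fst.comp (Primrec.fst.comp Primrec.snd))) (Primrec.snd.comp Primrec.snd)

theorem mulw_prim (e : Fin k → Bool) : Primrec₂ (mulw e : Wd m k → _ → _) := by
  refine Primrec.pair ?_ ?_
  · exact Primrec.list_append.comp (Primrec.fst.comp Primrec.fst)
      (fl_prim.comp ((par_prim e).comp (Primrec.snd.comp Primrec.fst))
        (Primrec.fst.comp Primrec.snd))
  · exact Primrec.list_append.comp (Primrec.snd.comp Primrec.fst) (Primrec.snd.comp Primrec.snd)

theorem invw_prim (e : Fin k → Bool) : Primrec (invw e : Wd m k → _) :=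
  Primrec.pair (fl_prim.comp ((par_prim e).comp Primrec.snd) (invRev_prim.comp Primrec.fst))
    (invRev_prim.comp Primrec.snd)

theorem evw_eq (e : Fin k → Bool) (a b : Wd m k) : evw e a = evw e b ↔
    nf a.1 = nf b.1 ∧ FreeGroup.reduce a.2 = FreeGroup.reduce b.2 := by
  rw [SemidirectProduct.ext_iff, nf_iff]
  refine and_congr Iff.rfl ⟨fun h => ?_, fun h => FreeGroup.reduce.exact h⟩
  simpa [evw] using congrArg FreeGroup.toWord h

theorem evw_eq_prim (e : Fin k → Bool) :
    PrimrecRel fun a b : Wd m k => evw e a = evw e b := by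
  have h1 : PrimrecPred fun q : Wd m k × Wd m k => nf q.1.1 = nf q.2.1 :=
    Primrec.eq.comp (nf_prim.comp (Primrec.fst.comp Primrec.fst))
      (nf_prim.comp (Primrec.fst.comp Primrec.snd))
  have h2 : PrimrecPred fun q : Wd m k × Wd m k =>
      FreeGroup.reduce q.1.2 = FreeGroup.reduce q.2.2 :=
    Primrec.eq.comp (reduce_prim.comp (Primrec.snd.comp Primrec.fst))
      (reduce_prim.comp (Primrec.snd.comp Primrec.snd))
  exact (h1.and h2).of_eq fun q => (evw_eq e q.1 q.2).symm

/-- Conjugacy is primitive recursive when the free group acts through powers of `ε`. -/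
theorem conj_th (m : ℕ) (e : Fin k → Bool) :
    PrimrecRel fun a b : Wd m k => IsConj (evw e a) (evw e b) := by
  obtain ⟨K, hK⟩ := pw_of_nm m
  refine conj_prim (evw e) (sn (th m e)) (sn_one _) (sn_inv _ (th_nm e)) (sn_mul _ (th_nm e))
    (sn_helly _ (th_nm e)) (mulw e) (invw e)
    (fun r => (words (Fin m × Bool) (K * r)).flatMap
      (fun u => (words (Fin k × Bool) r).map (fun t => (u, t))))
    (fun w => w.1.length + w.2.length) (mulw_prim e) (invw_prim e) ?_ ?_ (evw_eq_prim e)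
    (evw_mul e) (evw_inv e) ?_ ?_
  · refine Primrec.list_flatMap (words_prim.comp (Primrec.nat_mul.comp (Primrec.const K)
      Primrec.id)) ?_
    refine Primrec.list_map (words_prim.comp Primrec.fst) ?_
    exact Primrec.pair (Primrec.snd.comp Primrec.fst) Primrec.snd
  · exact Primrec.nat_add.comp (Primrec.list_length.comp Primrec.fst)
      (Primrec.list_length.comp Primrec.snd)
  · intro g r h
    have h1 : nm g.left ≤ r := (le_max_left _ _).trans h
    have h2 : FreeGroup.norm g.right ≤ r := (le_max_right _ _).trans h
    obtain ⟨w, lw, ew⟩ := hK _ _ h1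
    refine ⟨(w, g.right.toWord), ?_, ?_⟩
    · simp only [List.mem_flatMap, List.mem_map]
      exact ⟨w, mem_words _ _ lw, _, mem_words _ _ h2, rfl⟩
    · ext
      · exact ew
      · exact FreeGroup.mk_toWord
  · intro w
    refine max_le ((nm_pw _).trans (Nat.le_add_right _ _)) ?_
    exact FreeGroup.norm_mk_le.trans (Nat.le_add_left _ _)

/-! ### Reduction of the general case -/

/-- Every automorphism of the braid group differs from a power of `ε` by an inner one. -/
theorem aut_form (hm : 1 ≤ m) (φ : MulAut (Br m)) :
    ∃ (b : Br m) (e : Bool), ∀ g, φ g = b * (if e then eps m else 1) g * b⁻¹ := by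
  rcases dg_all m hm φ with ⟨b, h⟩ | ⟨b, h⟩
  · exact ⟨b, false, by simpa using h⟩
  · refine ⟨b, true, fun g => ?_⟩
    have := h (eps m g)
    rw [MulAut.mul_apply, eps_eps] at this
    simpa using this

theorem pw_surj (g : Br m) : ∃ w, pw w = g := by
  obtain ⟨K, h⟩ := pw_of_nm m
  obtain ⟨w, -, e⟩ := h g _ le_rfl
  exact ⟨w, e⟩

/-- Twisting the generators `t_j` by braids `b j` identifies the semidirect product for `φ` with
the one for the corresponding powers of `ε`. -/
theorem exists_iso (hm : 1 ≤ m) (φ : Fin k → MulAut (Br m)) :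
    ∃ (e : Fin k → Bool) (b : Fin k → Br m)
      (Φ : Br m ⋊[FreeGroup.lift φ] FreeGroup (Fin k) ≃* Br m ⋊[th m e] FreeGroup (Fin k)),
      (∀ g, Φ (SemidirectProduct.inl g) = SemidirectProduct.inl g) ∧
      ∀ j, Φ (SemidirectProduct.inr (FreeGroup.of j)) =
        SemidirectProduct.inl (b j) * SemidirectProduct.inr (FreeGroup.of j) := by
  choose b e h using fun j => aut_form hm (φ j)
  let ψ : FreeGroup (Fin k) →* Br m ⋊[th m e] FreeGroup (Fin k) :=
    FreeGroup.lift fun j => SemidirectProduct.inl (b j) * SemidirectProduct.inr (FreeGroup.of j)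
  have hψ : ∀ j, ψ (FreeGroup.of j) =
      SemidirectProduct.inl (b j) * SemidirectProduct.inr (FreeGroup.of j) := fun j =>
    FreeGroup.lift_apply_of
  have hr : ∀ f, (ψ f).right = f := by
    intro f
    have : (SemidirectProduct.rightHom.comp ψ) = MonoidHom.id _ := by
      ext j; simp [hψ]
    exact DFunLike.congr_fun this f
  have hc : ∀ (f : FreeGroup (Fin k)) (g : Br m),
      (SemidirectProduct.inl (FreeGroup.lift φ f g) : Br m ⋊[th m e] FreeGroup (Fin k)) =
        ψ f * SemidirectProduct.inl g * (ψ f)⁻¹ := by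
    intro f
    induction f using FreeGroup.induction_on with
    | C1 => simp
    | of j =>
      intro g
      have e1 : th m e (FreeGroup.of j) = if e j then eps m else 1 := FreeGroup.lift_apply_of
      rw [FreeGroup.lift_apply_of, h, ← e1, map_mul, map_mul, SemidirectProduct.inl_aut, hψ, map_inv]
      simp only [mul_inv_rev, mul_assoc, map_inv]
    | inv_of j ih =>
      intro g
      have := ih ((FreeGroup.lift φ (FreeGroup.of j))⁻¹ g)
      rw [MulAut.apply_inv_self] at this
      rw [this, map_inv, map_inv]; group
    | mul f f' h1 h2 =>
      intro g
      rw [map_mul, MulAut.mul_apply, h1, h2, map_mul]; group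
  let Φ : Br m ⋊[FreeGroup.lift φ] FreeGroup (Fin k) →* Br m ⋊[th m e] FreeGroup (Fin k) :=
    SemidirectProduct.lift SemidirectProduct.inl ψ (fun f => by
      refine MonoidHom.ext fun g => ?_
      simpa using hc f g)
  have hl : ∀ g, Φ (SemidirectProduct.inl g) = SemidirectProduct.inl g := fun g => by simp [Φ]
  have hrr : ∀ f, Φ (SemidirectProduct.inr f) = ψ f := fun g => by simp [Φ]
  have hinj : Function.Injective Φ := by
    rw [injective_iff_map_eq_one]
    intro a ha
    rw [← SemidirectProduct.inl_left_mul_inr_right a, map_mul, hl, hrr] at ha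
    have h1 := congrArg SemidirectProduct.right ha
    have h1 : a.right = 1 := by simpa [hr] using h1
    rw [h1, map_one, mul_one] at ha
    have h2 : a.left = 1 := by simpa using congrArg SemidirectProduct.left ha
    ext
    · exact h2
    · rw [h1]; rfl
  have hsurj : Function.Surjective Φ := by
    rintro ⟨g, f⟩
    refine ⟨SemidirectProduct.inl (g * (ψ f).left⁻¹) * SemidirectProduct.inr f, ?_⟩
    rw [map_mul, hl, hrr]
    ext
    · simp
    · simp [hr]
  exact ⟨e, b, MulEquiv.ofBijective Φ ⟨hinj, hsurj⟩, hl, fun j => (hrr _).trans (hψ j)⟩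

/-- The conjugacy relation on words is primitive recursive for an arbitrary action. -/
theorem conj_all (hm : 1 ≤ m) (φ : Fin k → MulAut (Br m)) :
    PrimrecRel fun a b : Wd m k =>
      IsConj (⟨pw a.1, FreeGroup.mk a.2⟩ : Br m ⋊[FreeGroup.lift φ] FreeGroup (Fin k))
        ⟨pw b.1, FreeGroup.mk b.2⟩ := by
  obtain ⟨e, b, Φ, hl, hr⟩ := exists_iso hm φ
  choose c hc using fun j => pw_surj (b j)
  -- the code of the image of a letter of the free group
  let lt : Fin k × Bool → Wd m k := fun a =>
    if a.2 then (c a.1, [(a.1, true)]) else invw e (c a.1, [(a.1, true)])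
  let tr : List (Fin k × Bool) → Wd m k := fun t => t.foldr (fun a w => mulw e (lt a) w) ([], [])
  have h1 : ∀ j, evw e (c j, [(j, true)]) = Φ (SemidirectProduct.inr (FreeGroup.of j)) := by
    intro j
    rw [hr]
    ext
    · simp [evw, hc]
    · simp [evw]; rfl
  have h2 : ∀ a, evw e (lt a) = Φ (SemidirectProduct.inr (FreeGroup.mk [a])) := by
    rintro ⟨j, b⟩
    cases b
    · simp only [lt, Bool.false_eq_true, if_false]
      rw [evw_inv, h1, ← map_inv, ← map_inv]; rfl
    · simp only [lt, if_true]
      rw [h1]; rfl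
  have h3 : ∀ t, evw e (tr t) = Φ (SemidirectProduct.inr (FreeGroup.mk t)) := by
    intro t
    induction t with
    | nil =>
      have : (FreeGroup.mk [] : FreeGroup (Fin k)) = 1 := rfl
      rw [this, map_one, map_one]; rfl
    | cons a t ih =>
      have : tr (a :: t) = mulw e (lt a) (tr t) := rfl
      rw [this, evw_mul, ih, h2, ← map_mul, ← map_mul, FreeGroup.mul_mk]; rfl
  let T : Wd m k → Wd m k := fun a => mulw e (a.1, []) (tr a.2)
  have hT : ∀ a : Wd m k, evw e (T a) = Φ ⟨pw a.1, FreeGroup.mk a.2⟩ := by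
    intro a
    rw [evw_mul, h3, SemidirectProduct.mk_eq_inl_mul_inr, map_mul, hl]; rfl
  have ptr : Primrec tr := by
    refine Primrec.list_foldr (h := fun _ c => mulw e (lt c.1) c.2) Primrec.id
      (Primrec.const _) ?_
    exact (mulw_prim e).comp ((Primrec.dom_finite lt).comp (Primrec.fst.comp Primrec.snd))
      (Primrec.snd.comp Primrec.snd)
  have pT : Primrec T := (mulw_prim e).comp (Primrec.pair Primrec.fst (Primrec.const []))
    (ptr.comp Primrec.snd)
  have := PrimrecRel.comp (conj_th m e) (pT.comp Primrec.fst) (pT.comp Primrec.snd)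
  refine PrimrecPred.of_eq this ?_
  rintro ⟨a, b⟩
  simp only [hT]
  constructor
  · intro h
    simpa using Φ.symm.toMonoidHom.map_isConj h
  · intro h
    exact Φ.toMonoidHom.map_isConj h

end BC

/-- semidirect products of `B n` by free groups acting via automorphisms
have solvable conjugacy problem. -/
theorem conjugacy_problem_semidirect_product (n : ℕ) (hn : 2 ≤ n) (m : ℕ)
    (φ : Fin m → MulAut (B n)) :
    ∃ f : (List (Fin (n - 1) × Bool) × List (Fin m × Bool)) ×
          (List (Fin (n - 1) × Bool) × List (Fin m × Bool)) → Bool,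
      Computable f ∧
      ∀ (u v : List (Fin (n - 1) × Bool)) (s t : List (Fin m × Bool)),
        (f ((u, s), (v, t)) = true ↔
          IsConj
            (⟨π u, FreeGroup.mk s⟩ : B n ⋊[FreeGroup.lift φ] FreeGroup (Fin m))
            ⟨π v, FreeGroup.mk t⟩) := by
  obtain ⟨hd, h⟩ := BC.conj_all (m := n - 1) (by omega) φ
  refine ⟨fun q => @decide _ (hd q), h.to_comp, fun u v s t => ?_⟩
  rw [decide_eq_true_iff]
  have e : ∀ w : List (Fin (n - 1) × Bool), BC.pw w = (π w : B n) := fun w => BC.pw_eq_prod w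
  rw [← e, ← e]
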